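/- Let α ∈ (0,1), T > 0, ℓ > 0. Assume a, f ∈ C²([0,T]×[−ℓ,ℓ]×ℝ×ℝ) and b(·,±ℓ,·,·), g(·,±ℓ,·,·) ∈ C²([0,T]×ℝ×ℝ) satisfy the uniform parabolicity conditions a(t,x,z,p) > 0 on [0,T]×[−ℓ,ℓ]×ℝ×ℝ and ∂_p b(t,±ℓ,z,p)·p + b(t,±ℓ,z,p) ∓ ∂_p g(t,±ℓ,z,p) > 0 for all (t,z,p) ∈ [0,T]×ℝ×ℝ. Let u⁰ ∈ C^{2+α}([−ℓ,ℓ]) satisfy the compatibility condition ∓b(0,±ℓ,u⁰(±ℓ),u⁰ₓ(±ℓ))u⁰ₓ(±ℓ) + g(0,±ℓ,u⁰(±ℓ),u⁰ₓ(±ℓ)) = a(0,±ℓ,u⁰(±ℓ),u⁰ₓ(±ℓ))u⁰ₓₓ(±ℓ) + f(0,±ℓ,u⁰(±ℓ),u⁰ₓ(±ℓ)). Then problem (1),(2) with u(0,·) = u⁰ admits a unique solution u on a maximal interval of existence [0,τ_∞) ⊆ [0,T] such that u ∈ C^{1+α/2,2+α}(Ω_τ) for every τ < τ_∞, and either lim_{τ↗τ_∞}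 |u|^{(1+α/2,2+α)}_{Ω_τ} = ∞ or u ∈ C^{1+α/2,2+α}(Ω_T). -/

import Mathlib

/-!
The problem is treated by maximal Hölder regularity in time for the Dirichlet heat semigroup,
followed by continuation of the local solution.

*Linear theory.* The Dirichlet heat semigroup on `C([0,L])` is given by Gaussian kernels acting on
odd `2L`-periodic extensions. It is analytic but not strongly continuous at `0`, since continuous
functions need not vanish at the ends; its relation to the generator is therefore expressed through
the inverse `G` of the second derivative (`MRSys`). For a `θ`-Hölder forcing `κ` with Hölder orbit
`t ↦ S t (κ 0)`, the time derivative `Q` of the mild solution is `θ`-Hölder with a constant depending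
only on the semigroup bounds (`MRSys.Q_holder`). The substitution `y = ∫ 1 / √W` transports this to
operators `W ∂² - B ∂` on `[-ℓ,ℓ]` with the same bounds, `W` being a polynomial uniformly close to the
initial leading coefficient `a(0,·,u⁰,u⁰ₓ)` (`exists_paraSys`).

*Local existence.* The unknown is a curve `φ` whose values consist of an interior forcing and the two
boundary velocities. It determines `u` as the initial value, plus the affine interpolation of the
integrated boundary velocities, plus a part with zero boundary values produced by the semigroup. The
equation and the boundary conditions become `Phi φ = φ`. On a short time interval `Phi` is a contraction
in a set of `α/2`-Hölder curves with prescribed initial value (`exists_fix`): the lower order terms gain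
a power of the length of the interval, and the second order term carries the small factor `a - W`. The
compatibility condition says that the initial forcing vanishes at `±ℓ`, which makes its orbit
`α/2`-Hölder in time (`Heat.S_orbit`). Hence `local_exist`.

*Regularity.* Second differences in space over a step `h` are compared with time increments over a step
proportional to `h ^ 2`; this makes `u_t` Hölder in space (`zyg`, `Cls0.dX`), then `u_x` Hölder in time
with exponent `(1+α)/2` (`Cls0.pT`), and the equation, divided by `a`, gives the space regularity of
`u_xx` (`Cls0.toCls`). Solutions on the closed cylinder are extended to all `x` by second-order Taylor
polynomials, so that they have two-sided derivatives at the lateral boundary (`Cls.sol`).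
Conversely, a solution in the open cylinder with bounded Hölder norm extends, with its derivatives, to
the closed cylinder, by McShane extension (`holder_ext`, `OpenSol.close`, `toClosed`).

*Uniqueness.* Obliqueness means that the boundary conditions read `u_t = r` at `ℓ` and `u_t = l` at
`-ℓ`, where `r = g - b p` decreases and `l = g + b p` increases with the slope `p`. The maximum principle
then applies up to the lateral boundary (`Cls0.le`).

*Continuation.* A solution on `[0,σ]`, `σ < T`, can be restarted from its final state (`Cls0.append`,
`Cls.restart`). Hence the maximal solution either reaches `T` or does not extend to its closed interval of
existence (`maximal`). If in the second case the norm did not tend to `∞`, it would be bounded along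
times approaching `τ_∞`, hence up to `τ_∞`, and the solution could be closed up there, a contradiction.
-/


open Set Filter MeasureTheory
open scoped Topology

noncomputable section

/-- The time derivative `u_t` of a function `u = u(t,x)`. -/
def timeDeriv (u : ℝ → ℝ → ℝ) (t x : ℝ) : ℝ := deriv (fun s => u s x) t

/-- The spatial derivative `u_x` of a function `u = u(t,x)`. -/
def spaceDeriv (u : ℝ → ℝ → ℝ) (t x : ℝ) : ℝ := deriv (fun y => u t y) x

/-- The second spatial derivative `u_{xx}` of a function `u = u(t,x)`. -/
def spaceDeriv2 (u : ℝ → ℝ → ℝ) (t x : ℝ) : ℝ := deriv (fun y => spaceDeriv u t y) x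

/-- `v` is uniformly `β`-Hölder continuous on `I` with constant `C`. -/
def HolderBnd (β : ℝ) (I : Set ℝ) (v : ℝ → ℝ) (C : ℝ) : Prop :=
  ∀ s ∈ I, ∀ s' ∈ I, |v s - v s'| ≤ C * |s - s'| ^ β

/-- The `β`-Hölder seminorm `[v]^{(β)}_I`. -/
def hSemi (β : ℝ) (I : Set ℝ) (v : ℝ → ℝ) : ℝ :=
  sSup ((fun p : ℝ × ℝ => |v p.1 - v p.2| / |p.1 - p.2| ^ β) ''
    {p : ℝ × ℝ | p.1 ∈ I ∧ p.2 ∈ I ∧ p.1 ≠ p.2})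

/-- The sup-norm of `v` on `I`. -/
def supI (I : Set ℝ) (v : ℝ → ℝ) : ℝ := sSup ((fun s => |v s|) '' I)

/-- The `C^β` norm `|v|^{(β)}_I`. -/
def hNorm (β : ℝ) (I : Set ℝ) (v : ℝ → ℝ) : ℝ := supI I v + hSemi β I v

/-- The sup-norm of `w` on `(0,τ) × Q`. -/
def supN (τ : ℝ) (Q : Set ℝ) (w : ℝ → ℝ → ℝ) : ℝ :=
  sSup ((fun p : ℝ × ℝ => |w p.1 p.2|) '' (Ioo 0 τ ×ˢ Q))

/-- The parabolic Hölder seminorm `⟨w⟩^{(β/2,β)}_{(0,τ)×Q}`. -/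
def pSemi (β τ : ℝ) (Q : Set ℝ) (w : ℝ → ℝ → ℝ) : ℝ :=
  sSup ((fun x => hSemi (β / 2) (Ioo 0 τ) (fun t => w t x)) '' Q) +
    sSup ((fun t => hSemi β Q (fun x => w t x)) '' (Ioo 0 τ))

/-- Componentwise bound `C` for the parabolic Hölder seminorm `⟨w⟩^{(β/2,β)}_{(0,τ)×Q}`. -/
def PHolderBnd (β τ : ℝ) (Q : Set ℝ) (w : ℝ → ℝ → ℝ) (C : ℝ) : Prop :=
  (∀ x ∈ Q, HolderBnd (β / 2) (Ioo 0 τ) (fun t => w t x) C) ∧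
    ∀ t ∈ Ioo (0 : ℝ) τ, HolderBnd β Q (fun x => w t x) C

/-- The norm `|w|^{(β/2,β)}_{(0,τ)×Q}`. -/
def pNorm0 (β τ : ℝ) (Q : Set ℝ) (w : ℝ → ℝ → ℝ) : ℝ := supN τ Q w + pSemi β τ Q w

/-- The leading parabolic seminorm `⟨u⟩^{(1+α/2,2+α)}_{(0,τ)×Q}`. -/
def pSemi2 (α τ : ℝ) (Q : Set ℝ) (u : ℝ → ℝ → ℝ) : ℝ :=
  pSemi α τ Q (timeDeriv u) + pSemi α τ Q (spaceDeriv2 u) +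
    sSup ((fun x => hSemi ((1 + α) / 2) (Ioo 0 τ) (fun t => spaceDeriv u t x)) '' Q)

/-- The parabolic Hölder norm `|u|^{(1+α/2,2+α)}_{(0,τ)×Q}`. -/
def pNorm2 (α τ : ℝ) (Q : Set ℝ) (u : ℝ → ℝ → ℝ) : ℝ :=
  supN τ Q u + supN τ Q (timeDeriv u) + supN τ Q (spaceDeriv u) +
    supN τ Q (spaceDeriv2 u) + pSemi2 α τ Q u

/-- `C^{1,2}`-regularity (existence of `u_t`, `u_x`, `u_{xx}`) on `(0,τ) × Q`. -/
def Reg12 (τ : ℝ) (Q : Set ℝ) (u : ℝ → ℝ → ℝ) : Prop :=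
  ∀ t ∈ Ioo (0 : ℝ) τ, ∀ x ∈ Q,
    DifferentiableAt ℝ (fun s => u s x) t ∧
      DifferentiableAt ℝ (fun y => u t y) x ∧
        DifferentiableAt ℝ (fun y => spaceDeriv u t y) x

/-- Membership in the parabolic Hölder space `C^{1+α/2,2+α}((0,τ)×Q)`. -/
def MemP (α τ : ℝ) (Q : Set ℝ) (u : ℝ → ℝ → ℝ) : Prop :=
  ContinuousOn (fun p : ℝ × ℝ => u p.1 p.2) (Icc 0 τ ×ˢ closure Q) ∧
    Reg12 τ (closure Q) u ∧
      ∃ C : ℝ,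
        (∀ t ∈ Ioo (0 : ℝ) τ, ∀ x ∈ Q,
          |u t x| ≤ C ∧ |timeDeriv u t x| ≤ C ∧ |spaceDeriv u t x| ≤ C ∧
            |spaceDeriv2 u t x| ≤ C) ∧
          PHolderBnd α τ Q (timeDeriv u) C ∧ PHolderBnd α τ Q (spaceDeriv2 u) C ∧
            ∀ x ∈ Q, HolderBnd ((1 + α) / 2) (Ioo 0 τ) (fun t => spaceDeriv u t x) C

/-- Membership in `C^{2+α}([-ℓ,ℓ])`. -/
def MemC2 (α ℓ : ℝ) (v : ℝ → ℝ) : Prop :=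
  ContinuousOn v (Icc (-ℓ) ℓ) ∧
    (∀ x ∈ Icc (-ℓ) ℓ, DifferentiableAt ℝ v x ∧ DifferentiableAt ℝ (deriv v) x) ∧
      ContinuousOn (deriv (deriv v)) (Icc (-ℓ) ℓ) ∧
        ∃ C : ℝ, HolderBnd α (Icc (-ℓ) ℓ) (deriv (deriv v)) C

/-- The `C^{2+α}([-ℓ,ℓ])` norm. -/
def c2Norm (α ℓ : ℝ) (v : ℝ → ℝ) : ℝ :=
  supI (Icc (-ℓ) ℓ) v + supI (Icc (-ℓ) ℓ) (deriv v) + supI (Icc (-ℓ) ℓ) (deriv (deriv v)) +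
    hSemi α (Icc (-ℓ) ℓ) (deriv (deriv v))

/-- Regularity of a classical solution on `(0,τ) × (-ℓ,ℓ)` for a problem with dynamical
boundary conditions at `x = ±ℓ`: continuity on the closed cylinder, interior `C^{1,2}`
regularity and existence of `u_t` and `u_x` at the lateral boundary. -/
def ClassicalReg (τ ℓ : ℝ) (u : ℝ → ℝ → ℝ) : Prop :=
  ContinuousOn (fun p : ℝ × ℝ => u p.1 p.2) (Icc 0 τ ×ˢ Icc (-ℓ) ℓ) ∧
    Reg12 τ (Ioo (-ℓ) ℓ) u ∧
      ∀ t ∈ Ioo (0 : ℝ) τ,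
        DifferentiableAt ℝ (fun s => u s ℓ) t ∧ DifferentiableAt ℝ (fun y => u t y) ℓ ∧
          DifferentiableAt ℝ (fun s => u s (-ℓ)) t ∧ DifferentiableAt ℝ (fun y => u t y) (-ℓ)

/-- `u` is a classical solution on `(0,τ) × (-ℓ,ℓ)` of the quasilinear equation (1) with the
gradient-dependent dynamical boundary conditions (2) and initial value `u0`. -/
def SolQ (τ ℓ : ℝ) (a f b g : ℝ → ℝ → ℝ → ℝ → ℝ) (u0 : ℝ → ℝ) (u : ℝ → ℝ → ℝ) : Prop :=
  ClassicalReg τ ℓ u ∧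
    (∀ t ∈ Ioo (0 : ℝ) τ, ∀ x ∈ Ioo (-ℓ) ℓ,
      timeDeriv u t x - a t x (u t x) (spaceDeriv u t x) * spaceDeriv2 u t x
        = f t x (u t x) (spaceDeriv u t x)) ∧
      (∀ t ∈ Ioo (0 : ℝ) τ,
        timeDeriv u t ℓ + b t ℓ (u t ℓ) (spaceDeriv u t ℓ) * spaceDeriv u t ℓ
            = g t ℓ (u t ℓ) (spaceDeriv u t ℓ) ∧
          timeDeriv u t (-ℓ) - b t (-ℓ) (u t (-ℓ)) (spaceDeriv u t (-ℓ)) * spaceDeriv u t (-ℓ)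
            = g t (-ℓ) (u t (-ℓ)) (spaceDeriv u t (-ℓ))) ∧
        ∀ x ∈ Icc (-ℓ) ℓ, u 0 x = u0 x

/-- `u` is a classical solution on `(0,τ) × (-ℓ,ℓ)` of the quasilinear equation (1) with the
gradient-independent dynamical boundary conditions (2a) and initial value `u0`. -/
def SolQ2a (τ ℓ : ℝ) (a f : ℝ → ℝ → ℝ → ℝ → ℝ) (b g : ℝ → ℝ → ℝ → ℝ) (u0 : ℝ → ℝ)
    (u : ℝ → ℝ → ℝ) : Prop :=
  ClassicalReg τ ℓ u ∧
    (∀ t ∈ Ioo (0 : ℝ) τ, ∀ x ∈ Ioo (-ℓ) ℓ,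
      timeDeriv u t x - a t x (u t x) (spaceDeriv u t x) * spaceDeriv2 u t x
        = f t x (u t x) (spaceDeriv u t x)) ∧
      (∀ t ∈ Ioo (0 : ℝ) τ,
        timeDeriv u t ℓ + b t ℓ (u t ℓ) * spaceDeriv u t ℓ = g t ℓ (u t ℓ) ∧
          timeDeriv u t (-ℓ) - b t (-ℓ) (u t (-ℓ)) * spaceDeriv u t (-ℓ) = g t (-ℓ) (u t (-ℓ))) ∧
        ∀ x ∈ Icc (-ℓ) ℓ, u 0 x = u0 x

/-! ### Hölder regularity in time of mild solutions -/

/-- `TH τ θ H φ`: the curve `φ` is `θ`-Hölder continuous on `[0,τ]` with constant `H`. -/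
def TH {E : Type*} [NormedAddCommGroup E] (τ θ H : ℝ) (φ : ℝ → E) : Prop :=
  ∀ s t, 0 ≤ s → s ≤ t → t ≤ τ → ‖φ t - φ s‖ ≤ H * (t - s) ^ θ

theorem TH.continuousOn {E : Type*} [NormedAddCommGroup E] {τ θ H : ℝ} {φ : ℝ → E}
    (h : TH τ θ H φ) (hθ : 0 < θ) : ContinuousOn φ (Icc 0 τ) := by
  intro s hs
  rw [ContinuousWithinAt, tendsto_iff_norm_sub_tendsto_zero]
  have h1 : Tendsto (fun t => H * |t - s| ^ θ) (𝓝[Icc 0 τ] s) (𝓝 0) := by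
    have : ContinuousAt (fun t => H * |t - s| ^ θ) s := by
      apply ContinuousAt.mul continuousAt_const
      apply ContinuousAt.rpow_const (by fun_prop) (Or.inr hθ.le)
    have h2 := this.tendsto
    simp only [sub_self, abs_zero, Real.zero_rpow hθ.ne', mul_zero] at h2
    exact h2.mono_left nhdsWithin_le_nhds
  refine squeeze_zero' (Eventually.of_forall fun _ => norm_nonneg _) ?_ h1
  filter_upwards [self_mem_nhdsWithin] with t ht
  rcases le_total s t with hst | hst
  · rw [abs_of_nonneg (by linarith)]; exact h s t hs.1 hst ht.2
  · rw [abs_sub_comm, abs_of_nonneg (by linarith), norm_sub_rev]; exact h t s ht.1 hst hs.2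

/-- Integrability and size of a function with an integrable power singularity at `0`. -/
theorem sing_int {E : Type*} [NormedAddCommGroup E] [NormedSpace ℝ E] {F : ℝ → E} {t C θ : ℝ}
    (ht : 0 ≤ t) (hθ : 0 < θ) (hF : ContinuousOn F (Ioc 0 t))
    (hb : ∀ r ∈ Ioc 0 t, ‖F r‖ ≤ C * r ^ (θ - 1)) :
    IntervalIntegrable F volume 0 t ∧ ‖∫ r in (0:ℝ)..t, F r‖ ≤ C * (t ^ θ / θ) := by
  have hi : IntervalIntegrable (fun r : ℝ => C * r ^ (θ - 1)) volume 0 t :=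
    (intervalIntegral.intervalIntegrable_rpow' (by linarith)).const_mul C
  have hm : AEStronglyMeasurable F (volume.restrict (Ioc 0 t)) :=
    hF.aestronglyMeasurable measurableSet_Ioc
  constructor
  · refine hi.mono_fun (by rwa [uIoc_of_le ht]) ?_
    rw [uIoc_of_le ht]
    filter_upwards [ae_restrict_mem measurableSet_Ioc] with r hr
    exact (hb r hr).trans (le_abs_self _)
  · refine (intervalIntegral.norm_integral_le_of_norm_le ht
      (Eventually.of_forall fun r hr => hb r hr) hi).trans ?_
    rw [intervalIntegral.integral_const_mul, integral_rpow (Or.inl (by linarith))]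
    simp [Real.zero_rpow hθ.ne']

/-- The data of an analytic semigroup `S` (with derivative `S1`) generated by an invertible
operator whose inverse is `G`; `S` need not be strongly continuous at `0`, the relation to the
generator being expressed through `G` only. -/
structure MRSys (X : Type*) [NormedAddCommGroup X] [NormedSpace ℝ X] where
  S : ℝ → X →L[ℝ] X
  S1 : ℝ → X →L[ℝ] X
  G : X →L[ℝ] X
  M : ℝ
  S_zero : S 0 = 1
  bS : ∀ r, 0 ≤ r → ‖S r‖ ≤ M
  bS1 : ∀ r, 0 < r → ‖S1 r‖ ≤ M / r
  lS1 : ∀ r r', 0 < r → r ≤ r' → ‖S1 r' - S1 r‖ ≤ M * (r' - r) / r ^ 2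
  ftc : ∀ a b, 0 < a → a ≤ b → ∀ v, S b v - S a v = ∫ r in a..b, S1 r v
  gS1 : ∀ r, 0 < r → ∀ v, G (S1 r v) = S r v
  gS : ∀ t, 0 ≤ t → ∀ v, G (S t v) - G v = ∫ r in (0:ℝ)..t, S r v
  Ginj : Function.Injective G

namespace MRSys
variable {X : Type*} [NormedAddCommGroup X] [NormedSpace ℝ X] [CompleteSpace X] (P : MRSys X)

theorem M_nonneg : 0 ≤ P.M := (norm_nonneg _).trans (P.bS 0 le_rfl)

theorem contS1 : ContinuousOn P.S1 (Ioi 0) := by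
  intro r hr
  have hr : 0 < r := hr
  rw [ContinuousWithinAt, tendsto_iff_norm_sub_tendsto_zero]
  have hM : 0 ≤ P.M := (norm_nonneg _).trans (P.bS 0 le_rfl)
  have h1 : Tendsto (fun t => P.M * |t - r| / (r/2) ^ 2) (𝓝[Ioi 0] r) (𝓝 0) := by
    have : ContinuousAt (fun t => P.M * |t - r| / (r/2) ^ 2) r := by fun_prop
    have h2 := this.tendsto
    simp only [sub_self, abs_zero, mul_zero, zero_div] at h2
    exact h2.mono_left nhdsWithin_le_nhds
  refine squeeze_zero' (Eventually.of_forall fun _ => norm_nonneg _) ?_ h1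
  have : ∀ᶠ t in 𝓝[Ioi 0] r, r / 2 < t :=
    nhdsWithin_le_nhds (lt_mem_nhds (by linarith))
  filter_upwards [this] with t ht
  rcases le_total r t with hst | hst
  · rw [abs_of_nonneg (by linarith)]
    refine (P.lS1 r t hr hst).trans ?_
    have : 0 ≤ t - r := by linarith
    gcongr; linarith
  · rw [abs_sub_comm, abs_of_nonneg (by linarith), norm_sub_rev]
    refine (P.lS1 t r (by linarith) hst).trans ?_
    have : 0 ≤ r - t := by linarith
    gcongr

theorem S_diff {a b : ℝ} (ha : 0 < a) (hab : a ≤ b) (v : X) :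
    ‖P.S b v - P.S a v‖ ≤ P.M * (b - a) / a * ‖v‖ := by
  have hM := P.M_nonneg
  rw [P.ftc a b ha hab]
  have := intervalIntegral.norm_integral_le_of_norm_le_const (a := a) (b := b)
    (f := fun r => P.S1 r v) (C := P.M / a * ‖v‖) ?_
  · rw [abs_of_nonneg (by linarith)] at this
    refine this.trans (le_of_eq ?_); ring
  · intro r hr
    rw [uIoc_of_le hab] at hr
    refine ((P.S1 r).le_opNorm v).trans ?_
    have h0 : 0 < r := ha.trans hr.1
    have := P.bS1 r h0
    have h2 : P.M / r ≤ P.M / a := by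
      have := hr.1.le
      gcongr
    gcongr
    exact this.trans h2

theorem contS : ContinuousOn P.S (Ioi 0) := by
  intro r hr
  have hr : 0 < r := hr
  rw [ContinuousWithinAt, tendsto_iff_norm_sub_tendsto_zero]
  have hM := P.M_nonneg
  have h1 : Tendsto (fun t => P.M * |t - r| / (r/2)) (𝓝[Ioi 0] r) (𝓝 0) := by
    have : ContinuousAt (fun t => P.M * |t - r| / (r/2)) r := by fun_prop
    have h2 := this.tendsto
    simp only [sub_self, abs_zero, mul_zero, zero_div] at h2
    exact h2.mono_left nhdsWithin_le_nhds
  refine squeeze_zero' (Eventually.of_forall fun _ => norm_nonneg _) ?_ h1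
  have : ∀ᶠ t in 𝓝[Ioi 0] r, r / 2 < t :=
    nhdsWithin_le_nhds (lt_mem_nhds (by linarith))
  filter_upwards [this] with t ht
  refine ContinuousLinearMap.opNorm_le_bound _ (by positivity) fun v => ?_
  rw [ContinuousLinearMap.sub_apply]
  rcases le_total r t with hst | hst
  · rw [abs_of_nonneg (by linarith)]
    refine (P.S_diff hr hst v).trans ?_
    have : 0 ≤ t - r := by linarith
    gcongr; linarith
  · rw [abs_sub_comm, abs_of_nonneg (by linarith), norm_sub_rev]
    refine (P.S_diff (by linarith) hst v).trans ?_
    have : 0 ≤ r - t := by linarith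
    gcongr

/-- The time derivative of the mild solution with forcing `κ`. -/
def Q (κ : ℝ → X) (t : ℝ) : X := P.S t (κ t) + ∫ r in (0:ℝ)..t, P.S1 r (κ (t - r) - κ t)

/-- The mild solution with forcing `κ` and zero initial value. -/
def z (κ : ℝ → X) (t : ℝ) : X := ∫ r in (0:ℝ)..t, P.S r (κ (t - r))

variable {τ θ H : ℝ} {κ : ℝ → X}

theorem contF (hκ : TH τ θ H κ) (hθ : 0 < θ) {t : ℝ} (htτ : t ≤ τ) :
    ContinuousOn (fun r => κ (t - r)) (Icc 0 t) := by
  refine (hκ.continuousOn hθ).comp (by fun_prop) ?_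
  intro r hr
  exact ⟨by linarith [hr.2], by linarith [hr.1]⟩

theorem intQ (hκ : TH τ θ H κ) (hθ : 0 < θ) {t : ℝ} (ht : 0 ≤ t) (htτ : t ≤ τ) {u : ℝ}
    (hu : 0 ≤ u) (hut : u ≤ t) :
    IntervalIntegrable (fun r => P.S1 r (κ (t - r) - κ t)) volume 0 u ∧
    ‖∫ r in (0:ℝ)..u, P.S1 r (κ (t - r) - κ t)‖ ≤ P.M * H * (u ^ θ / θ) := by
  refine sing_int hu hθ ?_ ?_
  · refine ContinuousOn.clm_apply (P.contS1.mono fun r hr => hr.1) ?_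
    exact ((contF hκ hθ htτ).mono fun r hr => ⟨hr.1.le, hr.2.trans hut⟩).sub continuousOn_const
  · intro r hr
    refine ((P.S1 r).le_opNorm _).trans ?_
    have h1 := hκ (t - r) t (by linarith [hr.2]) (by linarith [hr.1]) htτ
    rw [norm_sub_rev, show t - (t - r) = r by ring] at h1
    have h2 := P.bS1 r hr.1
    have hM := P.M_nonneg
    calc ‖P.S1 r‖ * ‖κ (t - r) - κ t‖ ≤ P.M / r * (H * r ^ θ) := by
          gcongr
          exact div_nonneg hM hr.1.le
      _ = P.M * H * r ^ (θ - 1) := by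
          rw [Real.rpow_sub_one hr.1.ne']; ring

theorem int_S {t : ℝ} (ht : 0 ≤ t) {φ : ℝ → X} (hφ : ContinuousOn φ (Icc 0 t)) :
    IntervalIntegrable (fun r => P.S r (φ r)) volume 0 t := by
  obtain ⟨C, hC⟩ := isCompact_Icc.exists_bound_of_continuousOn hφ
  refine (sing_int (C := P.M * C) (θ := 1) ht one_pos ?_ ?_).1
  · exact ContinuousOn.clm_apply (P.contS.mono fun r hr => hr.1)
      (hφ.mono Ioc_subset_Icc_self)
  · intro r hr
    rw [sub_self, Real.rpow_zero, mul_one]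
    refine ((P.S r).le_opNorm _).trans ?_
    gcongr
    · exact P.M_nonneg
    · exact P.bS r hr.1.le
    · exact hC r ⟨hr.1.le, hr.2⟩

/-- The mild solution solves `G (Q - κ) = z`, that is, `Q = A z + κ`. -/
theorem G_eq (hκ : TH τ θ H κ) (hθ : 0 < θ) {t : ℝ} (ht : 0 ≤ t) (htτ : t ≤ τ) :
    P.G (P.Q κ t - κ t) = P.z κ t := by
  rw [Q, z, map_sub, map_add, ← P.G.intervalIntegral_comp_comm (P.intQ hκ hθ ht htτ ht le_rfl).1]
  have h1 := P.gS t ht (κ t)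
  have h2 : ∫ r in (0:ℝ)..t, P.G (P.S1 r (κ (t - r) - κ t)) =
      ∫ r in (0:ℝ)..t, (P.S r (κ (t - r)) - P.S r (κ t)) := by
    refine intervalIntegral.integral_congr_ae (Eventually.of_forall fun r hr => ?_)
    rw [uIoc_of_le ht] at hr
    rw [P.gS1 r hr.1, map_sub]
  rw [h2, intervalIntegral.integral_sub (P.int_S ht (contF hκ hθ htτ))
    (P.int_S ht continuousOn_const), ← h1]
  abel

/-- Increment of the boundary term of `Q`. For `s ≤ t - s` the size of `κ s - κ 0` suffices; otherwise
the derivative bound for `S` on `[s,t]` gains the factor `(t - s) / s`. -/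
theorem S_sub_le (hκ : TH τ θ H κ) (hH : 0 ≤ H) (hθ1 : θ < 1) {s t : ℝ} (hs : 0 ≤ s)
    (hst : s < t) (htτ : t ≤ τ) (hθ : 0 < θ) :
    ‖P.S t (κ s - κ 0) - P.S s (κ s - κ 0)‖ ≤ 2 * P.M * H * (t - s) ^ θ := by
  have hM := P.M_nonneg
  have h1 := hκ 0 s le_rfl hs (hst.le.trans htτ)
  rw [sub_zero] at h1
  rcases le_total s (t - s) with h | h
  · have e1 := (P.S t).le_opNorm (κ s - κ 0)
    have e2 := (P.S s).le_opNorm (κ s - κ 0)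
    have b1 := P.bS t (hs.trans hst.le)
    have b2 := P.bS s hs
    have : s ^ θ ≤ (t - s) ^ θ := by gcongr
    have e3 : ‖κ s - κ 0‖ ≤ H * (t - s) ^ θ := h1.trans (by gcongr)
    calc _ ≤ ‖P.S t (κ s - κ 0)‖ + ‖P.S s (κ s - κ 0)‖ := norm_sub_le _ _
      _ ≤ P.M * (H * (t - s) ^ θ) + P.M * (H * (t - s) ^ θ) := by
          refine add_le_add (e1.trans ?_) (e2.trans ?_) <;> gcongr
      _ = _ := by ring
  · have hs0 : 0 < s := by linarith
    have hh : 0 < t - s := by linarith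
    refine (P.S_diff hs0 hst.le _).trans ?_
    have e : (t - s) * s ^ (θ - 1) ≤ (t - s) ^ θ := by
      have : s ^ (θ - 1) ≤ (t - s) ^ (θ - 1) :=
        Real.rpow_le_rpow_of_nonpos hh h (by linarith)
      calc _ ≤ (t - s) * (t - s) ^ (θ - 1) := by gcongr
        _ = _ := by rw [Real.rpow_sub_one hh.ne']; field_simp
    calc P.M * (t - s) / s * ‖κ s - κ 0‖ ≤ P.M * (t - s) / s * (H * s ^ θ) := by gcongr
      _ = P.M * H * ((t - s) * s ^ (θ - 1)) := by rw [Real.rpow_sub_one hs0.ne']; ring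
      _ ≤ P.M * H * (t - s) ^ θ := by gcongr
      _ ≤ _ := by
        have : 0 ≤ P.M * H * (t - s) ^ θ := by positivity
        linarith

/-- Increment of the singular integral in `Q` under a shift `h` of the kernel. The size bound of `S1` is
used for `r ≤ h`, its Lipschitz bound for `r ≥ h`. -/
theorem T1_le (hκ : TH τ θ H κ) (hH : 0 ≤ H) (hθ : 0 < θ) (hθ1 : θ < 1) {s h : ℝ} (hs : 0 ≤ s)
    (hh : 0 < h) (hsτ : s ≤ τ) :
    ‖∫ r in (0:ℝ)..s, (P.S1 (r + h) - P.S1 r) (κ (s - r) - κ s)‖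
      ≤ (2 * P.M * H / θ + P.M * H / (1 - θ)) * h ^ θ := by
  have hM := P.M_nonneg
  set F : ℝ → X := fun r => (P.S1 (r + h) - P.S1 r) (κ (s - r) - κ s) with hF
  have hc : ContinuousOn F (Ioc 0 s) := by
    refine ContinuousOn.clm_apply (ContinuousOn.sub ?_ (P.contS1.mono fun r hr => hr.1)) ?_
    · exact P.contS1.comp (by fun_prop) fun r hr => by
        have := hr.1; simp only [mem_Ioi]; linarith
    · exact ((contF hκ hθ hsτ).mono Ioc_subset_Icc_self).sub continuousOn_const
  have hκb : ∀ r ∈ Ioc 0 s, ‖κ (s - r) - κ s‖ ≤ H * r ^ θ := fun r hr => by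
    have h1 := hκ (s - r) s (by linarith [hr.2]) (by linarith [hr.1]) hsτ
    rwa [norm_sub_rev, show s - (s - r) = r by ring] at h1
  have hb1 : ∀ r ∈ Ioc 0 s, ‖F r‖ ≤ 2 * P.M * H * r ^ (θ - 1) := fun r hr => by
    refine ((P.S1 (r + h) - P.S1 r).le_opNorm _).trans ?_
    have hr0 := hr.1
    have e1 : ‖P.S1 (r + h) - P.S1 r‖ ≤ P.M / r + P.M / r := by
      refine (norm_sub_le _ _).trans (add_le_add ((P.bS1 _ (by linarith)).trans ?_) (P.bS1 r hr0))
      gcongr; linarith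
    calc _ ≤ (P.M / r + P.M / r) * (H * r ^ θ) := by
          have := hκb r hr
          gcongr
      _ = _ := by rw [Real.rpow_sub_one hr0.ne']; ring
  have hb2 : ∀ r ∈ Ioc 0 s, ‖F r‖ ≤ P.M * H * h * r ^ (θ - 2) := fun r hr => by
    refine ((P.S1 (r + h) - P.S1 r).le_opNorm _).trans ?_
    have hr0 := hr.1
    have e1 := P.lS1 r (r + h) hr0 (by linarith)
    rw [add_sub_cancel_left] at e1
    calc _ ≤ (P.M * h / r ^ 2) * (H * r ^ θ) := by
          have := hκb r hr
          gcongr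
      _ = _ := by rw [Real.rpow_sub hr0]; norm_num; ring
  have hθ1' : 0 < 1 - θ := by linarith
  -- for `s ≤ h` the near-diagonal bound alone suffices; otherwise the integral is split at `h`
  rcases le_total s h with hsh | hsh
  · refine (sing_int hs hθ hc hb1).2.trans ?_
    have : s ^ θ ≤ h ^ θ := by gcongr
    have e : 0 ≤ P.M * H / (1 - θ) * h ^ θ := by positivity
    calc 2 * P.M * H * (s ^ θ / θ) ≤ 2 * P.M * H * (h ^ θ / θ) := by gcongr
      _ ≤ _ := by rw [add_mul]; have : 2 * P.M * H * (h ^ θ / θ) = 2 * P.M * H / θ * h ^ θ := by ring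
                  linarith
  · have i1 := sing_int hh.le hθ (hc.mono (Ioc_subset_Ioc_right hsh))
      (fun r hr => hb1 r ⟨hr.1, hr.2.trans hsh⟩)
    have i0 := (sing_int hs hθ hc hb1).1
    have i2 : IntervalIntegrable F volume h s := i0.mono_set (by
      rw [uIcc_of_le hsh, uIcc_of_le hs]; exact Icc_subset_Icc_left hh.le)
    rw [← intervalIntegral.integral_add_adjacent_intervals i1.1 i2]
    refine (norm_add_le _ _).trans ?_
    rw [add_mul]
    refine add_le_add (i1.2.trans (le_of_eq (by ring))) ?_
    have h0 : (0:ℝ) ∉ uIcc h s := by rw [uIcc_of_le hsh]; intro h; linarith [h.1]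
    have i3 : IntervalIntegrable (fun r : ℝ => P.M * H * h * r ^ (θ - 2)) volume h s :=
      (intervalIntegral.intervalIntegrable_rpow (Or.inr h0)).const_mul _
    refine (intervalIntegral.norm_integral_le_of_norm_le hsh
      (Eventually.of_forall fun r hr => hb2 r ⟨hh.trans hr.1, hr.2⟩) i3).trans ?_
    rw [intervalIntegral.integral_const_mul, integral_rpow (Or.inr ⟨by linarith, h0⟩)]
    have e1 : θ - 2 + 1 = θ - 1 := by ring
    rw [e1]
    have e2 : (s ^ (θ - 1) - h ^ (θ - 1)) / (θ - 1) ≤ h ^ (θ - 1) / (1 - θ) := by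
      rw [show (s ^ (θ - 1) - h ^ (θ - 1)) / (θ - 1) = (h ^ (θ - 1) - s ^ (θ - 1)) / (1 - θ) by
        rw [← neg_div_neg_eq]; ring]
      have : 0 ≤ s ^ (θ - 1) := Real.rpow_nonneg hs _
      gcongr; linarith
    calc _ ≤ P.M * H * h * (h ^ (θ - 1) / (1 - θ)) := by gcongr
      _ = _ := by rw [Real.rpow_sub_one hh.ne']; field_simp

/-- The constant in the maximal regularity estimate. -/
def CQ (θ : ℝ) : ℝ := P.M * (3 / θ + 1 / (1 - θ) + 5)

/-- Maximal Hölder regularity in time: a Hölder forcing produces a Hölder time derivative. -/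
theorem Q_holder (hκ : TH τ θ H κ) (hH : 0 ≤ H) (hθ : 0 < θ) (hθ1 : θ < 1) {H0 : ℝ}
    (h0 : TH τ θ H0 (fun t => P.S t (κ 0))) :
    TH τ θ (P.CQ θ * H + H0) (P.Q κ) := by
  intro s t hs hst htτ
  rcases hst.eq_or_lt with rfl | hst'
  · simp [Real.zero_rpow hθ.ne']
  have hM := P.M_nonneg
  set h := t - s with hh
  have hh0 : 0 < h := by linarith
  have ht0 : 0 ≤ t := hs.trans hst
  have hsτ : s ≤ τ := hst.trans htτ
  have hht : h ≤ t := by linarith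
  have iQt := P.intQ hκ hθ ht0 htτ ht0 le_rfl
  have iQs := P.intQ hκ hθ hs hsτ hs le_rfl
  have iQh := P.intQ hκ hθ ht0 htτ hh0.le hht
  have iht : IntervalIntegrable (fun r => P.S1 r (κ (t - r) - κ t)) volume h t :=
    iQt.1.mono_set (by rw [uIcc_of_le hht, uIcc_of_le ht0]; exact Icc_subset_Icc_left hh0.le)
  have ic : ∀ v : X, IntervalIntegrable (fun r => P.S1 (r + h) v) volume 0 s := by
    intro v
    refine ContinuousOn.intervalIntegrable ?_
    rw [uIcc_of_le hs]
    refine ContinuousOn.clm_apply (P.contS1.comp (by fun_prop) fun r hr => ?_) continuousOn_const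
    have := hr.1; simp only [mem_Ioi]; linarith
  have id : IntervalIntegrable (fun r => P.S1 (r + h) (κ (s - r) - κ s)) volume 0 s := by
    refine ContinuousOn.intervalIntegrable ?_
    rw [uIcc_of_le hs]
    refine ContinuousOn.clm_apply (P.contS1.comp (by fun_prop) fun r hr => ?_)
      ((contF hκ hθ hsτ).sub continuousOn_const)
    have := hr.1; simp only [mem_Ioi]; linarith
  have shift : ∫ r in h..t, P.S1 r (κ (t - r) - κ t) =
      (∫ r in (0:ℝ)..s, P.S1 (r + h) (κ (s - r) - κ s)) + (P.S t (κ s - κ t) - P.S h (κ s - κ t)) := by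
    have e1 : ∫ r in h..t, P.S1 r (κ (t - r) - κ t)
        = ∫ r in (0:ℝ)..s, P.S1 (r + h) (κ (t - (r + h)) - κ t) := by
      rw [intervalIntegral.integral_comp_add_right (fun r => P.S1 r (κ (t - r) - κ t)) h]
      congr 1 <;> rw [hh] <;> ring
    have e2 : P.S t (κ s - κ t) - P.S h (κ s - κ t) = ∫ r in (0:ℝ)..s, P.S1 (r + h) (κ s - κ t) := by
      rw [P.ftc h t hh0 hht,
        intervalIntegral.integral_comp_add_right (fun r => P.S1 r (κ s - κ t)) h]
      congr 1 <;> rw [hh] <;> ring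
    rw [e1, e2, ← intervalIntegral.integral_add id (ic _)]
    congr 1; ext r
    rw [← map_add]; congr 1
    rw [show t - (r + h) = s - r by rw [hh]; ring]; abel
  have key : P.Q κ t - P.Q κ s =
      (∫ r in (0:ℝ)..s, (P.S1 (r + h) - P.S1 r) (κ (s - r) - κ s))
      + (∫ r in (0:ℝ)..h, P.S1 r (κ (t - r) - κ t))
      + (P.S t (κ s - κ t) - P.S h (κ s - κ t))
      + P.S t (κ t - κ s) + (P.S t (κ s - κ 0) - P.S s (κ s - κ 0))
      + (P.S t (κ 0) - P.S s (κ 0)) := by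
    rw [Q, Q, ← intervalIntegral.integral_add_adjacent_intervals iQh.1 iht, shift]
    simp only [ContinuousLinearMap.sub_apply]
    rw [intervalIntegral.integral_sub id iQs.1]
    simp only [map_sub]
    abel
  have b1 := P.T1_le hκ hH hθ hθ1 hs hh0 hsτ
  have b2 := iQh.2
  have hd := hκ s t hs hst htτ
  have b3 : ‖P.S t (κ s - κ t) - P.S h (κ s - κ t)‖ ≤ 2 * P.M * H * h ^ θ := by
    refine (norm_sub_le _ _).trans ?_
    have e1 := (P.S t).le_opNorm (κ s - κ t)
    have e2 := (P.S h).le_opNorm (κ s - κ t)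
    rw [norm_sub_rev (κ s)] at e1 e2
    calc _ ≤ P.M * (H * h ^ θ) + P.M * (H * h ^ θ) := by
          refine add_le_add (e1.trans ?_) (e2.trans ?_) <;> gcongr
          · exact P.bS t ht0
          · exact P.bS h hh0.le
      _ = _ := by ring
  have b4 : ‖P.S t (κ t - κ s)‖ ≤ P.M * H * h ^ θ := by
    refine ((P.S t).le_opNorm _).trans ?_
    rw [mul_assoc]
    gcongr
    exact P.bS t ht0
  have b5 := P.S_sub_le hκ hH hθ1 hs hst' htτ hθ
  have b6 := h0 s t hs hst htτ
  rw [key]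
  calc _ ≤ (2 * P.M * H / θ + P.M * H / (1 - θ)) * h ^ θ + P.M * H * (h ^ θ / θ)
        + 2 * P.M * H * h ^ θ + P.M * H * h ^ θ + 2 * P.M * H * h ^ θ + H0 * h ^ θ :=
      norm_add_le_of_le (norm_add_le_of_le (norm_add_le_of_le (norm_add_le_of_le
        (norm_add_le_of_le b1 b2) b3) b4) b5) b6
    _ = _ := by rw [CQ]; ring

end MRSys

namespace MRSys
variable {X : Type*} [NormedAddCommGroup X] [NormedSpace ℝ X] [CompleteSpace X] (P : MRSys X)
variable {τ θ H : ℝ} {κ : ℝ → X}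

theorem z_reflect (κ : ℝ → X) (t : ℝ) : P.z κ t = ∫ s in (0:ℝ)..t, P.S (t - s) (κ s) := by
  rw [z]
  have := intervalIntegral.integral_comp_sub_left (a := 0) (b := t)
    (fun s => P.S (t - s) (κ s)) t
  simp only [sub_sub_cancel, sub_self, sub_zero] at this
  exact this

/-- The kernel `(s, σ) ↦ S(σ - s) κ(s)` of the triangle `s < σ`, extended by zero. -/
def ker (κ : ℝ → X) (s σ : ℝ) : X := if s < σ then P.S (σ - s) (κ s) else 0

/-- The kernel is bounded on the triangle and continuous where `s < σ`, hence integrable. -/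
theorem ker_integrable {t : ℝ} (hκ : ContinuousOn κ (Icc 0 t)) :
    Integrable (Function.uncurry (P.ker κ))
      ((volume.restrict (Ioc 0 t)).prod (volume.restrict (Ioc 0 t))) := by
  obtain ⟨C, hC⟩ := isCompact_Icc.exists_bound_of_continuousOn hκ
  set D : Set (ℝ × ℝ) := {p | p.1 < p.2} with hD
  have hDm : MeasurableSet D := measurableSet_lt measurable_fst measurable_snd
  have hsq : MeasurableSet (Ioc 0 t ×ˢ Ioc 0 t : Set (ℝ × ℝ)) :=
    measurableSet_Ioc.prod measurableSet_Ioc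
  have hfun : Function.uncurry (P.ker κ) = D.indicator (fun p => P.S (p.2 - p.1) (κ p.1)) := by
    ext1 p
    simp [Function.uncurry, ker, indicator, hD]
  have hcont : ContinuousOn (fun p : ℝ × ℝ => P.S (p.2 - p.1) (κ p.1))
      ((Ioc 0 t ×ˢ Ioc 0 t) ∩ D) := by
    refine ContinuousOn.clm_apply (P.contS.comp (by fun_prop) ?_) (hκ.comp (by fun_prop) ?_)
    · rintro p ⟨_, hp⟩
      have hp : p.1 < p.2 := hp
      exact sub_pos.2 hp
    · rintro p ⟨hp, _⟩
      exact ⟨hp.1.1.le, hp.1.2⟩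
  refine Integrable.of_bound (C := P.M * C) ?_ ?_
  · rw [Measure.prod_restrict, hfun, aestronglyMeasurable_indicator_iff hDm, Measure.restrict_restrict hDm, inter_comm]
    exact hcont.aestronglyMeasurable (hsq.inter hDm)
  · rw [Measure.prod_restrict]
    refine (ae_restrict_iff' hsq).2 (Eventually.of_forall fun p hp => ?_)
    have hC0 : 0 ≤ C := (norm_nonneg _).trans (hC p.1 ⟨hp.1.1.le, hp.1.2⟩)
    have hM := P.M_nonneg
    simp only [Function.uncurry, ker]
    split_ifs with h
    · refine ((P.S _).le_opNorm _).trans ?_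
      gcongr
      · exact P.bS _ (by linarith)
      · exact hC p.1 ⟨hp.1.1.le, hp.1.2⟩
    · simp; positivity

/-- Fubini on the triangle `0 < s < σ < t`. -/
theorem triangle {t : ℝ} (ht : 0 ≤ t) (hκ : ContinuousOn κ (Icc 0 t)) :
    ∫ s in (0:ℝ)..t, (∫ r in (0:ℝ)..(t - s), P.S r (κ s)) = ∫ σ in (0:ℝ)..t, P.z κ σ := by
  have hsw := integral_integral_swap (P.ker_integrable hκ)
  rw [intervalIntegral.integral_of_le ht, intervalIntegral.integral_of_le ht]
  have h1 : ∫ s in Ioc 0 t, (∫ r in (0:ℝ)..(t - s), P.S r (κ s)) =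
      ∫ s in Ioc 0 t, ∫ σ in Ioc 0 t, P.ker κ s σ := by
    refine setIntegral_congr_fun measurableSet_Ioc fun s hs => ?_
    have e1 : (∫ r in (0:ℝ)..(t - s), P.S r (κ s)) = ∫ σ in s..t, P.S (σ - s) (κ s) := by
      have := intervalIntegral.integral_comp_sub_right (a := s) (b := t)
        (fun r => P.S r (κ s)) s
      rw [sub_self] at this
      exact this.symm
    beta_reduce
    rw [e1, intervalIntegral.integral_of_le hs.2]
    have e2 : (fun σ => P.ker κ s σ) = (Ioi s).indicator (fun σ => P.S (σ - s) (κ s)) := by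
      ext1 σ
      simp [ker, indicator]
    rw [e2, setIntegral_indicator measurableSet_Ioi]
    congr 2
    ext σ
    simp only [mem_Ioc, mem_inter_iff, mem_Ioi]
    exact ⟨fun h => ⟨⟨hs.1.trans h.1, h.2⟩, h.1⟩, fun h => ⟨h.2, h.1.2⟩⟩
  have h2 : ∫ σ in Ioc 0 t, P.z κ σ = ∫ σ in Ioc 0 t, ∫ s in Ioc 0 t, P.ker κ s σ := by
    refine setIntegral_congr_fun measurableSet_Ioc fun σ hσ => ?_
    beta_reduce
    rw [P.z_reflect, intervalIntegral.integral_of_le hσ.1.le, integral_Ioc_eq_integral_Ioo]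
    have e2 : (fun s => P.ker κ s σ) = (Iio σ).indicator (fun s => P.S (σ - s) (κ s)) := by
      ext1 s
      simp [ker, indicator]
    rw [e2, setIntegral_indicator measurableSet_Iio]
    congr 2
    ext s
    simp only [mem_Ioo, mem_inter_iff, mem_Iio, mem_Ioc]
    exact ⟨fun h => ⟨⟨h.1, h.2.le.trans hσ.2⟩, h.2⟩, fun h => ⟨h.1.1, h.2⟩⟩
  rw [h1, h2, hsw]

theorem Q_continuousOn (hκ : TH τ θ H κ) (hH : 0 ≤ H) (hθ : 0 < θ) (hθ1 : θ < 1) {H0 : ℝ}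
    (h0 : TH τ θ H0 (fun t => P.S t (κ 0))) : ContinuousOn (P.Q κ) (Icc 0 τ) :=
  (P.Q_holder hκ hH hθ hθ1 h0).continuousOn hθ

/-- The mild solution is the time integral of `Q`, so that `Q` is its time derivative. -/
theorem z_eq_int (hκ : TH τ θ H κ) (hH : 0 ≤ H) (hθ : 0 < θ) (hθ1 : θ < 1) {H0 : ℝ}
    (h0 : TH τ θ H0 (fun t => P.S t (κ 0))) {t : ℝ} (ht : 0 ≤ t) (htτ : t ≤ τ) :
    P.z κ t = ∫ s in (0:ℝ)..t, P.Q κ s := by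
  have hsub : Icc 0 t ⊆ Icc 0 τ := Icc_subset_Icc_right htτ
  have hQc := (P.Q_continuousOn hκ hH hθ hθ1 h0).mono hsub
  have hκc := (hκ.continuousOn hθ).mono hsub
  have hQi : IntervalIntegrable (P.Q κ) volume 0 t := hQc.intervalIntegrable_of_Icc ht
  have hκi : IntervalIntegrable κ volume 0 t := hκc.intervalIntegrable_of_Icc ht
  apply P.Ginj
  rw [← P.G.intervalIntegral_comp_comm hQi]
  -- On the forcing side, `G S(t-s) κ(s) = G κ(s) + ∫_0^{t-s} S(r) κ(s) dr`.
  have hGz : P.G (P.z κ t) = (∫ s in (0:ℝ)..t, P.G (κ s)) + ∫ σ in (0:ℝ)..t, P.z κ σ := by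
    have hi1 : IntervalIntegrable (fun s => P.G (κ s)) volume 0 t :=
      (P.G.continuous.comp_continuousOn hκc).intervalIntegrable_of_Icc ht
    have hi0 : IntervalIntegrable (fun s => P.S (t - s) (κ s)) volume 0 t := by
      have := (P.int_S ht (contF hκ hθ htτ)).comp_sub_left t
      simp only [sub_sub_cancel, sub_self, sub_zero] at this
      exact this.symm
    rw [P.z_reflect, ← P.G.intervalIntegral_comp_comm hi0]
    have e : ∀ s ∈ uIcc 0 t, P.G (P.S (t - s) (κ s)) =
        P.G (κ s) + ∫ r in (0:ℝ)..(t - s), P.S r (κ s) := by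
      intro s hs
      rw [uIcc_of_le ht] at hs
      rw [← P.gS (t - s) (by linarith [hs.2])]
      abel
    rw [intervalIntegral.integral_congr e, intervalIntegral.integral_add hi1 ?_,
      P.triangle ht hκc]
    have hi2 : IntervalIntegrable (fun s => P.G (P.S (t - s) (κ s))) volume 0 t :=
      ⟨P.G.integrable_comp hi0.1, P.G.integrable_comp hi0.2⟩
    refine (hi2.sub hi1).congr ?_
    intro s hs
    beta_reduce
    rw [e s (uIoc_subset_uIcc hs)]
    abel
  have hGQ : ∀ s ∈ uIcc 0 t, P.G (P.Q κ s) = P.G (κ s) + P.z κ s := by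
    intro s hs
    rw [uIcc_of_le ht] at hs
    rw [← P.G_eq hκ hθ hs.1 (hs.2.trans htτ), map_sub]
    abel
  have hzc : ContinuousOn (P.z κ) (Icc 0 t) := by
    have : ContinuousOn (fun s => P.G (P.Q κ s - κ s)) (Icc 0 t) :=
      P.G.continuous.comp_continuousOn (hQc.sub hκc)
    refine this.congr fun s hs => ?_
    beta_reduce
    rw [P.G_eq hκ hθ hs.1 (hs.2.trans htτ)]
  rw [hGz, intervalIntegral.integral_congr hGQ, intervalIntegral.integral_add]
  · exact (P.G.continuous.comp_continuousOn hκc).intervalIntegrable_of_Icc ht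
  · exact hzc.intervalIntegrable_of_Icc ht

theorem Q_sub {κ' : ℝ → X} {H' : ℝ} (hκ : TH τ θ H κ) (hκ' : TH τ θ H' κ') (hθ : 0 < θ) {t : ℝ}
    (ht : 0 ≤ t) (htτ : t ≤ τ) : P.Q (fun s => κ s - κ' s) t = P.Q κ t - P.Q κ' t := by
  simp only [Q]
  rw [map_sub, add_sub_add_comm, ← intervalIntegral.integral_sub
    (P.intQ hκ hθ ht htτ ht le_rfl).1 (P.intQ hκ' hθ ht htτ ht le_rfl).1]
  congr 2
  ext r
  rw [← map_sub]
  congr 1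
  abel

end MRSys

/-! ### Gaussian kernels -/

namespace Heat

/-- The kernels `r^{-q} s^j exp(-s²/(4r))`, a family closed under `∂_s` and `∂_r`. -/
def K (j : ℕ) (q r s : ℝ) : ℝ := r ^ (-q) * s ^ j * Real.exp (-(s ^ 2) / (4 * r))

theorem absDom {r β : ℝ} (hr : 0 < r) (hβ : 0 ≤ β) (x : ℝ) :
    |x| ^ β * Real.exp (-(x ^ 2) / (4 * r)) ≤
      Real.exp (2 * r * β ^ 2) * Real.exp (-(x ^ 2) / (8 * r)) := by
  have h1 : |x| ^ β ≤ Real.exp (|x| * β) := by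
    rw [Real.exp_mul]
    exact Real.rpow_le_rpow (abs_nonneg _) (by linarith [Real.add_one_le_exp |x|]) hβ
  calc _ ≤ Real.exp (|x| * β) * Real.exp (-(x ^ 2) / (4 * r)) := by gcongr
    _ ≤ _ := by
      rw [← Real.exp_add, ← Real.exp_add, Real.exp_le_exp]
      have h2 : |x| * β ≤ 2 * r * β ^ 2 + x ^ 2 / (8 * r) := by
        have h3 : (|x| - 4 * r * β) ^ 2 / (8 * r) ≥ 0 := by positivity
        have h4 : (|x| - 4 * r * β) ^ 2 / (8 * r) = x ^ 2 / (8 * r) - |x| * β + 2 * r * β ^ 2 := by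
          have := sq_abs x
          field_simp
          rw [← this]; ring
        linarith
      have h5 : -(x ^ 2) / (4 * r) = -(x ^ 2 / (8 * r)) - x ^ 2 / (8 * r) := by
        field_simp; ring
      have h6 : -(x ^ 2) / (8 * r) = -(x ^ 2 / (8 * r)) := by ring
      rw [h5, h6]
      linarith

theorem gauss_int {c : ℝ} (hc : 0 < c) : Integrable (fun x : ℝ => Real.exp (-(x ^ 2) / c)) := by
  have := integrable_exp_neg_mul_sq (b := 1 / c) (by positivity)
  refine this.congr (Eventually.of_forall fun x => ?_)
  simp only
  congr 1; ring

theorem abs_int {r β : ℝ} (hr : 0 < r) (hβ : 0 ≤ β) :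
    Integrable (fun x : ℝ => |x| ^ β * Real.exp (-(x ^ 2) / (4 * r))) := by
  refine ((gauss_int (c := 8 * r) (by positivity)).const_mul (Real.exp (2 * r * β ^ 2))).mono' ?_ ?_
  · apply Measurable.aestronglyMeasurable
    fun_prop
  · refine Eventually.of_forall fun x => ?_
    rw [Real.norm_of_nonneg (by positivity)]
    exact absDom hr hβ x

/-- Absolute Gaussian moments. -/
def mom (β : ℝ) : ℝ := ∫ x : ℝ, |x| ^ β * Real.exp (-(x ^ 2) / 4)

theorem mom_nonneg (β : ℝ) : 0 ≤ mom β := integral_nonneg fun x => by positivity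

theorem mom_scale {r β : ℝ} (hr : 0 < r) :
    ∫ x : ℝ, |x| ^ β * Real.exp (-(x ^ 2) / (4 * r)) = r ^ ((β + 1) / 2) * mom β := by
  have h := Measure.integral_comp_mul_left
    (fun x : ℝ => |x| ^ β * Real.exp (-(x ^ 2) / (4 * r))) (√r)
  have hs : 0 < √r := Real.sqrt_pos.2 hr
  have e : ∀ x : ℝ, |√r * x| ^ β * Real.exp (-((√r * x) ^ 2) / (4 * r)) =
      √r ^ β * (|x| ^ β * Real.exp (-(x ^ 2) / 4)) := by
    intro x
    rw [abs_mul, abs_of_pos hs, Real.mul_rpow hs.le (abs_nonneg _), mul_pow, Real.sq_sqrt hr.le,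
      mul_assoc]
    congr 3
    field_simp
  simp only [e] at h
  rw [integral_const_mul, smul_eq_mul, abs_of_pos (by positivity)] at h
  have h2 : √r * √r ^ β = r ^ ((β + 1) / 2) := by
    rw [Real.sqrt_eq_rpow, ← Real.rpow_mul hr.le, ← Real.rpow_add hr]
    congr 1; ring
  rw [← h2, mul_assoc]
  change _ = √r * (√r ^ β * ∫ x : ℝ, _)
  rw [h]
  field_simp

theorem K_abs {r : ℝ} (hr : 0 < r) (j : ℕ) (q s : ℝ) :
    |K j q r s| = r ^ (-q) * (|s| ^ (j : ℝ) * Real.exp (-(s ^ 2) / (4 * r))) := by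
  rw [K, abs_mul, abs_mul, abs_of_pos (Real.rpow_pos_of_pos hr _), Real.abs_exp, abs_pow,
    Real.rpow_natCast, mul_assoc]

theorem K_cont (j : ℕ) (q r : ℝ) : Continuous (K j q r) := by
  unfold K
  fun_prop

/-- The size of the locally uniform Gaussian majorant of `K j q`. -/
def domC (j : ℕ) (q r0 : ℝ) : ℝ :=
  ((r0 / 2) ^ (-q) + (2 * r0) ^ (-q)) * Real.exp (4 * r0 * (j : ℝ) ^ 2) * Real.exp (1 / (16 * r0))

/-- A Gaussian majorant of the kernels, uniform for `r` near `r0` and `y` near `y0`; it justifies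
differentiation under the integral sign. -/
theorem K_dom {r0 r y0 y : ℝ} (hr0 : 0 < r0) (hr : r ∈ Icc (r0 / 2) (2 * r0)) (hy : |y - y0| ≤ 1)
    (j : ℕ) (q s : ℝ) :
    |K j q r (s - y)| ≤ domC j q r0 * Real.exp (-((s - y0) ^ 2) / (32 * r0)) := by
  have hr' : 0 < r := by linarith [hr.1]
  rw [K_abs hr']
  have h1 := absDom hr' (Nat.cast_nonneg j) (s - y)
  have h2 : r ^ (-q) ≤ (r0 / 2) ^ (-q) + (2 * r0) ^ (-q) := by
    rcases le_total 0 (-q) with h | h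
    · have := Real.rpow_le_rpow hr'.le hr.2 h
      have : 0 ≤ (r0 / 2) ^ (-q) := by positivity
      linarith
    · have := Real.rpow_le_rpow_of_nonpos (by positivity) hr.1 h
      have : 0 ≤ (2 * r0) ^ (-q) := by positivity
      linarith
  have h3 : Real.exp (2 * r * (j : ℝ) ^ 2) ≤ Real.exp (4 * r0 * (j : ℝ) ^ 2) := by
    rw [Real.exp_le_exp]
    have := hr.2
    have : 0 ≤ (j : ℝ) ^ 2 := by positivity
    nlinarith
  have h4 : Real.exp (-((s - y) ^ 2) / (8 * r)) ≤
      Real.exp (1 / (16 * r0)) * Real.exp (-((s - y0) ^ 2) / (32 * r0)) := by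
    rw [← Real.exp_add, Real.exp_le_exp]
    have e1 : (s - y) ^ 2 / (16 * r0) ≤ (s - y) ^ 2 / (8 * r) := by
      have := hr.2
      exact div_le_div_of_nonneg_left (sq_nonneg _) (by positivity) (by linarith)
    have e2 : (s - y0) ^ 2 ≤ 2 * (s - y) ^ 2 + 2 := by
      have : (y - y0) ^ 2 ≤ 1 := by
        rw [← sq_abs]; nlinarith [abs_nonneg (y - y0)]
      nlinarith [sq_nonneg (s - y - (y - y0))]
    have e3 : (s - y0) ^ 2 / (32 * r0) ≤ (2 * (s - y) ^ 2 + 2) / (32 * r0) := by gcongr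
    have e4 : (2 * (s - y) ^ 2 + 2) / (32 * r0) = (s - y) ^ 2 / (16 * r0) + 1 / (16 * r0) := by
      field_simp; ring
    rw [neg_div, neg_div]
    linarith
  calc _ ≤ ((r0 / 2) ^ (-q) + (2 * r0) ^ (-q)) * (Real.exp (4 * r0 * (j : ℝ) ^ 2) *
        (Real.exp (1 / (16 * r0)) * Real.exp (-((s - y0) ^ 2) / (32 * r0)))) := by
        refine mul_le_mul h2 (h1.trans ?_) (by positivity) (by positivity)
        exact mul_le_mul h3 h4 (by positivity) (by positivity)
    _ = _ := by rw [domC]; ring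

theorem K_ds {r : ℝ} (hr : 0 < r) (j : ℕ) (q s : ℝ) :
    HasDerivAt (K j q r) (j * K (j - 1) q r s - 1 / 2 * K (j + 1) (q + 1) r s) s := by
  have h1 : HasDerivAt (fun s : ℝ => -(s ^ 2) / (4 * r)) (-(2 * s) / (4 * r)) s := by
    simpa using ((hasDerivAt_pow 2 s).neg.div_const (4 * r))
  have h2 := (((hasDerivAt_pow j s).const_mul (r ^ (-q))).mul h1.exp)
  refine h2.congr_deriv ?_
  have e : r ^ (-(q + 1)) = r ^ (-q) / r := by
    rw [neg_add, ← sub_eq_add_neg, Real.rpow_sub_one hr.ne']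
  simp only [K, e]
  field_simp
  ring

theorem K_dr {r : ℝ} (hr : 0 < r) (j : ℕ) (q s : ℝ) :
    HasDerivAt (fun r => K j q r s) (-q * K j (q + 1) r s + 1 / 4 * K (j + 2) (q + 2) r s) r := by
  have h1 : HasDerivAt (fun r : ℝ => -(s ^ 2) / (4 * r)) (s ^ 2 / (4 * r ^ 2)) r := by
    have := ((hasDerivAt_id r).const_mul 4).inv (by simp; positivity)
    have := this.const_mul (-(s ^ 2))
    simp only [id, mul_one] at this
    refine HasDerivAt.congr_deriv (f' := _) (f := _) this ?_
    field_simp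
  have h2 := (((Real.hasDerivAt_rpow_const (p := -q) (Or.inl hr.ne')).mul_const (s ^ j)).mul h1.exp)
  refine h2.congr_deriv ?_
  have e : r ^ (-(q + 1)) = r ^ (-q) / r := by
    rw [neg_add, ← sub_eq_add_neg, Real.rpow_sub_one hr.ne']
  have e2 : r ^ (-(q + 2)) = r ^ (-q) / r ^ 2 := by
    rw [neg_add, ← sub_eq_add_neg, Real.rpow_sub hr]; norm_num
  have e3 : r ^ (-q - 1) = r ^ (-q) / r := by
    rw [Real.rpow_sub_one hr.ne']
  simp only [K, e, e2, e3]
  field_simp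
  ring

variable {F : ℝ → ℝ} {B : ℝ}

/-- Convolution of the bounded function `F` with the kernel `K j q r`. -/
def J (F : ℝ → ℝ) (j : ℕ) (q r y : ℝ) : ℝ := ∫ s, K j q r (s - y) * F s

theorem J_int (hF : Measurable F) (hB : ∀ s, |F s| ≤ B) (j : ℕ) (q : ℝ) {r : ℝ} (hr : 0 < r)
    (y : ℝ) : Integrable (fun s => K j q r (s - y) * F s) := by
  have hi : Integrable (fun s : ℝ => domC j q r * Real.exp (-((s - y) ^ 2) / (32 * r)) * B) :=
    (((gauss_int (c := 32 * r) (by positivity)).comp_sub_right y).const_mul _).mul_const _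
  refine hi.mono' ?_ (Eventually.of_forall fun s => ?_)
  · exact (((K_cont j q r).measurable.comp (measurable_id.sub_const y)).mul hF).aestronglyMeasurable
  · rw [norm_mul]
    have := K_dom (y := y) (y0 := y) hr (r := r) ⟨by linarith, by linarith⟩ (by simp) j q s
    exact mul_le_mul this (hB s) (abs_nonneg _) ((abs_nonneg _).trans this)

theorem J_abs (hB : ∀ s, |F s| ≤ B) (j : ℕ) (q : ℝ) {r : ℝ}
    (hr : 0 < r) (y : ℝ) : |J F j q r y| ≤ r ^ (((j : ℝ) + 1) / 2 - q) * mom j * B := by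
  have hi : Integrable (fun s : ℝ => r ^ (-q) *
      (|s - y| ^ (j : ℝ) * Real.exp (-((s - y) ^ 2) / (4 * r))) * B) :=
    (((abs_int hr (Nat.cast_nonneg j)).comp_sub_right y).const_mul _).mul_const _
  have := norm_integral_le_of_norm_le hi (f := fun s => K j q r (s - y) * F s)
    (Eventually.of_forall fun s => ?_)
  · refine this.trans (le_of_eq ?_)
    rw [integral_mul_const, integral_const_mul,
      integral_sub_right_eq_self (fun s : ℝ => |s| ^ (j : ℝ) * Real.exp (-(s ^ 2) / (4 * r))) y,
      mom_scale hr, ← mul_assoc, ← Real.rpow_add hr]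
    congr 3; ring
  · rw [norm_mul, Real.norm_eq_abs, Real.norm_eq_abs, K_abs hr]
    gcongr
    exact hB s

/-- Differentiation of the convolution in `y` under the integral sign. -/
theorem J_dy (hF : Measurable F) (hB : ∀ s, |F s| ≤ B) (j : ℕ) (q : ℝ) {r : ℝ} (hr : 0 < r)
    (y : ℝ) : HasDerivAt (J F j q r)
      (-(j * J F (j - 1) q r y - 1 / 2 * J F (j + 1) (q + 1) r y)) y := by
  have hI := fun j q => J_int hF hB j q hr y
  have hm : ∀ j q y, AEStronglyMeasurable (fun s => K j q r (s - y) * F s) := fun j q y =>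
    (J_int hF hB j q hr y).1
  have key := (hasDerivAt_integral_of_dominated_loc_of_deriv_le (μ := volume)
    (F := fun y s => K j q r (s - y) * F s) (x₀ := y) (s := Metric.closedBall y 1)
    (F' := fun y s => -((j * K (j - 1) q r (s - y) - 1 / 2 * K (j + 1) (q + 1) r (s - y)) * F s))
    (bound := fun s => (j * domC (j - 1) q r + 1 / 2 * domC (j + 1) (q + 1) r) *
      Real.exp (-((s - y) ^ 2) / (32 * r)) * B)
    (Metric.closedBall_mem_nhds y one_pos) (Eventually.of_forall fun y => hm j q y) (hI j q)
    ?_ ?_ ?_ ?_).2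
  · refine key.congr_deriv ?_
    rw [integral_neg]
    congr 1
    simp only [J, ← integral_const_mul]
    rw [← integral_sub ((hI _ _).const_mul _) ((hI _ _).const_mul _)]
    congr 1; ext s; ring
  · have := ((hm (j - 1) q y).const_mul (j : ℝ)).sub ((hm (j + 1) (q + 1) y).const_mul (1 / 2 : ℝ))
    refine this.neg.congr (Eventually.of_forall fun s => ?_)
    simp only [Pi.neg_apply, Pi.sub_apply]
    ring
  · refine Eventually.of_forall fun s y' hy' => ?_
    have hy' : |y' - y| ≤ 1 := by simpa [Real.dist_eq] using hy'
    have hr2 : r ∈ Icc (r / 2) (2 * r) := ⟨by linarith, by linarith⟩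
    have b1 := K_dom hr hr2 hy' (j - 1) q s
    have b2 := K_dom hr hr2 hy' (j + 1) (q + 1) s
    rw [norm_neg, norm_mul, Real.norm_eq_abs, Real.norm_eq_abs]
    refine mul_le_mul ?_ (hB s) (abs_nonneg _) (by unfold domC; positivity)
    refine (abs_sub _ _).trans ?_
    rw [abs_mul, abs_mul, Nat.abs_cast, abs_of_pos (by norm_num : (0:ℝ) < 1 / 2), add_mul,
      mul_assoc, mul_assoc]
    gcongr
  · exact (((gauss_int (c := 32 * r) (by positivity)).comp_sub_right y).const_mul _).mul_const _
  · refine Eventually.of_forall fun s y' _ => ?_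
    have h := (K_ds hr j q (s - y')).comp y' ((hasDerivAt_id y').const_sub s)
    refine (h.mul_const (F s)).congr_deriv ?_
    ring

/-- Differentiation of the convolution in `r` under the integral sign. -/
theorem J_dr (hF : Measurable F) (hB : ∀ s, |F s| ≤ B) (j : ℕ) (q : ℝ) {r : ℝ} (hr : 0 < r)
    (y : ℝ) : HasDerivAt (fun r => J F j q r y)
      (-q * J F j (q + 1) r y + 1 / 4 * J F (j + 2) (q + 2) r y) r := by
  have hI := fun j q => J_int hF hB j q hr y
  have hs : Icc (r / 2) (2 * r) ∈ 𝓝 r := Icc_mem_nhds (by linarith) (by linarith)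
  have key := (hasDerivAt_integral_of_dominated_loc_of_deriv_le (μ := volume)
    (F := fun r s => K j q r (s - y) * F s) (x₀ := r) (s := Icc (r / 2) (2 * r))
    (F' := fun r s => (-q * K j (q + 1) r (s - y) + 1 / 4 * K (j + 2) (q + 2) r (s - y)) * F s)
    (bound := fun s => (|q| * domC j (q + 1) r + 1 / 4 * domC (j + 2) (q + 2) r) *
      Real.exp (-((s - y) ^ 2) / (32 * r)) * B) hs
    (Eventually.mono hs fun r' hr' => (J_int hF hB j q (by linarith [hr'.1]) y).1) (hI j q)
    ?_ ?_ ?_ ?_).2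
  · refine key.congr_deriv ?_
    simp only [J, ← integral_const_mul]
    rw [← integral_add ((hI _ _).const_mul _) ((hI _ _).const_mul _)]
    congr 1; ext s; ring
  · have := ((hI j (q + 1)).1.const_mul (-q)).add ((hI (j + 2) (q + 2)).1.const_mul (1 / 4 : ℝ))
    refine this.congr (Eventually.of_forall fun s => ?_)
    simp only [Pi.add_apply]
    ring
  · refine Eventually.of_forall fun s r' hr' => ?_
    have b1 := K_dom hr hr' (y := y) (y0 := y) (by simp) j (q + 1) s
    have b2 := K_dom hr hr' (y := y) (y0 := y) (by simp) (j + 2) (q + 2) s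
    rw [norm_mul, Real.norm_eq_abs, Real.norm_eq_abs]
    refine mul_le_mul ?_ (hB s) (abs_nonneg _) (by unfold domC; positivity)
    refine (abs_add_le _ _).trans ?_
    rw [abs_mul, abs_mul, abs_neg, abs_of_pos (by norm_num : (0:ℝ) < 1 / 4), add_mul,
      mul_assoc, mul_assoc]
    gcongr
  · exact (((gauss_int (c := 32 * r) (by positivity)).comp_sub_right y).const_mul _).mul_const _
  · refine Eventually.of_forall fun s r' hr' => ?_
    exact (K_dr (by linarith [hr'.1]) j q (s - y)).mul_const (F s)

end Heat

/-! ### The Dirichlet heat semigroup on an interval -/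

namespace Heat

/-- The even `2L`-periodic triangle wave which is the identity on `[0,L]`. -/
def tri (L y : ℝ) : ℝ := L / Real.pi * Real.arccos (Real.cos (Real.pi * y / L))

/-- The odd `2L`-periodic sign, equal to `1` on `(0,L)`. -/
def sgn (L y : ℝ) : ℝ :=
  if 0 < Real.sin (Real.pi * y / L) then 1 else if Real.sin (Real.pi * y / L) < 0 then -1 else 0

theorem tri_mem {L : ℝ} (hL : 0 < L) (y : ℝ) : tri L y ∈ Icc 0 L := by
  have h0 := Real.arccos_nonneg (Real.cos (Real.pi * y / L))
  have h1 := Real.arccos_le_pi (Real.cos (Real.pi * y / L))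
  have hp := Real.pi_pos
  refine ⟨by unfold tri; positivity, ?_⟩
  unfold tri
  calc _ ≤ L / Real.pi * Real.pi := by gcongr
    _ = L := by field_simp

theorem tri_cont (L : ℝ) : Continuous (tri L) := by
  unfold tri
  exact continuous_const.mul (Real.continuous_arccos.comp (Real.continuous_cos.comp (by fun_prop)))

theorem tri_eq {L : ℝ} (hL : 0 < L) {y : ℝ} (hy : y ∈ Icc 0 L) : tri L y = y := by
  have hp := Real.pi_pos
  unfold tri
  rw [Real.arccos_cos]
  · field_simp
  · have := hy.1; positivity
  · rw [div_le_iff₀ hL]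
    have := hy.2
    gcongr

theorem tri_neg (L y : ℝ) : tri L (-y) = tri L y := by
  unfold tri
  rw [show Real.pi * -y / L = -(Real.pi * y / L) by ring, Real.cos_neg]

theorem tri_le {L : ℝ} (hL : 0 < L) (y : ℝ) : tri L y ≤ |y| := by
  rcases le_total L |y| with h | h
  · exact (tri_mem hL y).2.trans h
  · have : tri L y = tri L |y| := by
      rcases abs_choice y with h | h <;> rw [h]
      rw [tri_neg]
    rw [this, tri_eq hL ⟨abs_nonneg _, h⟩]

theorem tri_sub {L : ℝ} (hL : 0 < L) (y : ℝ) : tri L (L - y) = L - tri L y := by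
  have hp := Real.pi_pos
  unfold tri
  rw [show Real.pi * (L - y) / L = Real.pi - Real.pi * y / L by field_simp, Real.cos_pi_sub,
    Real.arccos_neg]
  field_simp

theorem sgn_meas (L : ℝ) : Measurable (sgn L) := by
  unfold sgn
  refine Measurable.ite (measurableSet_lt measurable_const (by fun_prop)) measurable_const
    (Measurable.ite (measurableSet_lt (by fun_prop) measurable_const) measurable_const
      measurable_const)

theorem sgn_abs (L y : ℝ) : |sgn L y| ≤ 1 := by
  unfold sgn
  split_ifs <;> simp

theorem sgn_odd_aux {L y y' : ℝ}
    (h : Real.sin (Real.pi * y' / L) = -Real.sin (Real.pi * y / L)) : sgn L y' = -sgn L y := by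
  unfold sgn
  rw [h]
  rcases lt_trichotomy (Real.sin (Real.pi * y / L)) 0 with h | h | h
  · simp [h, h.not_gt]
  · simp [h]
  · simp [h, h.not_gt]

theorem sgn_pos {L : ℝ} (hL : 0 < L) {y : ℝ} (hy : y ∈ Ioo 0 L) : sgn L y = 1 := by
  have hp := Real.pi_pos
  unfold sgn
  rw [if_pos]
  apply Real.sin_pos_of_pos_of_lt_pi
  · have := hy.1; positivity
  · rw [div_lt_iff₀ hL]
    have := hy.2
    gcongr

/-- Continuous functions on `[0,L]`. -/
abbrev XL (L : ℝ) := C(Icc (0:ℝ) L, ℝ)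

/-- A map which is Lipschitz continuous away from `0` is continuous on `(0,∞)`. -/
theorem contOn_of_lip {E : Type*} [SeminormedAddCommGroup E] {f : ℝ → E} {M : ℝ}
    (h : ∀ r r', 0 < r → r ≤ r' → ‖f r' - f r‖ ≤ M * (r' - r) / r ^ 2) :
    ContinuousOn f (Ioi 0) := by
  intro r hr
  have hr : 0 < r := hr
  have hM : 0 ≤ M := by
    have := (norm_nonneg _).trans (h 1 2 (by norm_num) (by norm_num))
    norm_num at this
    exact this
  rw [ContinuousWithinAt, tendsto_iff_norm_sub_tendsto_zero]
  have h1 : Tendsto (fun t => M * |t - r| / (r/2) ^ 2) (𝓝[Ioi 0] r) (𝓝 0) := by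
    have : ContinuousAt (fun t => M * |t - r| / (r/2) ^ 2) r := by fun_prop
    have h2 := this.tendsto
    simp only [sub_self, abs_zero, mul_zero, zero_div] at h2
    exact h2.mono_left nhdsWithin_le_nhds
  refine squeeze_zero' (Eventually.of_forall fun _ => norm_nonneg _) ?_ h1
  have : ∀ᶠ t in 𝓝[Ioi 0] r, r / 2 < t :=
    nhdsWithin_le_nhds (lt_mem_nhds (by linarith))
  filter_upwards [this] with t ht
  rcases le_total r t with hst | hst
  · refine (h r t hr hst).trans ?_
    rw [abs_of_nonneg (by linarith)]
    have : 0 ≤ t - r := by linarith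
    gcongr; linarith
  · rw [norm_sub_rev]
    refine (h t r (by linarith) hst).trans ?_
    rw [abs_of_nonpos (by linarith), neg_sub]
    have : 0 ≤ r - t := by linarith
    gcongr

/-- The odd `2L`-periodic extension of a function on `[0,L]`. -/
def ext {L : ℝ} (hL : 0 < L) (f : XL L) (y : ℝ) : ℝ := sgn L y * f ⟨tri L y, tri_mem hL y⟩

section
variable {L : ℝ} (hL : 0 < L) (f : XL L)

theorem ext_meas : Measurable (ext hL f) := by
  refine (sgn_meas L).mul ?_
  exact (f.continuous.comp ((tri_cont L).subtype_mk _)).measurable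

theorem ext_abs (y : ℝ) : |ext hL f y| ≤ ‖f‖ := by
  rw [ext, abs_mul]
  calc _ ≤ 1 * ‖f‖ := by
        gcongr
        · exact sgn_abs L y
        · exact f.norm_coe_le_norm _
    _ = _ := one_mul _

theorem ext_eq {y : ℝ} (hy : y ∈ Ioo 0 L) : ext hL f y = f ⟨y, Ioo_subset_Icc_self hy⟩ := by
  rw [ext, sgn_pos hL hy, one_mul]
  congr 1
  exact Subtype.ext (tri_eq hL (Ioo_subset_Icc_self hy))

theorem ext_odd (y : ℝ) : ext hL f (-y) = -ext hL f y := by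
  unfold ext
  rw [sgn_odd_aux (y := y) (by rw [← Real.sin_neg]; congr 1; ring), neg_mul]
  congr 3
  exact Subtype.ext (tri_neg L y)

theorem ext_odd' (y : ℝ) : ext hL f (2 * L - y) = -ext hL f y := by
  unfold ext
  rw [sgn_odd_aux (y := y) (by
    rw [← Real.sin_two_pi_sub]; congr 1; field_simp), neg_mul]
  congr 3
  refine Subtype.ext ?_
  simp only
  rw [show 2 * L - y = L - (y - L) by ring, tri_sub hL, show y - L = -(L - y) by ring, tri_neg,
    tri_sub hL]
  ring

/-- The odd periodic extension keeps Hölder continuity when the function vanishes at the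
endpoints. -/
theorem ext_holder {α H : ℝ} (hα : 0 < α) (hH : ∀ x y, |f x - f y| ≤ H * |(x : ℝ) - y| ^ α)
    (h0 : f ⟨0, by simp [hL.le]⟩ = 0) (h1 : f ⟨L, by simp [hL.le]⟩ = 0) (y : Icc 0 L) (s : ℝ) :
    |ext hL f s - f y| ≤ 2 * H * |s - y| ^ α := by
  have hH0 : 0 ≤ H := by
    have := hH ⟨0, by simp [hL.le]⟩ ⟨L, by simp [hL.le]⟩
    rw [h0, h1] at this
    simp only [sub_self, abs_zero, zero_sub, abs_neg] at this
    exact nonneg_of_mul_nonneg_left this (by positivity)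
  have b0 : ∀ x : Icc (0:ℝ) L, |f x| ≤ H * (x : ℝ) ^ α := fun x => by
    have := hH x ⟨0, by simp [hL.le]⟩
    rwa [h0, sub_zero, sub_zero, abs_of_nonneg x.2.1] at this
  have b1 : ∀ x : Icc (0:ℝ) L, |f x| ≤ H * (L - (x : ℝ)) ^ α := fun x => by
    have := hH x ⟨L, by simp [hL.le]⟩
    have e : |(x : ℝ) - L| = L - x := by
      rw [abs_sub_comm, abs_of_nonneg (by linarith [x.2.2])]
    rwa [h1, sub_zero, e] at this
  have e0 : ∀ s, |ext hL f s| ≤ |f ⟨tri L s, tri_mem hL s⟩| := fun s => by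
    rw [ext, abs_mul]
    exact mul_le_of_le_one_left (abs_nonneg _) (sgn_abs L s)
  rcases lt_or_ge s 0 with hs | hs
  · have hys : |s - y| = y - s := by rw [abs_of_nonpos (by linarith [y.2.1])]; ring
    have c1 : |ext hL f s| ≤ H * |s - y| ^ α := by
      refine (e0 s).trans ((b0 _).trans ?_)
      simp only
      gcongr
      · exact (tri_mem hL s).1
      · refine (tri_le hL s).trans ?_
        rw [abs_of_neg hs, hys]; linarith [y.2.1]
    have c2 : |f y| ≤ H * |s - y| ^ α := by
      refine (b0 _).trans ?_
      gcongr
      · exact y.2.1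
      · rw [hys]; linarith
    refine (abs_sub _ _).trans (by linarith)
  rcases lt_or_ge L s with hs' | hs'
  · have hys : |s - y| = s - y := by rw [abs_of_nonneg (by linarith [y.2.2])]
    have c1 : |ext hL f s| ≤ H * |s - y| ^ α := by
      refine (e0 s).trans ((b1 _).trans ?_)
      simp only
      gcongr
      · linarith [(tri_mem hL s).2]
      · rw [← tri_sub hL]
        refine (tri_le hL _).trans ?_
        rw [abs_of_neg (by linarith), hys]; linarith [y.2.2]
    have c2 : |f y| ≤ H * |s - y| ^ α := by
      refine (b1 _).trans ?_
      gcongr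
      · linarith [y.2.2]
      · rw [hys]; linarith
    refine (abs_sub _ _).trans (by linarith)
  · have c1 : ext hL f s = f ⟨s, hs, hs'⟩ := by
      rcases hs.eq_or_lt with rfl | h
      · simp [ext, sgn, h0]
      rcases hs'.eq_or_lt with rfl | h'
      · have : Real.pi * s / s = Real.pi := by field_simp
        simp only [ext, sgn, this, h1]
        simp
      exact ext_eq hL f ⟨h, h'⟩
    rw [c1]
    refine (hH _ _).trans ?_
    have : 0 ≤ H * |s - y| ^ α := by positivity
    simp only
    linarith

end

/-- Convolution with `K j q r` of the odd periodic extension, as an operator on `C([0,L])`. -/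
def Jop {L : ℝ} (hL : 0 < L) (j : ℕ) (q r : ℝ) : XL L →L[ℝ] XL L :=
  if hr : 0 < r then
    LinearMap.mkContinuous
      { toFun := fun f => ⟨fun y => J (ext hL f) j q r y,
          (continuous_iff_continuousAt.2 fun y => (J_dy (ext_meas hL f) (ext_abs hL f) j q hr
            y).continuousAt).comp continuous_subtype_val⟩
        map_add' := fun f g => by
          ext y
          simp only [ContinuousMap.coe_mk, ContinuousMap.add_apply, J]
          rw [← integral_add (J_int (ext_meas hL f) (ext_abs hL f) j q hr y)
            (J_int (ext_meas hL g) (ext_abs hL g) j q hr y)]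
          congr 1; ext s
          simp only [ext, ContinuousMap.add_apply]
          ring
        map_smul' := fun c f => by
          ext y
          simp only [ContinuousMap.coe_mk, ContinuousMap.smul_apply, J, RingHom.id_apply,
            smul_eq_mul]
          rw [← integral_const_mul]
          congr 1; ext s
          simp only [ext, ContinuousMap.smul_apply, smul_eq_mul]
          ring }
      (r ^ (((j : ℝ) + 1) / 2 - q) * mom j) (fun f => by
        refine (ContinuousMap.norm_le _ ?_).2 fun y => ?_
        · have := mom_nonneg j
          positivity
        · exact J_abs (ext_abs hL f) j q hr y)
  else 0

section
variable {L : ℝ} (hL : 0 < L)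

theorem Jop_apply (j : ℕ) (q : ℝ) {r : ℝ} (hr : 0 < r) (f : XL L) (y : Icc 0 L) :
    Jop hL j q r f y = J (ext hL f) j q r y := by
  simp [Jop, hr]

theorem Jop_norm (j : ℕ) (q : ℝ) {r : ℝ} (hr : 0 < r) :
    ‖Jop hL j q r‖ ≤ r ^ (((j : ℝ) + 1) / 2 - q) * mom j := by
  rw [Jop, dif_pos hr]
  refine LinearMap.mkContinuous_norm_le _ ?_ _
  have := mom_nonneg j
  positivity

/-- The normalisation `(4π)^{-1/2}` of the heat kernel. -/
def c0 : ℝ := 1 / √(4 * Real.pi)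

theorem c0_pos : 0 < c0 := by unfold c0; positivity

/-- The Dirichlet heat semigroup on `C([0,L])`. -/
def S (r : ℝ) : XL L →L[ℝ] XL L := if r = 0 then 1 else c0 • Jop hL 0 (1 / 2) r

/-- The time derivative of the Dirichlet heat semigroup. -/
def S1 (r : ℝ) : XL L →L[ℝ] XL L :=
  c0 • (-(1 / 2 : ℝ) • Jop hL 0 (3 / 2) r + (1 / 4 : ℝ) • Jop hL 2 (5 / 2) r)

/-- Pointwise formula for `∂_r S`. -/
def s1 (F : ℝ → ℝ) (r y : ℝ) : ℝ :=
  c0 * (-(1 / 2) * J F 0 (3 / 2) r y + 1 / 4 * J F 2 (5 / 2) r y)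

theorem S_apply {r : ℝ} (hr : 0 < r) (f : XL L) (y : Icc 0 L) :
    S hL r f y = c0 * J (ext hL f) 0 (1 / 2) r y := by
  simp [S, hr.ne', Jop_apply hL _ _ hr]

theorem S1_apply {r : ℝ} (hr : 0 < r) (f : XL L) (y : Icc 0 L) :
    S1 hL r f y = s1 (ext hL f) r y := by
  simp [S1, s1, Jop_apply hL _ _ hr]
  ring

theorem s_dr {F : ℝ → ℝ} {B : ℝ} (hF : Measurable F) (hB : ∀ s, |F s| ≤ B) {r : ℝ} (hr : 0 < r)
    (y : ℝ) : HasDerivAt (fun r => c0 * J F 0 (1 / 2) r y) (s1 F r y) r := by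
  refine ((J_dr hF hB 0 (1 / 2) hr y).const_mul c0).congr_deriv ?_
  unfold s1
  norm_num

/-- Pointwise formula for `∂_r² S`. -/
def s2 (F : ℝ → ℝ) (r y : ℝ) : ℝ :=
  c0 * (3 / 4 * J F 0 (5 / 2) r y - 3 / 4 * J F 2 (7 / 2) r y + 1 / 16 * J F 4 (9 / 2) r y)

theorem s1_dr {F : ℝ → ℝ} {B : ℝ} (hF : Measurable F) (hB : ∀ s, |F s| ≤ B) {r : ℝ} (hr : 0 < r)
    (y : ℝ) : HasDerivAt (fun r => s1 F r y) (s2 F r y) r := by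
  have h1 := (J_dr hF hB 0 (3 / 2) hr y).const_mul (-(1 / 2))
  have h2 := (J_dr hF hB 2 (5 / 2) hr y).const_mul (1 / 4)
  refine ((h1.add h2).const_mul c0).congr_deriv ?_
  unfold s2
  rw [show (3 / 2 + 1 : ℝ) = 5 / 2 by norm_num, show (3 / 2 + 2 : ℝ) = 7 / 2 by norm_num,
    show (5 / 2 + 1 : ℝ) = 7 / 2 by norm_num, show (5 / 2 + 2 : ℝ) = 9 / 2 by norm_num]
  ring

/-- The constant of the heat semigroup estimates. -/
def MM : ℝ := 1 + c0 * (mom 0 + mom 2 + mom 4)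

theorem mom_cast : mom ((2 : ℕ) : ℝ) = mom 2 ∧ mom ((0 : ℕ) : ℝ) = mom 0 ∧
    mom ((4 : ℕ) : ℝ) = mom 4 := by norm_num

theorem s2_abs {F : ℝ → ℝ} {B : ℝ} (hB : ∀ s, |F s| ≤ B) {r : ℝ} (hr : 0 < r) (y : ℝ) :
    |s2 F r y| ≤ MM * B / r ^ 2 := by
  have hB0 : 0 ≤ B := (abs_nonneg _).trans (hB 0)
  have h0 := J_abs hB 0 (5 / 2) hr y
  have h2 := J_abs hB 2 (7 / 2) hr y
  have h4 := J_abs hB 4 (9 / 2) hr y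
  norm_num at h0 h2 h4
  have m0 := mom_nonneg 0
  have m2 := mom_nonneg 2
  have m4 := mom_nonneg 4
  have hc := c0_pos
  rw [s2, abs_mul, abs_of_pos hc]
  have h : |3 / 4 * J F 0 (5 / 2) r y - 3 / 4 * J F 2 (7 / 2) r y + 1 / 16 * J F 4 (9 / 2) r y| ≤
      (mom 0 + mom 2 + mom 4) * (r ^ 2)⁻¹ * B := by
    refine (abs_add_le _ _).trans ((add_le_add (abs_sub _ _) le_rfl).trans ?_)
    rw [abs_mul, abs_mul, abs_mul]
    norm_num
    have : 0 ≤ (r ^ 2)⁻¹ * mom 0 * B := by positivity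
    have : 0 ≤ (r ^ 2)⁻¹ * mom 2 * B := by positivity
    have : 0 ≤ (r ^ 2)⁻¹ * mom 4 * B := by positivity
    nlinarith
  calc _ ≤ c0 * ((mom 0 + mom 2 + mom 4) * (r ^ 2)⁻¹ * B) := by gcongr
    _ ≤ MM * B / r ^ 2 := by
      unfold MM
      have : 0 ≤ B * (r ^ 2)⁻¹ := by positivity
      rw [div_eq_mul_inv]
      nlinarith

theorem S_norm {r : ℝ} (hr : 0 ≤ r) : ‖S hL r‖ ≤ MM := by
  have m0 := mom_nonneg 0
  have m2 := mom_nonneg 2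
  have m4 := mom_nonneg 4
  have hc := c0_pos
  rcases hr.eq_or_lt with rfl | hr
  · simp only [S, if_true]
    refine ContinuousLinearMap.norm_id_le.trans ?_
    unfold MM
    have : 0 ≤ c0 * (mom 0 + mom 2 + mom 4) := by positivity
    linarith
  · rw [S, if_neg hr.ne']
    refine (ContinuousLinearMap.opNorm_smul_le _ _).trans ?_
    rw [Real.norm_of_nonneg hc.le]
    have h := Jop_norm hL 0 (1 / 2) hr
    norm_num at h
    unfold MM
    nlinarith [mul_nonneg hc.le m2, mul_nonneg hc.le m4]

theorem S1_norm {r : ℝ} (hr : 0 < r) : ‖S1 hL r‖ ≤ MM / r := by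
  have m0 := mom_nonneg 0
  have m2 := mom_nonneg 2
  have m4 := mom_nonneg 4
  have hc := c0_pos
  have h0 := Jop_norm hL 0 (3 / 2) hr
  have h2 := Jop_norm hL 2 (5 / 2) hr
  norm_num [Real.rpow_neg_one] at h0 h2
  have h : ‖-(1 / 2 : ℝ) • Jop hL 0 (3 / 2) r + (1 / 4 : ℝ) • Jop hL 2 (5 / 2) r‖ ≤
      (mom 0 + mom 2 + mom 4) * r⁻¹ := by
    refine (ContinuousLinearMap.opNorm_add_le _ _).trans ((add_le_add
      (ContinuousLinearMap.opNorm_smul_le _ _) (ContinuousLinearMap.opNorm_smul_le _ _)).trans ?_)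
    norm_num
    have : 0 ≤ r⁻¹ * mom 0 := by positivity
    have : 0 ≤ r⁻¹ * mom 2 := by positivity
    have : 0 ≤ r⁻¹ * mom 4 := by positivity
    nlinarith
  refine (ContinuousLinearMap.opNorm_smul_le _ _).trans ?_
  rw [Real.norm_of_nonneg hc.le]
  calc _ ≤ c0 * ((mom 0 + mom 2 + mom 4) * r⁻¹) := by gcongr
    _ ≤ MM / r := by
      unfold MM
      have : 0 ≤ r⁻¹ := by positivity
      rw [div_eq_mul_inv]
      nlinarith

theorem S1_lip {r r' : ℝ} (hr : 0 < r) (hrr : r ≤ r') :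
    ‖S1 hL r' - S1 hL r‖ ≤ MM * (r' - r) / r ^ 2 := by
  have m0 := mom_nonneg 0
  have m2 := mom_nonneg 2
  have m4 := mom_nonneg 4
  have hc := c0_pos
  have hMM : 0 ≤ MM := by unfold MM; positivity
  have hr2 : 0 ≤ r' - r := by linarith
  refine ContinuousLinearMap.opNorm_le_bound _ (by positivity) fun f => ?_
  refine (ContinuousMap.norm_le _ (by positivity)).2 fun y => ?_
  have h := (convex_Icc r r').norm_image_sub_le_of_norm_hasDerivWithin_le
    (f := fun r => s1 (ext hL f) r y) (f' := fun r => s2 (ext hL f) r y)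
    (C := MM * ‖f‖ / r ^ 2) (x := r) (y := r')
    (fun x hx => (s1_dr (ext_meas hL f) (ext_abs hL f) (hr.trans_le hx.1) y).hasDerivWithinAt)
    (fun x hx => (s2_abs (ext_abs hL f) (hr.trans_le hx.1) y).trans (by
      have := hx.1
      gcongr)) ⟨le_rfl, hrr⟩ ⟨hrr, le_rfl⟩
  rw [← S1_apply hL hr, ← S1_apply hL (hr.trans_le hrr)] at h
  refine (le_of_eq ?_).trans (h.trans (le_of_eq ?_))
  · rfl
  · rw [Real.norm_of_nonneg hr2]; ring

theorem S1_contOn (v : XL L) : ContinuousOn (fun r => S1 hL r v) (Ioi 0) := by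
  refine contOn_of_lip (M := MM * ‖v‖) fun r r' hr hrr => ?_
  have h := (S1 hL r' - S1 hL r).le_of_opNorm_le (S1_lip hL hr hrr) v
  refine (le_of_eq ?_).trans (h.trans (le_of_eq ?_))
  · rfl
  · ring

theorem S_ftc {a b : ℝ} (ha : 0 < a) (hab : a ≤ b) (v : XL L) :
    S hL b v - S hL a v = ∫ r in a..b, S1 hL r v := by
  have hc : ContinuousOn (fun r => S1 hL r v) (Icc a b) :=
    (S1_contOn hL v).mono fun r hr => ha.trans_le hr.1
  have hi := hc.intervalIntegrable_of_Icc (μ := volume) hab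
  ext y
  have e := (ContinuousMap.evalCLM ℝ y : XL L →L[ℝ] ℝ).intervalIntegral_comp_comm hi
  simp only [ContinuousMap.evalCLM_apply] at e
  rw [← e, ContinuousMap.sub_apply, S_apply hL ha, S_apply hL (ha.trans_le hab)]
  have hu : uIcc a b = Icc a b := uIcc_of_le hab
  have e2 : ∫ r in a..b, S1 hL r v y = ∫ r in a..b, s1 (ext hL v) r y := by
    refine intervalIntegral.integral_congr fun r hr => ?_
    rw [hu] at hr
    exact S1_apply hL (ha.trans_le hr.1) v y
  rw [e2]
  symm
  refine intervalIntegral.integral_eq_sub_of_hasDerivAt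
    (f := fun r => c0 * J (ext hL v) 0 (1 / 2) r y) (fun r hr => ?_) ?_
  · rw [hu] at hr
    exact s_dr (ext_meas hL v) (ext_abs hL v) (ha.trans_le hr.1) y
  · refine ContinuousOn.intervalIntegrable fun r hr => ?_
    rw [hu] at hr
    exact (s1_dr (ext_meas hL v) (ext_abs hL v)
      (ha.trans_le hr.1) y).continuousAt.continuousWithinAt

end
end Heat

/-! ### Orbits of Hölder functions -/

namespace Heat

theorem K_even (q r s : ℝ) : K 0 q r (-s) = K 0 q r s := by simp [K]

/-- A Gaussian average over an even kernel vanishes at each centre of odd symmetry. -/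
theorem J_odd {F : ℝ → ℝ} {c : ℝ} (hF : ∀ s, F (2 * c - s) = -F s) (q r : ℝ) :
    J F 0 q r c = 0 := by
  have h := integral_sub_left_eq_self (fun s => K 0 q r (s - c) * F s) volume (2 * c)
  have h2 : ∫ s, K 0 q r (2 * c - s - c) * F (2 * c - s) = -J F 0 q r c := by
    rw [J, ← integral_neg]
    congr 1; ext s
    rw [hF, show 2 * c - s - c = -(s - c) by ring, K_even]
    ring
  rw [h2] at h
  change -J F 0 q r c = J F 0 q r c at h
  linarith

theorem c0_mom : c0 * mom 0 = 1 := by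
  have h := integral_gaussian (1 / 4)
  have h2 : mom 0 = √(Real.pi / (1 / 4)) := by
    rw [← h, mom]
    congr 1; ext x
    simp only [Real.rpow_zero, one_mul]
    congr 1; ring
  rw [h2, c0, show Real.pi / (1 / 4) = 4 * Real.pi by ring]
  have : 0 < √(4 * Real.pi) := by positivity
  field_simp

theorem J_one {r : ℝ} (hr : 0 < r) (y : ℝ) : c0 * J (fun _ => 1) 0 (1 / 2) r y = 1 := by
  have h := mom_scale (β := 0) hr
  have h1 : J (fun _ => 1) 0 (1 / 2) r y = r ^ (-(1 / 2) : ℝ) * (r ^ ((0 + 1) / 2 : ℝ) * mom 0) := by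
    rw [← h, ← integral_const_mul, ← integral_sub_right_eq_self _ y, J]
    congr 1; ext s
    simp [K]
  rw [h1, ← mul_assoc (r ^ _), ← Real.rpow_add hr]
  norm_num
  exact c0_mom

theorem s1_one {r : ℝ} (hr : 0 < r) (y : ℝ) : s1 (fun _ => 1) r y = 0 := by
  have h := s_dr (F := fun _ => 1) (B := 1) measurable_const (by simp) hr y
  have h2 : HasDerivAt (fun r => c0 * J (fun _ => 1) 0 (1 / 2) r y) 0 r := by
    refine (hasDerivAt_const r (1:ℝ)).congr_of_eventuallyEq ?_
    filter_upwards [lt_mem_nhds hr] with t ht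
    exact J_one ht y
  exact h.unique h2

theorem J_const_smul (c : ℝ) (j : ℕ) (q r y : ℝ) :
    J (fun _ => c) j q r y = c * J (fun _ => 1) j q r y := by
  unfold J
  rw [← integral_const_mul]
  congr 1; ext s; ring

theorem J_sub_const {F : ℝ → ℝ} {B : ℝ} (hF : Measurable F) (hB : ∀ s, |F s| ≤ B) (c : ℝ) (j : ℕ)
    (q : ℝ) {r : ℝ} (hr : 0 < r) (y : ℝ) :
    J (fun s => F s - c) j q r y = J F j q r y - c * J (fun _ => 1) j q r y := by
  rw [← J_const_smul]
  unfold J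
  rw [← integral_sub (J_int hF hB j q hr y) (J_int (F := fun _ => c) measurable_const
    (fun _ => le_rfl) j q hr y)]
  congr 1; ext s; ring

theorem s1_sub_const {F : ℝ → ℝ} {B : ℝ} (hF : Measurable F) (hB : ∀ s, |F s| ≤ B) (c : ℝ)
    {r : ℝ} (hr : 0 < r) (y : ℝ) : s1 (fun s => F s - c) r y = s1 F r y := by
  have h := s1_one hr y
  unfold s1 at h ⊢
  rw [J_sub_const hF hB _ _ _ hr, J_sub_const hF hB _ _ _ hr]
  linear_combination (-c) * h

/-- Gaussian average of a function with a Hölder zero at `y`. -/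
theorem J_holder {F : ℝ → ℝ} {H α y : ℝ} (hα : 0 ≤ α) (hF : ∀ s, |F s| ≤ H * |s - y| ^ α)
    (j : ℕ) (q : ℝ) {r : ℝ} (hr : 0 < r) :
    |J F j q r y| ≤ r ^ (((j : ℝ) + 1 + α) / 2 - q) * mom (j + α) * H := by
  have hi : Integrable (fun s : ℝ => r ^ (-q) *
      (|s - y| ^ ((j : ℝ) + α) * Real.exp (-((s - y) ^ 2) / (4 * r))) * H) :=
    (((abs_int hr (by positivity)).comp_sub_right y).const_mul _).mul_const _
  have h := norm_integral_le_of_norm_le (f := fun s => K j q r (s - y) * F s) hi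
    (Eventually.of_forall fun s => by
      rw [norm_mul, Real.norm_eq_abs, Real.norm_eq_abs, K_abs hr]
      calc _ ≤ r ^ (-q) * (|s - y| ^ (j : ℝ) * Real.exp (-((s - y) ^ 2) / (4 * r))) *
            (H * |s - y| ^ α) := by
            gcongr
            exact hF s
        _ = _ := by
          rw [Real.rpow_add_of_nonneg (abs_nonneg _) (by positivity) hα]
          ring)
  refine h.trans (le_of_eq ?_)
  rw [integral_mul_const, integral_const_mul,
    integral_sub_right_eq_self (fun s => |s| ^ ((j : ℝ) + α) * Real.exp (-(s ^ 2) / (4 * r))) y,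
    mom_scale hr, ← mul_assoc, ← Real.rpow_add hr]
  congr 3
  ring

/-- The Hölder constant of the orbit of a Hölder function. -/
def CO (α : ℝ) : ℝ := c0 * (2 * mom α + (mom α + mom (2 + α)) * (2 / α))

theorem CO_nonneg {α : ℝ} (hα : 0 < α) : 0 ≤ CO α := by
  have := c0_pos
  have := mom_nonneg α
  have := mom_nonneg (2 + α)
  unfold CO
  positivity

section
variable {L : ℝ} (hL : 0 < L)

/-- Pointwise bounds for the orbit of a Hölder function vanishing at the ends: its odd extension is
Hölder on `ℝ`, and both quantities are unchanged when a constant is subtracted from it. -/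
theorem S_sub_holder {α H : ℝ} (hα : 0 < α) {f : XL L}
    (hH : ∀ x y, |f x - f y| ≤ H * |(x : ℝ) - y| ^ α) (h0 : f ⟨0, by simp [hL.le]⟩ = 0)
    (h1 : f ⟨L, by simp [hL.le]⟩ = 0) {r : ℝ} (hr : 0 < r) (y : Icc 0 L) :
    |S hL r f y - f y| ≤ c0 * (2 * mom α) * H * r ^ (α / 2) ∧
    |S1 hL r f y| ≤ c0 * (mom α + mom (2 + α)) * H * r ^ (α / 2 - 1) := by
  have hh := ext_holder hL f hα hH h0 h1 y
  have hH0 : 0 ≤ H := by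
    have := hH ⟨0, by simp [hL.le]⟩ ⟨L, by simp [hL.le]⟩
    rw [h0, h1] at this
    simp only [sub_self, abs_zero, zero_sub, abs_neg] at this
    exact nonneg_of_mul_nonneg_left this (by positivity)
  have hc := c0_pos
  constructor
  · have e : S hL r f y - f y = c0 * J (fun s => ext hL f s - f y) 0 (1 / 2) r y := by
      rw [J_sub_const (ext_meas hL f) (ext_abs hL f) _ _ _ hr, S_apply hL hr]
      linear_combination (f y) * J_one hr y
    have h := J_holder hα.le hh 0 (1 / 2) hr
    rw [e, abs_mul, abs_of_pos hc]
    calc _ ≤ c0 * _ := mul_le_mul_of_nonneg_left h hc.le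
      _ = _ := by
        rw [show (((0:ℕ):ℝ) + 1 + α) / 2 - 1 / 2 = α / 2 by push_cast; ring]
        norm_num; ring
  · have e : S1 hL r f y = s1 (fun s => ext hL f s - f y) r y := by
      rw [s1_sub_const (ext_meas hL f) (ext_abs hL f) _ hr, S1_apply hL hr]
    have h := J_holder hα.le hh 0 (3 / 2) hr
    have h' := J_holder hα.le hh 2 (5 / 2) hr
    rw [show (((0:ℕ):ℝ) + 1 + α) / 2 - 3 / 2 = α / 2 - 1 by push_cast; ring] at h
    rw [show (((2:ℕ):ℝ) + 1 + α) / 2 - 5 / 2 = α / 2 - 1 by push_cast; ring] at h'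
    rw [e, s1, abs_mul, abs_of_pos hc]
    have m0 := mom_nonneg α
    have m2 := mom_nonneg (2 + α)
    have hp : 0 ≤ r ^ (α / 2 - 1) := by positivity
    calc _ ≤ c0 * (1 / 2 * (r ^ (α / 2 - 1) * mom (((0:ℕ):ℝ) + α) * (2 * H)) +
          1 / 4 * (r ^ (α / 2 - 1) * mom (((2:ℕ):ℝ) + α) * (2 * H))) := by
          gcongr
          refine (abs_add_le _ _).trans ?_
          rw [abs_mul, abs_mul]
          norm_num at h h' ⊢
          gcongr
      _ ≤ _ := by
        norm_num
        have : 0 ≤ c0 * (r ^ (α / 2 - 1) * mom (2 + α) * H) := by positivity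
        nlinarith

/-- The orbit of an `α`-Hölder function vanishing at the ends is `α/2`-Hölder in time. -/
theorem S_orbit {α H τ : ℝ} (hα : 0 < α) (hα1 : α < 1) {f : XL L}
    (hH : ∀ x y, |f x - f y| ≤ H * |(x : ℝ) - y| ^ α) (h0 : f ⟨0, by simp [hL.le]⟩ = 0)
    (h1 : f ⟨L, by simp [hL.le]⟩ = 0) : TH τ (α / 2) (CO α * H) (fun t => S hL t f) := by
  have hH0 : 0 ≤ H := by
    have := hH ⟨0, by simp [hL.le]⟩ ⟨L, by simp [hL.le]⟩
    rw [h0, h1] at this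
    simp only [sub_self, abs_zero, zero_sub, abs_neg] at this
    exact nonneg_of_mul_nonneg_left this (by positivity)
  have hc := c0_pos
  have m0 := mom_nonneg α
  have m2 := mom_nonneg (2 + α)
  have hC := CO_nonneg hα
  intro s t hs hst _
  rcases hst.eq_or_lt with rfl | hst
  · simp only [sub_self, norm_zero]
    positivity
  have ht : 0 < t - s := by linarith
  refine (ContinuousMap.norm_le _ (by positivity)).2 fun y => ?_
  rw [ContinuousMap.sub_apply, Real.norm_eq_abs]
  rcases hs.eq_or_lt with rfl | hs
  · have h := (S_sub_holder hL hα hH h0 h1 hst y).1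
    simp only [S, if_true, sub_zero] at h ⊢
    refine h.trans ?_
    unfold CO
    have : 0 ≤ (mom α + mom (2 + α)) * (2 / α) := by positivity
    gcongr
    linarith
  · have hftc : S hL t f y - S hL s f y = ∫ r in s..t, S1 hL r f y := by
      have e := S_ftc hL hs hst.le f
      have hi : IntervalIntegrable (fun r => S1 hL r f) volume s t :=
        ((S1_contOn hL f).mono fun r hr => hs.trans_le hr.1).intervalIntegrable_of_Icc hst.le
      have e2 := (ContinuousMap.evalCLM ℝ y : XL L →L[ℝ] ℝ).intervalIntegral_comp_comm hi
      simp only [ContinuousMap.evalCLM_apply] at e2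
      rw [e2, ← e]
      rfl
    rw [hftc]
    have hi : IntervalIntegrable (fun r : ℝ => c0 * (mom α + mom (2 + α)) * H * r ^ (α / 2 - 1))
        volume s t := (intervalIntegral.intervalIntegrable_rpow' (by linarith)).const_mul _
    refine (intervalIntegral.norm_integral_le_of_norm_le (f := fun r => S1 hL r f y) hst.le (Eventually.of_forall
      fun r hr => (S_sub_holder hL hα hH h0 h1 (hs.trans hr.1) y).2) hi).trans ?_
    rw [intervalIntegral.integral_const_mul, integral_rpow (Or.inl (by linarith))]
    have hsub : t ^ (α / 2) - s ^ (α / 2) ≤ (t - s) ^ (α / 2) := by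
      have := Real.rpow_add_le_add_rpow hs.le ht.le (p := α / 2) (by linarith) (by linarith)
      rw [show s + (t - s) = t by ring] at this
      linarith
    rw [sub_add_cancel]
    have e : (t ^ (α / 2) - s ^ (α / 2)) / (α / 2) ≤ (2 / α) * (t - s) ^ (α / 2) := by
      rw [div_eq_mul_inv, inv_div, mul_comm]
      gcongr
    calc _ ≤ c0 * (mom α + mom (2 + α)) * H * ((2 / α) * (t - s) ^ (α / 2)) := by gcongr
      _ ≤ _ := by
        unfold CO
        have : 0 ≤ c0 * mom α * H * (t - s) ^ (α / 2) := by positivity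
        nlinarith

end
end Heat

/-! ### The inverse of the Dirichlet second derivative -/

namespace Heat

section
variable {L : ℝ} (hL : 0 < L)

/-- The constant extension of a function on `[0,L]` to `ℝ`. -/
def cx (w : XL L) : ℝ → ℝ := IccExtend hL.le w

theorem cx_cont (w : XL L) : Continuous (cx hL w) := w.continuous.Icc_extend'

theorem cx_eq (w : XL L) (y : Icc 0 L) : cx hL w y = w y := IccExtend_val _ _ _

theorem cx_abs (w : XL L) (y : ℝ) : |cx hL w y| ≤ ‖w‖ := w.norm_coe_le_norm _

/-- The primitive of a continuous function on `[0,L]`. -/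
def V : XL L →L[ℝ] XL L :=
  LinearMap.mkContinuous
    { toFun := fun w => ⟨fun y => ∫ s in (0:ℝ)..y, cx hL w s,
        (intervalIntegral.continuous_primitive (fun a b =>
          (cx_cont hL w).intervalIntegrable a b) 0).comp continuous_subtype_val⟩
      map_add' := fun f g => by
        ext y
        simp only [ContinuousMap.coe_mk, ContinuousMap.add_apply]
        rw [← intervalIntegral.integral_add ((cx_cont hL f).intervalIntegrable _ _)
          ((cx_cont hL g).intervalIntegrable _ _)]
        rfl
      map_smul' := fun c f => by
        ext y
        simp only [ContinuousMap.coe_mk, ContinuousMap.smul_apply, RingHom.id_apply, smul_eq_mul]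
        rw [← intervalIntegral.integral_const_mul]
        rfl }
    L (fun w => by
      refine (ContinuousMap.norm_le _ (by positivity)).2 fun y => ?_
      have h := intervalIntegral.norm_integral_le_of_norm_le_const (a := 0) (b := (y : ℝ))
        (f := cx hL w) (C := ‖w‖) fun s _ => cx_abs hL w s
      refine h.trans ?_
      rw [sub_zero, abs_of_nonneg y.2.1, mul_comm]
      gcongr
      exact y.2.2)

theorem V_apply (w : XL L) (y : Icc 0 L) : V hL w y = ∫ s in (0:ℝ)..y, cx hL w s := rfl

theorem cx_V (w : XL L) {y : ℝ} (hy : y ∈ Icc 0 L) : cx hL (V hL w) y = ∫ s in (0:ℝ)..y, cx hL w s := by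
  rw [show y = ((⟨y, hy⟩ : Icc 0 L) : ℝ) from rfl, cx_eq]
  rfl

theorem V_deriv (w : XL L) {y : ℝ} (hy : y ∈ Icc 0 L) :
    HasDerivWithinAt (cx hL (V hL w)) (cx hL w y) (Icc 0 L) y := by
  have h := (intervalIntegral.integral_hasDerivAt_right ((cx_cont hL w).intervalIntegrable 0 y)
    ((cx_cont hL w).stronglyMeasurableAtFilter _ _) (cx_cont hL w).continuousAt)
  exact h.hasDerivWithinAt.congr (fun s hs => cx_V hL w hs) (cx_V hL w hy)

/-- The right endpoint of `[0,L]`. -/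
def pL : Icc 0 L := ⟨L, hL.le, le_rfl⟩
/-- The left endpoint of `[0,L]`. -/
def p0 : Icc 0 L := ⟨0, le_rfl, hL.le⟩
/-- The identity function on `[0,L]`. -/
def idL : XL L := ⟨fun y => y, continuous_subtype_val⟩

/-- The slope correction in the Dirichlet inverse. -/
def sl : XL L →L[ℝ] ℝ :=
  (1 / L) • (ContinuousMap.evalCLM ℝ (pL hL) : XL L →L[ℝ] ℝ).comp ((V hL).comp (V hL))

/-- The inverse of the second derivative with Dirichlet conditions on `[0,L]`. -/
def G : XL L →L[ℝ] XL L := (V hL).comp (V hL) - (sl hL).smulRight idL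

/-- The derivative of `G`. -/
def Z1 : XL L →L[ℝ] XL L := V hL - (sl hL).smulRight 1

theorem G_apply (w : XL L) (y : Icc 0 L) : G hL w y = V hL (V hL w) y - V hL (V hL w) (pL hL) / L * y := by
  simp only [G, sl, idL, ContinuousLinearMap.sub_apply, ContinuousMap.sub_apply,
    ContinuousLinearMap.smulRight_apply, ContinuousMap.smul_apply, ContinuousLinearMap.smul_apply,
    ContinuousLinearMap.comp_apply, ContinuousMap.evalCLM_apply, smul_eq_mul,
    ContinuousMap.coe_mk]
  ring

theorem Z1_apply (w : XL L) (y : Icc 0 L) : Z1 hL w y = V hL w y - V hL (V hL w) (pL hL) / L := by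
  simp [Z1, sl]
  ring

theorem cx_G (w : XL L) {y : ℝ} (hy : y ∈ Icc 0 L) :
    cx hL (G hL w) y = cx hL (V hL (V hL w)) y - V hL (V hL w) (pL hL) / L * y := by
  have h := G_apply hL w ⟨y, hy⟩
  rw [← cx_eq hL, ← cx_eq hL] at h
  exact h

theorem cx_Z1 (w : XL L) {y : ℝ} (hy : y ∈ Icc 0 L) :
    cx hL (Z1 hL w) y = cx hL (V hL w) y - V hL (V hL w) (pL hL) / L := by
  have h := Z1_apply hL w ⟨y, hy⟩
  rw [← cx_eq hL, ← cx_eq hL] at h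
  exact h

theorem G_deriv (w : XL L) {y : ℝ} (hy : y ∈ Icc 0 L) :
    HasDerivWithinAt (cx hL (G hL w)) (cx hL (Z1 hL w) y) (Icc 0 L) y := by
  have h := (V_deriv hL (V hL w) hy).sub
    ((hasDerivWithinAt_id y (Icc 0 L)).const_mul (V hL (V hL w) (pL hL) / L))
  refine (h.congr (fun s hs => cx_G hL w hs) (cx_G hL w hy)).congr_deriv ?_
  rw [cx_Z1 hL w hy, mul_one]

theorem Z1_deriv (w : XL L) {y : ℝ} (hy : y ∈ Icc 0 L) :
    HasDerivWithinAt (cx hL (Z1 hL w)) (cx hL w y) (Icc 0 L) y := by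
  have h := (V_deriv hL w hy).sub_const (V hL (V hL w) (pL hL) / L)
  exact h.congr (fun s hs => cx_Z1 hL w hs) (cx_Z1 hL w hy)

theorem G_end (w : XL L) : G hL w (p0 hL) = 0 ∧ G hL w (pL hL) = 0 := by
  rw [G_apply, G_apply]
  constructor
  · rw [V_apply]
    simp [p0]
  · have : ((pL hL : Icc 0 L) : ℝ) = L := rfl
    rw [this]
    field_simp
    ring

/-- `G` inverts the second derivative on functions vanishing at the ends. -/
theorem G_eq {h h1 h2 : ℝ → ℝ} {w v : XL L} (d1 : ∀ y, HasDerivAt h (h1 y) y)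
    (d2 : ∀ y, HasDerivAt h1 (h2 y) y) (hw : ∀ y : Icc 0 L, w y = h2 y)
    (hv : ∀ y : Icc 0 L, v y = h y) (h0 : h 0 = 0) (hLz : h L = 0) : G hL w = v := by
  have e1 : ∀ y ∈ Icc 0 L, cx hL (V hL w) y = h1 y - h1 0 := fun y hy => by
    rw [cx_V hL w hy]
    have hc : ∀ s ∈ uIcc 0 y, cx hL w s = h2 s := fun s hs => by
      rw [uIcc_of_le hy.1] at hs
      have hs' : s ∈ Icc 0 L := ⟨hs.1, hs.2.trans hy.2⟩
      rw [← hw ⟨s, hs'⟩, ← cx_eq hL]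
    refine intervalIntegral.integral_eq_sub_of_hasDerivAt (fun s hs => ?_)
      ((cx_cont hL w).intervalIntegrable _ _)
    rw [hc s hs]
    exact d2 s
  have e2 : ∀ y ∈ Icc 0 L, cx hL (V hL (V hL w)) y = h y - h 0 - y * h1 0 := fun y hy => by
    rw [cx_V hL _ hy]
    have hc : ∀ s ∈ uIcc 0 y, cx hL (V hL w) s = h1 s - h1 0 := fun s hs => by
      rw [uIcc_of_le hy.1] at hs
      exact e1 s ⟨hs.1, hs.2.trans hy.2⟩
    have := intervalIntegral.integral_eq_sub_of_hasDerivAt (f := fun s => h s - s * h1 0)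
      (f' := cx hL (V hL w)) (a := 0) (b := y) (fun s hs => by
        rw [hc s hs]
        exact ((d1 s).sub ((hasDerivAt_id s).mul_const (h1 0))).congr_deriv (by ring))
      ((cx_cont hL (V hL w)).intervalIntegrable _ _)
    rw [this]
    ring
  ext y
  rw [G_apply, ← cx_eq hL, ← cx_eq hL _ (pL hL), e2 _ y.2, e2 _ (pL hL).2, hv]
  have : ((pL hL : Icc 0 L) : ℝ) = L := rfl
  rw [this, h0, hLz]
  field_simp
  ring

/-- The heat equation `∂_r S = (S)''` in inverse form. -/
theorem gS1 {r : ℝ} (hr : 0 < r) (v : XL L) : G hL (S1 hL r v) = S hL r v := by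
  have hm := ext_meas hL v
  have hb := ext_abs hL v
  refine G_eq hL (h := fun y => c0 * J (ext hL v) 0 (1 / 2) r y)
    (h1 := fun y => c0 * (1 / 2 * J (ext hL v) 1 (3 / 2) r y)) (h2 := s1 (ext hL v) r)
    (fun y => ?_) (fun y => ?_) (fun y => S1_apply hL hr v y) (fun y => S_apply hL hr v y) ?_ ?_
  · refine ((J_dy hm hb 0 (1 / 2) hr y).const_mul c0).congr_deriv ?_
    rw [show (1 / 2 + 1 : ℝ) = 3 / 2 by norm_num]
    simp
  · refine (((J_dy hm hb 1 (3 / 2) hr y).const_mul (1 / 2)).const_mul c0).congr_deriv ?_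
    rw [show (3 / 2 + 1 : ℝ) = 5 / 2 by norm_num]
    unfold s1
    push_cast
    ring_nf
  · rw [J_odd (fun s => by rw [mul_zero, zero_sub, ext_odd]), mul_zero]
  · rw [J_odd (fun s => by rw [ext_odd']), mul_zero]

theorem Ginj : Function.Injective (G hL) := by
  rw [injective_iff_map_eq_zero]
  intro w hw
  have hu : UniqueDiffOn ℝ (Icc 0 L) := uniqueDiffOn_Icc hL
  have z0 : ∀ y, cx hL (0 : XL L) y = 0 := fun y => rfl
  have h1 : ∀ y ∈ Icc 0 L, cx hL (Z1 hL w) y = 0 := fun y hy => by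
    have := G_deriv hL w hy
    rw [hw] at this
    exact (hu y hy).eq_deriv _ this
      ((hasDerivWithinAt_const y (Icc 0 L) (0:ℝ)).congr (fun s _ => z0 s) (z0 y))
  ext y
  rw [← cx_eq hL w]
  exact (hu y y.2).eq_deriv _ (Z1_deriv hL w y.2)
      ((hasDerivWithinAt_const (y : ℝ) (Icc 0 L) (0:ℝ)).congr h1 (h1 y y.2))

/-- The supremum norm of `G w` is controlled by the `L¹` norm of `w`. -/
theorem G_L1 (w : XL L) : ‖G hL w‖ ≤ 2 * L * ∫ s in (0:ℝ)..L, |cx hL w s| := by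
  have hI : ∀ y ∈ Icc 0 L, |cx hL (V hL w) y| ≤ ∫ s in (0:ℝ)..L, |cx hL w s| := fun y hy => by
    rw [cx_V hL w hy]
    refine (intervalIntegral.abs_integral_le_integral_abs hy.1).trans ?_
    refine intervalIntegral.integral_mono_interval le_rfl hy.1 hy.2
      (Eventually.of_forall fun _ => abs_nonneg _) ((cx_cont hL w).abs.intervalIntegrable _ _)
  set I := ∫ s in (0:ℝ)..L, |cx hL w s|
  have hI0 : 0 ≤ I := (abs_nonneg _).trans (hI 0 ⟨le_rfl, hL.le⟩)
  have hI2 : ∀ y ∈ Icc 0 L, |cx hL (V hL (V hL w)) y| ≤ L * I := fun y hy => by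
    rw [cx_V hL _ hy]
    have h := intervalIntegral.norm_integral_le_of_norm_le_const (a := 0) (b := (y : ℝ))
      (f := cx hL (V hL w)) (C := I) fun s hs => by
        rw [uIoc_of_le hy.1] at hs
        exact hI s ⟨hs.1.le, hs.2.trans hy.2⟩
    refine h.trans ?_
    rw [sub_zero, abs_of_nonneg hy.1, mul_comm]
    gcongr
    exact hy.2
  refine (ContinuousMap.norm_le _ (by positivity)).2 fun y => ?_
  rw [G_apply, ← cx_eq hL, ← cx_eq hL _ (pL hL)]
  refine (abs_sub _ _).trans ?_
  have h1 := hI2 y y.2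
  have h2 := hI2 _ (pL hL).2
  rw [abs_mul, abs_div, abs_of_pos hL, abs_of_nonneg y.2.1]
  have : |cx hL (V hL (V hL w)) (pL hL)| / L * y ≤ L * I := by
    calc _ ≤ L * I / L * L := by
            have := y.2.1
            have := y.2.2
            have : 0 ≤ L * I / L := by positivity
            gcongr
      _ = _ := by field_simp
  linarith

/-- Pointwise convergence of the heat semigroup at interior points. -/
theorem S_tendsto (v : XL L) {y : ℝ} (hy : y ∈ Ioo 0 L) :
    Tendsto (fun a => c0 * J (ext hL v) 0 (1 / 2) a y) (𝓝[>] 0) (𝓝 (ext hL v y)) := by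
  have hcy : ContinuousAt (ext hL v) y := by
    refine ((cx_cont hL v).continuousAt).congr ?_
    filter_upwards [Ioo_mem_nhds hy.1 hy.2] with s hs
    rw [ext_eq hL v hs, ← cx_eq hL]
  have hsub : ∀ a : ℝ, 0 < a → J (ext hL v) 0 (1 / 2) a y =
      ∫ x : ℝ, Real.exp (-(x ^ 2) / 4) * ext hL v (y + √a * x) := fun a ha => by
    have hs : 0 < √a := Real.sqrt_pos.2 ha
    have h := Measure.integral_comp_mul_left (fun x : ℝ =>
      Real.exp (-(x ^ 2) / (4 * a)) * ext hL v (y + x)) (√a)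
    have h3 : ∫ x : ℝ, Real.exp (-(x ^ 2) / 4) * ext hL v (y + √a * x) =
      ∫ x : ℝ, Real.exp (-((√a * x) ^ 2) / (4 * a)) * ext hL v (y + √a * x) := by
      congr 1; ext x
      rw [mul_pow, Real.sq_sqrt ha.le]
      congr 2
      field_simp
    rw [h3, h, J, abs_of_pos (by positivity), smul_eq_mul, ← integral_const_mul,
      ← integral_sub_right_eq_self (fun x => (√a)⁻¹ * (Real.exp (-(x ^ 2) / (4 * a)) *
        ext hL v (y + x))) y]
    congr 1; ext s
    rw [K, Real.rpow_neg ha.le, ← Real.sqrt_eq_rpow, show y + (s - y) = s by ring]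
    ring
  have hlim : Tendsto (fun a : ℝ => ∫ x : ℝ, Real.exp (-(x ^ 2) / 4) * ext hL v (y + √a * x))
      (𝓝[>] 0) (𝓝 (∫ x : ℝ, Real.exp (-(x ^ 2) / 4) * ext hL v y)) := by
    refine tendsto_integral_filter_of_dominated_convergence
      (fun x => Real.exp (-(x ^ 2) / 4) * ‖v‖) (Eventually.of_forall fun a => ?_)
      (Eventually.of_forall fun a => Eventually.of_forall fun x => ?_)
      ((gauss_int (by norm_num)).mul_const _) (Eventually.of_forall fun x => ?_)
    · have := (ext_meas hL v).comp (show Measurable (fun x : ℝ => y + √a * x) by fun_prop)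
      exact (Measurable.mul (by fun_prop) this).aestronglyMeasurable
    · rw [norm_mul, Real.norm_of_nonneg (Real.exp_pos _).le]
      gcongr
      exact ext_abs hL v _
    · refine Tendsto.const_mul _ ?_
      have h1 : Tendsto (fun a : ℝ => y + √a * x) (𝓝[>] 0) (𝓝 y) := by
        have : ContinuousAt (fun a : ℝ => y + √a * x) 0 := by fun_prop
        have := this.tendsto
        simp only [Real.sqrt_zero, zero_mul, add_zero] at this
        exact this.mono_left nhdsWithin_le_nhds
      exact hcy.tendsto.comp h1
  have hfin : c0 * ∫ x : ℝ, Real.exp (-(x ^ 2) / 4) * ext hL v y = ext hL v y := by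
    rw [integral_mul_const]
    have : ∫ x : ℝ, Real.exp (-(x ^ 2) / 4) = mom 0 := by simp [mom]
    rw [this, ← mul_assoc, c0_mom, one_mul]
  rw [← hfin]
  refine (hlim.const_mul c0).congr' ?_
  filter_upwards [self_mem_nhdsWithin] with a ha
  rw [hsub a ha]

/-- A substitute for strong continuity at `0`: the heat semigroup converges pointwise in the interior
and boundedly, hence in `L¹`, and `G` is continuous from `L¹` to the supremum norm. -/
theorem G_tendsto (v : XL L) : Tendsto (fun a => G hL (S hL a v)) (𝓝[>] 0) (𝓝 (G hL v)) := by
  rw [tendsto_iff_norm_sub_tendsto_zero]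
  have hlim : Tendsto (fun a => 2 * L * ∫ s in (0:ℝ)..L, |cx hL (S hL a v - v) s|) (𝓝[>] 0)
      (𝓝 (2 * L * ∫ s in (0:ℝ)..L, (0:ℝ))) := by
    refine Tendsto.const_mul _ ?_
    refine intervalIntegral.tendsto_integral_filter_of_dominated_convergence
      (fun _ => (MM + 1) * ‖v‖) (Eventually.of_forall fun a => ?_) ?_ (by simp) ?_
    · exact (cx_cont hL _).abs.aestronglyMeasurable
    · filter_upwards [self_mem_nhdsWithin] with a ha
      refine Eventually.of_forall fun s _ => ?_
      rw [Real.norm_eq_abs, abs_abs]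
      refine (cx_abs hL _ s).trans ((norm_sub_le _ _).trans ?_)
      have := (S hL a).le_of_opNorm_le (S_norm hL (le_of_lt ha)) v
      linarith
    · have hne : ∀ᵐ x : ℝ, x ≠ L := by
        simp [ae_iff, measure_singleton]
      filter_upwards [hne] with s hs hs'
      rw [uIoc_of_le hL.le] at hs'
      have hs2 : s ∈ Ioo 0 L := ⟨hs'.1, lt_of_le_of_ne hs'.2 hs⟩
      have h := (S_tendsto hL v hs2).sub_const (ext hL v s)
      rw [sub_self] at h
      have h2 := h.abs
      rw [abs_zero] at h2
      refine h2.congr' ?_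
      filter_upwards [self_mem_nhdsWithin] with a ha
      have e := cx_eq hL (S hL a v - v) ⟨s, Ioo_subset_Icc_self hs2⟩
      simp only at e
      rw [e, ContinuousMap.sub_apply, S_apply hL ha, ext_eq hL v hs2]
  simp only [intervalIntegral.integral_zero, mul_zero] at hlim
  refine squeeze_zero (fun _ => norm_nonneg _) (fun a => ?_) hlim
  rw [← map_sub]
  exact G_L1 hL _

end
end Heat

/-! ### Parabolic semigroups on continuous functions -/

namespace Heat

section
variable {L : ℝ} (hL : 0 < L)

theorem MM_nonneg : 0 ≤ MM := by
  have := mom_nonneg 0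
  have := mom_nonneg 2
  have := mom_nonneg 4
  have := c0_pos
  unfold MM
  positivity

theorem S_contOn (v : XL L) : ContinuousOn (fun r => S hL r v) (Ioi 0) := by
  have hd : ∀ r r', 0 < r → r ≤ r' → ‖S hL r' v - S hL r v‖ ≤ MM * ‖v‖ * (r' - r) / r := by
    intro r r' hr hrr
    rw [S_ftc hL hr hrr]
    have h := intervalIntegral.norm_integral_le_of_norm_le_const (a := r) (b := r')
      (f := fun r => S1 hL r v) (C := MM / r * ‖v‖) fun s hs => by
        rw [uIoc_of_le hrr] at hs
        refine ((S1 hL s).le_of_opNorm_le (S1_norm hL (hr.trans hs.1)) v).trans ?_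
        have := MM_nonneg
        have := hs.1.le
        gcongr
    refine h.trans (le_of_eq ?_)
    rw [abs_of_nonneg (by linarith)]
    ring
  intro r hr
  have hr : 0 < r := hr
  have hM : 0 ≤ MM * ‖v‖ := mul_nonneg MM_nonneg (norm_nonneg _)
  rw [ContinuousWithinAt, tendsto_iff_norm_sub_tendsto_zero]
  have h1 : Tendsto (fun t => MM * ‖v‖ * |t - r| / (r/2)) (𝓝[Ioi 0] r) (𝓝 0) := by
    have : ContinuousAt (fun t => MM * ‖v‖ * |t - r| / (r/2)) r := by fun_prop
    have h2 := this.tendsto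
    simp only [sub_self, abs_zero, mul_zero, zero_div] at h2
    exact h2.mono_left nhdsWithin_le_nhds
  refine squeeze_zero' (Eventually.of_forall fun _ => norm_nonneg _) ?_ h1
  have : ∀ᶠ t in 𝓝[Ioi 0] r, r / 2 < t :=
    nhdsWithin_le_nhds (lt_mem_nhds (by linarith))
  filter_upwards [this] with t ht
  rcases le_total r t with hst | hst
  · refine (hd r t hr hst).trans ?_
    rw [abs_of_nonneg (by linarith)]
    have : 0 ≤ t - r := by linarith
    gcongr; linarith
  · rw [norm_sub_rev]
    refine (hd t r (by linarith) hst).trans ?_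
    rw [abs_of_nonpos (by linarith), neg_sub]
    have : 0 ≤ r - t := by linarith
    gcongr

/-- `gS1` integrated in time, the initial time being reached through `G_tendsto`. -/
theorem gS {t : ℝ} (ht : 0 ≤ t) (v : XL L) :
    G hL (S hL t v) - G hL v = ∫ r in (0:ℝ)..t, S hL r v := by
  rcases ht.eq_or_lt with rfl | ht
  · simp [S]
  have hb : ∀ a, ∀ r ∈ Ioc (0:ℝ) a, ‖S hL r v‖ ≤ MM * ‖v‖ * r ^ ((1:ℝ) - 1) := fun a r hr => by
    simp only [sub_self, Real.rpow_zero, mul_one]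
    exact (S hL r).le_of_opNorm_le (S_norm hL hr.1.le) v
  have hs := fun a (ha : 0 ≤ a) => sing_int (F := fun r => S hL r v) ha zero_lt_one
    ((S_contOn hL v).mono fun r hr => hr.1) (hb a)
  have key : ∀ a ∈ Ioc 0 t, G hL (S hL t v) - G hL (S hL a v) =
      (∫ r in (0:ℝ)..t, S hL r v) - ∫ r in (0:ℝ)..a, S hL r v := fun a ha => by
    rw [intervalIntegral.integral_interval_sub_left (hs t ht.le).1 (hs a ha.1.le).1, ← map_sub,
      S_ftc hL ha.1 ha.2]
    have hi : IntervalIntegrable (fun r => S1 hL r v) volume a t :=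
      ((S1_contOn hL v).mono fun r hr => ha.1.trans_le hr.1).intervalIntegrable_of_Icc ha.2
    rw [← (G hL).intervalIntegral_comp_comm hi]
    refine intervalIntegral.integral_congr fun r hr => ?_
    rw [uIcc_of_le ha.2] at hr
    exact gS1 hL (ha.1.trans_le hr.1) v
  have l1 : Tendsto (fun a => G hL (S hL t v) - G hL (S hL a v)) (𝓝[>] 0)
      (𝓝 (G hL (S hL t v) - G hL v)) := (G_tendsto hL v).const_sub _
  have l0 : Tendsto (fun a => ∫ r in (0:ℝ)..a, S hL r v) (𝓝[>] 0) (𝓝 0) := by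
    have hz : Tendsto (fun a : ℝ => MM * ‖v‖ * (a ^ (1:ℝ) / 1)) (𝓝[>] 0) (𝓝 0) := by
      have : ContinuousAt (fun a : ℝ => MM * ‖v‖ * (a ^ (1:ℝ) / 1)) 0 := by
        simp only [Real.rpow_one]
        fun_prop
      have := this.tendsto
      simp only [Real.rpow_one, zero_div, mul_zero] at this
      simp only [Real.rpow_one]
      exact this.mono_left nhdsWithin_le_nhds
    refine squeeze_zero_norm' ?_ hz
    filter_upwards [self_mem_nhdsWithin] with a ha
    exact (hs a (le_of_lt ha)).2
  have l2 := l0.const_sub (∫ r in (0:ℝ)..t, S hL r v)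
  rw [sub_zero] at l2
  refine tendsto_nhds_unique (l1.congr' ?_) l2
  filter_upwards [Ioc_mem_nhdsGT ht] with a ha
  exact key a ha

/-- The Dirichlet heat semigroup on `C([0,L])`. -/
def sys : MRSys (XL L) where
  S := S hL
  S1 := S1 hL
  G := G hL
  M := MM
  S_zero := by simp [S]
  bS _ := S_norm hL
  bS1 _ := S1_norm hL
  lS1 _ _ := S1_lip hL
  ftc _ _ := S_ftc hL
  gS1 _ := gS1 hL
  gS _ := gS hL
  Ginj := Ginj hL

end
end Heat

theorem intervalIntegral_equiv {X Y : Type*} [NormedAddCommGroup X] [NormedSpace ℝ X]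
    [NormedAddCommGroup Y] [NormedSpace ℝ Y] (e : X ≃ₗᵢ[ℝ] Y) (φ : ℝ → X) (a b : ℝ) :
    ∫ r in a..b, e (φ r) = e (∫ r in a..b, φ r) := by
  have h := fun s : Set ℝ => e.toContinuousLinearEquiv.integral_comp_comm
    (μ := volume.restrict s) φ
  simp only [LinearIsometryEquiv.coe_toContinuousLinearEquiv] at h
  simp only [intervalIntegral, h, map_sub]

/-- Transport of the semigroup data along a linear isometry. -/
def MRSys.conj {X Y : Type*} [NormedAddCommGroup X] [NormedSpace ℝ X] [CompleteSpace X]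
    [NormedAddCommGroup Y] [NormedSpace ℝ Y] [CompleteSpace Y] (P : MRSys X) (e : X ≃ₗᵢ[ℝ] Y) :
    MRSys Y :=
  have hn : ∀ A : X →L[ℝ] X, ∀ C : ℝ, ‖A‖ ≤ C →
      ‖((e : X →L[ℝ] Y).comp A).comp (e.symm : Y →L[ℝ] X)‖ ≤ C := fun A C h =>
    ContinuousLinearMap.opNorm_le_bound _ ((norm_nonneg _).trans h) fun v => by
      have := A.le_of_opNorm_le h (e.symm v)
      simpa using this
  { S := fun r => ((e : X →L[ℝ] Y).comp (P.S r)).comp (e.symm : Y →L[ℝ] X)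
    S1 := fun r => ((e : X →L[ℝ] Y).comp (P.S1 r)).comp (e.symm : Y →L[ℝ] X)
    G := ((e : X →L[ℝ] Y).comp P.G).comp (e.symm : Y →L[ℝ] X)
    M := P.M
    S_zero := by
      ext v
      simp [P.S_zero]
    bS := fun r hr => hn _ _ (P.bS r hr)
    bS1 := fun r hr => hn _ _ (P.bS1 r hr)
    lS1 := fun r r' hr h => by
      have := hn _ _ (P.lS1 r r' hr h)
      rwa [ContinuousLinearMap.comp_sub, ContinuousLinearMap.sub_comp] at this
    ftc := fun a b ha hab v => by
      have h := intervalIntegral_equiv e (fun r => P.S1 r (e.symm v)) a b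
      have h2 := P.ftc a b ha hab (e.symm v)
      rw [← h2] at h
      refine Eq.trans ?_ (h.symm.trans rfl)
      simp
    gS1 := fun r hr v => by
      simp [P.gS1 r hr]
    gS := fun t ht v => by
      have h := intervalIntegral_equiv e (fun r => P.S r (e.symm v)) 0 t
      have h2 := P.gS t ht (e.symm v)
      rw [← h2] at h
      refine Eq.trans ?_ (h.symm.trans rfl)
      simp
    Ginj := by
      intro v w h
      simpa [P.Ginj.eq_iff] using h }

/-- Continuous functions on `[-ℓ,ℓ]`. -/
abbrev XI (ℓ : ℝ) := C(Icc (-ℓ) ℓ, ℝ)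

/-- The extension of a function on `[-ℓ,ℓ]` to `ℝ` by its boundary values. -/
def cI {ℓ : ℝ} (hl : 0 < ℓ) (w : XI ℓ) : ℝ → ℝ := IccExtend (by linarith : -ℓ ≤ ℓ) w

section
variable {ℓ : ℝ} (hl : 0 < ℓ)

theorem cI_cont (w : XI ℓ) : Continuous (cI hl w) := w.continuous.Icc_extend'

theorem cI_eq (w : XI ℓ) (y : Icc (-ℓ) ℓ) : cI hl w y = w y := IccExtend_val _ _ _

theorem cI_mk (w : XI ℓ) {y : ℝ} (hy : y ∈ Icc (-ℓ) ℓ) : cI hl w y = w ⟨y, hy⟩ :=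
  cI_eq hl w ⟨y, hy⟩

theorem cI_abs (w : XI ℓ) (y : ℝ) : |cI hl w y| ≤ ‖w‖ := w.norm_coe_le_norm _

/-- The right endpoint of `[-ℓ,ℓ]`. -/
def pR : Icc (-ℓ) ℓ := ⟨ℓ, by linarith, le_rfl⟩
/-- The left endpoint of `[-ℓ,ℓ]`. -/
def pM : Icc (-ℓ) ℓ := ⟨-ℓ, le_rfl, by linarith⟩

end

/-- Semigroup data on `C([-ℓ,ℓ])` for the Dirichlet realisation of `w ↦ W w'' - B w'`: the inverse
`P.G` of this operator, together with its first two derivatives `Z1`, `Z2`; `C0` controls the orbits of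
`α`-Hölder functions vanishing at the ends. -/
structure ParaSys (ℓ : ℝ) (hl : 0 < ℓ) (α : ℝ) where
  P : MRSys (XI ℓ)
  hM : P.M = Heat.MM
  Z1 : XI ℓ →L[ℝ] XI ℓ
  Z2 : XI ℓ →L[ℝ] XI ℓ
  W : XI ℓ
  B : XI ℓ
  C0 : ℝ
  C0_nonneg : 0 ≤ C0
  hz1 : ∀ w, ∀ x ∈ Icc (-ℓ) ℓ,
    HasDerivWithinAt (cI hl (P.G w)) (cI hl (Z1 w) x) (Icc (-ℓ) ℓ) x
  hz2 : ∀ w, ∀ x ∈ Icc (-ℓ) ℓ,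
    HasDerivWithinAt (cI hl (Z1 w)) (cI hl (Z2 w) x) (Icc (-ℓ) ℓ) x
  hend : ∀ w, P.G w (pM hl) = 0 ∧ P.G w (pR hl) = 0
  hW : ∀ w x, W x * Z2 w x - B x * Z1 w x = w x
  orb : ∀ (f : XI ℓ) (H τ : ℝ), (∀ x y, |f x - f y| ≤ H * |(x : ℝ) - y| ^ α) →
    f (pM hl) = 0 → f (pR hl) = 0 → TH τ (α / 2) (C0 * H) (fun t => P.S t f)

/-- Interpolation: the derivative is controlled by the function and its second derivative. -/
theorem interp {ℓ : ℝ} (hl : 0 < ℓ) {z0 z1 z2 : XI ℓ}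
    (h1 : ∀ x ∈ Icc (-ℓ) ℓ, HasDerivWithinAt (cI hl z0) (cI hl z1 x) (Icc (-ℓ) ℓ) x)
    (h2 : ∀ x ∈ Icc (-ℓ) ℓ, HasDerivWithinAt (cI hl z1) (cI hl z2 x) (Icc (-ℓ) ℓ) x)
    {η : ℝ} (hη : 0 < η) (hηl : η ≤ ℓ) : ‖z1‖ ≤ 2 / η * ‖z0‖ + η * ‖z2‖ := by
  refine (ContinuousMap.norm_le _ (by positivity)).2 fun x => ?_
  have key : ∀ a b : ℝ, a ∈ Icc (-ℓ) ℓ → b = a + η → b ∈ Icc (-ℓ) ℓ → ∀ c ∈ Icc a b,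
      |cI hl z1 c| ≤ 2 / η * ‖z0‖ + η * ‖z2‖ := by
    intro a b ha hb hb' c hc
    have hsub : Icc a b ⊆ Icc (-ℓ) ℓ := Icc_subset_Icc ha.1 hb'.2
    obtain ⟨ξ, hξ, hm⟩ := exists_hasDerivAt_eq_slope (cI hl z0) (cI hl z1) (by linarith)
      ((cI_cont hl z0).continuousOn) (fun y hy =>
        (h1 y (hsub (Ioo_subset_Icc_self hy))).hasDerivAt
          (Icc_mem_nhds (ha.1.trans_lt hy.1) (hy.2.trans_le hb'.2)))
    have e1 : |cI hl z1 ξ| ≤ 2 / η * ‖z0‖ := by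
      rw [hm, hb, add_sub_cancel_left, abs_div, abs_of_pos hη, div_mul_eq_mul_div]
      gcongr
      refine (abs_sub _ _).trans ?_
      have := cI_abs hl z0 (a + η)
      have := cI_abs hl z0 a
      linarith
    have e2 := (convex_Icc (-ℓ) ℓ).norm_image_sub_le_of_norm_hasDerivWithin_le h2
      (fun y _ => cI_abs hl z2 y) (hsub (Ioo_subset_Icc_self hξ)) (hsub hc)
    have e3 : |c - ξ| ≤ η := by
      rw [abs_le]; constructor <;> linarith [hc.1, hc.2, hξ.1, hξ.2]
    have e4 : |cI hl z1 c - cI hl z1 ξ| ≤ ‖z2‖ * η := e2.trans (by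
      rw [Real.norm_eq_abs]; gcongr)
    have := abs_sub_abs_le_abs_sub (cI hl z1 c) (cI hl z1 ξ)
    linarith
  rw [← cI_eq hl]
  rcases le_total (x : ℝ) 0 with h | h
  · exact key x (x + η) x.2 rfl ⟨by linarith [x.2.1], by linarith⟩ x ⟨le_rfl, by linarith⟩
  · exact key (x - η) x ⟨by linarith, by linarith [x.2.2]⟩ (by ring) x.2 x ⟨by linarith, le_rfl⟩

section
variable {ℓ : ℝ} (hl : 0 < ℓ)

/-- Composition with a homeomorphism as a linear isometry. -/
def compIso {K K' : Type*} [TopologicalSpace K] [CompactSpace K] [TopologicalSpace K']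
    [CompactSpace K'] (h : K ≃ₜ K') : C(K', ℝ) ≃ₗᵢ[ℝ] C(K, ℝ) where
  toFun f := f.comp ⟨h, h.continuous⟩
  invFun f := f.comp ⟨h.symm, h.symm.continuous⟩
  left_inv f := by ext x; simp
  right_inv f := by ext x; simp
  map_add' f g := rfl
  map_smul' c f := rfl
  norm_map' f := by
    refine le_antisymm ((ContinuousMap.norm_le _ (norm_nonneg _)).2 fun x => ?_)
      ((ContinuousMap.norm_le _ (norm_nonneg _)).2 fun x => ?_)
    · exact f.norm_coe_le_norm _
    · have := (f.comp ⟨h, h.continuous⟩ : C(K, ℝ)).norm_coe_le_norm (h.symm x)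
      simpa using this

/-- Operators with leading coefficient close to a prescribed positive `a0`: `W` is a polynomial close to
`a0`, and `y = ∫ 1 / √W` transforms the second derivative into `W ∂² - B ∂`. -/
theorem exists_paraSys {α : ℝ} (hα : 0 < α) (hα1 : α < 1) (a0 : XI ℓ) (ha0 : ∀ x, 0 < a0 x)
    {ε : ℝ} (hε : 0 < ε) : ∃ Q : ParaSys ℓ hl α, ‖Q.W - a0‖ ≤ ε := by
  have hne : (univ : Set (Icc (-ℓ) ℓ)).Nonempty := ⟨pR hl, trivial⟩
  obtain ⟨xm, -, hxm⟩ := isCompact_univ.exists_isMinOn hne a0.continuous.continuousOn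
  set m := a0 xm with hm
  have hm0 : 0 < m := ha0 xm
  obtain ⟨p, hp⟩ := exists_polynomial_near_continuousMap (-ℓ) ℓ a0 (min ε (m / 2))
    (lt_min hε (by linarith))
  have hpos : ∀ x ∈ Icc (-ℓ) ℓ, 0 < p.eval x := fun x hx => by
    have h1 := (p.toContinuousMapOn (Icc (-ℓ) ℓ) - a0).norm_coe_le_norm ⟨x, hx⟩
    have h2 := (abs_le.1 (h1.trans (hp.le.trans (min_le_right _ _)))).1
    have h3 : m ≤ a0 ⟨x, hx⟩ := hxm (mem_univ _)
    simp only [ContinuousMap.sub_apply, Polynomial.toContinuousMapOn_apply,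
      Polynomial.toContinuousMap_apply] at h2
    linarith
  have hnez : ∀ x : Icc (-ℓ) ℓ, √(p.eval (x : ℝ)) ≠ 0 := fun x =>
    (Real.sqrt_pos.2 (hpos x x.2)).ne'
  have hnez' : ∀ x : Icc (-ℓ) ℓ, p.eval (x : ℝ) ≠ 0 := fun x => (hpos x x.2).ne'
  let W : XI ℓ := ⟨fun x => p.eval (x : ℝ), by fun_prop⟩
  let ρ : XI ℓ := ⟨fun x => 1 / √(p.eval (x : ℝ)), by fun_prop (disch := exact hnez _)⟩
  let ρ' : XI ℓ := ⟨fun x => -(1 / 2) * p.derivative.eval (x : ℝ) / (p.eval (x : ℝ) *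
    √(p.eval (x : ℝ))), by
      refine Continuous.div (by fun_prop) (by fun_prop) fun x => mul_ne_zero (hnez' x) (hnez x)⟩
  have hρpos : ∀ x, 0 < ρ x := fun x => by
    have := hpos x x.2
    change 0 < 1 / √(p.eval (x : ℝ))
    positivity
  have hρd : ∀ x ∈ Icc (-ℓ) ℓ, HasDerivWithinAt (cI hl ρ) (cI hl ρ' x) (Icc (-ℓ) ℓ) x := by
    intro x hx
    have hs := Real.sqrt_pos.2 (hpos x hx)
    have h1 := ((p.hasDerivAt x).sqrt (hpos x hx).ne').inv hs.ne'
    refine (h1.hasDerivWithinAt.congr (f₁ := cI hl ρ) (fun y hy => ?_) ?_).congr_deriv ?_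
    · rw [cI_mk hl ρ hy]
      exact one_div _
    · rw [cI_mk hl ρ hx]
      exact one_div _
    · rw [cI_mk hl ρ' hx]
      change _ = -(1 / 2) * p.derivative.eval x / (p.eval x * √(p.eval x))
      rw [Real.sq_sqrt (hpos x hx).le]
      have := hpos x hx
      field_simp
  obtain ⟨xr, -, hxr⟩ := isCompact_univ.exists_isMinOn hne ρ.continuous.continuousOn
  set mr := ρ xr with hmr
  have hmr0 : 0 < mr := hρpos xr
  have hmrle : ∀ s, mr ≤ cI hl ρ s := fun s => hxr (mem_univ _)
  -- `Y` has derivative `1 / √W`, so it straightens `W ∂²`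
  let Y : ℝ → ℝ := fun x => ∫ s in (-ℓ)..x, cI hl ρ s
  have hYd : ∀ x, HasDerivAt Y (cI hl ρ x) x := fun x =>
    intervalIntegral.integral_hasDerivAt_right ((cI_cont hl ρ).intervalIntegrable _ _)
      ((cI_cont hl ρ).stronglyMeasurableAtFilter _ _) (cI_cont hl ρ).continuousAt
  have hYc : Continuous Y := continuous_iff_continuousAt.2 fun x => (hYd x).continuousAt
  have hYexp : ∀ x y, x ≤ y → mr * (y - x) ≤ Y y - Y x := by
    intro x y hxy
    have h1 : Y y - Y x = ∫ s in x..y, cI hl ρ s :=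
      intervalIntegral.integral_interval_sub_left ((cI_cont hl ρ).intervalIntegrable _ _)
        ((cI_cont hl ρ).intervalIntegrable _ _)
    have h2 := intervalIntegral.integral_mono_on hxy (f := fun _ => mr) (g := cI hl ρ)
      (Continuous.intervalIntegrable continuous_const x y : IntervalIntegrable _ volume x y) ((cI_cont hl ρ).intervalIntegrable _ _) (fun s _ => hmrle s)
    rw [intervalIntegral.integral_const, smul_eq_mul] at h2
    rw [h1]; linarith
  have hYmono : StrictMono Y := fun x y hxy => by
    have := hYexp x y hxy.le
    have : 0 < mr * (y - x) := mul_pos hmr0 (by linarith)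
    linarith
  have hY0 : Y (-ℓ) = 0 := intervalIntegral.integral_same
  set L := Y ℓ with hLdef
  have hL : 0 < L := by rw [← hY0]; exact hYmono (by linarith)
  have hmaps : ∀ x ∈ Icc (-ℓ) ℓ, Y x ∈ Icc 0 L := fun x hx =>
    ⟨by rw [← hY0]; exact hYmono.monotone hx.1, hYmono.monotone hx.2⟩
  let Yc : Icc (-ℓ) ℓ → Icc 0 L := fun x => ⟨Y x, hmaps x x.2⟩
  have hYcc : Continuous Yc := (hYc.comp continuous_subtype_val).subtype_mk _
  have hbij : Function.Bijective Yc := by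
    constructor
    · intro x y h
      exact Subtype.ext (hYmono.injective (congrArg Subtype.val h))
    · intro y
      have := intermediate_value_Icc (by linarith : -ℓ ≤ ℓ) hYc.continuousOn
      rw [hY0] at this
      obtain ⟨x, hx, hxy⟩ := this y.2
      exact ⟨⟨x, hx⟩, Subtype.ext hxy⟩
  let hom : Icc (-ℓ) ℓ ≃ₜ Icc 0 L := Continuous.homeoOfEquivCompactToT2
    (f := Equiv.ofBijective Yc hbij) hYcc
  have hom_apply : ∀ x, hom x = Yc x := fun _ => rfl
  let e : Heat.XL L ≃ₗᵢ[ℝ] XI ℓ := compIso hom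
  have he : ∀ (w : Heat.XL L) x, e w x = w (Yc x) := fun _ _ => rfl
  have hcx : ∀ (w : Heat.XL L), ∀ x ∈ Icc (-ℓ) ℓ, cI hl (e w) x = Heat.cx hL w (Y x) := by
    intro w x hx
    rw [cI_mk hl _ hx, he]
    exact (Heat.cx_eq hL w ⟨Y x, hmaps x hx⟩).symm
  let Z1 : XI ℓ →L[ℝ] XI ℓ := (ContinuousLinearMap.mul ℝ (XI ℓ) ρ).comp
    (((e : Heat.XL L →L[ℝ] XI ℓ).comp (Heat.Z1 hL)).comp (e.symm : XI ℓ →L[ℝ] Heat.XL L))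
  have hZ1 : ∀ w, Z1 w = ρ * e (Heat.Z1 hL (e.symm w)) := fun _ => rfl
  let Z2 : XI ℓ →L[ℝ] XI ℓ := (ContinuousLinearMap.mul ℝ (XI ℓ) ρ').comp
    (((e : Heat.XL L →L[ℝ] XI ℓ).comp (Heat.Z1 hL)).comp (e.symm : XI ℓ →L[ℝ] Heat.XL L)) +
      ContinuousLinearMap.mul ℝ (XI ℓ) (ρ * ρ)
  have hZ2 : ∀ w, Z2 w = ρ' * e (Heat.Z1 hL (e.symm w)) + ρ * ρ * w := fun _ => rfl
  let B : XI ℓ := ⟨fun x => p.eval (x : ℝ) * (ρ' x / ρ x),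
    Continuous.mul (by fun_prop) (ρ'.continuous.div ρ.continuous fun x => (hρpos x).ne')⟩
  have hG : ∀ w, ((Heat.sys hL).conj e).G w = e (Heat.G hL (e.symm w)) := fun _ => rfl
  have hS : ∀ t w, ((Heat.sys hL).conj e).S t w = e (Heat.S hL t (e.symm w)) := fun _ _ => rfl
  have cmul : ∀ u v : XI ℓ, ∀ x, cI hl (u * v) x = cI hl u x * cI hl v x := fun _ _ _ => rfl
  have cadd : ∀ u v : XI ℓ, ∀ x, cI hl (u + v) x = cI hl u x + cI hl v x := fun _ _ _ => rfl
  have hYw : ∀ x, HasDerivWithinAt Y (cI hl ρ x) (Icc (-ℓ) ℓ) x := fun x =>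
    (hYd x).hasDerivWithinAt
  refine ⟨{ P := (Heat.sys hL).conj e, hM := rfl, Z1 := Z1, Z2 := Z2, W := W, B := B
            C0 := Heat.CO α * (1 / mr) ^ α
            C0_nonneg := mul_nonneg (Heat.CO_nonneg hα) (by positivity)
            hz1 := ?_, hz2 := ?_, hend := ?_, hW := ?_, orb := ?_ }, ?_⟩
  · intro w x hx
    rw [hG, hZ1, cmul, hcx _ x hx]
    have h := (Heat.G_deriv hL (e.symm w) (hmaps x hx)).comp x (hYw x) hmaps
    refine (h.congr (fun y hy => hcx _ y hy) (hcx _ x hx)).congr_deriv ?_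
    ring
  · intro w x hx
    have h := (Heat.Z1_deriv hL (e.symm w) (hmaps x hx)).comp x (hYw x) hmaps
    have h' := (hρd x hx).mul (h.congr (fun y hy => hcx _ y hy) (hcx _ x hx))
    rw [hZ1, hZ2]
    refine h'.congr_deriv ?_
    rw [cadd, cmul, cmul, cmul, ← hcx _ x hx, e.apply_symm_apply]
    ring
  · intro w
    rw [hG, he, he]
    have h := Heat.G_end hL (e.symm w)
    rw [show Yc (pM hl) = Heat.p0 hL from Subtype.ext hY0,
      show Yc (pR hl) = Heat.pL hL from rfl]
    exact h
  · intro w x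
    rw [hZ1, hZ2]
    simp only [ContinuousMap.add_apply, ContinuousMap.mul_apply]
    have hp' := hpos x x.2
    have hsq : ρ x * ρ x * p.eval (x : ℝ) = 1 := by
      change 1 / √(p.eval (x : ℝ)) * (1 / √(p.eval (x : ℝ))) * p.eval (x : ℝ) = 1
      have hs := Real.sqrt_pos.2 hp'
      field_simp
      exact (Real.sq_sqrt hp'.le).symm
    change p.eval (x : ℝ) * _ - p.eval (x : ℝ) * (ρ' x / ρ x) * _ = _
    have := (hρpos x).ne'
    field_simp
    linear_combination (w x) * hsq
  · intro f H τ hf h0 h1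
    have hH0 : 0 ≤ H := by
      have := hf (pM hl) (pR hl)
      rw [h0, h1] at this
      simp only [sub_self, abs_zero] at this
      refine nonneg_of_mul_nonneg_left this (Real.rpow_pos_of_pos (abs_pos.2 ?_) _)
      change (-ℓ) - ℓ ≠ 0
      intro h; linarith
    have hes : ∀ y, e.symm f y = f (hom.symm y) := fun _ => rfl
    have hX : ∀ y y' : Icc 0 L, |((hom.symm y : Icc (-ℓ) ℓ) : ℝ) - hom.symm y'| ≤
        1 / mr * |(y : ℝ) - y'| := by
      intro y y'
      have e1 : ∀ y, Y (hom.symm y) = y := fun y =>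
        congrArg Subtype.val (hom.apply_symm_apply y)
      rcases le_total ((hom.symm y : Icc (-ℓ) ℓ) : ℝ) (hom.symm y') with h | h
      · have := hYexp _ _ h
        rw [e1, e1] at this
        rw [abs_sub_comm, abs_of_nonneg (by linarith), one_div, inv_mul_eq_div, le_div_iff₀ hmr0,
          mul_comm, abs_sub_comm]
        exact this.trans (le_abs_self _)
      · have := hYexp _ _ h
        rw [e1, e1] at this
        rw [abs_of_nonneg (by linarith), one_div, inv_mul_eq_div, le_div_iff₀ hmr0, mul_comm]
        exact this.trans (le_abs_self _)
    have hsymm0 : hom.symm (Heat.p0 hL) = pM hl := by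
      rw [Homeomorph.symm_apply_eq]; exact Subtype.ext hY0.symm
    have hsymmL : hom.symm (Heat.pL hL) = pR hl := by
      rw [Homeomorph.symm_apply_eq]; rfl
    have h := Heat.S_orbit hL (f := e.symm f) (H := H * (1 / mr) ^ α) (τ := τ) hα hα1 (fun y y' => by
      rw [hes, hes]
      refine (hf _ _).trans ?_
      calc _ ≤ H * (1 / mr * |(y : ℝ) - y'|) ^ α := by
            gcongr
            exact hX y y'
        _ = _ := by rw [Real.mul_rpow (by positivity) (abs_nonneg _), mul_assoc])
      (by rw [hes]; exact (congrArg f hsymm0).trans h0)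
      (by rw [hes]; exact (congrArg f hsymmL).trans h1)
    intro s t hs hst ht
    have h' := h s t hs hst ht
    rw [← e.norm_map, map_sub] at h'
    change ‖((Heat.sys hL).conj e).S t f - ((Heat.sys hL).conj e).S s f‖ ≤ _
    rw [hS, hS]
    exact h'.trans (le_of_eq (by ring))
  · have : W - a0 = p.toContinuousMapOn (Icc (-ℓ) ℓ) - a0 := by
      ext x; simp [W]
    rw [this]
    exact hp.le.trans (min_le_left _ _)

end

/-! ### Hölder curves and nonlinear substitution operators -/

section
variable {E : Type*} [NormedAddCommGroup E]

theorem TH.mono {τ θ H H' : ℝ} {φ : ℝ → E} (h : TH τ θ H φ) (hH : H ≤ H') : TH τ θ H' φ :=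
  fun s t hs hst ht => (h s t hs hst ht).trans (by
    have := Real.rpow_nonneg (sub_nonneg.2 hst) θ
    gcongr)

theorem TH.mono_time {τ τ' θ H : ℝ} {φ : ℝ → E} (h : TH τ θ H φ) (hτ : τ' ≤ τ) : TH τ' θ H φ :=
  fun s t hs hst ht => h s t hs hst (ht.trans hτ)

theorem TH.add {τ θ H H' : ℝ} {φ ψ : ℝ → E} (h : TH τ θ H φ) (h' : TH τ θ H' ψ) :
    TH τ θ (H + H') (fun t => φ t + ψ t) := fun s t hs hst ht => by
  rw [add_sub_add_comm, add_mul]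
  exact (norm_add_le _ _).trans (add_le_add (h s t hs hst ht) (h' s t hs hst ht))

theorem TH.sub {τ θ H H' : ℝ} {φ ψ : ℝ → E} (h : TH τ θ H φ) (h' : TH τ θ H' ψ) :
    TH τ θ (H + H') (fun t => φ t - ψ t) := fun s t hs hst ht => by
  rw [sub_sub_sub_comm, add_mul]
  exact (norm_sub_le _ _).trans (add_le_add (h s t hs hst ht) (h' s t hs hst ht))

theorem TH.congr {τ θ H : ℝ} {φ ψ : ℝ → E} (h : TH τ θ H φ)
    (he : ∀ t, 0 ≤ t → t ≤ τ → ψ t = φ t) : TH τ θ H ψ := fun s t hs hst ht => by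
  rw [he s hs (hst.trans ht), he t (hs.trans hst) ht]
  exact h s t hs hst ht

theorem TH.sup {τ θ H : ℝ} {φ : ℝ → E} (h : TH τ θ H φ) (hθ : 0 < θ) (hH : 0 ≤ H) {t : ℝ}
    (ht : 0 ≤ t) (htτ : t ≤ τ) :
    ‖φ t - φ 0‖ ≤ H * τ ^ θ := by
  have := h 0 t le_rfl ht htτ
  rw [sub_zero] at this
  refine this.trans ?_
  gcongr

theorem TH.const {τ θ : ℝ} (c : E) : TH τ θ 0 (fun _ => c) := fun s t _ _ _ => by simp

/-- A contraction principle in the class of `θ`-Hölder curves with prescribed initial value. -/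
theorem fixed_point [CompleteSpace E] {τ θ R : ℝ} (hτ : 0 < τ) (hθ : 0 < θ) (hR : 0 ≤ R)
    (Φ : (ℝ → E) → ℝ → E) (e0 : E)
    (H1 : ∀ φ, φ 0 = e0 → TH τ θ R φ → Φ φ 0 = e0)
    (H2 : TH τ θ (R / 2) (Φ fun _ => e0))
    (H3 : ∀ φ ψ H, 0 ≤ H → H ≤ R → φ 0 = e0 → TH τ θ R φ → ψ 0 = e0 → TH τ θ R ψ →
      TH τ θ H (fun t => φ t - ψ t) → TH τ θ (H / 2) (fun t => Φ φ t - Φ ψ t)) :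
    ∃ φ, φ 0 = e0 ∧ TH τ θ R φ ∧ ∀ t ∈ Icc 0 τ, Φ φ t = φ t := by
  let F : ℕ → ℝ → E := fun n => Nat.rec (fun _ => e0) (fun _ φ => Φ φ) n
  have F0 : F 0 = fun _ => e0 := rfl
  have FS : ∀ n, F (n + 1) = Φ (F n) := fun _ => rfl
  have cst : TH τ θ R (fun _ : ℝ => e0) := (TH.const e0).mono hR
  have adm : ∀ n, F n 0 = e0 ∧ TH τ θ R (F n) := by
    intro n
    induction n with
    | zero => exact ⟨rfl, cst⟩
    | succ n ih =>
      refine ⟨H1 _ ih.1 ih.2, ?_⟩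
      have h0 : TH τ θ R (fun t => F n t - e0) := (ih.2.sub (TH.const e0)).mono (by simp)
      have h1 := (H3 _ _ R hR le_rfl ih.1 ih.2 rfl cst h0).add H2
      rw [add_halves] at h1
      exact h1.congr fun t _ _ => by simp [FS]
  have hp : ∀ n : ℕ, (1 / 2 : ℝ) ^ n ≤ 1 := fun n => pow_le_one₀ (by norm_num) (by norm_num)
  have step : ∀ n, TH τ θ (R * (1 / 2) ^ n) (fun t => F (n + 1) t - F n t) := by
    intro n
    induction n with
    | zero => exact ((adm 1).2.sub (TH.const e0)).mono (by simp)
    | succ n ih =>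
      refine (H3 _ _ _ (by positivity) (mul_le_of_le_one_right hR (hp n))
        (adm (n + 1)).1 (adm (n + 1)).2 (adm n).1 (adm n).2 ih).mono (le_of_eq ?_)
      rw [pow_succ]; ring
  have far : ∀ n k, TH τ θ (2 * R * (1 / 2) ^ n * (1 - (1 / 2) ^ k))
      (fun t => F (n + k) t - F n t) := by
    intro n k
    induction k with
    | zero => exact (TH.const 0).congr (fun t _ _ => by simp) |>.mono (by simp)
    | succ k ih =>
      refine ((ih.add (step (n + k))).congr fun t _ _ => ?_).mono (le_of_eq ?_)
      · rw [← add_assoc]; simp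
      · rw [pow_add, pow_succ]; ring
  have far' : ∀ n m, n ≤ m → TH τ θ (2 * R * (1 / 2) ^ n) (fun t => F m t - F n t) := by
    intro n m h
    obtain ⟨k, rfl⟩ := Nat.exists_eq_add_of_le h
    refine (far n k).mono (mul_le_of_le_one_right (by positivity) ?_)
    have : (0:ℝ) ≤ (1 / 2) ^ k := by positivity
    linarith
  have supd : ∀ t ∈ Icc 0 τ, ∀ n m, n ≤ m → ‖F m t - F n t‖ ≤ 2 * R * (1 / 2) ^ n * τ ^ θ := by
    intro t ht n m h
    have := (far' n m h).sup hθ (by positivity) ht.1 ht.2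
    simpa [(adm m).1, (adm n).1] using this
  have l0 : Tendsto (fun n : ℕ => 2 * R * (1 / 2) ^ n * τ ^ θ) atTop (𝓝 0) := by
    have := (tendsto_pow_atTop_nhds_zero_of_lt_one (r := (1/2:ℝ)) (by norm_num)
      (by norm_num)).const_mul (2 * R) |>.mul_const (τ ^ θ)
    simpa using this
  have cau : ∀ t ∈ Icc 0 τ, ∃ e, Tendsto (fun n => F n t) atTop (𝓝 e) := by
    intro t ht
    refine cauchySeq_tendsto_of_complete (cauchySeq_of_le_tendsto_0
      (fun n => 2 * (2 * R * (1 / 2) ^ n * τ ^ θ)) (fun n m N hn hm => ?_)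
      (by simpa using l0.const_mul 2))
    rw [dist_eq_norm]
    have e1 := supd t ht N n hn
    have e2 := supd t ht N m hm
    have : F n t - F m t = (F n t - F N t) - (F m t - F N t) := by abel
    rw [this]
    refine (norm_sub_le _ _).trans ?_
    linarith
  choose! φ hφ using cau
  have mem0 : (0:ℝ) ∈ Icc 0 τ := ⟨le_rfl, hτ.le⟩
  have φ0 : φ 0 = e0 := tendsto_nhds_unique (hφ 0 mem0)
    (tendsto_const_nhds.congr fun n => ((adm n).1).symm)
  have φR : TH τ θ R φ := fun s t hs hst ht =>
    le_of_tendsto ((hφ t ⟨hs.trans hst, ht⟩).sub (hφ s ⟨hs, hst.trans ht⟩)).norm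
      (Eventually.of_forall fun n => (adm n).2 s t hs hst ht)
  have φd : ∀ n, TH τ θ (2 * R * (1 / 2) ^ n) (fun t => φ t - F n t) := fun n s t hs hst ht =>
    le_of_tendsto (((hφ t ⟨hs.trans hst, ht⟩).sub_const _).sub
      ((hφ s ⟨hs, hst.trans ht⟩).sub_const _)).norm
      (eventually_atTop.2 ⟨n, fun m hm => far' n m hm s t hs hst ht⟩)
  refine ⟨φ, φ0, φR, fun t ht => ?_⟩
  refine tendsto_nhds_unique ?_ (hφ t ht)
  refine (tendsto_add_atTop_iff_nat 2).1 ?_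
  rw [tendsto_iff_norm_sub_tendsto_zero]
  refine squeeze_zero (fun _ => norm_nonneg _) (fun n => ?_) l0
  have h1 := H3 φ (F (n + 1)) (2 * R * (1 / 2) ^ (n + 1)) (by positivity) (by
    rw [pow_succ]
    have := hp n
    nlinarith) φ0 φR (adm (n + 1)).1 (adm (n + 1)).2 (φd (n + 1))
  have h2 := h1.sup hθ (by positivity) ht.1 ht.2
  simp only [H1 φ φ0 φR, H1 _ (adm (n + 1)).1 (adm (n + 1)).2, sub_self, sub_zero] at h2
  rw [norm_sub_rev]
  refine h2.trans ?_
  gcongr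
  rw [pow_succ]
  have : (0:ℝ) ≤ R * (1 / 2) ^ n := by positivity
  linarith

end

/-- Quantitative `C^{1,1}` control of `h` on `K`: bounds for `h`, for its differences, and for its
mixed second differences. -/
structure SDP {E : Type*} [NormedAddCommGroup E] (K : Set E) (h : E → ℝ) (L : ℝ) : Prop where
  nn : 0 ≤ L
  bd : ∀ A ∈ K, |h A| ≤ L
  lip : ∀ A ∈ K, ∀ B ∈ K, |h A - h B| ≤ L * ‖A - B‖
  sd : ∀ A ∈ K, ∀ B ∈ K, ∀ A' ∈ K, ∀ B' ∈ K, |h A - h B - (h A' - h B')| ≤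
    L * (‖A - B - (A' - B')‖ + (‖A - A'‖ + ‖B - B'‖) * ‖A' - B'‖)

/-- A `C²` function has the quantitative `C^{1,1}` control on every compact convex set. -/
theorem exists_SDP {E : Type*} [NormedAddCommGroup E] [NormedSpace ℝ E] {U K : Set E} {h : E → ℝ}
    (hU : UniqueDiffOn ℝ U) (hK : IsCompact K) (hKc : Convex ℝ K) (hKU : K ⊆ U)
    (hh : ContDiffOn ℝ 2 h U) : ∃ L, SDP K h L := by
  set h' := fderivWithin ℝ h U with hh'
  have c1 : ContDiffOn ℝ 1 h' U := hh.fderivWithin hU (by norm_num)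
  have d0 : ∀ x ∈ K, HasFDerivWithinAt h (h' x) K x := fun x hx =>
    ((hh.differentiableOn (by norm_num) x (hKU hx)).hasFDerivWithinAt).mono hKU
  have d1 : ∀ x ∈ K, HasFDerivWithinAt h' (fderivWithin ℝ h' U x) K x := fun x hx =>
    ((c1.differentiableOn (by norm_num) x (hKU hx)).hasFDerivWithinAt).mono hKU
  obtain ⟨L0, hL0⟩ := hK.exists_bound_of_continuousOn (hh.continuousOn.mono hKU)
  obtain ⟨L1, hL1⟩ := hK.exists_bound_of_continuousOn (c1.continuousOn.mono hKU)
  obtain ⟨L2, hL2⟩ := hK.exists_bound_of_continuousOn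
    ((c1.continuousOn_fderivWithin hU (by norm_num)).mono hKU)
  set L := max 0 (max L0 (max L1 L2)) with hL
  have l0 : L0 ≤ L := (le_max_left _ _).trans (le_max_right _ _)
  have l1 : L1 ≤ L := (le_max_left _ _).trans ((le_max_right _ _).trans (le_max_right _ _))
  have l2 : L2 ≤ L := (le_max_right _ _).trans ((le_max_right _ _).trans (le_max_right _ _))
  have lip' : ∀ A ∈ K, ∀ B ∈ K, ‖h' A - h' B‖ ≤ L * ‖A - B‖ := fun A hA B hB =>
    hKc.norm_image_sub_le_of_norm_hasFDerivWithin_le d1 (fun x hx => (hL2 x hx).trans l2) hB hA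
  refine ⟨L, le_max_left _ _, fun A hA => (hL0 A hA).trans l0, fun A hA B hB =>
    hKc.norm_image_sub_le_of_norm_hasFDerivWithin_le d0 (fun x hx => (hL1 x hx).trans l1) hB hA, ?_⟩
  intro A hA B hB A' hA' B' hB'
  have seg : ∀ A ∈ K, ∀ B ∈ K, ∀ σ ∈ Icc (0:ℝ) 1, B + σ • (A - B) ∈ K := fun A hA B hB σ hσ =>
    hKc.add_smul_sub_mem hB hA hσ
  have der : ∀ A ∈ K, ∀ B ∈ K, ∀ σ ∈ Icc (0:ℝ) 1, HasDerivWithinAt (fun σ : ℝ => h (B + σ • (A - B)))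
      (h' (B + σ • (A - B)) (A - B)) (Icc 0 1) σ := by
    intro A hA B hB σ hσ
    have e1 : HasDerivWithinAt (fun σ : ℝ => B + σ • (A - B)) (A - B) (Icc 0 1) σ := by
      have := ((hasDerivAt_id σ).smul_const (A - B)).const_add B
      simpa using this.hasDerivWithinAt
    exact (d0 _ (seg A hA B hB σ hσ)).comp_hasDerivWithinAt σ e1 (fun y hy => seg A hA B hB y hy)
  have key := (convex_Icc (0:ℝ) 1).norm_image_sub_le_of_norm_hasDerivWithin_le
    (C := L * (‖A - B - (A' - B')‖ + (‖A - A'‖ + ‖B - B'‖) * ‖A' - B'‖))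
    (fun σ hσ => (der A hA B hB σ hσ).sub (der A' hA' B' hB' σ hσ)) (fun σ hσ => ?_)
    (x := 0) (y := 1) ⟨le_rfl, zero_le_one⟩ ⟨zero_le_one, le_rfl⟩
  · simp only [Pi.sub_apply, one_smul, zero_smul, add_zero, add_sub_cancel, sub_zero, norm_one,
      mul_one, Real.norm_eq_abs] at key
    rwa [show h A - h B - (h A' - h B') = h A - h A' - (h B - h B') by ring]
  · set X := B + σ • (A - B)
    set X' := B' + σ • (A' - B')
    have hX : X ∈ K := seg A hA B hB σ hσ
    have hX' : X' ∈ K := seg A' hA' B' hB' σ hσ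
    have e0 : X - X' = (1 - σ) • (B - B') + σ • (A - A') := by
      simp only [X, X']; module
    have e1 : ‖X - X'‖ ≤ ‖A - A'‖ + ‖B - B'‖ := by
      rw [e0]
      refine (norm_add_le _ _).trans ?_
      rw [norm_smul, norm_smul, Real.norm_of_nonneg hσ.1, Real.norm_of_nonneg (by linarith [hσ.2])]
      have := norm_nonneg (A - A')
      have := norm_nonneg (B - B')
      nlinarith [hσ.1, hσ.2]
    have e2 : h' X (A - B) - h' X' (A' - B') =
        h' X (A - B - (A' - B')) + (h' X - h' X') (A' - B') := by
      simp only [map_sub, ContinuousLinearMap.sub_apply]; ring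
    rw [e2]
    refine (norm_add_le _ _).trans ?_
    have e3 := (h' X).le_of_opNorm_le ((hL1 X hX).trans l1) (A - B - (A' - B'))
    have e4 := (h' X - h' X').le_of_opNorm_le (lip' X hX X' hX') (A' - B')
    have e5 : L * ‖X - X'‖ * ‖A' - B'‖ ≤ L * (‖A - A'‖ + ‖B - B'‖) * ‖A' - B'‖ := by
      have : 0 ≤ L := le_max_left _ _
      gcongr
    linarith

/-- The box `[0,T] × [-ℓ,ℓ] × [-M,M]²`. -/
def Box (T ℓ M : ℝ) : Set (ℝ × ℝ × ℝ × ℝ) :=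
  Icc 0 T ×ˢ Icc (-ℓ) ℓ ×ˢ Icc (-M) M ×ˢ Icc (-M) M

/-- Admissible nonlinearities `h(t,x,z,p)` on `[0,T] × [-ℓ,ℓ] × ℝ²`. -/
def NLin (T ℓ : ℝ) (h : ℝ × ℝ × ℝ × ℝ → ℝ) : Prop := ∀ M, ∃ L, SDP (Box T ℓ M) h L

theorem nlin_of_contDiff {T ℓ : ℝ} (hT : 0 < T) (hl : 0 < ℓ) {h : ℝ × ℝ × ℝ × ℝ → ℝ}
    (hh : ContDiffOn ℝ 2 h (Icc (0:ℝ) T ×ˢ Icc (-ℓ) ℓ ×ˢ (univ : Set (ℝ × ℝ)))) :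
    NLin T ℓ h := fun M =>
  exists_SDP ((uniqueDiffOn_Icc hT).prod ((uniqueDiffOn_Icc (by linarith)).prod uniqueDiffOn_univ))
    (isCompact_Icc.prod (isCompact_Icc.prod (isCompact_Icc.prod isCompact_Icc)))
    ((convex_Icc _ _).prod ((convex_Icc _ _).prod ((convex_Icc _ _).prod (convex_Icc _ _))))
    (prod_mono le_rfl (prod_mono le_rfl (subset_univ _))) hh

theorem NLin.shift {T ℓ σ : ℝ} {h : ℝ × ℝ × ℝ × ℝ → ℝ} (hh : NLin T ℓ h) (hσ : 0 ≤ σ) :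
    NLin (T - σ) ℓ (fun q => h (q.1 + σ, q.2)) := fun M => by
  obtain ⟨L, h1, h2, h3, h4⟩ := hh M
  have hm : ∀ q ∈ Box (T - σ) ℓ M, ((q.1 + σ, q.2) : ℝ × ℝ × ℝ × ℝ) ∈ Box T ℓ M := fun q hq =>
    ⟨⟨by linarith [hq.1.1], by linarith [hq.1.2]⟩, hq.2⟩
  have e : ∀ A B : ℝ × ℝ × ℝ × ℝ, ((A.1 + σ, A.2) : ℝ × ℝ × ℝ × ℝ) - (B.1 + σ, B.2) = A - B :=
    fun A B => by ext <;> simp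
  refine ⟨L, h1, fun A hA => h2 _ (hm A hA), fun A hA B hB => ?_, fun A hA B hB A' hA' B' hB' => ?_⟩
  · rw [← e]; exact h3 _ (hm A hA) _ (hm B hB)
  · rw [← e A B, ← e A A', ← e B B', ← e A' B']
    exact h4 _ (hm A hA) _ (hm B hB) _ (hm A' hA') _ (hm B' hB')

section

theorem TH.mul {E : Type*} [NormedRing E] {τ θ H H' F F' : ℝ} {φ ψ : ℝ → E} (h : TH τ θ H φ)
    (h' : TH τ θ H' ψ) (hF : ∀ t, 0 ≤ t → t ≤ τ → ‖φ t‖ ≤ F)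
    (hF' : ∀ t, 0 ≤ t → t ≤ τ → ‖ψ t‖ ≤ F') :
    TH τ θ (F * H' + H * F') (fun t => φ t * ψ t) := fun s t hs hst ht => by
  have e : φ t * ψ t - φ s * ψ s = φ t * (ψ t - ψ s) + (φ t - φ s) * ψ s := by noncomm_ring
  rw [e]
  refine (norm_add_le _ _).trans ?_
  have e1 := (norm_mul_le (φ t) (ψ t - ψ s)).trans (mul_le_mul (hF t (hs.trans hst) ht)
    (h' s t hs hst ht) (norm_nonneg _) ((norm_nonneg _).trans (hF t (hs.trans hst) ht)))
  have e2 := (norm_mul_le (φ t - φ s) (ψ s)).trans (mul_le_mul (h s t hs hst ht)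
    (hF' s hs (hst.trans ht)) (norm_nonneg _) ((norm_nonneg _).trans (h s t hs hst ht)))
  linarith

theorem TH.clm {E F : Type*} [NormedAddCommGroup E] [NormedSpace ℝ E] [NormedAddCommGroup F]
    [NormedSpace ℝ F] {τ θ H C : ℝ} {φ : ℝ → E} (h : TH τ θ H φ) (A : E →L[ℝ] F) (hA : ‖A‖ ≤ C) :
    TH τ θ (C * H) (fun t => A (φ t)) := fun s t hs hst ht => by
  rw [← map_sub, mul_assoc]
  exact (A.le_of_opNorm_le hA _).trans (mul_le_mul_of_nonneg_left (h s t hs hst ht)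
    ((norm_nonneg _).trans hA))

variable {T ℓ M L : ℝ} {h : ℝ × ℝ × ℝ × ℝ → ℝ}

open Classical in
/-- The superposition operator `(u,p) ↦ h(t,·,u,p)` on continuous functions, with the junk value `0`
when the composition is not continuous. -/
def Nem (h : ℝ × ℝ × ℝ × ℝ → ℝ) (t : ℝ) (u p : XI ℓ) : XI ℓ :=
  if hc : Continuous (fun x : Icc (-ℓ) ℓ => h (t, x, u x, p x)) then ⟨_, hc⟩ else 0

theorem mem_Box {t : ℝ} (ht : t ∈ Icc 0 T) {u p : XI ℓ} (hu : ‖u‖ ≤ M) (hp : ‖p‖ ≤ M)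
    (x : Icc (-ℓ) ℓ) : ((t, (x : ℝ), u x, p x) : ℝ × ℝ × ℝ × ℝ) ∈ Box T ℓ M :=
  ⟨ht, x.2, abs_le.1 ((u.norm_coe_le_norm x).trans hu), abs_le.1 ((p.norm_coe_le_norm x).trans hp)⟩

theorem Nem_apply (hh : NLin T ℓ h) {t : ℝ} (ht : t ∈ Icc 0 T) (u p : XI ℓ) (x : Icc (-ℓ) ℓ) :
    Nem h t u p x = h (t, x, u x, p x) := by
  have hc : Continuous (fun x : Icc (-ℓ) ℓ => h (t, x, u x, p x)) := by
    obtain ⟨L, hL⟩ := hh (max ‖u‖ ‖p‖)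
    have hc : ContinuousOn h (Box T ℓ (max ‖u‖ ‖p‖)) :=
      (LipschitzOnWith.of_dist_le_mul (K := ⟨L, hL.nn⟩) fun A hA B hB => by
        rw [dist_eq_norm, dist_eq_norm]; exact hL.lip A hA B hB).continuousOn
    exact hc.comp_continuous (by fun_prop)
      (fun x => mem_Box ht (le_max_left _ _) (le_max_right _ _) x)
  unfold Nem
  rw [dif_pos hc]
  rfl

theorem Nem_bd (hh : NLin T ℓ h) (hL : SDP (Box T ℓ M) h L) {t : ℝ} (ht : t ∈ Icc 0 T)
    {u p : XI ℓ} (hu : ‖u‖ ≤ M) (hp : ‖p‖ ≤ M) : ‖Nem h t u p‖ ≤ L := by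
  refine (ContinuousMap.norm_le _ hL.nn).2 fun x => ?_
  rw [Nem_apply hh ht]
  exact hL.bd _ (mem_Box ht hu hp x)

theorem norm4_le {a b c d C : ℝ} (ha : |a| ≤ C) (hb : |b| ≤ C) (hc : |c| ≤ C) (hd : |d| ≤ C) :
    ‖((a, b, c, d) : ℝ × ℝ × ℝ × ℝ)‖ ≤ C := by
  simp only [Prod.norm_def, Real.norm_eq_abs]
  exact max_le ha (max_le hb (max_le hc hd))

theorem le_rpow_of_le_one {r θ : ℝ} (h0 : 0 ≤ r) (h1 : r ≤ 1) (hθ1 : θ < 1) : r ≤ r ^ θ := by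
  rcases h0.eq_or_lt with rfl | h
  · exact Real.rpow_nonneg le_rfl _
  · exact Real.self_le_rpow_of_le_one h.le h1 hθ1.le

variable {τ θ N : ℝ}

theorem pt_TH (hτ1 : τ ≤ 1) (hθ1 : θ < 1) (hN : 0 ≤ N) {u p : ℝ → XI ℓ}
    (hu : TH τ θ N u) (hp : TH τ θ N p) {s t : ℝ} (hs : 0 ≤ s) (hst : s ≤ t) (ht : t ≤ τ)
    (x : Icc (-ℓ) ℓ) : ‖((t, (x:ℝ), u t x, p t x) : ℝ × ℝ × ℝ × ℝ) - (s, (x:ℝ), u s x, p s x)‖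
      ≤ (N + 1) * (t - s) ^ θ := by
  have h0 : 0 ≤ (t - s) ^ θ := Real.rpow_nonneg (by linarith) _
  have h1 := le_rpow_of_le_one (θ := θ) (by linarith : 0 ≤ t - s) (by linarith) hθ1
  have h2 := ((u t - u s).norm_coe_le_norm x).trans (hu s t hs hst ht)
  have h3 := ((p t - p s).norm_coe_le_norm x).trans (hp s t hs hst ht)
  have h4 : 0 ≤ N * (t - s) ^ θ := by positivity
  refine norm4_le ?_ ?_ ?_ ?_
  · rw [abs_of_nonneg (by linarith)]; linarith
  · rw [sub_self, abs_zero]; positivity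
  · exact h2.trans (by linarith)
  · exact h3.trans (by linarith)

theorem Nem_TH (hh : NLin T ℓ h) (hL : SDP (Box T ℓ M) h L) (hτ1 : τ ≤ 1) (hτT : τ ≤ T)
    (hθ1 : θ < 1) (hN : 0 ≤ N) {u p : ℝ → XI ℓ}
    (hu : TH τ θ N u) (hp : TH τ θ N p) (hum : ∀ t, 0 ≤ t → t ≤ τ → ‖u t‖ ≤ M)
    (hpm : ∀ t, 0 ≤ t → t ≤ τ → ‖p t‖ ≤ M) :
    TH τ θ (L * (N + 1)) (fun t => Nem h t (u t) (p t)) := by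
  intro s t hs hst ht
  have h0 : 0 ≤ (t - s) ^ θ := Real.rpow_nonneg (by linarith) _
  have hsT : s ∈ Icc 0 T := ⟨hs, by linarith⟩
  have htT : t ∈ Icc 0 T := ⟨by linarith, by linarith⟩
  have hs' := hst.trans ht
  have ht' := hs.trans hst
  refine (ContinuousMap.norm_le _ (by have := hL.nn; positivity)).2 fun x => ?_
  rw [ContinuousMap.sub_apply, Nem_apply hh hsT, Nem_apply hh htT, mul_assoc]
  exact (hL.lip _ (mem_Box htT (hum t ht' ht) (hpm t ht' ht) x) _
    (mem_Box hsT (hum s hs hs') (hpm s hs hs') x)).trans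
    (mul_le_mul_of_nonneg_left (pt_TH hτ1 hθ1 hN hu hp hs hst ht x) hL.nn)

/-- The superposition operator is Lipschitz continuous in the Hölder seminorm on bounded sets of Hölder
curves sharing their initial values. -/
theorem Nem_diff (hh : NLin T ℓ h) (hL : SDP (Box T ℓ M) h L) (hτ1 : τ ≤ 1) (hτT : τ ≤ T)
    (hθ : 0 < θ) (hθ1 : θ < 1) (hN : 0 ≤ N) {H : ℝ} (hH : 0 ≤ H) {u p u' p' : ℝ → XI ℓ}
    (hum : ∀ t, 0 ≤ t → t ≤ τ → ‖u t‖ ≤ M) (hpm : ∀ t, 0 ≤ t → t ≤ τ → ‖p t‖ ≤ M)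
    (hu' : TH τ θ N u') (hp' : TH τ θ N p') (hum' : ∀ t, 0 ≤ t → t ≤ τ → ‖u' t‖ ≤ M)
    (hpm' : ∀ t, 0 ≤ t → t ≤ τ → ‖p' t‖ ≤ M)
    (hd : TH τ θ H (fun t => u t - u' t)) (hd0 : u 0 = u' 0)
    (he : TH τ θ H (fun t => p t - p' t)) (he0 : p 0 = p' 0) :
    TH τ θ (L * (2 * N + 3) * H) (fun t => Nem h t (u t) (p t) - Nem h t (u' t) (p' t)) := by
  intro s t hs hst ht
  have h0 : 0 ≤ (t - s) ^ θ := Real.rpow_nonneg (by linarith) _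
  have hsT : s ∈ Icc 0 T := ⟨hs, by linarith⟩
  have htT : t ∈ Icc 0 T := ⟨by linarith, by linarith⟩
  have hs' := hst.trans ht
  have ht' := hs.trans hst
  have hτ1' : τ ^ θ ≤ 1 := Real.rpow_le_one (by linarith) hτ1 hθ.le
  have dd : ∀ r, 0 ≤ r → r ≤ τ → ∀ x : Icc (-ℓ) ℓ,
      ‖((r, (x:ℝ), u r x, p r x) : ℝ × ℝ × ℝ × ℝ) - (r, (x:ℝ), u' r x, p' r x)‖ ≤ H := by
    intro r h0 h1 x
    have a1 := hd.sup hθ hH h0 h1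
    have a2 := he.sup hθ hH h0 h1
    simp only [hd0, he0, sub_self, sub_zero] at a1 a2
    have b1 := ((u r - u' r).norm_coe_le_norm x).trans a1
    have b2 := ((p r - p' r).norm_coe_le_norm x).trans a2
    refine norm4_le (by simpa) (by simpa) (b1.trans ?_) (b2.trans ?_) <;>
      exact mul_le_of_le_one_right hH hτ1'
  refine (ContinuousMap.norm_le _ (by have := hL.nn; positivity)).2 fun x => ?_
  rw [ContinuousMap.sub_apply, ContinuousMap.sub_apply, ContinuousMap.sub_apply, Nem_apply hh hsT,
    Nem_apply hh hsT, Nem_apply hh htT, Nem_apply hh htT]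
  have b1 := ((u t - u' t - (u s - u' s)).norm_coe_le_norm x).trans (hd s t hs hst ht)
  have b2 := ((p t - p' t - (p s - p' s)).norm_coe_le_norm x).trans (he s t hs hst ht)
  have key := hL.sd _ (mem_Box htT (hum t ht' ht) (hpm t ht' ht) x) _
    (mem_Box hsT (hum s hs hs') (hpm s hs hs') x) _
    (mem_Box htT (hum' t ht' ht) (hpm' t ht' ht) x) _
    (mem_Box hsT (hum' s hs hs') (hpm' s hs hs') x)
  have k1 : ‖((t, (x:ℝ), u t x, p t x) : ℝ × ℝ × ℝ × ℝ) - (s, (x:ℝ), u s x, p s x) -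
      (((t, (x:ℝ), u' t x, p' t x) : ℝ × ℝ × ℝ × ℝ) - (s, (x:ℝ), u' s x, p' s x))‖
      ≤ H * (t - s) ^ θ := by
    refine norm4_le ?_ ?_ (le_trans (le_of_eq ?_) b1) (le_trans (le_of_eq ?_) b2)
    · simp only [Prod.fst_sub, sub_self, abs_zero]; positivity
    · simp only [Prod.fst_sub, Prod.snd_sub, sub_self, abs_zero]; positivity
    · rw [Real.norm_eq_abs]; congr 1
      simp only [Prod.fst_sub, Prod.snd_sub, ContinuousMap.sub_apply]; ring
    · rw [Real.norm_eq_abs]; congr 1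
      simp only [Prod.snd_sub, ContinuousMap.sub_apply]; ring
  have k2 := dd t ht' ht x
  have k3 := dd s hs hs' x
  have k4 := pt_TH hτ1 hθ1 hN hu' hp' hs hst ht x
  rw [show h (t, (x:ℝ), u t x, p t x) - h (t, (x:ℝ), u' t x, p' t x) -
    (h (s, (x:ℝ), u s x, p s x) - h (s, (x:ℝ), u' s x, p' s x)) =
    h (t, (x:ℝ), u t x, p t x) - h (s, (x:ℝ), u s x, p s x) -
    (h (t, (x:ℝ), u' t x, p' t x) - h (s, (x:ℝ), u' s x, p' s x)) by ring]
  have k5 := mul_le_mul (add_le_add k2 k3) k4 (norm_nonneg _) (by linarith)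
  calc _ ≤ _ := key
    _ ≤ L * (H * (t - s) ^ θ + (H + H) * ((N + 1) * (t - s) ^ θ)) :=
        mul_le_mul_of_nonneg_left (add_le_add k1 k5) hL.nn
    _ = _ := by ring

end

/-! ### The linear boundary problem -/

/-- Values of the unknown curves: an interior forcing together with the two boundary velocities. -/
abbrev EX (ℓ : ℝ) := XI ℓ × ℝ × ℝ

section
variable {ℓ : ℝ} (hl : 0 < ℓ)

/-- The affine function with value `c` at `ℓ` and `d` at `-ℓ`. -/
def linX (c d : ℝ) : XI ℓ := ⟨fun x => c * ((ℓ + x) / (2 * ℓ)) + d * ((ℓ - x) / (2 * ℓ)), by fun_prop⟩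

include hl in
theorem linX_norm (c d : ℝ) : ‖(linX c d : XI ℓ)‖ ≤ max |c| |d| := by
  refine (ContinuousMap.norm_le _ (le_max_of_le_left (abs_nonneg _))).2 fun x => ?_
  change |c * ((ℓ + x) / (2 * ℓ)) + d * ((ℓ - x) / (2 * ℓ))| ≤ _
  have h1 : 0 ≤ (ℓ + x) / (2 * ℓ) := div_nonneg (by linarith [x.2.1]) (by linarith)
  have h2 : 0 ≤ (ℓ - x) / (2 * ℓ) := div_nonneg (by linarith [x.2.2]) (by linarith)
  have h3 : (ℓ + x) / (2 * ℓ) + (ℓ - x) / (2 * ℓ) = 1 := by field_simp; ring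
  refine (abs_add_le _ _).trans ?_
  rw [abs_mul, abs_mul, abs_of_nonneg h1, abs_of_nonneg h2]
  have := mul_le_mul_of_nonneg_right (le_max_left |c| |d|) h1
  have := mul_le_mul_of_nonneg_right (le_max_right |c| |d|) h2
  calc _ ≤ max |c| |d| * ((ℓ + x) / (2 * ℓ)) + max |c| |d| * ((ℓ - x) / (2 * ℓ)) := by linarith
    _ = _ := by rw [← mul_add, h3, mul_one]

theorem linX_sub (c d c' d' : ℝ) : (linX c d : XI ℓ) - linX c' d' = linX (c - c') (d - d') := by
  ext x
  simp only [linX, ContinuousMap.sub_apply, ContinuousMap.coe_mk]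
  ring

include hl in
theorem linX_TH {τ θ H : ℝ} {c d : ℝ → ℝ} (hc : TH τ θ H c) (hd : TH τ θ H d) :
    TH τ θ H (fun t => (linX (c t) (d t) : XI ℓ)) := fun s t hs hst ht => by
  rw [linX_sub]
  exact (linX_norm hl _ _).trans (max_le (hc s t hs hst ht) (hd s t hs hst ht))

theorem TH.fst {E F : Type*} [NormedAddCommGroup E] [NormedAddCommGroup F] {τ θ H : ℝ}
    {φ : ℝ → E × F} (h : TH τ θ H φ) : TH τ θ H (fun t => (φ t).1) := fun s t hs hst ht =>
  (norm_fst_le (φ t - φ s)).trans (h s t hs hst ht)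

theorem TH.snd {E F : Type*} [NormedAddCommGroup E] [NormedAddCommGroup F] {τ θ H : ℝ}
    {φ : ℝ → E × F} (h : TH τ θ H φ) : TH τ θ H (fun t => (φ t).2) := fun s t hs hst ht =>
  (norm_snd_le (φ t - φ s)).trans (h s t hs hst ht)

theorem TH.prodMk {E F : Type*} [NormedAddCommGroup E] [NormedAddCommGroup F] {τ θ H : ℝ}
    {φ : ℝ → E} {ψ : ℝ → F} (h : TH τ θ H φ) (h' : TH τ θ H ψ) :
    TH τ θ H (fun t => (φ t, ψ t)) := fun s t hs hst ht =>
  max_le (h s t hs hst ht) (h' s t hs hst ht)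

/-- The primitive of a bounded curve is Hölder with a small constant on short intervals. -/
theorem TH.primitive {E : Type*} [NormedAddCommGroup E] [NormedSpace ℝ E] {τ θ N : ℝ} {φ : ℝ → E}
    (hc : ContinuousOn φ (Icc 0 τ)) (hN : ∀ t, 0 ≤ t → t ≤ τ → ‖φ t‖ ≤ N) (hθ1 : θ < 1) :
    TH τ θ (N * τ ^ (1 - θ)) (fun t => ∫ r in (0:ℝ)..t, φ r) := fun s t hs hst ht => by
  have hi : ∀ r, 0 ≤ r → r ≤ τ → IntervalIntegrable φ volume 0 r := fun r h0 h1 =>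
    (hc.mono (Icc_subset_Icc_right h1)).intervalIntegrable_of_Icc h0
  have hN0 : 0 ≤ N := (norm_nonneg _).trans (hN s hs (hst.trans ht))
  rw [intervalIntegral.integral_interval_sub_left (hi t (hs.trans hst) ht) (hi s hs (hst.trans ht))]
  refine (intervalIntegral.norm_integral_le_of_norm_le_const (C := N) fun r hr => ?_).trans ?_
  · rw [uIoc_of_le hst] at hr
    exact hN r (hs.trans hr.1.le) (hr.2.trans ht)
  · rw [abs_of_nonneg (by linarith), mul_assoc]
    refine mul_le_mul_of_nonneg_left ?_ hN0
    rcases hst.eq_or_lt with rfl | h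
    · rw [sub_self]
      exact mul_nonneg (Real.rpow_nonneg (hs.trans ht) _) (Real.rpow_nonneg le_rfl _)
    · have h0 : 0 < t - s := by linarith
      calc t - s = (t - s) ^ (1 - θ) * (t - s) ^ θ := by
            rw [← Real.rpow_add h0, sub_add_cancel, Real.rpow_one]
        _ ≤ _ := by
            gcongr
            linarith

end

namespace ParaSys
variable {ℓ α : ℝ} {hl : 0 < ℓ} (S : ParaSys ℓ hl α)

/-- `w = Q - κ`, the image of the zero-boundary part under the linear operator. -/
def Wd (φ : ℝ → EX ℓ) (t : ℝ) : XI ℓ := S.P.Q (fun s => (φ s).1) t - (φ t).1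

/-- The increment `u - v₀` of the solution. -/
def Uc (φ : ℝ → EX ℓ) (t : ℝ) : XI ℓ :=
  linX (∫ r in (0:ℝ)..t, (φ r).2.1) (∫ r in (0:ℝ)..t, (φ r).2.2) + S.P.G (S.Wd φ t)

/-- The increment `u_x - v₀'` of the derivative. -/
def Pc (φ : ℝ → EX ℓ) (t : ℝ) : XI ℓ :=
  ContinuousMap.const _ (((∫ r in (0:ℝ)..t, (φ r).2.1) - ∫ r in (0:ℝ)..t, (φ r).2.2) / (2 * ℓ)) +
    S.Z1 (S.Wd φ t)

variable {τ θ R H0 N : ℝ} {φ : ℝ → EX ℓ}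

theorem Q_zero (κ : ℝ → XI ℓ) : S.P.Q κ 0 = κ 0 := by
  simp [MRSys.Q, S.P.S_zero]

theorem Wd_zero (φ : ℝ → EX ℓ) : S.Wd φ 0 = 0 := by
  simp [Wd, S.Q_zero]

theorem Uc_zero (φ : ℝ → EX ℓ) : S.Uc φ 0 = 0 := by
  ext x; simp [Uc, S.Wd_zero, linX]

theorem Pc_zero (φ : ℝ → EX ℓ) : S.Pc φ 0 = 0 := by
  ext x; simp [Pc, S.Wd_zero]

/-- The constant of the linear theory; it does not depend on the coefficient `W`. -/
def KS (θ : ℝ) : ℝ := Heat.MM * (3 / θ + 1 / (1 - θ) + 5) + 1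

theorem KS_pos (hθ : 0 < θ) (hθ1 : θ < 1) : 0 < KS θ := by
  have : 0 < 1 - θ := by linarith
  have := Heat.MM_nonneg
  unfold KS; positivity

theorem CQ_eq : S.P.CQ θ + 1 = KS θ := by rw [MRSys.CQ, S.hM, KS]

/-- Hölder bounds for the curves produced by the linear theory. `Wd` obeys the maximal regularity
estimate; the others are primitives in time or interpolate, with parameter `η`, between a primitive
and the second derivative. -/
theorem lin_est (hτ0 : 0 ≤ τ) (hτ1 : τ ≤ 1) (hθ : 0 < θ) (hθ1 : θ < 1) (hR : 0 ≤ R) (hH0 : 0 ≤ H0)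
    (hφ : TH τ θ R φ) (h0 : TH τ θ H0 (fun t => S.P.S t (φ 0).1)) (hN : ‖φ 0‖ ≤ N)
    {η : ℝ} (hη : 0 < η) (hηl : η ≤ ℓ) {Sg B : ℝ} (hSg : Sg = KS θ * R + H0)
    (hB : B = (N + Sg) * τ ^ (1 - θ)) :
    TH τ θ Sg (S.Wd φ) ∧ TH τ θ (2 * B) (S.Uc φ) ∧
      TH τ θ (2 / η * B + η * (‖S.Z2‖ * Sg)) (fun t => S.Z1 (S.Wd φ t)) ∧
      TH τ θ (1 / ℓ * B + (2 / η * B + η * (‖S.Z2‖ * Sg))) (S.Pc φ) := by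
  have hK := KS_pos hθ hθ1
  have hN0 : 0 ≤ N := (norm_nonneg _).trans hN
  have hτθ : τ ^ θ ≤ 1 := Real.rpow_le_one hτ0 hτ1 hθ.le
  have hQ := S.P.Q_holder hφ.fst hR hθ hθ1 h0
  have hKR : 0 ≤ KS θ * R := by positivity
  have hSg0 : 0 ≤ Sg := by rw [hSg]; linarith
  have hCQ : 0 ≤ S.P.CQ θ := by
    have : 0 < 1 - θ := by linarith
    have := S.P.M_nonneg
    unfold MRSys.CQ; positivity
  have hRS : R ≤ Sg := by
    rw [hSg, ← S.CQ_eq]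
    have : 0 ≤ S.P.CQ θ * R := by positivity
    linarith
  have hQS : S.P.CQ θ * R + H0 ≤ Sg := by
    rw [hSg, ← S.CQ_eq]
    linarith
  have hW : TH τ θ Sg (S.Wd φ) := (hQ.sub hφ.fst).mono (by
    rw [hSg, ← S.CQ_eq]; linarith)
  have bd : ∀ t, 0 ≤ t → t ≤ τ → ‖φ t‖ ≤ N + Sg := fun t ht htτ => by
    have h1 := hφ.sup hθ hR ht htτ
    have h2 : R * τ ^ θ ≤ R := mul_le_of_le_one_right hR hτθ
    have h3 := norm_sub_norm_le (φ t) (φ 0)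
    linarith
  have bQ : ∀ t, 0 ≤ t → t ≤ τ → ‖S.P.Q (fun s => (φ s).1) t‖ ≤ N + Sg := fun t ht htτ => by
    have h1 := (hQ.mono hQS).sup hθ hSg0 ht htτ
    rw [S.Q_zero] at h1
    have h2 : Sg * τ ^ θ ≤ Sg := mul_le_of_le_one_right hSg0 hτθ
    have h3 := norm_sub_norm_le (S.P.Q (fun s => (φ s).1) t) (φ 0).1
    have h4 := norm_fst_le (φ 0)
    linarith
  have hcR : TH τ θ B (fun t => ∫ r in (0:ℝ)..t, (φ r).2.1) := by
    rw [hB]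
    exact TH.primitive (hφ.snd.fst.continuousOn hθ) (fun t ht htτ =>
      (norm_fst_le (φ t).2).trans ((norm_snd_le (φ t)).trans (bd t ht htτ))) hθ1
  have hcL : TH τ θ B (fun t => ∫ r in (0:ℝ)..t, (φ r).2.2) := by
    rw [hB]
    exact TH.primitive (hφ.snd.snd.continuousOn hθ) (fun t ht htτ =>
      (norm_snd_le (φ t).2).trans ((norm_snd_le (φ t)).trans (bd t ht htτ))) hθ1
  have hz : TH τ θ B (fun t => S.P.G (S.Wd φ t)) := by
    refine TH.congr (φ := fun t => ∫ r in (0:ℝ)..t, S.P.Q (fun s => (φ s).1) r) ?_ fun t ht htτ => ?_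
    · rw [hB]
      exact TH.primitive (hQ.continuousOn hθ) bQ hθ1
    · rw [← S.P.z_eq_int hφ.fst hR hθ hθ1 h0 ht htτ, ← S.P.G_eq hφ.fst hθ ht htτ]
      rfl
  have hZ2 := hW.clm S.Z2 le_rfl
  have hZ1 : TH τ θ (2 / η * B + η * (‖S.Z2‖ * Sg)) (fun t => S.Z1 (S.Wd φ t)) := by
    intro s t hs hst ht
    rw [← map_sub]
    refine (interp hl (S.hz1 _) (S.hz2 _) hη hηl).trans ?_
    have e1 := hz s t hs hst ht
    have e2 := hZ2 s t hs hst ht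
    rw [← map_sub] at e1 e2
    calc _ ≤ 2 / η * (B * (t - s) ^ θ) + η * (‖S.Z2‖ * Sg * (t - s) ^ θ) := by gcongr
      _ = _ := by ring
  refine ⟨hW, ((linX_TH hl hcR hcL).add hz).mono (by linarith), hZ1, TH.add ?_ hZ1⟩
  intro s t hs hst ht
  refine (ContinuousMap.norm_le _ ((norm_nonneg _).trans ((hcR.sub hcL).mono
    (H' := 1 / ℓ * B * (2 * ℓ)) (by field_simp; linarith) s t hs hst ht |>.trans le_rfl)
    |> fun h => by
      have : 0 ≤ 1 / ℓ * B * (t - s) ^ θ * (2 * ℓ) := by linarith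
      exact nonneg_of_mul_nonneg_left this (by linarith))).2 fun x => ?_
  have e := (hcR.sub hcL) s t hs hst ht
  rw [ContinuousMap.sub_apply, ContinuousMap.const_apply, ContinuousMap.const_apply, ← sub_div,
    norm_div, Real.norm_of_nonneg (by linarith : 0 ≤ 2 * ℓ), div_le_iff₀ (by linarith)]
  refine e.trans (le_of_eq ?_)
  field_simp
  ring

/-- Bounds for the linear theory that are uniform in `τ ≤ 1`. -/
theorem lin_big (hθ : 0 < θ) (hθ1 : θ < 1) (hR : 0 ≤ R) (hH0 : 0 ≤ H0) (hN0 : 0 ≤ N) :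
    ∃ C, 0 ≤ C ∧ ∀ τ φ, 0 ≤ τ → τ ≤ 1 → TH τ θ R φ → TH τ θ H0 (fun t => S.P.S t (φ 0).1) →
      ‖φ 0‖ ≤ N → TH τ θ C (S.Wd φ) ∧ TH τ θ C (S.Uc φ) ∧ TH τ θ C (fun t => S.Z1 (S.Wd φ t)) ∧
        TH τ θ C (S.Pc φ) := by
  have hK := KS_pos hθ hθ1
  set Sg := KS θ * R + H0 with hSg
  have hSg0 : 0 ≤ Sg := by positivity
  have hl' := hl
  have a1 : 0 ≤ 2 * (N + Sg) := by positivity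
  have a2 : 0 ≤ 2 / ℓ * (N + Sg) + ℓ * (‖S.Z2‖ * Sg) := by positivity
  have a3 : 0 ≤ 1 / ℓ * (N + Sg) := by positivity
  refine ⟨Sg + 2 * (N + Sg) + (1 / ℓ * (N + Sg) + (2 / ℓ * (N + Sg) + ℓ * (‖S.Z2‖ * Sg))),
    by positivity, fun τ φ h0 h1 hφ hS hN => ?_⟩
  have hB : (N + Sg) * τ ^ (1 - θ) ≤ N + Sg := mul_le_of_le_one_right (by positivity)
    (Real.rpow_le_one h0 h1 (by linarith))
  obtain ⟨e1, e2, e3, e4⟩ := S.lin_est h0 h1 hθ hθ1 hR hH0 hφ hS hN hl le_rfl hSg rfl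
  have b1 : 2 / ℓ * ((N + Sg) * τ ^ (1 - θ)) ≤ 2 / ℓ * (N + Sg) := by gcongr
  have b2 : 1 / ℓ * ((N + Sg) * τ ^ (1 - θ)) ≤ 1 / ℓ * (N + Sg) := by gcongr
  exact ⟨e1.mono (by linarith), e2.mono (by linarith), e3.mono (by linarith),
    e4.mono (by linarith)⟩

/-- For curves vanishing at time `0` the lower order quantities have small constants on short intervals,
while `Wd` has the constant `KS θ`, which does not depend on the operator. -/
theorem lin_small (hθ : 0 < θ) (hθ1 : θ < 1) {ε : ℝ} (hε : 0 < ε) :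
    ∃ τ0, 0 < τ0 ∧ τ0 ≤ 1 ∧ ∀ τ φ H, 0 ≤ τ → τ ≤ τ0 → 0 ≤ H → φ 0 = 0 → TH τ θ H φ →
      TH τ θ (KS θ * H) (S.Wd φ) ∧ TH τ θ (ε * H) (S.Uc φ) ∧
      TH τ θ (ε * H) (fun t => S.Z1 (S.Wd φ t)) ∧ TH τ θ (ε * H) (S.Pc φ) := by
  have hK := KS_pos hθ hθ1
  set η := min ℓ (ε / (2 * (‖S.Z2‖ * KS θ + 1))) with hη
  have hη0 : 0 < η := lt_min hl (by positivity)
  have hη1 : η * (‖S.Z2‖ * KS θ) ≤ ε / 2 := by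
    have h1 : η ≤ ε / (2 * (‖S.Z2‖ * KS θ + 1)) := min_le_right _ _
    rw [le_div_iff₀ (by positivity)] at h1
    nlinarith
  have hl' := hl
  set A := 2 + 1 / ℓ + 2 / η with hA
  have hA0 : 0 < A := by positivity
  have lim : Tendsto (fun τ : ℝ => A * KS θ * τ ^ (1 - θ)) (𝓝[>] 0) (𝓝 0) := by
    have : ContinuousAt (fun τ : ℝ => A * KS θ * τ ^ (1 - θ)) 0 :=
      continuousAt_const.mul (continuousAt_id.rpow_const (Or.inr (by linarith)))
    have h := this.tendsto
    rw [Real.zero_rpow (by linarith), mul_zero] at h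
    exact h.mono_left nhdsWithin_le_nhds
  obtain ⟨τ0, hτ0, h2⟩ := ((lim.eventually (gt_mem_nhds (by positivity : 0 < ε / 2))).and
    (Ioc_mem_nhdsGT (zero_lt_one' ℝ))).exists
  refine ⟨τ0, h2.1, h2.2, fun τ φ H h0 h1 hH hφ0 hφ => ?_⟩
  obtain ⟨e1, e2, e3, e4⟩ := S.lin_est (N := 0) (H0 := 0) h0 (h1.trans h2.2) hθ hθ1 hH le_rfl hφ
    ((TH.const 0).congr fun t _ _ => by simp [hφ0]) (by simp [hφ0]) hη0 (min_le_left _ _) rfl rfl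
  have hp : τ ^ (1 - θ) ≤ τ0 ^ (1 - θ) := Real.rpow_le_rpow h0 h1 (by linarith)
  have c0 : 0 ≤ τ ^ (1 - θ) := Real.rpow_nonneg h0 _
  have hb : A * ((0 + (KS θ * H + 0)) * τ ^ (1 - θ)) ≤ ε / 2 * H := by
    calc A * ((0 + (KS θ * H + 0)) * τ ^ (1 - θ)) = A * KS θ * τ ^ (1 - θ) * H := by ring
      _ ≤ A * KS θ * τ0 ^ (1 - θ) * H := by gcongr
      _ ≤ _ := by gcongr
  have hc : η * (‖S.Z2‖ * (KS θ * H + 0)) ≤ ε / 2 * H := by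
    calc η * (‖S.Z2‖ * (KS θ * H + 0)) = η * (‖S.Z2‖ * KS θ) * H := by ring
      _ ≤ _ := by gcongr
  set B := (0 + (KS θ * H + 0)) * τ ^ (1 - θ) with hBdef
  have hB0 : 0 ≤ B := by positivity
  have k1 : 0 ≤ 1 / ℓ * B := by positivity
  have k2 : 0 ≤ 2 / η * B := by positivity
  have k3 : A * B = 2 * B + 1 / ℓ * B + 2 / η * B := by rw [hA]; ring
  have k4 : 0 ≤ ε / 2 * H := by positivity
  exact ⟨e1.mono (by linarith), e2.mono (by linarith), e3.mono (by linarith), e4.mono (by linarith)⟩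

theorem Wd_sub {R' : ℝ} {ψ : ℝ → EX ℓ} (hφ : TH τ θ R φ) (hψ : TH τ θ R' ψ) (hθ : 0 < θ) {t : ℝ}
    (ht : 0 ≤ t) (htτ : t ≤ τ) : S.Wd (fun s => φ s - ψ s) t = S.Wd φ t - S.Wd ψ t := by
  have := S.P.Q_sub hφ.fst hψ.fst hθ ht htτ
  simp only [Wd, Prod.fst_sub]
  rw [this]; abel

theorem int_sub {R R' : ℝ} {φ ψ : ℝ → ℝ} (hφ : TH τ θ R φ) (hψ : TH τ θ R' ψ) (hθ : 0 < θ) {t : ℝ}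
    (ht : 0 ≤ t) (htτ : t ≤ τ) :
    ∫ r in (0:ℝ)..t, (φ r - ψ r) = (∫ r in (0:ℝ)..t, φ r) - ∫ r in (0:ℝ)..t, ψ r :=
  intervalIntegral.integral_sub
    (((hφ.continuousOn hθ).mono (Icc_subset_Icc_right htτ)).intervalIntegrable_of_Icc ht)
    (((hψ.continuousOn hθ).mono (Icc_subset_Icc_right htτ)).intervalIntegrable_of_Icc ht)

theorem Uc_sub {R' : ℝ} {ψ : ℝ → EX ℓ} (hφ : TH τ θ R φ) (hψ : TH τ θ R' ψ) (hθ : 0 < θ) {t : ℝ}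
    (ht : 0 ≤ t) (htτ : t ≤ τ) : S.Uc (fun s => φ s - ψ s) t = S.Uc φ t - S.Uc ψ t := by
  simp only [Uc, S.Wd_sub hφ hψ hθ ht htτ, Prod.fst_sub, Prod.snd_sub, map_sub]
  rw [int_sub hφ.snd.fst hψ.snd.fst hθ ht htτ, int_sub hφ.snd.snd hψ.snd.snd hθ ht htτ, ← linX_sub]
  abel

theorem Pc_sub {R' : ℝ} {ψ : ℝ → EX ℓ} (hφ : TH τ θ R φ) (hψ : TH τ θ R' ψ) (hθ : 0 < θ) {t : ℝ}
    (ht : 0 ≤ t) (htτ : t ≤ τ) : S.Pc (fun s => φ s - ψ s) t = S.Pc φ t - S.Pc ψ t := by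
  simp only [Pc, S.Wd_sub hφ hψ hθ ht htτ, Prod.fst_sub, Prod.snd_sub, map_sub]
  rw [int_sub hφ.snd.fst hψ.snd.fst hθ ht htτ, int_sub hφ.snd.snd hψ.snd.snd hθ ht htτ]
  ext x
  simp only [ContinuousMap.add_apply, ContinuousMap.sub_apply, ContinuousMap.const_apply]
  ring

end ParaSys

/-! ### Local existence by contraction -/

/-- The data of the problem: the equation `u_t = a u_xx + f` in the interior, and the boundary
conditions `u_t = r` at `x = ℓ` and `u_t = l` at `x = -ℓ`. The coefficients depend on `(t,x,u,u_x)`. -/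
structure Dat (T ℓ : ℝ) where
  a : ℝ × ℝ × ℝ × ℝ → ℝ
  f : ℝ × ℝ × ℝ × ℝ → ℝ
  r : ℝ × ℝ × ℝ × ℝ → ℝ
  l : ℝ × ℝ × ℝ × ℝ → ℝ
  na : NLin T ℓ a
  nf : NLin T ℓ f
  nr : NLin T ℓ r
  nl : NLin T ℓ l
  pos : ∀ t ∈ Icc 0 T, ∀ x ∈ Icc (-ℓ) ℓ, ∀ z p, 0 < a (t, x, z, p)

/-- The problem with initial time `σ`. -/
def Dat.shift {T ℓ : ℝ} (D : Dat T ℓ) {σ : ℝ} (hσ : 0 ≤ σ) : Dat (T - σ) ℓ where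
  a q := D.a (q.1 + σ, q.2)
  f q := D.f (q.1 + σ, q.2)
  r q := D.r (q.1 + σ, q.2)
  l q := D.l (q.1 + σ, q.2)
  na := D.na.shift hσ
  nf := D.nf.shift hσ
  nr := D.nr.shift hσ
  nl := D.nl.shift hσ
  pos t ht x hx z p := D.pos _ ⟨by linarith [ht.1], by linarith [ht.2]⟩ x hx z p

theorem TH.eval {X : Type*} [TopologicalSpace X] [CompactSpace X] {τ θ H : ℝ} {φ : ℝ → C(X, ℝ)}
    (h : TH τ θ H φ) (x : X) : TH τ θ H (fun t => φ t x) := fun s t hs hst ht =>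
  ((φ t - φ s).norm_coe_le_norm x).trans (h s t hs hst ht)

theorem TH.bd {E : Type*} [NormedAddCommGroup E] {τ θ H : ℝ} {φ : ℝ → E} (h : TH τ θ H φ)
    (hθ : 0 < θ) (hH : 0 ≤ H) (hτ0 : 0 ≤ τ) (hτ1 : τ ≤ 1) {t : ℝ} (ht : 0 ≤ t) (htτ : t ≤ τ) :
    ‖φ t‖ ≤ ‖φ 0‖ + H := by
  have h1 := h.sup hθ hH ht htτ
  have h2 : H * τ ^ θ ≤ H := mul_le_of_le_one_right hH (Real.rpow_le_one hτ0 hτ1 hθ.le)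
  have h3 := norm_sub_norm_le (φ t) (φ 0)
  linarith

theorem TH.const_add {E : Type*} [NormedAddCommGroup E] {τ θ H : ℝ} {φ : ℝ → E} (h : TH τ θ H φ)
    (c : E) : TH τ θ H (fun t => c + φ t) := fun s t hs hst ht => by
  rw [add_sub_add_left_eq_sub]; exact h s t hs hst ht

namespace ParaSys
variable {T ℓ α : ℝ} {hl : 0 < ℓ} (S : ParaSys ℓ hl α) (D : Dat T ℓ) (v0 v1 v2 : XI ℓ)

/-- The candidate solution attached to a forcing curve. -/
def US (φ : ℝ → EX ℓ) (t : ℝ) : XI ℓ := v0 + S.Uc φ t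
/-- The candidate space derivative. -/
def PS (φ : ℝ → EX ℓ) (t : ℝ) : XI ℓ := v1 + S.Pc φ t
/-- The candidate second space derivative. -/
def QS (φ : ℝ → EX ℓ) (t : ℝ) : XI ℓ := v2 + S.Z2 (S.Wd φ t)

/-- Composition of a coefficient with the candidate solution. -/
def NS (h : ℝ × ℝ × ℝ × ℝ → ℝ) (φ : ℝ → EX ℓ) (t : ℝ) : XI ℓ := Nem h t (S.US v0 φ t) (S.PS v1 φ t)

/-- The map whose fixed points correspond to solutions. -/
def Phi (φ : ℝ → EX ℓ) (t : ℝ) : EX ℓ :=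
  (S.NS v0 v1 D.a φ t * S.QS v2 φ t + S.NS v0 v1 D.f φ t -
      linX (S.NS v0 v1 D.r φ t (pR hl)) (S.NS v0 v1 D.l φ t (pM hl)) - S.Wd φ t,
    S.NS v0 v1 D.r φ t (pR hl), S.NS v0 v1 D.l φ t (pM hl))

/-- The common initial value of the curves. -/
def E0 (hl : 0 < ℓ) (D : Dat T ℓ) (v0 v1 v2 : XI ℓ) : EX ℓ :=
  (Nem D.a 0 v0 v1 * v2 + Nem D.f 0 v0 v1 -
      linX (Nem D.r 0 v0 v1 (pR hl)) (Nem D.l 0 v0 v1 (pM hl)),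
    Nem D.r 0 v0 v1 (pR hl), Nem D.l 0 v0 v1 (pM hl))

theorem US_zero (φ : ℝ → EX ℓ) : S.US v0 φ 0 = v0 := by rw [US, S.Uc_zero, add_zero]
theorem PS_zero (φ : ℝ → EX ℓ) : S.PS v1 φ 0 = v1 := by rw [PS, S.Pc_zero, add_zero]
theorem QS_zero (φ : ℝ → EX ℓ) : S.QS v2 φ 0 = v2 := by rw [QS, S.Wd_zero, map_zero, add_zero]
theorem NS_zero (h : ℝ × ℝ × ℝ × ℝ → ℝ) (φ : ℝ → EX ℓ) : S.NS v0 v1 h φ 0 = Nem h 0 v0 v1 := by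
  rw [NS, US_zero, PS_zero]

theorem Phi_zero (φ : ℝ → EX ℓ) : S.Phi D v0 v1 v2 φ 0 = E0 hl D v0 v1 v2 := by
  simp only [Phi, E0, NS_zero, QS_zero, Wd_zero, sub_zero]

variable {θ R H0 N : ℝ}

/-- Bounds for `Phi` and its ingredients that are uniform in `τ ≤ 1`. -/
theorem Phi_big (hθ : 0 < θ) (hθ1 : θ < 1) (hR : 0 ≤ R) (hH0 : 0 ≤ H0) (hN0 : 0 ≤ N) :
    ∃ C M L, 0 ≤ C ∧ 0 ≤ M ∧ SDP (Box T ℓ M) D.a L ∧ SDP (Box T ℓ M) D.f L ∧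
      SDP (Box T ℓ M) D.r L ∧ SDP (Box T ℓ M) D.l L ∧ ∀ τ φ, 0 ≤ τ → τ ≤ 1 → τ ≤ T →
      TH τ θ R φ → TH τ θ H0 (fun t => S.P.S t (φ 0).1) → ‖φ 0‖ ≤ N →
      (TH τ θ C (S.Wd φ) ∧ TH τ θ C (S.US v0 φ) ∧ TH τ θ C (S.PS v1 φ) ∧ TH τ θ C (S.QS v2 φ)) ∧
      (∀ t, 0 ≤ t → t ≤ τ → ‖S.US v0 φ t‖ ≤ M ∧ ‖S.PS v1 φ t‖ ≤ M ∧ ‖S.QS v2 φ t‖ ≤ M) ∧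
      TH τ θ C (S.Phi D v0 v1 v2 φ) := by
  obtain ⟨C, hC, hb⟩ := S.lin_big hθ hθ1 hR hH0 hN0
  have hZ := norm_nonneg S.Z2
  set C1 := C + ‖S.Z2‖ * C with hC1
  have hZC : 0 ≤ ‖S.Z2‖ * C := by positivity
  have hC1' : 0 ≤ C1 := by positivity
  set M := ‖v0‖ + ‖v1‖ + ‖v2‖ + C1 with hM
  have hM0 : 0 ≤ M := by positivity
  obtain ⟨La, ha⟩ := D.na M
  obtain ⟨Lf, hf⟩ := D.nf M
  obtain ⟨Lr, hr⟩ := D.nr M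
  obtain ⟨Ll, hl'⟩ := D.nl M
  have up : ∀ {h : ℝ × ℝ × ℝ × ℝ → ℝ} {L L' : ℝ}, SDP (Box T ℓ M) h L → L ≤ L' →
      SDP (Box T ℓ M) h L' := fun {h L L'} hs hle => by
    refine ⟨hs.nn.trans hle, fun A hA => (hs.bd A hA).trans hle, fun A hA B hB =>
      (hs.lip A hA B hB).trans (by gcongr), fun A hA B hB A' hA' B' hB' =>
      (hs.sd A hA B hB A' hA' B' hB').trans (by gcongr)⟩
  set L := La + Lf + Lr + Ll with hL
  have n1 := ha.nn
  have n2 := hf.nn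
  have n3 := hr.nn
  have n4 := hl'.nn
  replace ha : SDP (Box T ℓ M) D.a L := up ha (by linarith)
  replace hf : SDP (Box T ℓ M) D.f L := up hf (by linarith)
  replace hr : SDP (Box T ℓ M) D.r L := up hr (by linarith)
  replace hl' : SDP (Box T ℓ M) D.l L := up hl' (by linarith)
  have hL0 : 0 ≤ L := by positivity
  set K := L * (C1 + 1) with hK
  have hK0 : 0 ≤ K := by positivity
  set C2 := C1 + (L * C1 + K * M + K + K + C1) with hC2
  have hx : 0 ≤ L * C1 := by positivity
  have hy : 0 ≤ K * M := by positivity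
  refine ⟨C2, M, L, by positivity, hM0, ha, hf, hr, hl', fun τ φ h0 h1 hT hφ hS hN => ?_⟩
  obtain ⟨e1, e2, -, e4⟩ := hb τ φ h0 h1 hφ hS hN
  have hU : TH τ θ C1 (S.US v0 φ) := (e2.const_add v0).mono (by linarith)
  have hP : TH τ θ C1 (S.PS v1 φ) := (e4.const_add v1).mono (by linarith)
  have hQ : TH τ θ C1 (S.QS v2 φ) := ((e1.clm S.Z2 le_rfl).const_add v2).mono (by linarith)
  have n0 := norm_nonneg v0
  have n1 := norm_nonneg v1
  have n2 := norm_nonneg v2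
  have bU : ∀ t, 0 ≤ t → t ≤ τ → ‖S.US v0 φ t‖ ≤ M := fun t ht htτ => by
    have := hU.bd hθ hC1' h0 h1 ht htτ
    rw [US_zero] at this; linarith
  have bP : ∀ t, 0 ≤ t → t ≤ τ → ‖S.PS v1 φ t‖ ≤ M := fun t ht htτ => by
    have := hP.bd hθ hC1' h0 h1 ht htτ
    rw [PS_zero] at this; linarith
  have bQ : ∀ t, 0 ≤ t → t ≤ τ → ‖S.QS v2 φ t‖ ≤ M := fun t ht htτ => by
    have := hQ.bd hθ hC1' h0 h1 ht htτ
    rw [QS_zero] at this; linarith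
  have nTH : ∀ {h : ℝ × ℝ × ℝ × ℝ → ℝ}, NLin T ℓ h → SDP (Box T ℓ M) h L →
      TH τ θ K (S.NS v0 v1 h φ) := fun hh hs => Nem_TH hh hs h1 hT hθ1 hC1' hU hP bU bP
  have tr := (nTH D.nr hr).eval (pR hl)
  have tl := (nTH D.nl hl').eval (pM hl)
  refine ⟨⟨e1.mono (by linarith), hU.mono (by linarith), hP.mono (by linarith),
    hQ.mono (by linarith)⟩, fun t ht htτ => ⟨bU t ht htτ, bP t ht htτ, bQ t ht htτ⟩, ?_⟩
  refine TH.prodMk (((TH.add (TH.mul (nTH D.na ha) hQ (F := L) (F' := M) (fun t ht htτ =>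
    Nem_bd D.na ha ⟨ht, htτ.trans hT⟩ (bU t ht htτ) (bP t ht htτ)) bQ) (nTH D.nf hf)).sub
    (linX_TH hl tr tl)).sub e1 |>.mono (by linarith)) (TH.prodMk (tr.mono ?_) (tl.mono ?_)) <;>
  linarith

end ParaSys

theorem TH.small_mul {X : Type*} [NormedRing X] {τ θ H H' F F' : ℝ} {φ ψ : ℝ → X}
    (h : TH τ θ H φ) (h' : TH τ θ H' ψ) (hψ0 : ψ 0 = 0) (hθ : 0 < θ) (hH' : 0 ≤ H')
    (hF : ∀ t, 0 ≤ t → t ≤ τ → ‖φ t‖ ≤ F) (hF' : H' * τ ^ θ ≤ F') :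
    TH τ θ (F * H' + H * F') (fun t => φ t * ψ t) :=
  TH.mul h h' hF fun t ht htτ => by
    have := h'.sup hθ hH' ht htτ
    rw [hψ0, sub_zero] at this
    exact this.trans hF'

namespace ParaSys
variable {T ℓ α : ℝ} {hl : 0 < ℓ}

theorem exists_small {K θ ε : ℝ} (hK : 0 ≤ K) (hθ : 0 < θ) (hε : 0 < ε) :
    ∃ τ0, 0 < τ0 ∧ τ0 ≤ 1 ∧ ∀ τ, 0 ≤ τ → τ ≤ τ0 → K * τ ^ θ ≤ ε := by
  have lim : Tendsto (fun τ : ℝ => K * τ ^ θ) (𝓝[>] 0) (𝓝 0) := by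
    have : ContinuousAt (fun τ : ℝ => K * τ ^ θ) 0 :=
      continuousAt_const.mul (continuousAt_id.rpow_const (Or.inr hθ.le))
    have h := this.tendsto
    rw [Real.zero_rpow hθ.ne', mul_zero] at h
    exact h.mono_left nhdsWithin_le_nhds
  obtain ⟨τ0, hτ0, h2⟩ := ((lim.eventually (gt_mem_nhds hε)).and
    (Ioc_mem_nhdsGT (zero_lt_one' ℝ))).exists
  refine ⟨τ0, h2.1, h2.2, fun τ h h' => le_trans ?_ hτ0.le⟩
  gcongr

set_option maxHeartbeats 1000000 in
/-- On a short interval `Phi` halves the Hölder constant of differences of curves with initial value `E0`,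
hence has a fixed point. The operator is chosen so that `W` is close to the initial leading
coefficient. -/
theorem exists_fix (hT : 0 < T) (hα : 0 < α) (hα1 : α < 1) (D : Dat T ℓ) (v0 v1 v2 : XI ℓ)
    {Hκ : ℝ} (hκ : ∀ x y, |(E0 hl D v0 v1 v2).1 x - (E0 hl D v0 v1 v2).1 y| ≤ Hκ * |(x : ℝ) - y| ^ α)
    (hκ0 : (E0 hl D v0 v1 v2).1 (pM hl) = 0) (hκ1 : (E0 hl D v0 v1 v2).1 (pR hl) = 0) :
    ∃ (S : ParaSys ℓ hl α) (τ R H0 : ℝ) (φ : ℝ → EX ℓ), 0 < τ ∧ τ ≤ 1 ∧ τ ≤ T ∧ 0 ≤ R ∧ 0 ≤ H0 ∧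
      TH τ (α / 2) R φ ∧ φ 0 = E0 hl D v0 v1 v2 ∧ TH τ (α / 2) H0 (fun t => S.P.S t (φ 0).1) ∧
      ∀ t ∈ Icc 0 τ, S.Phi D v0 v1 v2 φ t = φ t := by
  set θ := α / 2 with hθdef
  have hθ : 0 < θ := by positivity
  have hθ1 : θ < 1 := by rw [hθdef]; linarith
  have hK := KS_pos hθ hθ1
  have z0 : (0:ℝ) ∈ Icc 0 T := ⟨le_rfl, hT.le⟩
  set a0 := Nem D.a 0 v0 v1 with ha0
  have pa0 : ∀ x, 0 < a0 x := fun x => by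
    rw [ha0, Nem_apply D.na z0]; exact D.pos _ z0 _ x.2 _ _
  have hne : (univ : Set (Icc (-ℓ) ℓ)).Nonempty := ⟨pR hl, trivial⟩
  obtain ⟨xm, -, hxm⟩ := isCompact_univ.exists_isMinOn hne a0.continuous.continuousOn
  set m := a0 xm with hm
  have hm0 : 0 < m := pa0 xm
  have hxm' : ∀ x, m ≤ a0 x := fun x => hxm (mem_univ x)
  -- `ε0` is the admissible oscillation of the leading coefficient
  set ε0 := min (m / 2) (m / (32 * KS θ)) with hε0
  have hε0' : 0 < ε0 := lt_min (by positivity) (by positivity)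
  have hε0K : ε0 * (2 / m) * 2 * KS θ ≤ 1 / 8 := by
    have h1 : ε0 ≤ m / (32 * KS θ) := min_le_right _ _
    calc ε0 * (2 / m) * 2 * KS θ ≤ m / (32 * KS θ) * (2 / m) * 2 * KS θ := by gcongr
      _ = 1 / 8 := by field_simp; norm_num
  obtain ⟨S, hSW⟩ := exists_paraSys hl hα hα1 a0 pa0 hε0'
  have hWm : ∀ x, m / 2 ≤ S.W x := fun x => by
    have h1 : |S.W x - a0 x| ≤ ε0 := ((S.W - a0).norm_coe_le_norm x).trans hSW
    have h2 : ε0 ≤ m / 2 := min_le_left _ _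
    have := (abs_le.1 h1).1
    linarith [hxm' x]
  have hWne : ∀ x, S.W x ≠ 0 := fun x => (by have := hWm x; linarith : (0:ℝ) < S.W x).ne'
  set iW : XI ℓ := ⟨fun x => (S.W x)⁻¹, S.W.continuous.inv₀ hWne⟩ with hiW
  have hiWn : ‖iW‖ ≤ 2 / m := by
    refine (ContinuousMap.norm_le _ (by positivity)).2 fun x => ?_
    change ‖(S.W x)⁻¹‖ ≤ _
    have := hWm x
    rw [norm_inv, Real.norm_of_nonneg (by linarith), inv_le_comm₀ (by linarith) (by positivity),
      inv_div]
    exact this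
  set e0 := E0 hl D v0 v1 v2 with he0
  set H0 := S.C0 * max Hκ 0 with hH0
  have hH00 : 0 ≤ H0 := mul_nonneg S.C0_nonneg (le_max_right _ _)
  have orb : ∀ τ, TH τ θ H0 (fun t => S.P.S t e0.1) := fun τ =>
    S.orb e0.1 (max Hκ 0) τ (fun x y => (hκ x y).trans (by gcongr; exact le_max_left _ _)) hκ0 hκ1
  obtain ⟨CC, _, _, hCC, -, -, -, -, -, hc⟩ := S.Phi_big D v0 v1 v2 hθ hθ1 le_rfl hH00
    (norm_nonneg e0)
  set R := 2 * CC with hR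
  have hR0 : 0 ≤ R := by positivity
  obtain ⟨C, M, L, hC, hM, ha, hf, hr, hl', hbig⟩ := S.Phi_big D v0 v1 v2 hθ hθ1 hR0 hH00
    (norm_nonneg e0)
  have hL := ha.nn
  have hB := norm_nonneg S.B
  -- constants of the difference estimate
  set N1 := L * (2 * C + 3) with hN1
  have hN10 : 0 ≤ N1 := by positivity
  set NE := L * (C + 1) * (2 / m) with hNE
  have hNE0 : 0 ≤ NE := by positivity
  set G := (M * N1 + C * N1) + N1 + N1 + (‖S.B‖ + ((2 * ε0) * (2 / m) * ‖S.B‖ + NE * ‖S.B‖)) with hG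
  have hG0 : 0 ≤ G := by positivity
  obtain ⟨τ1, h1, h1', hsm⟩ := S.lin_small hθ hθ1 (ε := 1 / (8 * (G + 1))) (by positivity)
  obtain ⟨τ2, h2, h2', hsm2⟩ := exists_small (K := NE * KS θ) (by positivity) hθ
    (by norm_num : (0:ℝ) < 1 / 8)
  obtain ⟨τ3, h3, h3', hsm3⟩ := exists_small (K := L * (C + 1)) (by positivity) hθ hε0'
  set τ := min (min τ1 τ2) (min τ3 T) with hτ
  have t1 : τ ≤ τ1 := (min_le_left _ _).trans (min_le_left _ _)
  have t2 : τ ≤ τ2 := (min_le_left _ _).trans (min_le_right _ _)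
  have t3 : τ ≤ τ3 := (min_le_right _ _).trans (min_le_left _ _)
  have tT : τ ≤ T := (min_le_right _ _).trans (min_le_right _ _)
  have hτ0 : 0 < τ := lt_min (lt_min h1 h2) (lt_min h3 hT)
  have hτ1 : τ ≤ 1 := t1.trans h1'
  set ε := 1 / (8 * (G + 1)) with hε
  have hεp : 0 < ε := by positivity
  have hGε : G * ε ≤ 1 / 8 := by
    rw [hε, mul_one_div, div_le_iff₀ (by positivity)]; linarith
  obtain ⟨φ, f1, f2, f3⟩ := fixed_point hτ0 hθ hR0 (S.Phi D v0 v1 v2) e0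
    (fun φ _ _ => S.Phi_zero D v0 v1 v2 φ)
    (((hc τ (fun _ => e0) hτ0.le hτ1 tT (TH.const e0) (orb τ) le_rfl).2.2).mono
      (by rw [hR]; linarith))
    (fun φ ψ H hH0 hHR hφ0 hφ hψ0 hψ hδ => by
      obtain ⟨⟨a1, a2, a3, a4⟩, a5, -⟩ := hbig τ φ hτ0.le hτ1 tT hφ (hφ0 ▸ orb τ) (by rw [hφ0])
      obtain ⟨⟨b1, b2, b3, b4⟩, b5, -⟩ := hbig τ ψ hτ0.le hτ1 tT hψ (hψ0 ▸ orb τ) (by rw [hψ0])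
      obtain ⟨d1, d2, d3, d4⟩ := hsm τ (fun t => φ t - ψ t) H hτ0.le t1 hH0 (by simp [hφ0, hψ0]) hδ
      set δ := fun t => φ t - ψ t with hδdef
      have dU : TH τ θ (ε * H) (fun t => S.US v0 φ t - S.US v0 ψ t) := d2.congr fun t ht htτ => by
        rw [S.Uc_sub hφ hψ hθ ht htτ, US, US, add_sub_add_left_eq_sub]
      have dP : TH τ θ (ε * H) (fun t => S.PS v1 φ t - S.PS v1 ψ t) := d4.congr fun t ht htτ => by
        rw [S.Pc_sub hφ hψ hθ ht htτ, PS, PS, add_sub_add_left_eq_sub]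
      have hεH : 0 ≤ ε * H := by positivity
      have dN : ∀ {h : ℝ × ℝ × ℝ × ℝ → ℝ}, NLin T ℓ h → SDP (Box T ℓ M) h L →
          TH τ θ (N1 * (ε * H)) (fun t => S.NS v0 v1 h φ t - S.NS v0 v1 h ψ t) := fun hh hs =>
        Nem_diff hh hs hτ1 tT hθ hθ1 hC hεH (fun t ht htτ => (a5 t ht htτ).1)
          (fun t ht htτ => (a5 t ht htτ).2.1) b2 b3 (fun t ht htτ => (b5 t ht htτ).1)
          (fun t ht htτ => (b5 t ht htτ).2.1) dU (by rw [US_zero, US_zero]) dP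
          (by rw [PS_zero, PS_zero])
      have tr := (dN D.nr hr).eval (pR hl)
      have tl := (dN D.nl hl').eval (pM hl)
      simp only [ContinuousMap.sub_apply] at tr tl
      have τθ : τ ^ θ ≤ 1 := Real.rpow_le_one hτ0.le hτ1 hθ.le
      -- the leading coefficient along `ψ`
      have hA : TH τ θ (L * (C + 1)) (S.NS v0 v1 D.a ψ) :=
        Nem_TH D.na ha hτ1 tT hθ1 hC b2 b3 (fun t ht htτ => (b5 t ht htτ).1)
          (fun t ht htτ => (b5 t ht htτ).2.1)
      have hE : TH τ θ NE (fun t => (S.NS v0 v1 D.a ψ t - S.W) * iW) := fun s t hs hst ht => by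
        rw [← sub_mul, sub_sub_sub_cancel_right]
        refine (norm_mul_le _ _).trans ?_
        have := mul_le_mul (hA s t hs hst ht) hiWn (norm_nonneg _)
          ((norm_nonneg _).trans (hA s t hs hst ht))
        refine this.trans (le_of_eq ?_)
        rw [hNE]; ring
      have hEb : ∀ t, 0 ≤ t → t ≤ τ → ‖(S.NS v0 v1 D.a ψ t - S.W) * iW‖ ≤ 2 * ε0 * (2 / m) :=
        fun t ht htτ => by
        have q1 := hA.sup hθ (by positivity) ht htτ
        rw [NS_zero, ← ha0] at q1
        have q2 := hsm3 τ hτ0.le t3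
        have q3 : ‖S.NS v0 v1 D.a ψ t - S.W‖ ≤ 2 * ε0 := by
          have := norm_sub_le_norm_sub_add_norm_sub (S.NS v0 v1 D.a ψ t) a0 S.W
          rw [norm_sub_rev a0] at this
          linarith
        exact (norm_mul_le _ _).trans (mul_le_mul q3 hiWn (norm_nonneg _) (by positivity))
      have w0 : S.Wd δ 0 = 0 := S.Wd_zero δ
      have g1 : TH τ θ (2 * ε0 * (2 / m) * (KS θ * H) + NE * (KS θ * H * τ ^ θ))
          (fun t => (S.NS v0 v1 D.a ψ t - S.W) * iW * S.Wd δ t) :=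
        hE.small_mul d1 w0 hθ (by positivity) hEb le_rfl
      have hBz : TH τ θ (‖S.B‖ * (ε * H)) (fun t => S.B * S.Z1 (S.Wd δ t)) := fun s t hs hst ht => by
        rw [← mul_sub, mul_assoc]
        exact (norm_mul_le _ _).trans (by gcongr; exact d3 s t hs hst ht)
      have hBH : 0 ≤ ‖S.B‖ * (ε * H) := by positivity
      have g2 : TH τ θ (2 * ε0 * (2 / m) * (‖S.B‖ * (ε * H)) + NE * (‖S.B‖ * (ε * H)))
          (fun t => (S.NS v0 v1 D.a ψ t - S.W) * iW * (S.B * S.Z1 (S.Wd δ t))) :=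
        hE.small_mul hBz (by simp [w0]) hθ hBH hEb (mul_le_of_le_one_right hBH τθ)
      have hNH : 0 ≤ N1 * (ε * H) := by positivity
      have g3 : TH τ θ (M * (N1 * (ε * H)) + C * (N1 * (ε * H)))
          (fun t => S.QS v2 φ t * (S.NS v0 v1 D.a φ t - S.NS v0 v1 D.a ψ t)) :=
        a4.small_mul (dN D.na ha) (by rw [NS_zero, NS_zero, sub_self]) hθ hNH
          (fun t ht htτ => (a5 t ht htτ).2.2) (mul_le_of_le_one_right hNH τθ)
      have hfin : (M * (N1 * (ε * H)) + C * (N1 * (ε * H))) + N1 * (ε * H) + N1 * (ε * H) +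
          (2 * ε0 * (2 / m) * (KS θ * H) + NE * (KS θ * H * τ ^ θ)) +
          (2 * ε0 * (2 / m) * (‖S.B‖ * (ε * H)) + NE * (‖S.B‖ * (ε * H))) + ‖S.B‖ * (ε * H)
          ≤ H / 2 := by
        have q1 : NE * (KS θ * H * τ ^ θ) ≤ 1 / 8 * H := by
          have := mul_le_mul_of_nonneg_right (hsm2 τ hτ0.le t2) hH0
          linarith
        have q2 : 2 * ε0 * (2 / m) * (KS θ * H) ≤ 1 / 8 * H := by
          have := mul_le_mul_of_nonneg_right hε0K hH0
          linarith
        have q3 : (M * (N1 * (ε * H)) + C * (N1 * (ε * H))) + N1 * (ε * H) + N1 * (ε * H) +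
          (2 * ε0 * (2 / m) * (‖S.B‖ * (ε * H)) + NE * (‖S.B‖ * (ε * H))) + ‖S.B‖ * (ε * H)
          = G * ε * H := by rw [hG]; ring
        have q4 := mul_le_mul_of_nonneg_right hGε hH0
        linarith
      have hs : N1 * (ε * H) ≤ H / 2 := by
        have q4 := mul_le_mul_of_nonneg_right hGε hH0
        have : N1 * (ε * H) ≤ G * ε * H := by
          refine (mul_le_mul_of_nonneg_right ?_ hεH).trans (le_of_eq (mul_assoc G ε H).symm)
          have : 0 ≤ M * N1 + C * N1 := by positivity
          have : 0 ≤ ‖S.B‖ + (2 * ε0 * (2 / m) * ‖S.B‖ + NE * ‖S.B‖) := by positivity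
          rw [hG]; linarith
        linarith
      refine TH.prodMk ?_ (TH.prodMk (tr.mono hs) (tl.mono hs))
      -- `Z2 w = (w + B Z1 w) / W` turns the difference of the equations into terms that either
      -- carry a small factor or are of lower order
      refine TH.congr (((((g3.add (dN D.nf hf)).sub (linX_TH hl tr tl)).add g1).add g2).add hBz
        |>.mono hfin) fun t ht htτ => ?_
      have hw := S.hW (S.Wd δ t)
      have e1 := S.Wd_sub hφ hψ hθ ht htτ
      have eW : S.Wd φ t = S.Wd ψ t + S.Wd δ t := by rw [e1]; abel
      have eQ : S.QS v2 φ t = S.QS v2 ψ t + S.Z2 (S.Wd δ t) := by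
        rw [QS, QS, eW, map_add, add_assoc]
      simp only [Phi, Prod.fst_sub]
      rw [eQ, eW, ← linX_sub]
      ext x
      have hx := hw x
      have hix : iW x = (S.W x)⁻¹ := rfl
      simp only [ContinuousMap.sub_apply, ContinuousMap.add_apply, ContinuousMap.mul_apply, hix]
      have hz : S.Z2 (S.Wd δ t) x = (S.W x)⁻¹ * (S.Wd δ t x + S.B x * S.Z1 (S.Wd δ t) x) := by
        rw [← hx]; field_simp [hWne x]; ring
      have hwx := hWne x
      rw [hz]
      field_simp
      ring)
  exact ⟨S, τ, R, H0, φ, hτ0, hτ1, tT, hR0, hH00, f2, f1, f1 ▸ orb τ, f3⟩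

end ParaSys

section
variable {I : Set ℝ} {β A B C C' : ℝ} {u v : ℝ → ℝ}

theorem HolderBnd.mono (h : HolderBnd β I u C) (hC : C ≤ C') : HolderBnd β I u C' :=
  fun s hs t ht => (h s hs t ht).trans
    (mul_le_mul_of_nonneg_right hC (Real.rpow_nonneg (abs_nonneg _) _))

theorem HolderBnd.mono_set {J : Set ℝ} (h : HolderBnd β I u C) (hJ : J ⊆ I) : HolderBnd β J u C :=
  fun s hs t ht => h s (hJ hs) t (hJ ht)

theorem HolderBnd.congr (h : HolderBnd β I u C) (he : ∀ x ∈ I, v x = u x) : HolderBnd β I v C :=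
  fun s hs t ht => by rw [he s hs, he t ht]; exact h s hs t ht

theorem HolderBnd.sub (h : HolderBnd β I u C) (h' : HolderBnd β I v C') :
    HolderBnd β I (fun x => u x - v x) (C + C') := fun s hs t ht => by
  rw [sub_sub_sub_comm, add_mul]
  exact (abs_sub _ _).trans (add_le_add (h s hs t ht) (h' s hs t ht))

theorem HolderBnd.add (h : HolderBnd β I u C) (h' : HolderBnd β I v C') :
    HolderBnd β I (fun x => u x + v x) (C + C') := fun s hs t ht => by
  rw [add_sub_add_comm, add_mul]
  exact (abs_add_le _ _).trans (add_le_add (h s hs t ht) (h' s hs t ht))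

theorem HolderBnd.mul (h : HolderBnd β I u C) (h' : HolderBnd β I v C') (hA : ∀ x ∈ I, |u x| ≤ A)
    (hB : ∀ x ∈ I, |v x| ≤ B) : HolderBnd β I (fun x => u x * v x) (A * C' + C * B) :=
  fun s hs t ht => by
  have e : u s * v s - u t * v t = u s * (v s - v t) + (u s - u t) * v t := by ring
  rw [e]
  refine (abs_add_le _ _).trans ?_
  rw [abs_mul, abs_mul]
  have h1 := mul_le_mul (hA s hs) (h' s hs t ht) (abs_nonneg _) ((abs_nonneg _).trans (hA s hs))
  have h2 := mul_le_mul (h s hs t ht) (hB t ht) (abs_nonneg _) ((abs_nonneg _).trans (h s hs t ht))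
  linarith

theorem HolderBnd.continuousOn (h : HolderBnd β I u C) (hβ : 0 < β) : ContinuousOn u I := by
  intro x hx
  rw [ContinuousWithinAt, tendsto_iff_dist_tendsto_zero]
  have lim : Tendsto (fun y => C * |y - x| ^ β) (𝓝[I] x) (𝓝 0) := by
    have : ContinuousAt (fun y : ℝ => C * |y - x| ^ β) x :=
      continuousAt_const.mul (ContinuousAt.rpow_const (by fun_prop) (Or.inr hβ.le))
    have h := this.tendsto
    simp only [sub_self, abs_zero, Real.zero_rpow hβ.ne', mul_zero] at h
    exact h.mono_left nhdsWithin_le_nhds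
  refine squeeze_zero' (Eventually.of_forall fun _ => dist_nonneg) ?_ lim
  filter_upwards [self_mem_nhdsWithin] with y hy
  exact h y hy x hx

theorem abs_le_rpow {r R : ℝ} (h0 : 0 ≤ r) (hr : r ≤ R) (hβ1 : β < 1) :
    r ≤ R ^ (1 - β) * r ^ β := by
  rcases h0.eq_or_lt with rfl | h
  · exact mul_nonneg (Real.rpow_nonneg hr _) (Real.rpow_nonneg le_rfl _)
  · calc r = r ^ (1 - β) * r ^ β := by rw [← Real.rpow_add h, sub_add_cancel, Real.rpow_one]
      _ ≤ _ := by
        gcongr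

theorem HolderBnd.of_lip {R : ℝ} (hβ1 : β < 1) (hC : 0 ≤ C) (hI : ∀ x ∈ I, ∀ y ∈ I, |x - y| ≤ R)
    (h : ∀ x ∈ I, ∀ y ∈ I, |u x - u y| ≤ C * |x - y|) : HolderBnd β I u (C * R ^ (1 - β)) :=
  fun s hs t ht => (h s hs t ht).trans (by
    rw [mul_assoc]
    exact mul_le_mul_of_nonneg_left (abs_le_rpow (abs_nonneg _) (hI s hs t ht) hβ1) hC)

theorem HolderBnd.of_deriv {R : ℝ} (hβ1 : β < 1) (hC : 0 ≤ C) (hI : ∀ x ∈ I, ∀ y ∈ I, |x - y| ≤ R)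
    (hc : Convex ℝ I) (h : ∀ x ∈ I, HasDerivWithinAt u (v x) I x) (hb : ∀ x ∈ I, |v x| ≤ C) :
    HolderBnd β I u (C * R ^ (1 - β)) :=
  HolderBnd.of_lip hβ1 hC hI fun _ hx _ hy =>
    hc.norm_image_sub_le_of_norm_hasDerivWithin_le h hb hy hx

end

theorem abs_sub_le_Icc {ℓ x y : ℝ} (hx : x ∈ Icc (-ℓ) ℓ) (hy : y ∈ Icc (-ℓ) ℓ) : |x - y| ≤ 2 * ℓ := by
  rw [abs_le]; constructor <;> linarith [hx.1, hx.2, hy.1, hy.2]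

/-- Composition of a nonlinearity with functions that are Hölder in space. -/
theorem HolderBnd.comp4 {T ℓ α M L Cu Cp t : ℝ} (hα1 : α < 1) {h : ℝ × ℝ × ℝ × ℝ → ℝ}
    (hL : SDP (Box T ℓ M) h L) {u p : ℝ → ℝ} (ht : t ∈ Icc 0 T)
    (hu : ∀ x ∈ Icc (-ℓ) ℓ, |u x| ≤ M) (hp : ∀ x ∈ Icc (-ℓ) ℓ, |p x| ≤ M)
    (hu' : HolderBnd α (Icc (-ℓ) ℓ) u Cu) (hp' : HolderBnd α (Icc (-ℓ) ℓ) p Cp) (hCu : 0 ≤ Cu)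
    (hCp : 0 ≤ Cp) (hl : 0 < ℓ) :
    HolderBnd α (Icc (-ℓ) ℓ) (fun x => h (t, x, u x, p x)) (L * ((2 * ℓ) ^ (1 - α) + Cu + Cp)) :=
  fun x hx y hy => by
  refine (hL.lip _ ⟨ht, hx, abs_le.1 (hu x hx), abs_le.1 (hp x hx)⟩ _
    ⟨ht, hy, abs_le.1 (hu y hy), abs_le.1 (hp y hy)⟩).trans ?_
  rw [mul_assoc]
  refine mul_le_mul_of_nonneg_left ?_ hL.nn
  have e1 := abs_le_rpow (abs_nonneg _) (abs_sub_le_Icc hx hy) hα1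
  have e2 := hu' x hx y hy
  have e3 := hp' x hx y hy
  have p0 : 0 ≤ |x - y| ^ α := Real.rpow_nonneg (abs_nonneg _) _
  have p1 : 0 ≤ (2 * ℓ) ^ (1 - α) * |x - y| ^ α := by positivity
  have p2 : 0 ≤ Cu * |x - y| ^ α := by positivity
  have p3 : 0 ≤ Cp * |x - y| ^ α := by positivity
  simp only [Prod.mk_sub_mk]
  refine norm4_le ?_ ?_ ?_ ?_
  · rw [sub_self, abs_zero]; positivity
  · linarith
  · linarith
  · linarith

/-- The primitive of a continuous curve is differentiable up to the ends of the interval. -/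
theorem prim_deriv {E : Type*} [NormedAddCommGroup E] [NormedSpace ℝ E] [CompleteSpace E] {τ : ℝ}
    {φ : ℝ → E} (hτ : 0 ≤ τ) (hc : ContinuousOn φ (Icc 0 τ)) {t : ℝ} (ht : t ∈ Icc 0 τ) :
    HasDerivWithinAt (fun t => ∫ r in (0:ℝ)..t, φ r) (φ t) (Icc 0 τ) t := by
  set ψ : ℝ → E := IccExtend hτ ((Icc 0 τ).restrict φ) with hψ
  have cψ : Continuous ψ := (continuousOn_iff_continuous_restrict.1 hc).Icc_extend'
  have eψ : ∀ s ∈ Icc 0 τ, φ s = ψ s := fun s hs => by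
    rw [hψ, IccExtend_of_mem _ _ hs]; rfl
  have h := (cψ.integral_hasStrictDerivAt 0 t).hasDerivAt.hasDerivWithinAt (s := Icc 0 τ)
  rw [← eψ t ht] at h
  refine h.congr (fun s hs => ?_) ?_
  · refine intervalIntegral.integral_congr fun r hr => ?_
    rw [uIcc_of_le hs.1] at hr
    exact eψ r ⟨hr.1, hr.2.trans hs.2⟩
  · refine intervalIntegral.integral_congr fun r hr => ?_
    rw [uIcc_of_le ht.1] at hr
    exact eψ r ⟨hr.1, hr.2.trans ht.2⟩

/-- Solutions `u` on the closed cylinder `[0,τ] × [-ℓ,ℓ]`, with `p = u_x`, `q = u_xx`, `d = u_t`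
(one-sided derivatives at the boundary); `q` and `d` are Hölder in time and continuous in space. -/
structure Cls0 {T ℓ : ℝ} (D : Dat T ℓ) (α τ : ℝ) (u p q d : ℝ → ℝ → ℝ) : Prop where
  ux : ∀ t ∈ Icc 0 τ, ∀ x ∈ Icc (-ℓ) ℓ, HasDerivWithinAt (u t) (p t x) (Icc (-ℓ) ℓ) x
  px : ∀ t ∈ Icc 0 τ, ∀ x ∈ Icc (-ℓ) ℓ, HasDerivWithinAt (p t) (q t x) (Icc (-ℓ) ℓ) x
  ut : ∀ t ∈ Icc 0 τ, ∀ x ∈ Icc (-ℓ) ℓ, HasDerivWithinAt (fun s => u s x) (d t x) (Icc 0 τ) t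
  pde : ∀ t ∈ Icc 0 τ, ∀ x ∈ Icc (-ℓ) ℓ,
    d t x = D.a (t, x, u t x, p t x) * q t x + D.f (t, x, u t x, p t x)
  bcR : ∀ t ∈ Icc 0 τ, d t ℓ = D.r (t, ℓ, u t ℓ, p t ℓ)
  bcL : ∀ t ∈ Icc 0 τ, d t (-ℓ) = D.l (t, -ℓ, u t (-ℓ), p t (-ℓ))
  qc : ∀ t ∈ Icc 0 τ, ContinuousOn (q t) (Icc (-ℓ) ℓ)
  dc : ∀ t ∈ Icc 0 τ, ContinuousOn (d t) (Icc (-ℓ) ℓ)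
  qT : ∃ C, ∀ x ∈ Icc (-ℓ) ℓ, HolderBnd (α / 2) (Icc 0 τ) (fun t => q t x) C
  dT : ∃ C, ∀ x ∈ Icc (-ℓ) ℓ, HolderBnd (α / 2) (Icc 0 τ) (fun t => d t x) C

theorem TH.holder {τ θ H : ℝ} {φ : ℝ → ℝ} (h : TH τ θ H φ) : HolderBnd θ (Icc 0 τ) φ H :=
  fun s hs t ht => by
  rcases le_total s t with hst | hst
  · rw [abs_sub_comm, abs_sub_comm s, abs_of_nonneg (sub_nonneg.2 hst)]
    exact h s t hs.1 hst ht.2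
  · rw [abs_of_nonneg (sub_nonneg.2 hst)]
    exact h t s ht.1 hst hs.2

theorem TH.holderI {ℓ τ θ H : ℝ} (hl : 0 < ℓ) {φ : ℝ → XI ℓ} (h : TH τ θ H φ) {x : ℝ}
    (hx : x ∈ Icc (-ℓ) ℓ) : HolderBnd θ (Icc 0 τ) (fun t => cI hl (φ t) x) H := by
  simp only [cI_mk hl _ hx]
  exact (h.eval _).holder

/-- Local existence for the closed problem. -/
theorem local_exist {T ℓ α : ℝ} (hT : 0 < T) (hl : 0 < ℓ) (hα : 0 < α) (hα1 : α < 1) (D : Dat T ℓ)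
    {v0 v1 v2 : ℝ → ℝ} (h0 : ∀ x ∈ Icc (-ℓ) ℓ, HasDerivWithinAt v0 (v1 x) (Icc (-ℓ) ℓ) x)
    (h1 : ∀ x ∈ Icc (-ℓ) ℓ, HasDerivWithinAt v1 (v2 x) (Icc (-ℓ) ℓ) x)
    {C : ℝ} (h2 : HolderBnd α (Icc (-ℓ) ℓ) v2 C)
    (cR : D.r (0, ℓ, v0 ℓ, v1 ℓ) = D.a (0, ℓ, v0 ℓ, v1 ℓ) * v2 ℓ + D.f (0, ℓ, v0 ℓ, v1 ℓ))
    (cL : D.l (0, -ℓ, v0 (-ℓ), v1 (-ℓ)) =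
      D.a (0, -ℓ, v0 (-ℓ), v1 (-ℓ)) * v2 (-ℓ) + D.f (0, -ℓ, v0 (-ℓ), v1 (-ℓ))) :
    ∃ τ, 0 < τ ∧ τ ≤ T ∧ ∃ u p q d, Cls0 D α τ u p q d ∧ ∀ x ∈ Icc (-ℓ) ℓ, u 0 x = v0 x := by
  set I := Icc (-ℓ) ℓ with hI
  have z0 : (0:ℝ) ∈ Icc 0 T := ⟨le_rfl, hT.le⟩
  have mk : ∀ v : ℝ → ℝ, ContinuousOn v I → ∃ w : XI ℓ, ∀ x : I, w x = v x := fun v hv =>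
    ⟨⟨fun x => v x, continuousOn_iff_continuous_restrict.1 hv⟩, fun _ => rfl⟩
  have hc2 := h2.continuousOn hα
  obtain ⟨w0, e0⟩ := mk v0 fun x hx => (h0 x hx).continuousWithinAt
  obtain ⟨w1, e1⟩ := mk v1 fun x hx => (h1 x hx).continuousWithinAt
  obtain ⟨w2, e2⟩ := mk v2 hc2
  have rR : ((pR hl : I) : ℝ) = ℓ := rfl
  have rM : ((pM hl : I) : ℝ) = -ℓ := rfl
  have l1 : ∀ c d : ℝ, (linX c d : XI ℓ) (pR hl) = c := fun c d => by
    change c * ((ℓ + ℓ) / (2 * ℓ)) + d * ((ℓ - ℓ) / (2 * ℓ)) = c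
    field_simp; ring
  have l2 : ∀ c d : ℝ, (linX c d : XI ℓ) (pM hl) = d := fun c d => by
    change c * ((ℓ + -ℓ) / (2 * ℓ)) + d * ((ℓ - -ℓ) / (2 * ℓ)) = d
    field_simp; ring
  -- the initial curve value is Hölder and vanishes at the ends
  obtain ⟨Hκ, hκ⟩ : ∃ H, ∀ x y : I, |(ParaSys.E0 hl D w0 w1 w2).1 x - (ParaSys.E0 hl D w0 w1 w2).1 y| ≤
      H * |(x : ℝ) - y| ^ α := by
    set M := ‖w0‖ + ‖w1‖ + ‖w2‖ with hM
    have n0 := norm_nonneg w0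
    have n1 := norm_nonneg w1
    have n2 := norm_nonneg w2
    have b0 : ∀ x ∈ I, |v0 x| ≤ M := fun x hx => by
      have := w0.norm_coe_le_norm ⟨x, hx⟩
      rw [e0, Real.norm_eq_abs] at this; simp only at this; linarith
    have b1 : ∀ x ∈ I, |v1 x| ≤ M := fun x hx => by
      have := w1.norm_coe_le_norm ⟨x, hx⟩
      rw [e1, Real.norm_eq_abs] at this; simp only at this; linarith
    have b2 : ∀ x ∈ I, |v2 x| ≤ M := fun x hx => by
      have := w2.norm_coe_le_norm ⟨x, hx⟩
      rw [e2, Real.norm_eq_abs] at this; simp only at this; linarith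
    have hM0 : 0 ≤ M := by positivity
    have k0 := HolderBnd.of_deriv hα1 hM0 (fun x hx y hy => abs_sub_le_Icc hx hy)
      (convex_Icc _ _) h0 b1
    have k1 := HolderBnd.of_deriv hα1 hM0 (fun x hx y hy => abs_sub_le_Icc hx hy)
      (convex_Icc _ _) h1 b2
    obtain ⟨La, hLa⟩ := D.na M
    obtain ⟨Lf, hLf⟩ := D.nf M
    have hp : 0 ≤ M * (2 * ℓ) ^ (1 - α) := by positivity
    have ka := HolderBnd.comp4 hα1 hLa z0 b0 b1 k0 k1 hp hp hl
    have kf := HolderBnd.comp4 hα1 hLf z0 b0 b1 k0 k1 hp hp hl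
    set c := Nem D.r 0 w0 w1 (pR hl)
    set d := Nem D.l 0 w0 w1 (pM hl)
    have kl : HolderBnd α I (fun x => c * ((ℓ + x) / (2 * ℓ)) + d * ((ℓ - x) / (2 * ℓ)))
        ((|c| + |d|) / (2 * ℓ) * (2 * ℓ) ^ (1 - α)) := by
      refine HolderBnd.of_lip hα1 (by positivity) (fun x hx y hy => abs_sub_le_Icc hx hy)
        fun x _ y _ => ?_
      have : c * ((ℓ + x) / (2 * ℓ)) + d * ((ℓ - x) / (2 * ℓ)) -
          (c * ((ℓ + y) / (2 * ℓ)) + d * ((ℓ - y) / (2 * ℓ))) = (c - d) / (2 * ℓ) * (x - y) := by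
        field_simp; ring
      rw [this, abs_mul, abs_div, abs_of_pos (by positivity : 0 < 2 * ℓ)]
      gcongr
      exact abs_sub _ _
    have := ((ka.mul h2 (fun x hx => hLa.bd _ ⟨z0, hx, abs_le.1 (b0 x hx), abs_le.1 (b1 x hx)⟩)
      b2).add kf).sub kl
    obtain ⟨H, hH⟩ : ∃ H, HolderBnd α I (fun x => D.a (0, x, v0 x, v1 x) * v2 x +
        D.f (0, x, v0 x, v1 x) - (c * ((ℓ + x) / (2 * ℓ)) + d * ((ℓ - x) / (2 * ℓ)))) H := ⟨_, this⟩
    refine ⟨H, fun x y => ?_⟩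
    refine le_of_eq_of_le ?_ (hH x x.2 y y.2)
    simp only [ParaSys.E0, ContinuousMap.sub_apply, ContinuousMap.add_apply,
      ContinuousMap.mul_apply, Nem_apply D.na z0, Nem_apply D.nf z0, e0, e1, e2]
    rfl
  obtain ⟨S, τ, R, H0, φ, hτ0, hτ1, hτT, hR, hH0, hφ, -, hS, hfix⟩ :=
    ParaSys.exists_fix (hl := hl) hT hα hα1 D w0 w1 w2 hκ
    (by
      simp only [ParaSys.E0, ContinuousMap.sub_apply, ContinuousMap.add_apply,
        ContinuousMap.mul_apply, Nem_apply D.na z0, Nem_apply D.nf z0, l2, Nem_apply D.nl z0,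
        e0, e1, e2, rM]
      linarith)
    (by
      simp only [ParaSys.E0, ContinuousMap.sub_apply, ContinuousMap.add_apply,
        ContinuousMap.mul_apply, Nem_apply D.na z0, Nem_apply D.nf z0, l1, Nem_apply D.nr z0,
        e0, e1, e2, rR]
      linarith)
  set θ := α / 2 with hθdef
  have hθ : 0 < θ := by positivity
  have hθ1 : θ < 1 := by rw [hθdef]; linarith
  set Q := S.P.Q (fun s => (φ s).1) with hQ
  have hQT := S.P.Q_holder hφ.fst hR hθ hθ1 hS
  obtain ⟨C1, M1, -, -, -, -, -, -, -, hbig⟩ := S.Phi_big D w0 w1 w2 hθ hθ1 hR hH0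
    (norm_nonneg (φ 0))
  obtain ⟨⟨-, -, -, tQ⟩, -, -⟩ := hbig τ φ hτ0.le hτ1 hτT hφ hS le_rfl
  have zeq : ∀ t ∈ Icc 0 τ, S.P.G (S.Wd φ t) = ∫ s in (0:ℝ)..t, Q s := fun t ht => by
    rw [← S.P.z_eq_int hφ.fst hR hθ hθ1 hS ht.1 ht.2, ← S.P.G_eq hφ.fst hθ ht.1 ht.2]
    rfl
  have hQc := hQT.continuousOn hθ
  have dz : ∀ t ∈ Icc 0 τ, HasDerivWithinAt (fun t => S.P.G (S.Wd φ t)) (Q t) (Icc 0 τ) t :=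
    fun t ht => (prim_deriv hτ0.le hQc ht).congr zeq (zeq t ht)
  have ev : ∀ {ψ : ℝ → XI ℓ} {ψ' : XI ℓ} {t : ℝ} (x : I), HasDerivWithinAt ψ ψ' (Icc 0 τ) t →
      HasDerivWithinAt (fun t => ψ t x) (ψ' x) (Icc 0 τ) t := fun {ψ ψ' t} x h => by
    have := (ContinuousMap.evalCLM ℝ x).hasFDerivAt (x := ψ t) |>.comp_hasDerivWithinAt t h
    exact this
  have ud := uniqueDiffOn_Icc hτ0
  have Q0 : ∀ t ∈ Icc 0 τ, Q t (pM hl) = 0 ∧ Q t (pR hl) = 0 := fun t ht => by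
    constructor
    · refine (ud t ht).eq_deriv _ ((ev (pM hl) (dz t ht))) ?_
      simp only [(S.hend _).1]; exact hasDerivWithinAt_const _ _ _
    · refine (ud t ht).eq_deriv _ ((ev (pR hl) (dz t ht))) ?_
      simp only [(S.hend _).2]; exact hasDerivWithinAt_const _ _ _
  have f1 : ∀ t ∈ Icc 0 τ, S.NS w0 w1 D.r φ t (pR hl) = (φ t).2.1 := fun t ht => by
    rw [← hfix t ht]; simp only [ParaSys.Phi, hfix t ht]
  have f2 : ∀ t ∈ Icc 0 τ, S.NS w0 w1 D.l φ t (pM hl) = (φ t).2.2 := fun t ht => by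
    rw [← hfix t ht]; simp only [ParaSys.Phi, hfix t ht]
  set dd : ℝ → XI ℓ := fun t => linX (φ t).2.1 (φ t).2.2 + Q t with hdd
  have hdT : TH τ θ (R + (S.P.CQ θ * R + H0)) dd := (linX_TH hl hφ.snd.fst hφ.snd.snd).add hQT
  have cap : ∀ {w : XI ℓ} {x : ℝ} (hx : x ∈ I), cI hl w x = w ⟨x, hx⟩ := fun hx => cI_mk hl _ hx
  refine ⟨τ, hτ0, hτT, fun t => cI hl (S.US w0 φ t), fun t => cI hl (S.PS w1 φ t),
    fun t => cI hl (S.QS w2 φ t), fun t => cI hl (dd t), ?_, fun x hx => ?_⟩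
  · refine ⟨fun t ht x hx => ?_, fun t ht x hx => ?_, fun t ht x hx => ?_, fun t ht x hx => ?_,
      fun t ht => ?_, fun t ht => ?_, fun t _ => (cI_cont hl _).continuousOn,
      fun t _ => (cI_cont hl _).continuousOn, ⟨_, fun x hx => tQ.holderI hl hx⟩,
      ⟨_, fun x hx => hdT.holderI hl hx⟩⟩
    · set c := ∫ r in (0:ℝ)..t, (φ r).2.1 with hc
      set d := ∫ r in (0:ℝ)..t, (φ r).2.2 with hd
      have hlin : HasDerivWithinAt (fun x : ℝ => c * ((ℓ + x) / (2 * ℓ)) + d * ((ℓ - x) / (2 * ℓ)))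
          ((c - d) / (2 * ℓ)) I x := by
        have := ((((hasDerivAt_id x).const_add ℓ).div_const (2 * ℓ)).const_mul c).add
          ((((hasDerivAt_id x).const_sub ℓ).div_const (2 * ℓ)).const_mul d)
        refine (this.congr_deriv ?_).hasDerivWithinAt
        ring
      have := (h0 x hx).add (hlin.add (S.hz1 (S.Wd φ t) x hx))
      refine (this.congr (fun y hy => ?_) ?_).congr_deriv ?_
      · rw [cap hy]
        simp only [ParaSys.US, ParaSys.Uc, ContinuousMap.add_apply, e0, Pi.add_apply, cap hy]
        rfl
      · rw [cap hx]
        simp only [ParaSys.US, ParaSys.Uc, ContinuousMap.add_apply, e0, Pi.add_apply, cap hx]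
        rfl
      · rw [cap hx, cap hx]
        simp only [ParaSys.PS, ParaSys.Pc, ContinuousMap.add_apply, e1]
        rfl
    · have := (h1 x hx).add ((S.hz2 (S.Wd φ t) x hx).const_add
        (((∫ r in (0:ℝ)..t, (φ r).2.1) - ∫ r in (0:ℝ)..t, (φ r).2.2) / (2 * ℓ)))
      refine (this.congr (fun y hy => ?_) ?_).congr_deriv ?_
      · rw [cap hy]
        simp only [ParaSys.PS, ParaSys.Pc, ContinuousMap.add_apply, e1, Pi.add_apply, cap hy]
        rfl
      · rw [cap hx]
        simp only [ParaSys.PS, ParaSys.Pc, ContinuousMap.add_apply, e1, Pi.add_apply, cap hx]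
        rfl
      · rw [cap hx, cap hx]
        simp only [ParaSys.QS, ContinuousMap.add_apply, e2]
    · have m1 := prim_deriv hτ0.le (hφ.snd.fst.continuousOn hθ) ht
      have m2 := prim_deriv hτ0.le (hφ.snd.snd.continuousOn hθ) ht
      have := (((m1.mul_const ((ℓ + x) / (2 * ℓ))).add (m2.mul_const ((ℓ - x) / (2 * ℓ)))).add
        (ev ⟨x, hx⟩ (dz t ht))).const_add (v0 x)
      refine (this.congr (fun y hy => ?_) ?_).congr_deriv ?_
      · rw [cap hx]
        simp only [ParaSys.US, ParaSys.Uc, ContinuousMap.add_apply, e0, Pi.add_apply]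
        rfl
      · rw [cap hx]
        simp only [ParaSys.US, ParaSys.Uc, ContinuousMap.add_apply, e0, Pi.add_apply]
        rfl
      · rw [cap hx]
        simp only [hdd, ContinuousMap.add_apply]
        rfl
    · have tT : t ∈ Icc 0 T := ⟨ht.1, ht.2.trans hτT⟩
      have key := congrArg (fun e : EX ℓ => e.1 ⟨x, hx⟩) (hfix t ht)
      simp only [ParaSys.Phi, f1 t ht, f2 t ht] at key
      simp only [ContinuousMap.sub_apply, ContinuousMap.add_apply,
        ContinuousMap.mul_apply, ParaSys.NS, Nem_apply D.na tT, Nem_apply D.nf tT] at key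
      simp only [cap hx, hdd, ContinuousMap.add_apply]
      have : S.Wd φ t ⟨x, hx⟩ = Q t ⟨x, hx⟩ - (φ t).1 ⟨x, hx⟩ := rfl
      linarith
    · have tT : t ∈ Icc 0 T := ⟨ht.1, ht.2.trans hτT⟩
      have h := f1 t ht
      rw [ParaSys.NS, Nem_apply D.nr tT] at h
      simp only [← rR, cI_eq]
      rw [h, hdd]
      simp only [ContinuousMap.add_apply, l1, (Q0 t ht).2, add_zero]
    · have tT : t ∈ Icc 0 T := ⟨ht.1, ht.2.trans hτT⟩
      have h := f2 t ht
      rw [ParaSys.NS, Nem_apply D.nl tT] at h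
      simp only [← rM, cI_eq]
      rw [h, hdd]
      simp only [ContinuousMap.add_apply, l2, (Q0 t ht).1, add_zero]
  · exact (cap hx).trans (by rw [S.US_zero, e0])

/-! ### Hölder regularity in space -/

/-- A bounded function on `[-ℓ,ℓ]` whose second differences are `O(h^α)`, `α < 1`, is `α`-Hölder
in the forward direction from points of the left half. -/
theorem zyg_half {ℓ α K B : ℝ} (hl : 0 < ℓ) (hα : 0 < α) (hα1 : α < 1) (hK : 0 ≤ K) (hB : 0 ≤ B) :
    ∃ A, 0 ≤ A ∧ ∀ d : ℝ → ℝ, (∀ x ∈ Icc (-ℓ) ℓ, |d x| ≤ B) →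
      (∀ x h, 0 < h → x ∈ Icc (-ℓ) ℓ → x + 2 * h ∈ Icc (-ℓ) ℓ →
        |d (x + 2 * h) - 2 * d (x + h) + d x| ≤ K * h ^ α) →
      ∀ x h, -ℓ ≤ x → x ≤ 0 → 0 < h → h ≤ ℓ → |d (x + h) - d x| ≤ A * h ^ α := by
  have hc : (2:ℝ) ^ α / 2 < 1 := by
    rw [div_lt_one two_pos]
    calc (2:ℝ) ^ α < 2 ^ (1:ℝ) := Real.rpow_lt_rpow_of_exponent_lt one_lt_two hα1
      _ = 2 := Real.rpow_one _
  set c := (2:ℝ) ^ α / 2 with hcd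
  have hlα : 0 < (ℓ / 2) ^ α := by positivity
  set A := 2 * B / (ℓ / 2) ^ α + K / 2 / (1 - c) with hA
  have h1c : 0 < 1 - c := by linarith
  have hA1 : 2 * B ≤ A * (ℓ / 2) ^ α := by
    rw [hA, add_mul, div_mul_cancel₀ _ hlα.ne']
    have : 0 ≤ K / 2 / (1 - c) * (ℓ / 2) ^ α := by positivity
    linarith
  have hA2 : A * c + K / 2 ≤ A := by
    have : K / 2 ≤ A * (1 - c) := by
      rw [hA, add_mul, div_mul_cancel₀ _ h1c.ne']
      have : 0 ≤ 2 * B / (ℓ / 2) ^ α * (1 - c) := by positivity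
      linarith
    linarith
  have hA0 : 0 ≤ A := by positivity
  refine ⟨A, hA0, fun d hd h2 => ?_⟩
  have key : ∀ n : ℕ, ∀ x h, -ℓ ≤ x → x ≤ 0 → ℓ / 2 ^ n < h → h ≤ ℓ →
      |d (x + h) - d x| ≤ A * h ^ α := by
    intro n
    induction n with
    | zero => intro x h _ _ h1 h2; simp only [pow_zero, div_one] at h1; linarith
    | succ n ih =>
      intro x h hx hx0 h1 h3
      have hh : 0 < h := lt_trans (by positivity) h1
      by_cases hbig : ℓ / 2 ≤ h
      · refine (abs_sub _ _).trans ?_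
        have e1 := hd x ⟨hx, by linarith⟩
        have e2 := hd (x + h) ⟨by linarith, by linarith⟩
        have e3 : (ℓ / 2) ^ α ≤ h ^ α := Real.rpow_le_rpow (by positivity) hbig hα.le
        have := mul_le_mul_of_nonneg_left e3 hA0
        linarith
      · have e1 := ih x (2 * h) hx hx0 (by
          rw [pow_succ, ← div_div] at h1; linarith) (by linarith)
        have e2 := h2 x h hh ⟨hx, by linarith⟩ ⟨by linarith, by linarith⟩
        rw [Real.mul_rpow two_pos.le hh.le] at e1
        have e3 := mul_le_mul_of_nonneg_right hA2 (by positivity : 0 ≤ h ^ α)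
        have e4 : A * (2 ^ α * h ^ α) = 2 * (A * c * h ^ α) := by rw [hcd]; ring
        rw [e4] at e1
        rw [abs_le] at e1 e2 ⊢
        constructor <;> linarith [e1.1, e1.2, e2.1, e2.2]
  intro x h hx hx0 hh hhl
  obtain ⟨n, hn⟩ := exists_pow_lt_of_lt_one (div_pos hh hl) (by norm_num : (1 / 2 : ℝ) < 1)
  refine key n x h hx hx0 ?_ hhl
  rw [lt_div_iff₀ hl, one_div, inv_pow] at hn
  rw [div_eq_inv_mul]; exact hn

/-- A bounded function with second differences `O(h^α)`, `0 < α < 1`, is `α`-Hölder. -/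
theorem zyg {ℓ α K B : ℝ} (hl : 0 < ℓ) (hα : 0 < α) (hα1 : α < 1) (hK : 0 ≤ K) (hB : 0 ≤ B) :
    ∃ A, 0 ≤ A ∧ ∀ d : ℝ → ℝ, (∀ x ∈ Icc (-ℓ) ℓ, |d x| ≤ B) →
      (∀ x h, 0 < h → x ∈ Icc (-ℓ) ℓ → x + 2 * h ∈ Icc (-ℓ) ℓ →
        |d (x + 2 * h) - 2 * d (x + h) + d x| ≤ K * h ^ α) →
      HolderBnd α (Icc (-ℓ) ℓ) d A := by
  obtain ⟨A, hA, hd⟩ := zyg_half hl hα hα1 hK hB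
  have hp : 0 ≤ 2 * B / ℓ ^ α := by positivity
  refine ⟨A + 2 * B / ℓ ^ α, by positivity, fun d hb h2 => ?_⟩
  have g1 := hd d hb h2
  have g2 := hd (fun x => d (-x)) (fun x hx => hb _ ⟨by linarith [hx.2], by linarith [hx.1]⟩)
    fun x h hh hx hx2 => by
      have := h2 (-x - 2 * h) h hh ⟨by linarith [hx2.2], by linarith [hx2.1]⟩
        ⟨by linarith [hx.2], by linarith [hx.1]⟩
      rw [show -x - 2 * h + 2 * h = -x by ring, show -x - 2 * h + h = -(x + h) by ring,
        show -x - 2 * h = -(x + 2 * h) by ring] at this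
      convert this using 2; ring
  have main : ∀ x ∈ Icc (-ℓ) ℓ, ∀ y ∈ Icc (-ℓ) ℓ, x < y →
      |d y - d x| ≤ (A + 2 * B / ℓ ^ α) * |y - x| ^ α := fun x hx y hy hxy => by
    have h0 : 0 < y - x := sub_pos.2 hxy
    rw [abs_of_pos h0]
    have p1 : 0 ≤ 2 * B / ℓ ^ α * (y - x) ^ α := by positivity
    by_cases hle : y - x ≤ ℓ
    · rcases le_total x 0 with h | h
      · have := g1 x (y - x) hx.1 h h0 hle
        rw [add_sub_cancel] at this
        linarith
      · have := g2 (-y) (y - x) (by linarith [hy.2]) (by linarith) h0 hle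
        rw [neg_neg, show -(-y + (y - x)) = x by ring, abs_sub_comm] at this
        linarith
    · have e1 := hb x hx
      have e2 := hb y hy
      have e3 : ℓ ^ α ≤ (y - x) ^ α := Real.rpow_le_rpow hl.le (not_le.1 hle).le hα.le
      have e4 : 2 * B / ℓ ^ α * ℓ ^ α = 2 * B := div_mul_cancel₀ _ (by positivity)
      have e5 := mul_le_mul_of_nonneg_left e3 hp
      have e6 : 0 ≤ A * (y - x) ^ α := by positivity
      have := abs_sub (d y) (d x)
      linarith
  intro x hx y hy
  rcases lt_trichotomy x y with h | h | h
  · rw [abs_sub_comm, abs_sub_comm x]; exact main x hx y hy h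
  · subst h
    rw [sub_self, abs_zero]; positivity
  · exact main y hy x hx h

/-- Second differences are controlled by the second derivative. -/
theorem second_diff {ℓ C x h : ℝ} {w w1 w2 : ℝ → ℝ} (hh : 0 ≤ h)
    (h1 : ∀ x ∈ Icc (-ℓ) ℓ, HasDerivWithinAt w (w1 x) (Icc (-ℓ) ℓ) x)
    (h2 : ∀ x ∈ Icc (-ℓ) ℓ, HasDerivWithinAt w1 (w2 x) (Icc (-ℓ) ℓ) x)
    (hb : ∀ x ∈ Icc (-ℓ) ℓ, |w2 x| ≤ C) (hx : x ∈ Icc (-ℓ) ℓ) (hx2 : x + 2 * h ∈ Icc (-ℓ) ℓ) :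
    |w (x + 2 * h) - 2 * w (x + h) + w x| ≤ C * h ^ 2 := by
  have sub1 : ∀ y ∈ Icc x (x + h), y ∈ Icc (-ℓ) ℓ := fun y hy =>
    ⟨by linarith [hy.1, hx.1], by linarith [hy.2, hx2.2]⟩
  have sub2 : ∀ y ∈ Icc x (x + h), y + h ∈ Icc (-ℓ) ℓ := fun y hy =>
    ⟨by linarith [hy.1, hx.1], by linarith [hy.2, hx2.2]⟩
  have lip : ∀ y ∈ Icc (-ℓ) ℓ, ∀ z ∈ Icc (-ℓ) ℓ, |w1 z - w1 y| ≤ C * |z - y| := fun y hy z hz =>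
    (convex_Icc _ _).norm_image_sub_le_of_norm_hasDerivWithin_le h2 hb hy hz
  have hd : ∀ y ∈ Icc x (x + h), HasDerivWithinAt (fun y => w (y + h) - w y) (w1 (y + h) - w1 y)
      (Icc x (x + h)) y := fun y hy => by
    have e1 := (h1 (y + h) (sub2 y hy)).comp y
      (((hasDerivAt_id y).add_const h).hasDerivWithinAt (s := Icc x (x + h))) sub2
    rw [mul_one] at e1
    exact e1.sub ((h1 y (sub1 y hy)).mono sub1)
  have := (convex_Icc x (x + h)).norm_image_sub_le_of_norm_hasDerivWithin_le hd (C := C * h)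
    (fun y hy => by
      have := lip y (sub1 y hy) (y + h) (sub2 y hy)
      rwa [add_sub_cancel_left, abs_of_nonneg hh] at this) ⟨le_rfl, by linarith⟩
    (⟨by linarith, le_rfl⟩ : x + h ∈ Icc x (x + h))
  rw [add_sub_cancel_left, Real.norm_eq_abs, Real.norm_eq_abs, abs_of_nonneg hh] at this
  rw [show x + 2 * h = x + h + h by ring, pow_two, ← mul_assoc]
  convert this using 2; ring

/-- Interpolation: the first derivative is controlled by increments and the second derivative. -/
theorem interpI {ℓ C x h : ℝ} {w w1 w2 : ℝ → ℝ} (hh : 0 ≤ h) (hhl : h ≤ ℓ)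
    (h1 : ∀ x ∈ Icc (-ℓ) ℓ, HasDerivWithinAt w (w1 x) (Icc (-ℓ) ℓ) x)
    (h2 : ∀ x ∈ Icc (-ℓ) ℓ, HasDerivWithinAt w1 (w2 x) (Icc (-ℓ) ℓ) x)
    (hb : ∀ x ∈ Icc (-ℓ) ℓ, |w2 x| ≤ C) (hx : x ∈ Icc (-ℓ) ℓ) :
    ∃ y ∈ Icc (-ℓ) ℓ, |y - x| = h ∧ |w1 x| * h ≤ |w y - w x| + C * h ^ 2 := by
  have lip : ∀ y ∈ Icc (-ℓ) ℓ, ∀ z ∈ Icc (-ℓ) ℓ, |w1 z - w1 y| ≤ C * |z - y| := fun y hy z hz =>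
    (convex_Icc _ _).norm_image_sub_le_of_norm_hasDerivWithin_le h2 hb hy hz
  have hC : 0 ≤ C := (abs_nonneg _).trans (hb x hx)
  obtain ⟨y, hy, hyx⟩ : ∃ y ∈ Icc (-ℓ) ℓ, |y - x| = h := by
    rcases le_total x 0 with h0 | h0
    · exact ⟨x + h, ⟨by linarith [hx.1], by linarith⟩, by rw [add_sub_cancel_left, abs_of_nonneg hh]⟩
    · exact ⟨x - h, ⟨by linarith, by linarith [hx.2]⟩, by
        rw [sub_sub_cancel_left, abs_neg, abs_of_nonneg hh]⟩
  refine ⟨y, hy, hyx, ?_⟩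
  have hsub : uIcc x y ⊆ Icc (-ℓ) ℓ := uIcc_subset_Icc hx hy
  have hd : ∀ z ∈ uIcc x y, HasDerivWithinAt (fun z => w z - w1 x * z) (w1 z - w1 x) (uIcc x y) z :=
    fun z hz => by
      have := ((hasDerivAt_id z).const_mul (w1 x)).hasDerivWithinAt (s := uIcc x y)
      rw [mul_one] at this
      exact ((h1 z (hsub hz)).mono hsub).sub this
  have := (convex_uIcc x y).norm_image_sub_le_of_norm_hasDerivWithin_le hd (C := C * h)
    (fun z hz => (lip x hx z (hsub hz)).trans (mul_le_mul_of_nonneg_left (by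
      rw [← hyx]
      exact abs_sub_left_of_mem_uIcc hz) hC)) left_mem_uIcc right_mem_uIcc
  rw [Real.norm_eq_abs, Real.norm_eq_abs, hyx] at this
  have e : |w1 x| * h = |w1 x * (y - x)| := by rw [abs_mul, hyx]
  rw [e]
  have e2 : w1 x * (y - x) = (w y - w x) - (w y - w1 x * y - (w x - w1 x * x)) := by ring
  rw [e2, pow_two, ← mul_assoc]
  exact (abs_sub _ _).trans (by linarith)

/-- Solutions on the closed cylinder with full parabolic Hölder regularity. -/
structure Cls {T ℓ : ℝ} (D : Dat T ℓ) (α τ : ℝ) (u p q d : ℝ → ℝ → ℝ) : Prop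
    extends Cls0 D α τ u p q d where
  qX : ∃ C, ∀ t ∈ Icc 0 τ, HolderBnd α (Icc (-ℓ) ℓ) (q t) C
  dX : ∃ C, ∀ t ∈ Icc 0 τ, HolderBnd α (Icc (-ℓ) ℓ) (d t) C
  pT : ∃ C, ∀ x ∈ Icc (-ℓ) ℓ, HolderBnd ((1 + α) / 2) (Icc 0 τ) (fun t => p t x) C

section
variable {T ℓ α τ : ℝ} {D : Dat T ℓ} {u p q d : ℝ → ℝ → ℝ}

theorem HolderBnd.bdd {ℓ τ θ : ℝ} {w : ℝ → ℝ → ℝ} (hτ : 0 ≤ τ) (hθ : 0 < θ)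
    (hc : ContinuousOn (w 0) (Icc (-ℓ) ℓ))
    (hT : ∃ C, ∀ x ∈ Icc (-ℓ) ℓ, HolderBnd θ (Icc 0 τ) (fun t => w t x) C) :
    ∃ B, ∀ t ∈ Icc 0 τ, ∀ x ∈ Icc (-ℓ) ℓ, |w t x| ≤ B := by
  obtain ⟨C, hC⟩ := hT
  obtain ⟨B, hB⟩ := isCompact_Icc.exists_bound_of_continuousOn hc
  refine ⟨B + |C| * τ ^ θ, fun t ht x hx => ?_⟩
  have e1 := hC x hx t ht 0 ⟨le_rfl, hτ⟩
  have e2 := hB x hx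
  rw [Real.norm_eq_abs] at e2
  rw [sub_zero, abs_of_nonneg ht.1] at e1
  have e3 : t ^ θ ≤ τ ^ θ := Real.rpow_le_rpow ht.1 ht.2 hθ.le
  have e4 : C * t ^ θ ≤ |C| * τ ^ θ :=
    mul_le_mul (le_abs_self C) e3 (Real.rpow_nonneg ht.1 _) (abs_nonneg C)
  have := abs_add_le (w t x - w 0 x) (w 0 x)
  rw [sub_add_cancel] at this
  linarith

/-- Solutions on the closed cylinder are bounded together with their derivatives. -/
theorem Cls0.bounds (hc : Cls0 D α τ u p q d) (hτ : 0 ≤ τ) (hl : 0 < ℓ) (hα : 0 < α) :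
    ∃ B, 0 ≤ B ∧ ∀ t ∈ Icc 0 τ, ∀ x ∈ Icc (-ℓ) ℓ,
      |u t x| ≤ B ∧ |p t x| ≤ B ∧ |q t x| ≤ B ∧ |d t x| ≤ B := by
  have z : (0:ℝ) ∈ Icc 0 τ := ⟨le_rfl, hτ⟩
  have hx0 : (0:ℝ) ∈ Icc (-ℓ) ℓ := ⟨by linarith, hl.le⟩
  obtain ⟨Bq, hBq⟩ := HolderBnd.bdd hτ (by positivity) (hc.qc 0 z) hc.qT
  obtain ⟨Bd, hBd⟩ := HolderBnd.bdd hτ (by positivity) (hc.dc 0 z) hc.dT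
  obtain ⟨B0, hB0⟩ := isCompact_Icc.exists_bound_of_continuousOn (f := u 0)
    fun x hx => (hc.ux 0 z x hx).continuousWithinAt
  have hBd0 : 0 ≤ Bd := (abs_nonneg _).trans (hBd 0 z 0 hx0)
  have hBq0 : 0 ≤ Bq := (abs_nonneg _).trans (hBq 0 z 0 hx0)
  have hB00 : 0 ≤ B0 := (norm_nonneg _).trans (hB0 0 hx0)
  set Bu := B0 + Bd * τ with hBu
  have hu : ∀ t ∈ Icc 0 τ, ∀ x ∈ Icc (-ℓ) ℓ, |u t x| ≤ Bu := fun t ht x hx => by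
    have e1 := (convex_Icc 0 τ).norm_image_sub_le_of_norm_hasDerivWithin_le
      (fun s hs => hc.ut s hs x hx) (fun s hs => hBd s hs x hx) z ht
    rw [sub_zero, Real.norm_eq_abs, Real.norm_eq_abs, abs_of_nonneg ht.1] at e1
    have e2 := hB0 x hx
    rw [Real.norm_eq_abs] at e2
    have e3 := mul_le_mul_of_nonneg_left ht.2 hBd0
    have := abs_add_le (u t x - u 0 x) (u 0 x)
    rw [sub_add_cancel] at this
    linarith
  have hp : ∀ t ∈ Icc 0 τ, ∀ x ∈ Icc (-ℓ) ℓ, |p t x| ≤ 2 * Bu / ℓ + Bq * ℓ := fun t ht x hx => by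
    obtain ⟨y, hy, -, h⟩ := interpI hl.le le_rfl (hc.ux t ht) (hc.px t ht) (hBq t ht) hx
    have e1 := hu t ht x hx
    have e2 := hu t ht y hy
    have e3 := abs_sub (u t y) (u t x)
    rw [← mul_le_mul_iff_left₀ hl]
    have : (2 * Bu / ℓ + Bq * ℓ) * ℓ = 2 * Bu + Bq * ℓ ^ 2 := by field_simp
    linarith
  have n1 : 0 ≤ Bu := by positivity
  have n2 : 0 ≤ 2 * Bu / ℓ + Bq * ℓ := by positivity
  refine ⟨Bu + (2 * Bu / ℓ + Bq * ℓ) + Bq + Bd, by positivity, fun t ht x hx => ?_⟩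
  have e1 := hu t ht x hx
  have e2 := hp t ht x hx
  have e3 := hBq t ht x hx
  have e4 := hBd t ht x hx
  refine ⟨?_, ?_, ?_, ?_⟩ <;> linarith

/-- `u_t` is Hölder in space: its second differences are compared with those of the increments
of `u` over a time of order `h²`. -/
theorem Cls0.dX (hc : Cls0 D α τ u p q d) (hτ : 0 < τ) (hl : 0 < ℓ) (hα : 0 < α) (hα1 : α < 1) :
    ∃ C, 0 ≤ C ∧ ∀ t ∈ Icc 0 τ, HolderBnd α (Icc (-ℓ) ℓ) (d t) C := by
  obtain ⟨B, hB, hb⟩ := hc.bounds hτ.le hl hα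
  obtain ⟨C1, hC1⟩ := hc.qT
  obtain ⟨C2, hC2⟩ := hc.dT
  set C := |C1| + |C2| with hCd
  have hC0 : 0 ≤ C := by positivity
  have hq : ∀ x ∈ Icc (-ℓ) ℓ, HolderBnd (α / 2) (Icc 0 τ) (fun t => q t x) C := fun x hx =>
    (hC1 x hx).mono (by linarith [le_abs_self C1, abs_nonneg C2])
  have hd : ∀ x ∈ Icc (-ℓ) ℓ, HolderBnd (α / 2) (Icc 0 τ) (fun t => d t x) C := fun x hx =>
    (hC2 x hx).mono (by linarith [le_abs_self C2, abs_nonneg C1])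
  set κ := τ / (2 * ℓ ^ 2) with hκ
  have hκ0 : 0 < κ := by positivity
  obtain ⟨A, hA, hz⟩ := zyg hl hα hα1 (K := (C / κ + 4 * C) * κ ^ (α / 2)) (by positivity) hB
  refine ⟨A, hA, fun t ht => hz _ (fun x hx => (hb t ht x hx).2.2.2) fun x h hh hx hx2 => ?_⟩
  have hx1 : x + h ∈ Icc (-ℓ) ℓ := ⟨by linarith [hx.1], by linarith [hx2.2]⟩
  have hhl : h ≤ ℓ := by linarith [hx.1, hx2.2]
  -- a time step in parabolic scaling; `κ` makes it at most `τ / 2`, so that a step forward or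
  -- backward in time stays in `[0,τ]`
  set k := κ * h ^ 2 with hk
  have hk0 : 0 < k := by positivity
  have hkτ : k ≤ τ / 2 := by
    have : h ^ 2 ≤ ℓ ^ 2 := by gcongr
    calc k ≤ κ * ℓ ^ 2 := by rw [hk]; gcongr
      _ = τ / 2 := by rw [hκ]; field_simp
  have hkθ : k ^ (α / 2) = κ ^ (α / 2) * h ^ α := by
    rw [hk, Real.mul_rpow hκ0.le (by positivity), ← Real.rpow_natCast h 2, ← Real.rpow_mul hh.le]
    congr 2; push_cast; ring
  obtain ⟨s, hs, hst⟩ : ∃ s ∈ Icc 0 τ, |s - t| = k := by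
    rcases le_total t (τ / 2) with h0 | h0
    · exact ⟨t + k, ⟨by linarith [ht.1], by linarith⟩, by rw [add_sub_cancel_left, abs_of_pos hk0]⟩
    · exact ⟨t - k, ⟨by linarith, by linarith [ht.2]⟩, by
        rw [sub_sub_cancel_left, abs_neg, abs_of_pos hk0]⟩
  have hsub : uIcc t s ⊆ Icc 0 τ := uIcc_subset_Icc ht hs
  set δ := d t (x + 2 * h) - 2 * d t (x + h) + d t x with hδ
  have e1 := (convex_uIcc t s).norm_image_sub_le_of_norm_hasDerivWithin_le
    (f := fun r => (u r (x + 2 * h) - 2 * u r (x + h) + u r x) - δ * r)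
    (f' := fun r => (d r (x + 2 * h) - 2 * d r (x + h) + d r x) - δ) (C := 4 * C * k ^ (α / 2))
    (fun r hr => by
      have := ((((hc.ut r (hsub hr) _ hx2).sub ((hc.ut r (hsub hr) _ hx1).const_mul 2)).add
        (hc.ut r (hsub hr) _ hx)).mono hsub).sub
        (((hasDerivAt_id r).const_mul δ).hasDerivWithinAt (s := uIcc t s))
      rw [mul_one] at this
      exact this)
    (fun r hr => by
      have hr' : |r - t| ^ (α / 2) ≤ k ^ (α / 2) := by
        refine Real.rpow_le_rpow (abs_nonneg _) ?_ (by positivity)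
        rw [← hst]
        exact abs_sub_left_of_mem_uIcc hr
      have m := mul_le_mul_of_nonneg_left hr' hC0
      have a1 := (hd _ hx2 r (hsub hr) t ht).trans m
      have a2 := (hd _ hx1 r (hsub hr) t ht).trans m
      have a3 := (hd _ hx r (hsub hr) t ht).trans m
      rw [Real.norm_eq_abs, hδ]
      rw [abs_le] at a1 a2 a3 ⊢
      constructor <;> linarith [a1.1, a1.2, a2.1, a2.2, a3.1, a3.2])
    left_mem_uIcc right_mem_uIcc
  have e2 := second_diff (w := fun x => u s x - u t x) (w1 := fun x => p s x - p t x)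
    (w2 := fun x => q s x - q t x) (C := C * k ^ (α / 2)) hh.le
    (fun y hy => (hc.ux s hs y hy).sub (hc.ux t ht y hy))
    (fun y hy => (hc.px s hs y hy).sub (hc.px t ht y hy))
    (fun y hy => by have := hq y hy s hs t ht; rwa [hst] at this) hx hx2
  simp only [Real.norm_eq_abs, hst] at e1
  have e3 : |δ| * k = |δ * (s - t)| := by rw [abs_mul, hst]
  have e4 : |δ| * k ≤ C * k ^ (α / 2) * h ^ 2 + 4 * C * k ^ (α / 2) * k := by
    rw [e3]
    rw [abs_le] at e1 e2 ⊢
    constructor <;> linarith [e1.1, e1.2, e2.1, e2.2]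
  have e5 : C * k ^ (α / 2) * h ^ 2 = C / κ * k ^ (α / 2) * k := by rw [hk]; field_simp
  rw [e5, ← add_mul, mul_le_mul_iff_left₀ hk0, ← add_mul, hkθ] at e4
  linarith

/-- `u_x` is `(1+α)/2`-Hölder in time. Interpolation in space with step `h ~ k^{1/2}` reduces its time
increment over `k` to the Hölder bounds for `u_t` in space and for `u_xx` in time. -/
theorem Cls0.pT (hc : Cls0 D α τ u p q d) (hτ : 0 < τ) (hl : 0 < ℓ) (hα : 0 < α) (hα1 : α < 1) :
    ∃ C, ∀ x ∈ Icc (-ℓ) ℓ, HolderBnd ((1 + α) / 2) (Icc 0 τ) (fun t => p t x) C := by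
  obtain ⟨Cd, hCd, hd⟩ := hc.dX hτ hl hα hα1
  obtain ⟨C1, hC1⟩ := hc.qT
  set κ := ℓ / τ ^ (1 / 2 : ℝ) with hκ
  have hκ0 : 0 < κ := by positivity
  have h0 : ∀ x ∈ Icc (-ℓ) ℓ, ∀ t ∈ Icc 0 τ, ∀ s ∈ Icc 0 τ, 0 < |s - t| →
      |p s x - p t x| ≤ (Cd * κ ^ (α - 1) + |C1| * κ) * |s - t| ^ ((1 + α) / 2) := by
    intro x hx t ht s hs hst
    set k := |s - t| with hk
    have hkτ : k ≤ τ := by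
      rw [hk, abs_le]; constructor <;> linarith [ht.1, ht.2, hs.1, hs.2]
    -- a space step in parabolic scaling; `κ` makes it at most `ℓ`
    set h := κ * k ^ (1 / 2 : ℝ) with hh
    have hh0 : 0 < h := by positivity
    have hhl : h ≤ ℓ := by
      calc h ≤ κ * τ ^ (1 / 2 : ℝ) := by rw [hh]; gcongr
        _ = ℓ := div_mul_cancel₀ _ (by positivity)
    obtain ⟨y, hy, hyx, e⟩ := interpI (w := fun x => u s x - u t x) (w1 := fun x => p s x - p t x)
      (w2 := fun x => q s x - q t x) (C := |C1| * k ^ (α / 2)) hh0.le hhl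
      (fun y hy => (hc.ux s hs y hy).sub (hc.ux t ht y hy))
      (fun y hy => (hc.px s hs y hy).sub (hc.px t ht y hy))
      (fun y hy => (hC1 y hy s hs t ht).trans (by gcongr; exact le_abs_self _)) hx
    have e1 := (convex_Icc 0 τ).norm_image_sub_le_of_norm_hasDerivWithin_le
      (f := fun r => u r y - u r x) (f' := fun r => d r y - d r x) (C := Cd * h ^ α)
      (fun r hr => (hc.ut r hr y hy).sub (hc.ut r hr x hx))
      (fun r hr => by rw [← hyx]; exact hd r hr y hy x hx) ht hs
    simp only [Real.norm_eq_abs] at e1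
    rw [← hk] at e1
    have e2 : u s y - u t y - (u s x - u t x) = u s y - u s x - (u t y - u t x) := by ring
    simp only [e2] at e
    have p1 : h ^ α = h * (κ ^ (α - 1) * k ^ ((α - 1) / 2)) := by
      have : h ^ α = h * h ^ (α - 1) := by
        rw [← Real.rpow_one_add' hh0.le (by linarith)]; ring_nf
      rw [this, hh, Real.mul_rpow hκ0.le (by positivity), ← Real.rpow_mul hst.le]
      ring_nf
    have p2 : k ^ ((α - 1) / 2) * k = k ^ ((1 + α) / 2) := by
      rw [← Real.rpow_add_one hst.ne']; ring_nf
    have p3 : k ^ (α / 2) * k ^ (1 / 2 : ℝ) = k ^ ((1 + α) / 2) := by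
      rw [← Real.rpow_add hst]; ring_nf
    have e3 : Cd * h ^ α * k = Cd * κ ^ (α - 1) * k ^ ((1 + α) / 2) * h := by
      rw [p1, ← p2]; ring
    have e4 : |C1| * k ^ (α / 2) * h ^ 2 = |C1| * κ * k ^ ((1 + α) / 2) * h := by
      rw [pow_two, ← p3]
      nth_rewrite 1 [hh]; ring
    rw [e3] at e1
    rw [e4] at e
    rw [← mul_le_mul_iff_left₀ hh0]
    linarith
  refine ⟨Cd * κ ^ (α - 1) + |C1| * κ, fun x hx s hs t ht => ?_⟩
  rcases (abs_nonneg (s - t)).eq_or_lt with h | h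
  · have : s = t := sub_eq_zero.1 (abs_eq_zero.1 h.symm)
    subst this
    rw [sub_self, abs_zero]; positivity
  · exact h0 x hx t ht s hs h

/-- The coefficient `a` is bounded below on bounded sets. -/
theorem Dat.low (D : Dat T ℓ) (hT : 0 ≤ T) (hl : 0 < ℓ) {M : ℝ} (hM : 0 ≤ M) :
    ∃ m, 0 < m ∧ ∀ A ∈ Box T ℓ M, m ≤ D.a A := by
  obtain ⟨L, hL⟩ := D.na M
  have hc : ContinuousOn D.a (Box T ℓ M) := by
    have : LipschitzOnWith ⟨L, hL.nn⟩ D.a (Box T ℓ M) := LipschitzOnWith.of_dist_le_mul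
      fun A hA B hB => by rw [Real.dist_eq, dist_eq_norm]; exact hL.lip A hA B hB
    exact this.continuousOn
  have hk : IsCompact (Box T ℓ M) :=
    isCompact_Icc.prod (isCompact_Icc.prod (isCompact_Icc.prod isCompact_Icc))
  obtain ⟨A, hA, hmin⟩ := hk.exists_isMinOn ⟨(0, 0, 0, 0), ⟨le_rfl, hT⟩, ⟨by linarith, hl.le⟩,
    ⟨by linarith, hM⟩, ⟨by linarith, hM⟩⟩ hc
  exact ⟨D.a A, D.pos _ hA.1 _ hA.2.1 _ _, fun B hB => hmin hB⟩

/-- Full regularity: `u_xx = (u_t - f) / a` is Hölder in space because `u_t` is. -/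
theorem Cls0.toCls (hc : Cls0 D α τ u p q d) (hτ : 0 < τ) (hτT : τ ≤ T) (hl : 0 < ℓ) (hα : 0 < α)
    (hα1 : α < 1) : Cls D α τ u p q d := by
  obtain ⟨Cd, hCd, hd⟩ := hc.dX hτ hl hα hα1
  refine { hc with qX := ?_, dX := ⟨Cd, hd⟩, pT := hc.pT hτ hl hα hα1 }
  obtain ⟨M, hM, hb⟩ := hc.bounds hτ.le hl hα
  obtain ⟨La, ha⟩ := D.na M
  obtain ⟨Lf, hf⟩ := D.nf M
  obtain ⟨m, hm, hlow⟩ := D.low (hτ.le.trans hτT) hl hM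
  have hp : 0 ≤ M * (2 * ℓ) ^ (1 - α) := by positivity
  set E := (2 * ℓ) ^ (1 - α) + M * (2 * ℓ) ^ (1 - α) + M * (2 * ℓ) ^ (1 - α)
  refine ⟨(Cd + Lf * E + La * E * M) / m, fun t ht => ?_⟩
  have tT : t ∈ Icc 0 T := ⟨ht.1, ht.2.trans hτT⟩
  have b0 : ∀ x ∈ Icc (-ℓ) ℓ, |u t x| ≤ M := fun x hx => (hb t ht x hx).1
  have b1 : ∀ x ∈ Icc (-ℓ) ℓ, |p t x| ≤ M := fun x hx => (hb t ht x hx).2.1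
  have b2 : ∀ x ∈ Icc (-ℓ) ℓ, |q t x| ≤ M := fun x hx => (hb t ht x hx).2.2.1
  have k0 := HolderBnd.of_deriv hα1 hM (fun x hx y hy => abs_sub_le_Icc hx hy)
    (convex_Icc _ _) (hc.ux t ht) b1
  have k1 := HolderBnd.of_deriv hα1 hM (fun x hx y hy => abs_sub_le_Icc hx hy)
    (convex_Icc _ _) (hc.px t ht) b2
  have ka := HolderBnd.comp4 hα1 ha tT b0 b1 k0 k1 hp hp hl
  have kf := HolderBnd.comp4 hα1 hf tT b0 b1 k0 k1 hp hp hl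
  intro x hx y hy
  have e1 := hd t ht x hx y hy
  have e2 := kf x hx y hy
  have e3 := ka x hx y hy
  have e4 := hlow (t, x, u t x, p t x) ⟨tT, hx, abs_le.1 (b0 x hx), abs_le.1 (b1 x hx)⟩
  simp only at e2 e3
  rw [hc.pde t ht x hx, hc.pde t ht y hy] at e1
  rw [div_mul_eq_mul_div, le_div_iff₀ hm]
  have a1 : |q t x - q t y| * m ≤ |D.a (t, x, u t x, p t x) * (q t x - q t y)| := by
    rw [abs_mul, abs_of_pos (hm.trans_le e4), mul_comm]
    gcongr
  have a2 : |(D.a (t, x, u t x, p t x) - D.a (t, y, u t y, p t y)) * q t y| ≤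
      La * E * |x - y| ^ α * M := by
    rw [abs_mul]
    exact mul_le_mul e3 (b2 y hy) (abs_nonneg _) ((abs_nonneg _).trans e3)
  refine a1.trans ?_
  have e5 : D.a (t, x, u t x, p t x) * (q t x - q t y) =
      (D.a (t, x, u t x, p t x) * q t x + D.f (t, x, u t x, p t x) -
        (D.a (t, y, u t y, p t y) * q t y + D.f (t, y, u t y, p t y))) -
      (D.f (t, x, u t x, p t x) - D.f (t, y, u t y, p t y)) -
      (D.a (t, x, u t x, p t x) - D.a (t, y, u t y, p t y)) * q t y := by ring
  rw [e5]
  refine (abs_sub _ _).trans ?_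
  have := abs_sub (D.a (t, x, u t x, p t x) * q t x + D.f (t, x, u t x, p t x) -
        (D.a (t, y, u t y, p t y) * q t y + D.f (t, y, u t y, p t y)))
      (D.f (t, x, u t x, p t x) - D.f (t, y, u t y, p t y))
  linarith

end

/-! ### Classical solutions from solutions on the closed cylinder -/

/-- The data `D` is the one given by the coefficients `a`, `f`, `b`, `g`. -/
structure Match {T ℓ : ℝ} (D : Dat T ℓ) (a f b g : ℝ → ℝ → ℝ → ℝ → ℝ) : Prop where
  a_eq : ∀ t x z p, D.a (t, x, z, p) = a t x z p
  f_eq : ∀ t x z p, D.f (t, x, z, p) = f t x z p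
  r_eq : ∀ t x z p, D.r (t, x, z, p) = g t ℓ z p - b t ℓ z p * p
  l_eq : ∀ t x z p, D.l (t, x, z, p) = g t (-ℓ) z p + b t (-ℓ) z p * p

/-- The nearest point of `[-ℓ,ℓ]`. -/
def clp (ℓ x : ℝ) : ℝ := max (-ℓ) (min x ℓ)

theorem clp_of_mem {ℓ x : ℝ} (hx : x ∈ Icc (-ℓ) ℓ) : clp ℓ x = x := by
  rw [clp, min_eq_left hx.2, max_eq_right hx.1]

theorem clp_of_ge {ℓ x : ℝ} (hl : 0 < ℓ) (hx : ℓ ≤ x) : clp ℓ x = ℓ := by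
  rw [clp, min_eq_right hx, max_eq_right (by linarith)]

theorem clp_of_le {ℓ x : ℝ} (hl : 0 < ℓ) (hx : x ≤ -ℓ) : clp ℓ x = -ℓ := by
  rw [clp, min_eq_left (by linarith), max_eq_left hx]

/-- A function glued at `±ℓ` from differentiable pieces with matching derivatives is differentiable. -/
theorem glue_deriv {ℓ x : ℝ} (hl : 0 < ℓ) {f g v φ ψ : ℝ → ℝ} (hL : ∀ x ∈ Iic (-ℓ), f x = φ x)
    (hI : ∀ x ∈ Icc (-ℓ) ℓ, f x = v x) (hR : ∀ x ∈ Ici ℓ, f x = ψ x)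
    (dL : ∀ x ∈ Iic (-ℓ), HasDerivAt φ (g x) x)
    (dI : ∀ x ∈ Icc (-ℓ) ℓ, HasDerivWithinAt v (g x) (Icc (-ℓ) ℓ) x)
    (dR : ∀ x ∈ Ici ℓ, HasDerivAt ψ (g x) x) : HasDerivAt f (g x) x := by
  have h1 : HasDerivWithinAt f (g x) (Iic (-ℓ)) x := by
    by_cases h : x ∈ Iic (-ℓ)
    · exact (dL x h).hasDerivWithinAt.congr hL (hL x h)
    · exact HasFDerivWithinAt.of_notMem_closure (by rwa [isClosed_Iic.closure_eq])
  have h2 : HasDerivWithinAt f (g x) (Icc (-ℓ) ℓ) x := by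
    by_cases h : x ∈ Icc (-ℓ) ℓ
    · exact (dI x h).congr hI (hI x h)
    · exact HasFDerivWithinAt.of_notMem_closure (by rwa [isClosed_Icc.closure_eq])
  have h3 : HasDerivWithinAt f (g x) (Ici ℓ) x := by
    by_cases h : x ∈ Ici ℓ
    · exact (dR x h).hasDerivWithinAt.congr hR (hR x h)
    · exact HasFDerivWithinAt.of_notMem_closure (by rwa [isClosed_Ici.closure_eq])
  have h := (h1.union h2).union h3
  rw [Iic_union_Icc_eq_Iic (by linarith), Iic_union_Ici] at h
  exact hasDerivWithinAt_univ.1 h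

/-- Extension of a `C²` function on `[-ℓ,ℓ]` by its second-order Taylor polynomials at the ends. -/
def tay (ℓ : ℝ) (v v1 v2 : ℝ → ℝ) (x : ℝ) : ℝ :=
  v (clp ℓ x) + v1 (clp ℓ x) * (x - clp ℓ x) + v2 (clp ℓ x) / 2 * (x - clp ℓ x) ^ 2

/-- Extension of a `C¹` function on `[-ℓ,ℓ]` by its first-order Taylor polynomials at the ends. -/
def tay1 (ℓ : ℝ) (v1 v2 : ℝ → ℝ) (x : ℝ) : ℝ := v1 (clp ℓ x) + v2 (clp ℓ x) * (x - clp ℓ x)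

section
variable {ℓ : ℝ} {v v1 v2 : ℝ → ℝ}

theorem tay_of_mem {x : ℝ} (hx : x ∈ Icc (-ℓ) ℓ) : tay ℓ v v1 v2 x = v x := by
  rw [tay, clp_of_mem hx]; simp

theorem tay1_of_mem {x : ℝ} (hx : x ∈ Icc (-ℓ) ℓ) : tay1 ℓ v1 v2 x = v1 x := by
  rw [tay1, clp_of_mem hx]; simp

theorem tay_deriv (hl : 0 < ℓ) (h1 : ∀ x ∈ Icc (-ℓ) ℓ, HasDerivWithinAt v (v1 x) (Icc (-ℓ) ℓ) x)
    (x : ℝ) : HasDerivAt (tay ℓ v v1 v2) (tay1 ℓ v1 v2 x) x := by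
  have poly : ∀ c x : ℝ, HasDerivAt (fun x => v c + v1 c * (x - c) + v2 c / 2 * (x - c) ^ 2)
      (v1 c + v2 c * (x - c)) x := fun c x => by
    have e := (hasDerivAt_id x).sub_const c
    have := ((e.const_mul (v1 c)).const_add (v c)).add ((e.pow 2).const_mul (v2 c / 2))
    refine this.congr_deriv ?_
    simp only [id]; push_cast; ring
  refine glue_deriv hl (φ := fun x => v (-ℓ) + v1 (-ℓ) * (x - -ℓ) + v2 (-ℓ) / 2 * (x - -ℓ) ^ 2)
    (v := v) (ψ := fun x => v ℓ + v1 ℓ * (x - ℓ) + v2 ℓ / 2 * (x - ℓ) ^ 2) (fun x hx => ?_)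
    (fun x hx => tay_of_mem hx) (fun x hx => ?_) (fun x hx => ?_) (fun x hx => ?_) fun x hx => ?_
  · rw [tay, clp_of_le hl hx]
  · rw [tay, clp_of_ge hl hx]
  · rw [tay1, clp_of_le hl hx]; exact poly _ _
  · rw [tay1_of_mem hx]; exact h1 x hx
  · rw [tay1, clp_of_ge hl hx]; exact poly _ _

theorem tay1_deriv (hl : 0 < ℓ) (h1 : ∀ x ∈ Icc (-ℓ) ℓ, HasDerivWithinAt v1 (v2 x) (Icc (-ℓ) ℓ) x)
    (x : ℝ) : HasDerivAt (tay1 ℓ v1 v2) (v2 (clp ℓ x)) x := by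
  have poly : ∀ c x : ℝ, HasDerivAt (fun x => v1 c + v2 c * (x - c)) (v2 c) x := fun c x => by
    have e := (hasDerivAt_id x).sub_const c
    refine ((e.const_mul (v2 c)).const_add (v1 c)).congr_deriv (mul_one _)
  refine glue_deriv (g := fun x => v2 (clp ℓ x)) hl (φ := fun x => v1 (-ℓ) + v2 (-ℓ) * (x - -ℓ))
    (v := v1) (ψ := fun x => v1 ℓ + v2 ℓ * (x - ℓ)) (fun x hx => ?_)
    (fun x hx => tay1_of_mem hx) (fun x hx => ?_) (fun x hx => ?_) (fun x hx => ?_) fun x hx => ?_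
  · rw [tay1, clp_of_le hl hx]
  · rw [tay1, clp_of_ge hl hx]
  · simp only [clp_of_le hl hx]; exact poly _ _
  · simp only [clp_of_mem hx]; exact h1 x hx
  · simp only [clp_of_ge hl hx]; exact poly _ _

end

section
variable {T ℓ α τ : ℝ} {D : Dat T ℓ} {u p q d : ℝ → ℝ → ℝ}

theorem Cls0.lip (hc : Cls0 D α τ u p q d) (hτ : 0 ≤ τ) (hl : 0 < ℓ) (hα : 0 < α) :
    ∃ B, 0 ≤ B ∧ ∀ t ∈ Icc 0 τ, ∀ s ∈ Icc 0 τ, ∀ x ∈ Icc (-ℓ) ℓ, ∀ y ∈ Icc (-ℓ) ℓ,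
      |u t x - u s y| ≤ B * (|t - s| + |x - y|) := by
  obtain ⟨B, hB, hb⟩ := hc.bounds hτ hl hα
  refine ⟨B, hB, fun t ht s hs x hx y hy => ?_⟩
  have e1 := (convex_Icc 0 τ).norm_image_sub_le_of_norm_hasDerivWithin_le
      (fun s hs => hc.ut s hs x hx) (fun s hs => (hb s hs x hx).2.2.2) hs ht
  have e2 := (convex_Icc _ _).norm_image_sub_le_of_norm_hasDerivWithin_le (hc.ux s hs)
    (fun x hx => (hb s hs x hx).2.1) hy hx
  simp only [Real.norm_eq_abs] at e1 e2
  have := abs_add_le (u t x - u s x) (u s x - u s y)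
  rw [sub_add_sub_cancel] at this
  linarith

theorem Cls0.cont (hc : Cls0 D α τ u p q d) (hτ : 0 ≤ τ) (hl : 0 < ℓ) (hα : 0 < α) :
    ContinuousOn (fun z : ℝ × ℝ => u z.1 z.2) (Icc 0 τ ×ˢ Icc (-ℓ) ℓ) := by
  obtain ⟨B, hB, hb⟩ := hc.lip hτ hl hα
  have : LipschitzOnWith ⟨B * 2, by positivity⟩ (fun z : ℝ × ℝ => u z.1 z.2)
      (Icc 0 τ ×ˢ Icc (-ℓ) ℓ) := by
    refine LipschitzOnWith.of_dist_le_mul fun z hz w hw => ?_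
    have h1 : |z.1 - w.1| ≤ dist z w := by rw [← Real.dist_eq]; exact le_max_left _ _
    have h2 : |z.2 - w.2| ≤ dist z w := by rw [← Real.dist_eq]; exact le_max_right _ _
    refine (hb _ hz.1 _ hw.1 _ hz.2 _ hw.2).trans ?_
    change _ ≤ B * 2 * dist z w
    rw [mul_assoc]
    exact mul_le_mul_of_nonneg_left (by linarith) hB
  exact this.continuousOn

/-- The extension of a solution on the closed cylinder to all `x ∈ ℝ`. -/
def extu (ℓ : ℝ) (u p q : ℝ → ℝ → ℝ) (t x : ℝ) : ℝ := tay ℓ (u t) (p t) (q t) x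

/-- The Taylor extension of a solution on the closed cylinder is a solution in the sense of `SolQ` and
belongs to the parabolic Hölder space. -/
theorem Cls.sol {a f b g : ℝ → ℝ → ℝ → ℝ → ℝ} {u0 : ℝ → ℝ} (hm : Match D a f b g)
    (hc : Cls D α τ u p q d) (hτ : 0 ≤ τ) (hl : 0 < ℓ) (hα : 0 < α)
    (hi : ∀ x ∈ Icc (-ℓ) ℓ, u 0 x = u0 x) :
    MemP α τ (Ioo (-ℓ) ℓ) (extu ℓ u p q) ∧ SolQ τ ℓ a f b g u0 (extu ℓ u p q) := by
  set U := extu ℓ u p q with hU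
  have cl : closure (Ioo (-ℓ) ℓ) = Icc (-ℓ) ℓ := closure_Ioo (by linarith)
  have Uu : ∀ t, ∀ x ∈ Icc (-ℓ) ℓ, U t x = u t x := fun t x hx => tay_of_mem hx
  have io : ∀ {t}, t ∈ Ioo 0 τ → t ∈ Icc 0 τ := fun h => Ioo_subset_Icc_self h
  have ix : ∀ {x}, x ∈ Ioo (-ℓ) ℓ → x ∈ Icc (-ℓ) ℓ := fun h => Ioo_subset_Icc_self h
  have dt : ∀ t ∈ Ioo 0 τ, ∀ x ∈ Icc (-ℓ) ℓ, HasDerivAt (fun s => U s x) (d t x) t :=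
    fun t ht x hx => by
    simp only [Uu _ x hx]
    exact (hc.ut t (io ht) x hx).hasDerivAt (Icc_mem_nhds ht.1 ht.2)
  have dx : ∀ t ∈ Ioo 0 τ, ∀ x, HasDerivAt (U t) (tay1 ℓ (p t) (q t) x) x := fun t ht x =>
    tay_deriv hl (hc.ux t (io ht)) x
  have sx : ∀ t ∈ Ioo 0 τ, spaceDeriv U t = tay1 ℓ (p t) (q t) := fun t ht =>
    funext fun x => (dx t ht x).deriv
  have dxx : ∀ t ∈ Ioo 0 τ, ∀ x, HasDerivAt (fun y => spaceDeriv U t y) (q t (clp ℓ x)) x :=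
    fun t ht x => by
    rw [show (fun y => spaceDeriv U t y) = spaceDeriv U t from rfl, sx t ht]
    exact tay1_deriv hl (hc.px t (io ht)) x
  have et : ∀ t ∈ Ioo 0 τ, ∀ x ∈ Icc (-ℓ) ℓ, timeDeriv U t x = d t x := fun t ht x hx =>
    (dt t ht x hx).deriv
  have ex : ∀ t ∈ Ioo 0 τ, ∀ x ∈ Icc (-ℓ) ℓ, spaceDeriv U t x = p t x := fun t ht x hx => by
    rw [sx t ht, tay1_of_mem hx]
  have exx : ∀ t ∈ Ioo 0 τ, ∀ x ∈ Icc (-ℓ) ℓ, spaceDeriv2 U t x = q t x := fun t ht x hx => by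
    have := (dxx t ht x).deriv
    rw [clp_of_mem hx] at this
    exact this
  have cont : ContinuousOn (fun z : ℝ × ℝ => U z.1 z.2) (Icc 0 τ ×ˢ Icc (-ℓ) ℓ) :=
    (hc.toCls0.cont hτ hl hα).congr fun z hz => Uu _ _ hz.2
  have reg : Reg12 τ (Icc (-ℓ) ℓ) U := fun t ht x hx =>
    ⟨(dt t ht x hx).differentiableAt, (dx t ht x).differentiableAt, (dxx t ht x).differentiableAt⟩
  have mR : ℓ ∈ Icc (-ℓ) ℓ := ⟨by linarith, le_rfl⟩
  have mL : -ℓ ∈ Icc (-ℓ) ℓ := ⟨le_rfl, by linarith⟩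
  constructor
  · rw [MemP, cl]
    refine ⟨cont, reg, ?_⟩
    obtain ⟨B, hB, hb⟩ := hc.bounds hτ hl hα
    obtain ⟨C1, h1⟩ := hc.qT
    obtain ⟨C2, h2⟩ := hc.dT
    obtain ⟨C3, h3⟩ := hc.qX
    obtain ⟨C4, h4⟩ := hc.dX
    obtain ⟨C5, h5⟩ := hc.pT
    have a1 := abs_nonneg C1
    have a2 := abs_nonneg C2
    have a3 := abs_nonneg C3
    have a4 := abs_nonneg C4
    have a5 := abs_nonneg C5
    refine ⟨B + |C1| + |C2| + |C3| + |C4| + |C5|, fun t ht x hx => ?_, ⟨fun x hx => ?_,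
      fun t ht => ?_⟩, ⟨fun x hx => ?_, fun t ht => ?_⟩, fun x hx => ?_⟩
    · rw [Uu _ _ (ix hx), et t ht x (ix hx), ex t ht x (ix hx), exx t ht x (ix hx)]
      obtain ⟨b1, b2, b3, b4⟩ := hb t (io ht) x (ix hx)
      refine ⟨?_, ?_, ?_, ?_⟩ <;> linarith
    · exact (((h2 x (ix hx)).mono_set Ioo_subset_Icc_self).congr fun t ht => et t ht x (ix hx)).mono
        (by linarith [le_abs_self C2])
    · exact (((h4 t (io ht)).mono_set Ioo_subset_Icc_self).congr fun x hx => et t ht x (ix hx)).mono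
        (by linarith [le_abs_self C4])
    · exact (((h1 x (ix hx)).mono_set Ioo_subset_Icc_self).congr fun t ht => exx t ht x (ix hx)).mono
        (by linarith [le_abs_self C1])
    · exact (((h3 t (io ht)).mono_set Ioo_subset_Icc_self).congr fun x hx => exx t ht x (ix hx)).mono
        (by linarith [le_abs_self C3])
    · exact (((h5 x (ix hx)).mono_set Ioo_subset_Icc_self).congr fun t ht => ex t ht x (ix hx)).mono
        (by linarith [le_abs_self C5])
  · refine ⟨⟨cont, fun t ht x hx => reg t ht x (ix hx), fun t ht => ⟨(reg t ht ℓ mR).1,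
      (reg t ht ℓ mR).2.1, (reg t ht _ mL).1, (reg t ht _ mL).2.1⟩⟩, fun t ht x hx => ?_,
      fun t ht => ⟨?_, ?_⟩, fun x hx => by rw [Uu _ x hx, hi x hx]⟩
    · rw [Uu _ _ (ix hx), et t ht x (ix hx), ex t ht x (ix hx), exx t ht x (ix hx), ← hm.a_eq,
        ← hm.f_eq, hc.pde t (io ht) x (ix hx)]
      ring
    · rw [Uu _ _ mR, et t ht _ mR, ex t ht _ mR, hc.bcR t (io ht), hm.r_eq]; ring
    · rw [Uu _ _ mL, et t ht _ mL, ex t ht _ mL, hc.bcL t (io ht), hm.l_eq]; ring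

end

/-! ### Closing up solutions from the open cylinder -/

theorem abs_rpow_tri {β : ℝ} (h0 : 0 ≤ β) (h1 : β ≤ 1) (a b c : ℝ) :
    |a - c| ^ β ≤ |a - b| ^ β + |b - c| ^ β := by
  have : |a - c| ≤ |a - b| + |b - c| := abs_sub_le _ _ _
  exact (Real.rpow_le_rpow (abs_nonneg _) this h0).trans
    (Real.rpow_add_le_add_rpow (abs_nonneg _) (abs_nonneg _) h0 h1)

/-- McShane extension of a jointly Hölder function on an open rectangle to the plane. -/
theorem holder_ext {β γ C a b c e : ℝ} (hβ : 0 < β) (hβ1 : β ≤ 1) (hγ : 0 < γ) (hγ1 : γ ≤ 1)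
    (hC : 0 ≤ C) (hab : a < b) (hce : c < e) {w : ℝ → ℝ → ℝ}
    (hT : ∀ x ∈ Ioo c e, HolderBnd β (Ioo a b) (fun t => w t x) C)
    (hX : ∀ t ∈ Ioo a b, HolderBnd γ (Ioo c e) (w t) C) :
    ∃ F : ℝ → ℝ → ℝ, Continuous (fun z : ℝ × ℝ => F z.1 z.2) ∧
      (∀ t ∈ Ioo a b, ∀ x ∈ Ioo c e, F t x = w t x) ∧
      (∀ x, HolderBnd β univ (fun t => F t x) C) ∧ ∀ t, HolderBnd γ univ (F t) C := by
  set ρ : ℝ × ℝ → ℝ × ℝ → ℝ := fun z w => |z.1 - w.1| ^ β + |z.2 - w.2| ^ γ with hρ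
  have tri : ∀ x y z, ρ x z ≤ ρ x y + ρ y z := fun x y z => by
    have h1 := abs_rpow_tri hβ.le hβ1 x.1 y.1 z.1
    have h2 := abs_rpow_tri hγ.le hγ1 x.2 y.2 z.2
    simp only [hρ]; linarith
  have symm : ∀ x y, ρ x y = ρ y x := fun x y => by
    simp only [hρ, abs_sub_comm]
  have self : ∀ x, ρ x x = 0 := fun x => by
    simp only [hρ, sub_self, abs_zero, Real.zero_rpow hβ.ne', Real.zero_rpow hγ.ne', add_zero]
  set S := Ioo a b ×ˢ Ioo c e
  have hS : ∀ z : S, ∀ y : S, w z.1.1 z.1.2 - w y.1.1 y.1.2 ≤ C * ρ z y := fun z y => by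
    have h1 := hT _ z.2.2 _ z.2.1 _ y.2.1
    have h2 := hX _ y.2.1 _ z.2.2 _ y.2.2
    simp only at h1 h2
    have := (le_abs_self _).trans h1
    have := (le_abs_self _).trans h2
    simp only [hρ]; linarith
  obtain ⟨t0, ht0⟩ := nonempty_Ioo.2 hab
  obtain ⟨x0, hx0⟩ := nonempty_Ioo.2 hce
  set o : S := ⟨(t0, x0), ht0, hx0⟩
  haveI : Nonempty S := ⟨o⟩
  set F : ℝ × ℝ → ℝ := fun z => ⨅ y : S, (w y.1.1 y.1.2 + C * ρ z y) with hF
  have bdd : ∀ z, BddBelow (range fun y : S => w y.1.1 y.1.2 + C * ρ z y) := fun z => by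
    refine ⟨w t0 x0 - C * ρ o z, ?_⟩
    rintro _ ⟨y, rfl⟩
    have h1 := hS o y
    have h2 := mul_le_mul_of_nonneg_left (tri o z y) hC
    simp only [o] at h1 h2 ⊢
    linarith
  have half : ∀ z y, F z ≤ F y + C * ρ z y := fun z y => by
    rw [← sub_le_iff_le_add]
    refine le_ciInf fun s => ?_
    have h1 := ciInf_le (bdd z) s
    have h2 := mul_le_mul_of_nonneg_left (tri z y s) hC
    simp only [hF]
    linarith
  have hFh : ∀ z y, |F z - F y| ≤ C * ρ z y := fun z y => by
    have h1 := half z y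
    have h2 := half y z
    rw [symm y z] at h2
    rw [abs_le]; constructor <;> linarith
  have hFe : ∀ z : S, F z = w z.1.1 z.1.2 := fun z => by
    refine le_antisymm ?_ (le_ciInf fun s => ?_)
    · have := ciInf_le (bdd z) z
      simp only [self, mul_zero, add_zero] at this
      exact this
    · have := hS z s; linarith
  refine ⟨fun t x => F (t, x), ?_, fun t ht x hx => hFe ⟨(t, x), ht, hx⟩, fun x s _ t _ => ?_,
    fun t x _ y _ => ?_⟩
  · rw [continuous_iff_continuousAt]
    intro z
    rw [ContinuousAt, tendsto_iff_dist_tendsto_zero]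
    have lim : Tendsto (fun y => C * ρ y z) (𝓝 z) (𝓝 0) := by
      have : Continuous fun y : ℝ × ℝ => C * ρ y z := by
        refine continuous_const.mul (Continuous.add ?_ ?_)
        · exact Continuous.rpow_const (by fun_prop) fun _ => Or.inr hβ.le
        · exact Continuous.rpow_const (by fun_prop) fun _ => Or.inr hγ.le
      have := this.tendsto z
      simp only [self, mul_zero] at this
      exact this
    exact squeeze_zero (fun _ => dist_nonneg) (fun y => hFh y z) lim
  · have := hFh (s, x) (t, x)
    simpa only [hρ, sub_self, abs_zero, Real.zero_rpow hγ.ne', add_zero] using this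
  · have := hFh (t, x) (t, y)
    simpa only [hρ, sub_self, abs_zero, Real.zero_rpow hβ.ne', zero_add] using this

/-- First-order Taylor estimate for a function with Hölder derivative. -/
theorem tayl {β C a b : ℝ} (hβ : 0 ≤ β) (hC : 0 ≤ C) {v v1 : ℝ → ℝ}
    (h : ∀ x ∈ Ioo a b, HasDerivAt v (v1 x) x) (h1 : HolderBnd β (Ioo a b) v1 C) {x y : ℝ}
    (hx : x ∈ Ioo a b) (hy : y ∈ Ioo a b) :
    |v y - v x - v1 x * (y - x)| ≤ C * |y - x| ^ β * |y - x| := by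
  have hsub : uIcc x y ⊆ Ioo a b := ordConnected_Ioo.uIcc_subset hx hy
  have hd : ∀ z ∈ uIcc x y, HasDerivWithinAt (fun z => v z - v1 x * z) (v1 z - v1 x) (uIcc x y) z :=
    fun z hz => by
      have := ((h z (hsub hz)).sub ((hasDerivAt_id z).const_mul (v1 x))).hasDerivWithinAt
        (s := uIcc x y)
      rw [mul_one] at this
      exact this
  have := (convex_uIcc x y).norm_image_sub_le_of_norm_hasDerivWithin_le hd (C := C * |y - x| ^ β)
    (fun z hz => (h1 z (hsub hz) x hx).trans (mul_le_mul_of_nonneg_left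
      (Real.rpow_le_rpow (abs_nonneg _) (abs_sub_left_of_mem_uIcc hz) hβ) hC))
    left_mem_uIcc right_mem_uIcc
  rw [Real.norm_eq_abs, Real.norm_eq_abs] at this
  convert this using 2; ring

/-- A Taylor inequality with remainder of order above one identifies the derivative. -/
theorem deriv_of_tayl {β C m x : ℝ} {I : Set ℝ} {v : ℝ → ℝ} (hβ : 0 < β)
    (h : ∀ y ∈ I, |v y - v x - m * (y - x)| ≤ C * |y - x| ^ β * |y - x|) :
    HasDerivWithinAt v m I x := by
  rw [hasDerivWithinAt_iff_isLittleO, Asymptotics.isLittleO_iff]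
  intro c hc
  have lim : Tendsto (fun y => C * |y - x| ^ β) (𝓝[I] x) (𝓝 0) := by
    have : ContinuousAt (fun y : ℝ => C * |y - x| ^ β) x :=
      continuousAt_const.mul (ContinuousAt.rpow_const (by fun_prop) (Or.inr hβ.le))
    have h := this.tendsto
    simp only [sub_self, abs_zero, Real.zero_rpow hβ.ne', mul_zero] at h
    exact h.mono_left nhdsWithin_le_nhds
  filter_upwards [self_mem_nhdsWithin, lim.eventually (gt_mem_nhds hc)] with y hy hyc
  have := (h y hy).trans (mul_le_mul_of_nonneg_right hyc.le (abs_nonneg _))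
  rw [smul_eq_mul, Real.norm_eq_abs, Real.norm_eq_abs, mul_comm (y - x)]
  exact this

/-- Weak inequalities between continuous functions pass from an open box to its closure. -/
theorem le_closed_box {a b c e r s : ℝ} (h1 : a < b) (h2 : c < e) (h3 : r < s)
    {φ ψ : ℝ × ℝ × ℝ → ℝ} (hφ : Continuous φ) (hψ : Continuous ψ)
    (h : ∀ x ∈ Ioo a b, ∀ y ∈ Ioo c e, ∀ z ∈ Ioo r s, φ (x, y, z) ≤ ψ (x, y, z)) :
    ∀ x ∈ Icc a b, ∀ y ∈ Icc c e, ∀ z ∈ Icc r s, φ (x, y, z) ≤ ψ (x, y, z) := by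
  intro x hx y hy z hz
  have hcl : closure (Ioo a b ×ˢ Ioo c e ×ˢ Ioo r s) ⊆ {w | φ w ≤ ψ w} :=
    closure_minimal (fun w hw => h _ hw.1 _ hw.2.1 _ hw.2.2) (isClosed_le hφ hψ)
  rw [closure_prod_eq, closure_prod_eq, closure_Ioo h1.ne, closure_Ioo h2.ne,
    closure_Ioo h3.ne] at hcl
  exact hcl ⟨hx, hy, hz⟩

theorem SDP.continuousOn {E : Type*} [NormedAddCommGroup E] {K : Set E} {h : E → ℝ} {L : ℝ}
    (hL : SDP K h L) : ContinuousOn h K := by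
  have : LipschitzOnWith ⟨L, hL.nn⟩ h K := LipschitzOnWith.of_dist_le_mul
      fun A hA B hB => by rw [Real.dist_eq, dist_eq_norm]; exact hL.lip A hA B hB
  exact this.continuousOn

/-- Solutions in the open cylinder with parabolic Hölder bounds there; `p`, `q`, `d` stand for
`u_x`, `u_xx`, `u_t`. -/
structure OpenSol {T ℓ : ℝ} (D : Dat T ℓ) (α τ : ℝ) (u p q d : ℝ → ℝ → ℝ) (C : ℝ) : Prop where
  cont : ContinuousOn (fun z : ℝ × ℝ => u z.1 z.2) (Ico 0 τ ×ˢ Icc (-ℓ) ℓ)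
  ux : ∀ t ∈ Ioo 0 τ, ∀ x ∈ Icc (-ℓ) ℓ, HasDerivAt (u t) (p t x) x
  px : ∀ t ∈ Ioo 0 τ, ∀ x ∈ Ioo (-ℓ) ℓ, HasDerivAt (p t) (q t x) x
  ut : ∀ t ∈ Ioo 0 τ, ∀ x ∈ Icc (-ℓ) ℓ, HasDerivAt (fun s => u s x) (d t x) t
  pde : ∀ t ∈ Ioo 0 τ, ∀ x ∈ Ioo (-ℓ) ℓ,
    d t x = D.a (t, x, u t x, p t x) * q t x + D.f (t, x, u t x, p t x)
  bcR : ∀ t ∈ Ioo 0 τ, d t ℓ = D.r (t, ℓ, u t ℓ, p t ℓ)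
  bcL : ∀ t ∈ Ioo 0 τ, d t (-ℓ) = D.l (t, -ℓ, u t (-ℓ), p t (-ℓ))
  bp : ∀ t ∈ Ioo 0 τ, ∀ x ∈ Ioo (-ℓ) ℓ, |p t x| ≤ C
  bq : ∀ t ∈ Ioo 0 τ, ∀ x ∈ Ioo (-ℓ) ℓ, |q t x| ≤ C
  bd : ∀ t ∈ Ioo 0 τ, ∀ x ∈ Ioo (-ℓ) ℓ, |d t x| ≤ C
  hq : PHolderBnd α τ (Ioo (-ℓ) ℓ) q C
  hd : PHolderBnd α τ (Ioo (-ℓ) ℓ) d C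
  hp : ∀ x ∈ Ioo (-ℓ) ℓ, HolderBnd ((1 + α) / 2) (Ioo 0 τ) (fun t => p t x) C

theorem lip_holder {I : Set ℝ} {v v1 : ℝ → ℝ} {C : ℝ} (hI : Convex ℝ I)
    (h : ∀ x ∈ I, HasDerivAt v (v1 x) x) (hb : ∀ x ∈ I, |v1 x| ≤ C) : HolderBnd 1 I v C :=
  fun x hx y hy => by
  rw [Real.rpow_one]
  exact hI.norm_image_sub_le_of_norm_hasDerivWithin_le (fun x hx => (h x hx).hasDerivWithinAt)
    hb hy hx

/-- A solution with Hölder bounds in the open cylinder extends to the closed cylinder. -/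
theorem OpenSol.close {T ℓ α τ C : ℝ} {D : Dat T ℓ} {u p q d : ℝ → ℝ → ℝ}
    (ho : OpenSol D α τ u p q d C) (hτ : 0 < τ) (hτT : τ ≤ T) (hl : 0 < ℓ) (hα : 0 < α)
    (hα1 : α < 1) : ∃ u' p' q' d', Cls D α τ u' p' q' d' ∧
      ∀ t ∈ Ico 0 τ, ∀ x ∈ Icc (-ℓ) ℓ, u' t x = u t x := by
  have hll : -ℓ < ℓ := by linarith
  have hC : 0 ≤ C := (abs_nonneg _).trans (ho.bp (τ / 2) ⟨by linarith, by linarith⟩ 0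
    ⟨by linarith, hl⟩)
  have ix : ∀ {x}, x ∈ Ioo (-ℓ) ℓ → x ∈ Icc (-ℓ) ℓ := fun h => Ioo_subset_Icc_self h
  have it : ∀ {t}, t ∈ Ioo 0 τ → t ∈ Icc 0 τ := fun h => Ioo_subset_Icc_self h
  obtain ⟨Fq, cq, eq, Tq, Xq⟩ := holder_ext (by linarith) (by linarith) hα hα1.le hC hτ hll
    ho.hq.1 ho.hq.2
  obtain ⟨Fd, cd, ed, Td, Xd⟩ := holder_ext (by linarith) (by linarith) hα hα1.le hC hτ hll
    ho.hd.1 ho.hd.2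
  obtain ⟨Fp, cp, ep, Tp, Xp⟩ := holder_ext (by linarith) (by linarith) one_pos le_rfl hC hτ hll
    ho.hp fun t ht => lip_holder (convex_Ioo _ _) (ho.px t ht) (ho.bq t ht)
  obtain ⟨Fu, cu, eu, -, -⟩ := holder_ext one_pos le_rfl one_pos le_rfl hC hτ hll
    (fun x hx => lip_holder (convex_Ioo _ _) (fun t ht => ho.ut t ht x (ix hx))
      (fun t ht => ho.bd t ht x hx))
    fun t ht => lip_holder (convex_Ioo _ _) (fun x hx => ho.ux t ht x (ix hx)) (ho.bp t ht)
  have cu' : ∀ {X : Type} [TopologicalSpace X] {f g : X → ℝ}, Continuous f → Continuous g →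
    Continuous fun x => Fu (f x) (g x) := fun hf hg => cu.comp (hf.prodMk hg)
  have cp' : ∀ {X : Type} [TopologicalSpace X] {f g : X → ℝ}, Continuous f → Continuous g →
    Continuous fun x => Fp (f x) (g x) := fun hf hg => cp.comp (hf.prodMk hg)
  have cq' : ∀ {X : Type} [TopologicalSpace X] {f g : X → ℝ}, Continuous f → Continuous g →
    Continuous fun x => Fq (f x) (g x) := fun hf hg => cq.comp (hf.prodMk hg)
  have cd' : ∀ {X : Type} [TopologicalSpace X] {f g : X → ℝ}, Continuous f → Continuous g →
    Continuous fun x => Fd (f x) (g x) := fun hf hg => cd.comp (hf.prodMk hg)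
  -- Taylor inequalities in the open cylinder pass to its closure and identify the derivatives
  have Dx : ∀ t ∈ Icc 0 τ, ∀ x ∈ Icc (-ℓ) ℓ, HasDerivWithinAt (Fu t) (Fp t x) (Icc (-ℓ) ℓ) x := by
    intro t ht x hx
    refine deriv_of_tayl one_pos (C := C) fun y hy => ?_
    refine le_closed_box hτ hll hll (φ := fun z => |Fu z.1 z.2.2 - Fu z.1 z.2.1 -
      Fp z.1 z.2.1 * (z.2.2 - z.2.1)|) (ψ := fun z => C * |z.2.2 - z.2.1| ^ (1:ℝ) * |z.2.2 - z.2.1|)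
      ?_ ?_ (fun t ht x hx y hy => ?_) t ht x hx y hy
    · have := cu' (f := fun z : ℝ × ℝ × ℝ => z.1) (g := fun z => z.2.2) (by fun_prop) (by fun_prop)
      have := cu' (f := fun z : ℝ × ℝ × ℝ => z.1) (g := fun z => z.2.1) (by fun_prop) (by fun_prop)
      have := cp' (f := fun z : ℝ × ℝ × ℝ => z.1) (g := fun z => z.2.1) (by fun_prop) (by fun_prop)
      fun_prop
    · simp only [Real.rpow_one]; fun_prop
    · simp only [eu t ht x hx, eu t ht y hy, ep t ht x hx]
      exact tayl zero_le_one hC (fun x hx => ho.ux t ht x (ix hx))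
        (lip_holder (convex_Ioo _ _) (ho.px t ht) (ho.bq t ht)) hx hy
  have Dxx : ∀ t ∈ Icc 0 τ, ∀ x ∈ Icc (-ℓ) ℓ, HasDerivWithinAt (Fp t) (Fq t x) (Icc (-ℓ) ℓ) x := by
    intro t ht x hx
    refine deriv_of_tayl hα (C := C) fun y hy => ?_
    refine le_closed_box hτ hll hll (φ := fun z => |Fp z.1 z.2.2 - Fp z.1 z.2.1 -
      Fq z.1 z.2.1 * (z.2.2 - z.2.1)|) (ψ := fun z => C * |z.2.2 - z.2.1| ^ α * |z.2.2 - z.2.1|)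
      ?_ ?_ (fun t ht x hx y hy => ?_) t ht x hx y hy
    · have := cp' (f := fun z : ℝ × ℝ × ℝ => z.1) (g := fun z => z.2.2) (by fun_prop) (by fun_prop)
      have := cp' (f := fun z : ℝ × ℝ × ℝ => z.1) (g := fun z => z.2.1) (by fun_prop) (by fun_prop)
      have := cq' (f := fun z : ℝ × ℝ × ℝ => z.1) (g := fun z => z.2.1) (by fun_prop) (by fun_prop)
      fun_prop
    · have : Continuous fun z : ℝ × ℝ × ℝ => |z.2.2 - z.2.1| ^ α :=
        Continuous.rpow_const (by fun_prop) fun _ => Or.inr hα.le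
      fun_prop
    · simp only [ep t ht x hx, ep t ht y hy, eq t ht x hx]
      exact tayl hα.le hC (ho.px t ht) (ho.hq.2 t ht) hx hy
  have Dt : ∀ t ∈ Icc 0 τ, ∀ x ∈ Icc (-ℓ) ℓ,
      HasDerivWithinAt (fun s => Fu s x) (Fd t x) (Icc 0 τ) t := by
    intro t ht x hx
    refine deriv_of_tayl (β := α / 2) (by linarith) (C := C) fun s hs => ?_
    refine le_closed_box hτ hτ hll (φ := fun z => |Fu z.2.1 z.2.2 - Fu z.1 z.2.2 -
      Fd z.1 z.2.2 * (z.2.1 - z.1)|) (ψ := fun z => C * |z.2.1 - z.1| ^ (α / 2) * |z.2.1 - z.1|)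
      ?_ ?_ (fun t ht s hs x hx => ?_) t ht s hs x hx
    · have := cu' (f := fun z : ℝ × ℝ × ℝ => z.2.1) (g := fun z => z.2.2) (by fun_prop) (by fun_prop)
      have := cu' (f := fun z : ℝ × ℝ × ℝ => z.1) (g := fun z => z.2.2) (by fun_prop) (by fun_prop)
      have := cd' (f := fun z : ℝ × ℝ × ℝ => z.1) (g := fun z => z.2.2) (by fun_prop) (by fun_prop)
      fun_prop
    · have : Continuous fun z : ℝ × ℝ × ℝ => |z.2.1 - z.1| ^ (α / 2) :=
        Continuous.rpow_const (by fun_prop) fun _ => Or.inr (by linarith)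
      fun_prop
    · simp only [eu t ht x hx, eu s hs x hx, ed t ht x hx]
      exact tayl (v := fun s => u s x) (v1 := fun s => d s x) (by linarith) hC
        (fun t ht => ho.ut t ht x (ix hx)) (ho.hd.1 x hx) ht hs
  have fu : ∀ t ∈ Ico 0 τ, ∀ x ∈ Icc (-ℓ) ℓ, Fu t x = u t x := fun t ht x hx => by
    have := EqOn.of_subset_closure (f := fun z : ℝ × ℝ => Fu z.1 z.2) (g := fun z => u z.1 z.2)
      (s := Ioo 0 τ ×ˢ Ioo (-ℓ) ℓ) (t := Ico 0 τ ×ˢ Icc (-ℓ) ℓ)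
      (fun z hz => eu _ hz.1 _ hz.2) cu.continuousOn ho.cont
      (prod_mono Ioo_subset_Ico_self Ioo_subset_Icc_self) (by
        rw [closure_prod_eq, closure_Ioo hτ.ne, closure_Ioo hll.ne]
        exact prod_mono Ico_subset_Icc_self le_rfl)
    exact this (⟨ht, hx⟩ : (t, x) ∈ Ico 0 τ ×ˢ Icc (-ℓ) ℓ)
  have fd : ∀ t ∈ Ioo 0 τ, ∀ x ∈ Icc (-ℓ) ℓ, Fd t x = d t x := fun t ht x hx => by
    have h1 := (Dt t (it ht) x hx).hasDerivAt (Icc_mem_nhds ht.1 ht.2)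
    refine (h1.congr_of_eventuallyEq ?_).unique (ho.ut t ht x hx)
    filter_upwards [Ioo_mem_nhds ht.1 ht.2] with s hs
    exact (fu s ⟨hs.1.le, hs.2⟩ x hx).symm
  have fp : ∀ t ∈ Ioo 0 τ, ∀ x ∈ Icc (-ℓ) ℓ, Fp t x = p t x := fun t ht x hx => by
    refine (uniqueDiffOn_Icc hll x hx).eq_deriv _ (Dx t (it ht) x hx) ?_
    exact (ho.ux t ht x hx).hasDerivWithinAt.congr (fun y hy => fu t ⟨ht.1.le, ht.2⟩ y hy)
      (fu t ⟨ht.1.le, ht.2⟩ x hx)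
  obtain ⟨Mu, hMu⟩ := (isCompact_Icc (a := 0) (b := τ)).prod (isCompact_Icc (a := -ℓ) (b := ℓ))
    |>.exists_bound_of_continuousOn cu.continuousOn
  obtain ⟨Mp, hMp⟩ := (isCompact_Icc (a := 0) (b := τ)).prod (isCompact_Icc (a := -ℓ) (b := ℓ))
    |>.exists_bound_of_continuousOn cp.continuousOn
  have hbox : ∀ t ∈ Icc 0 τ, ∀ x ∈ Icc (-ℓ) ℓ,
      (t, x, Fu t x, Fp t x) ∈ Box T ℓ (max Mu Mp) := fun t ht x hx =>
    ⟨⟨ht.1, ht.2.trans hτT⟩, hx, abs_le.1 ((hMu (t, x) ⟨ht, hx⟩).trans (le_max_left _ _)),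
      abs_le.1 ((hMp (t, x) ⟨ht, hx⟩).trans (le_max_right _ _))⟩
  have coef : ∀ {h : ℝ × ℝ × ℝ × ℝ → ℝ}, NLin T ℓ h → ContinuousOn
      (fun z : ℝ × ℝ => h (z.1, z.2, Fu z.1 z.2, Fp z.1 z.2)) (Icc 0 τ ×ˢ Icc (-ℓ) ℓ) := fun hh => by
    obtain ⟨L, hL⟩ := hh (max Mu Mp)
    exact hL.continuousOn.comp (by fun_prop) fun z hz => hbox _ hz.1 _ hz.2
  have PDE : ∀ t ∈ Icc 0 τ, ∀ x ∈ Icc (-ℓ) ℓ, Fd t x =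
      D.a (t, x, Fu t x, Fp t x) * Fq t x + D.f (t, x, Fu t x, Fp t x) := fun t ht x hx => by
    have := EqOn.of_subset_closure (f := fun z : ℝ × ℝ => Fd z.1 z.2)
      (g := fun z => D.a (z.1, z.2, Fu z.1 z.2, Fp z.1 z.2) * Fq z.1 z.2 +
        D.f (z.1, z.2, Fu z.1 z.2, Fp z.1 z.2))
      (s := Ioo 0 τ ×ˢ Ioo (-ℓ) ℓ) (t := Icc 0 τ ×ˢ Icc (-ℓ) ℓ)
      (fun z hz => by
        simp only [ed _ hz.1 _ hz.2, eu _ hz.1 _ hz.2, ep _ hz.1 _ hz.2, eq _ hz.1 _ hz.2]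
        exact ho.pde _ hz.1 _ hz.2) cd.continuousOn
      (((coef D.na).mul cq.continuousOn).add (coef D.nf))
      (prod_mono Ioo_subset_Icc_self Ioo_subset_Icc_self) (by
        rw [closure_prod_eq, closure_Ioo hτ.ne, closure_Ioo hll.ne])
    exact this (⟨ht, hx⟩ : (t, x) ∈ Icc 0 τ ×ˢ Icc (-ℓ) ℓ)
  have BC : ∀ {h : ℝ × ℝ × ℝ × ℝ → ℝ} {x : ℝ}, NLin T ℓ h → x ∈ Icc (-ℓ) ℓ →
      (∀ t ∈ Ioo 0 τ, d t x = h (t, x, u t x, p t x)) →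
      ∀ t ∈ Icc 0 τ, Fd t x = h (t, x, Fu t x, Fp t x) := fun {h x} hh hx hb t ht => by
    have := EqOn.of_subset_closure (f := fun t : ℝ => Fd t x)
      (g := fun t => h (t, x, Fu t x, Fp t x))
      (s := Ioo 0 τ) (t := Icc 0 τ)
      (fun t ht => by
        simp only [fd t ht x hx, fp t ht x hx, fu t ⟨ht.1.le, ht.2⟩ x hx]
        exact hb t ht) (cd' continuous_id continuous_const).continuousOn
      ((coef hh).comp (f := fun t : ℝ => (t, x)) (by fun_prop) fun t ht => ⟨ht, hx⟩)
      Ioo_subset_Icc_self (by rw [closure_Ioo hτ.ne])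
    exact this ht
  refine ⟨Fu, Fp, Fq, Fd, Cls0.toCls ⟨Dx, Dxx, Dt, PDE, BC D.nr ⟨by linarith, le_rfl⟩ ho.bcR,
    BC D.nl ⟨le_rfl, by linarith⟩ ho.bcL, fun t _ => ?_, fun t _ => ?_,
    ⟨C, fun x _ => (Tq x).mono_set (subset_univ _)⟩, ⟨C, fun x _ => (Td x).mono_set (subset_univ _)⟩⟩
    hτ hτT hl hα hα1, fu⟩
  · exact (cq' continuous_const continuous_id).continuousOn
  · exact (cd' continuous_const continuous_id).continuousOn

/-! ### Comparison and uniqueness -/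

/-- Obliqueness: the boundary nonlinearities are monotone in the slope. -/
structure Obl {T ℓ : ℝ} (D : Dat T ℓ) : Prop where
  r : ∀ t ∈ Icc 0 T, ∀ z, Antitone fun p => D.r (t, ℓ, z, p)
  l : ∀ t ∈ Icc 0 T, ∀ z, Monotone fun p => D.l (t, -ℓ, z, p)

/-- First-order necessary condition at a maximum, valid also at an endpoint. -/
theorem max_first {a b x y c : ℝ} {φ : ℝ → ℝ} (hx : x ∈ Icc a b) (hy : y ∈ Icc a b)
    (h : HasDerivWithinAt φ c (Icc a b) x) (hm : ∀ y ∈ Icc a b, φ y ≤ φ x) : c * (y - x) ≤ 0 := by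
  have h1 : IsLocalMaxOn φ (Icc a b) x := IsMaxOn.localize fun y hy => hm y hy
  have h2 := h1.hasFDerivWithinAt_nonpos h.hasFDerivWithinAt
    (sub_mem_posTangentConeAt_of_segment_subset ((convex_Icc a b).segment_subset hx hy))
  simpa [mul_comm] using h2

/-- First- and second-order necessary conditions at an interior maximum. -/
theorem max_second {a b x c : ℝ} {φ ψ : ℝ → ℝ} (hx : x ∈ Ioo a b)
    (h1 : ∀ y ∈ Icc a b, HasDerivWithinAt φ (ψ y) (Icc a b) y)
    (h2 : HasDerivWithinAt ψ c (Icc a b) x) (hm : ∀ y ∈ Icc a b, φ y ≤ φ x) :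
    ψ x = 0 ∧ c ≤ 0 := by
  have hx' := Ioo_subset_Icc_self hx
  have e1 := max_first hx' (left_mem_Icc.2 (hx'.1.trans hx'.2)) (h1 x hx') hm
  have e2 := max_first hx' (right_mem_Icc.2 (hx'.1.trans hx'.2)) (h1 x hx') hm
  have z : ψ x = 0 := by
    apply le_antisymm
    · nlinarith [hx.2]
    · nlinarith [hx.1]
  refine ⟨z, not_lt.1 fun hc => ?_⟩
  have h3 := h2.hasDerivAt (Icc_mem_nhds hx.1 hx.2)
  have h4 := (hasDerivAt_iff_tendsto_slope.1 h3).mono_left (nhdsGT_le_nhdsNE x)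
  have h5 : ∀ᶠ y in 𝓝[>] x, 0 < ψ y := by
    filter_upwards [h4.eventually (lt_mem_nhds hc), self_mem_nhdsWithin] with y hy hxy
    rw [slope_def_field, z, sub_zero] at hy
    have : 0 < y - x := sub_pos.2 hxy
    by_contra hn
    exact absurd hy (not_lt.2 (div_nonpos_of_nonpos_of_nonneg (not_lt.1 hn) this.le))
  obtain ⟨y, hy, hs⟩ := (mem_nhdsGT_iff_exists_Ioo_subset' hx.2).1
    (h5.and (Ioo_mem_nhdsGT hx.2))
  have hy' : x < y := hy
  set w := (x + y) / 2 with hw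
  have hxw : x < w := by rw [hw]; linarith
  have hsub : Ioo x w ⊆ Ioo x y := Ioo_subset_Ioo_right (by rw [hw]; linarith)
  have hwI : w ∈ Icc a b := Ioo_subset_Icc_self ⟨hx.1.trans hxw, (hs ⟨hxw, by rw [hw]; linarith⟩).2.2⟩
  have hin : Icc x w ⊆ Icc a b := Icc_subset_Icc hx'.1 hwI.2
  obtain ⟨k, hk, hk2⟩ := exists_hasDerivAt_eq_slope φ ψ hxw
    (fun y hy => ((h1 y (hin hy)).continuousWithinAt).mono hin)
    (fun y hy => (h1 y (hin (Ioo_subset_Icc_self hy))).hasDerivAt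
      (Icc_mem_nhds (hx.1.trans hy.1) (hy.2.trans_le hwI.2)))
  have := (hs (hsub hk)).1
  rw [hk2] at this
  have h6 := (div_pos_iff_of_pos_right (sub_pos.2 hxw)).1 this
  linarith [hm w hwI]

section
variable {T ℓ α τ : ℝ} {D : Dat T ℓ} {u p q d u' p' q' d' : ℝ → ℝ → ℝ}

/-- Comparison principle: at a positive maximum of `e^{-Mt}(u - u')` the equation or, at a lateral
point, the obliqueness of the boundary condition bounds `d - d'` by a multiple of `u - u'` that is
smaller than `M`. -/
theorem Cls0.le (ob : Obl D) (hc : Cls0 D α τ u p q d) (hc' : Cls0 D α τ u' p' q' d')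
    (hτ : 0 ≤ τ) (hτT : τ ≤ T) (hl : 0 < ℓ) (hα : 0 < α)
    (hi : ∀ x ∈ Icc (-ℓ) ℓ, u 0 x = u' 0 x) :
    ∀ t ∈ Icc 0 τ, ∀ x ∈ Icc (-ℓ) ℓ, u t x ≤ u' t x := by
  obtain ⟨B1, hB1, hb1⟩ := hc.bounds hτ hl hα
  obtain ⟨B2, hB2, hb2⟩ := hc'.bounds hτ hl hα
  set B := max B1 B2 with hB
  have hB0 : 0 ≤ B := hB1.trans (le_max_left _ _)
  have g1 : ∀ t ∈ Icc 0 τ, ∀ x ∈ Icc (-ℓ) ℓ, |u t x| ≤ B ∧ |p t x| ≤ B :=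
    fun t ht x hx => ⟨(hb1 t ht x hx).1.trans (le_max_left _ _),
      (hb1 t ht x hx).2.1.trans (le_max_left _ _)⟩
  have g2 : ∀ t ∈ Icc 0 τ, ∀ x ∈ Icc (-ℓ) ℓ, |u' t x| ≤ B ∧ |p' t x| ≤ B ∧ |q' t x| ≤ B :=
    fun t ht x hx => ⟨(hb2 t ht x hx).1.trans (le_max_right _ _),
      (hb2 t ht x hx).2.1.trans (le_max_right _ _), (hb2 t ht x hx).2.2.1.trans (le_max_right _ _)⟩
  obtain ⟨La, ha⟩ := D.na B
  obtain ⟨Lf, hf⟩ := D.nf B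
  obtain ⟨Lr, hr⟩ := D.nr B
  obtain ⟨Ll, hL⟩ := D.nl B
  have na := ha.nn
  have nf := hf.nn
  have nr := hr.nn
  have nl := hL.nn
  -- `M` exceeds the Lipschitz constants in `u` of the equation and of the boundary conditions
  set M := La * B + Lf + Lr + Ll + 1 with hM
  have key : ∀ {h : ℝ × ℝ × ℝ × ℝ → ℝ} {L : ℝ}, SDP (Box T ℓ B) h L → ∀ t ∈ Icc 0 τ,
      ∀ x ∈ Icc (-ℓ) ℓ, ∀ z z' k : ℝ, |z| ≤ B → |z'| ≤ B → |k| ≤ B →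
      |h (t, x, z, k) - h (t, x, z', k)| ≤ L * |z - z'| := fun {h L} hh t ht x hx z z' k hz hz' hk => by
    have tT : t ∈ Icc 0 T := ⟨ht.1, ht.2.trans hτT⟩
    refine (hh.lip _ ⟨tT, hx, abs_le.1 hz, abs_le.1 hk⟩ _
      ⟨tT, hx, abs_le.1 hz', abs_le.1 hk⟩).trans (le_of_eq ?_)
    simp [Prod.norm_def]
  have cont : ContinuousOn (fun z : ℝ × ℝ => Real.exp (-M * z.1) * (u z.1 z.2 - u' z.1 z.2))
      (Icc 0 τ ×ˢ Icc (-ℓ) ℓ) :=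
    ContinuousOn.mul (by fun_prop) ((hc.cont hτ hl hα).sub (hc'.cont hτ hl hα))
  obtain ⟨⟨t, x⟩, ⟨ht, hx⟩, hmax⟩ := (isCompact_Icc.prod isCompact_Icc).exists_isMaxOn
    ⟨((0:ℝ), (0:ℝ)), ⟨⟨le_rfl, hτ⟩, ⟨by linarith, hl.le⟩⟩⟩ cont
  by_cases hpos : u t x - u' t x ≤ 0
  · intro s hs y hy
    have : Real.exp (-M * s) * (u s y - u' s y) ≤ Real.exp (-M * t) * (u t x - u' t x) :=
      hmax (⟨hs, hy⟩ : (s, y) ∈ Icc 0 τ ×ˢ Icc (-ℓ) ℓ)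
    have h1 : Real.exp (-M * t) * (u t x - u' t x) ≤ 0 :=
      mul_nonpos_of_nonneg_of_nonpos (Real.exp_pos _).le hpos
    by_contra hn
    have h2 : 0 < Real.exp (-M * s) * (u s y - u' s y) :=
      mul_pos (Real.exp_pos _) (sub_pos.2 (not_le.1 hn))
    linarith
  -- a positive maximum, attained at `(t,x)`, contradicts the equation or a boundary condition
  exfalso
  rw [not_le] at hpos
  simp only at ht hx
  have t0 : 0 < t := by
    rcases ht.1.eq_or_lt with h | h
    · rw [← h, hi x hx] at hpos; simp at hpos
    · exact h
  have hM1 : ∀ s ∈ Icc 0 τ, ∀ y ∈ Icc (-ℓ) ℓ, Real.exp (-M * s) * (u s y - u' s y) ≤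
      Real.exp (-M * t) * (u t x - u' t x) := fun s hs y hy =>
      hmax (⟨hs, hy⟩ : (s, y) ∈ Icc 0 τ ×ˢ Icc (-ℓ) ℓ)
  have hsp : ∀ y ∈ Icc (-ℓ) ℓ, u t y - u' t y ≤ u t x - u' t x := fun y hy =>
    le_of_mul_le_mul_left (hM1 t ht y hy) (Real.exp_pos _)
  have htm : M * (u t x - u' t x) ≤ d t x - d' t x := by
    have hd : HasDerivWithinAt (fun s => Real.exp (-M * s) * (u s x - u' s x))
        (Real.exp (-M * t) * (-M) * (u t x - u' t x) + Real.exp (-M * t) * (d t x - d' t x))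
        (Icc 0 τ) t := by
      have e : HasDerivAt (fun s : ℝ => Real.exp (-M * s)) (Real.exp (-M * t) * (-M)) t := by
        simpa using ((hasDerivAt_id t).const_mul (-M)).exp
      exact e.hasDerivWithinAt.mul ((hc.ut t ht x hx).sub (hc'.ut t ht x hx))
    have := max_first (y := 0) ht ⟨le_rfl, hτ⟩ hd (fun s hs => hM1 s hs x hx)
    have e : 0 < Real.exp (-M * t) * t := mul_pos (Real.exp_pos _) t0
    by_contra hn
    nlinarith [mul_pos e (sub_pos.2 (not_le.1 hn))]
  have hdx := fun y hy => (hc.ux t ht y hy).sub (hc'.ux t ht y hy)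
  have b1 := g1 t ht x hx
  have b2 := g2 t ht x hx
  have tT : t ∈ Icc 0 T := ⟨ht.1, ht.2.trans hτT⟩
  have aw : |u t x - u' t x| = u t x - u' t x := abs_of_pos hpos
  set w := u t x - u' t x with hw
  have hlt : ∀ K, K ≤ La * B + Lf + Lr + Ll → K * w < M * w := fun K hK =>
    mul_lt_mul_of_pos_right (by linarith) hpos
  have hab := mul_nonneg na hB0
  rcases hx.1.eq_or_lt with hxl | hxl
  · have e := max_first (y := ℓ) hx (right_mem_Icc.2 (by linarith)) (hdx x hx) hsp
    have e2 : p t x ≤ p' t x := by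
      by_contra hn
      nlinarith [not_le.1 hn]
    have e3 := ob.l t tT (u t x) e2
    have e4 := (abs_le.1 (key hL t ht x hx _ _ (p' t x) b1.1 b2.1 b2.2.1)).2
    subst hxl
    rw [hc.bcL t ht, hc'.bcL t ht] at htm
    rw [aw] at e4
    simp only at e3
    have := hlt Ll (by linarith)
    linarith
  rcases hx.2.eq_or_lt with hxr | hxr
  · have e := max_first (y := -ℓ) hx (left_mem_Icc.2 (by linarith)) (hdx x hx) hsp
    have e2 : p' t x ≤ p t x := by
      by_contra hn
      nlinarith [not_le.1 hn]
    have e3 := ob.r t tT (u t x) e2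
    have e4 := (abs_le.1 (key hr t ht x hx _ _ (p' t x) b1.1 b2.1 b2.2.1)).2
    subst hxr
    rw [hc.bcR t ht, hc'.bcR t ht] at htm
    rw [aw] at e4
    simp only at e3
    have := hlt Lr (by linarith)
    linarith
  · obtain ⟨e1, e2⟩ := max_second ⟨hxl, hxr⟩ hdx ((hc.px t ht x hx).sub (hc'.px t ht x hx)) hsp
    have ep : p t x = p' t x := sub_eq_zero.1 e1
    rw [hc.pde t ht x hx, hc'.pde t ht x hx, ep] at htm
    have e3 := (abs_le.1 (key hf t ht x hx _ _ (p' t x) b1.1 b2.1 b2.2.1)).2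
    have e4 := key ha t ht x hx _ _ (p' t x) b1.1 b2.1 b2.2.1
    rw [aw] at e3 e4
    have e5 : (D.a (t, x, u t x, p' t x) - D.a (t, x, u' t x, p' t x)) * q' t x ≤ La * w * B := by
      refine (le_abs_self _).trans ?_
      rw [abs_mul]
      exact mul_le_mul e4 b2.2.2 (abs_nonneg _) (mul_nonneg na hpos.le)
    have e6 : D.a (t, x, u t x, p' t x) * (q t x - q' t x) ≤ 0 :=
      mul_nonpos_of_nonneg_of_nonpos (D.pos t tT x hx _ _).le e2
    have := hlt (La * B + Lf) (by linarith)
    nlinarith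

/-- Solutions with the same initial value coincide, together with all their derivatives. -/
theorem Cls0.uniq (ob : Obl D) (hc : Cls0 D α τ u p q d) (hc' : Cls0 D α τ u' p' q' d')
    (hτ : 0 < τ) (hτT : τ ≤ T) (hl : 0 < ℓ) (hα : 0 < α)
    (hi : ∀ x ∈ Icc (-ℓ) ℓ, u 0 x = u' 0 x) :
    ∀ t ∈ Icc 0 τ, ∀ x ∈ Icc (-ℓ) ℓ, u t x = u' t x ∧ p t x = p' t x ∧ q t x = q' t x ∧
      d t x = d' t x := by
  have eu : ∀ t ∈ Icc 0 τ, ∀ x ∈ Icc (-ℓ) ℓ, u t x = u' t x := fun t ht x hx =>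
    le_antisymm (hc.le ob hc' hτ.le hτT hl hα hi t ht x hx)
      (hc'.le ob hc hτ.le hτT hl hα (fun x hx => (hi x hx).symm) t ht x hx)
  have ul := uniqueDiffOn_Icc (show -ℓ < ℓ by linarith)
  have ep : ∀ t ∈ Icc 0 τ, ∀ x ∈ Icc (-ℓ) ℓ, p t x = p' t x := fun t ht x hx =>
    (ul x hx).eq_deriv _ ((hc.ux t ht x hx).congr (fun y hy => (eu t ht y hy).symm)
      (eu t ht x hx).symm) (hc'.ux t ht x hx)
  exact fun t ht x hx => ⟨eu t ht x hx, ep t ht x hx,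
    (ul x hx).eq_deriv _ ((hc.px t ht x hx).congr (fun y hy => (ep t ht y hy).symm)
      (ep t ht x hx).symm) (hc'.px t ht x hx),
    (uniqueDiffOn_Icc hτ t ht).eq_deriv _ ((hc.ut t ht x hx).congr
      (fun s hs => (eu s hs x hx).symm) (eu t ht x hx).symm) (hc'.ut t ht x hx)⟩
end

/-! ### Continuation of solutions -/

/-- Concatenation at time `σ`. -/
def cat (σ : ℝ) (v w : ℝ → ℝ) (t : ℝ) : ℝ := if t ≤ σ then v t else w (t - σ)

section
variable {σ ρ : ℝ} {v w v1 w1 : ℝ → ℝ}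

theorem cat_le {t : ℝ} (h : t ≤ σ) : cat σ v w t = v t := if_pos h

theorem cat_ge (h0 : v σ = w 0) {t : ℝ} (h : σ ≤ t) : cat σ v w t = w (t - σ) := by
  rcases h.eq_or_lt with h | h
  · rw [← h, cat_le le_rfl, sub_self, h0]
  · exact if_neg (not_le.2 h)

/-- A concatenation that matches at `σ` keeps Hölder continuity. -/
theorem cat_holder {β C1 C2 : ℝ} (hβ : 0 ≤ β) (hC1 : 0 ≤ C1) (hC2 : 0 ≤ C2) (hρ : 0 ≤ ρ)
    (hσ : 0 ≤ σ)
    (hv : HolderBnd β (Icc 0 σ) v C1) (hw : HolderBnd β (Icc 0 ρ) w C2) (h0 : v σ = w 0) :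
    HolderBnd β (Icc 0 (σ + ρ)) (cat σ v w) (C1 + C2) := by
  have key : ∀ s ∈ Icc 0 (σ + ρ), ∀ t ∈ Icc 0 (σ + ρ), s ≤ t →
      |cat σ v w s - cat σ v w t| ≤ (C1 + C2) * |s - t| ^ β := fun s hs t ht hst => by
    have pn : 0 ≤ |s - t| ^ β := Real.rpow_nonneg (abs_nonneg _) _
    rcases le_total t σ with h | h
    · rw [cat_le h, cat_le (hst.trans h)]
      refine (hv s ⟨hs.1, hst.trans h⟩ t ⟨ht.1, h⟩).trans ?_
      nlinarith
    rcases le_total σ s with h' | h'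
    · rw [cat_ge h0 h, cat_ge h0 h']
      refine (hw _ ⟨by linarith, by linarith [hs.2]⟩ _ ⟨by linarith, by linarith [ht.2]⟩).trans ?_
      rw [sub_sub_sub_cancel_right]
      nlinarith
    · rw [cat_le h', cat_ge h0 h]
      have e1 := hv s ⟨hs.1, h'⟩ σ ⟨hσ, le_rfl⟩
      have e2 := hw 0 ⟨le_rfl, hρ⟩ (t - σ) ⟨by linarith, by linarith [ht.2]⟩
      have f1 : |s - σ| ^ β ≤ |s - t| ^ β := Real.rpow_le_rpow (abs_nonneg _)
        (by rw [abs_of_nonpos (by linarith), abs_of_nonpos (by linarith)]; linarith) hβ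
      have f2 : |0 - (t - σ)| ^ β ≤ |s - t| ^ β := Real.rpow_le_rpow (abs_nonneg _)
        (by rw [abs_of_nonpos (by linarith), abs_of_nonpos (by linarith)]; linarith) hβ
      calc |v s - w (t - σ)| = |(v s - v σ) + (w 0 - w (t - σ))| := by rw [h0]; congr 1; ring
        _ ≤ C1 * |s - σ| ^ β + C2 * |0 - (t - σ)| ^ β := (abs_add_le _ _).trans (add_le_add e1 e2)
        _ ≤ C1 * |s - t| ^ β + C2 * |s - t| ^ β := by gcongr
        _ = _ := by ring
  intro s hs t ht
  rcases le_total s t with h | h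
  · exact key s hs t ht h
  · rw [abs_sub_comm, abs_sub_comm s]; exact key t ht s hs h

/-- A concatenation that matches to first order at `σ` is differentiable there. -/
theorem cat_deriv (hσ : 0 ≤ σ) (hρ : 0 ≤ ρ)
    (hv : ∀ t ∈ Icc 0 σ, HasDerivWithinAt v (v1 t) (Icc 0 σ) t)
    (hw : ∀ t ∈ Icc 0 ρ, HasDerivWithinAt w (w1 t) (Icc 0 ρ) t) (h0 : v σ = w 0)
    (h1 : v1 σ = w1 0) : ∀ t ∈ Icc 0 (σ + ρ),
      HasDerivWithinAt (cat σ v w) (cat σ v1 w1 t) (Icc 0 (σ + ρ)) t := by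
  have A : ∀ t ∈ Icc 0 σ, HasDerivWithinAt (cat σ v w) (cat σ v1 w1 t) (Icc 0 σ) t := fun t ht => by
    rw [cat_le ht.2]
    exact (hv t ht).congr (fun s hs => cat_le hs.2) (cat_le ht.2)
  have B : ∀ t ∈ Icc σ (σ + ρ), HasDerivWithinAt (cat σ v w) (cat σ v1 w1 t) (Icc σ (σ + ρ)) t :=
      fun t ht => by
    rw [cat_ge h1 ht.1]
    refine HasDerivWithinAt.congr (f := fun s => w (s - σ)) ?_ (fun s hs => cat_ge h0 hs.1)
      (cat_ge h0 ht.1)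
    have := (hw (t - σ) ⟨by linarith [ht.1], by linarith [ht.2]⟩).scomp t
      (((hasDerivAt_id t).sub_const σ).hasDerivWithinAt (s := Icc σ (σ + ρ)))
      (fun s (hs : s ∈ Icc σ (σ + ρ)) =>
        (⟨by linarith [hs.1], by linarith [hs.2]⟩ : s - σ ∈ Icc 0 ρ))
    simpa [Function.comp_def] using this
  intro t ht
  rcases lt_trichotomy t σ with h | h | h
  · refine (A t ⟨ht.1, h.le⟩).mono_of_mem_nhdsWithin ?_
    filter_upwards [self_mem_nhdsWithin, mem_nhdsWithin_of_mem_nhds (Iio_mem_nhds h)] with s hs hs'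
    exact ⟨hs.1, le_of_lt hs'⟩
  · subst h
    have := (A t ⟨ht.1, le_rfl⟩).union (B t ⟨le_rfl, ht.2⟩)
    rwa [Icc_union_Icc_eq_Icc hσ (by linarith)] at this
  · refine (B t ⟨h.le, ht.2⟩).mono_of_mem_nhdsWithin ?_
    filter_upwards [self_mem_nhdsWithin, mem_nhdsWithin_of_mem_nhds (Ioi_mem_nhds h)] with s hs hs'
    exact ⟨le_of_lt hs', hs.2⟩
end

section
variable {T ℓ α τ : ℝ} {D : Dat T ℓ} {u p q d u' p' q' d' : ℝ → ℝ → ℝ}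

theorem Cls.mono (hc : Cls D α τ u p q d) {σ : ℝ} (h : σ ≤ τ) : Cls D α σ u p q d := by
  have s : Icc (0:ℝ) σ ⊆ Icc 0 τ := Icc_subset_Icc_right h
  exact
  { ux := fun t ht => hc.ux t (s ht)
    px := fun t ht => hc.px t (s ht)
    ut := fun t ht x hx => (hc.ut t (s ht) x hx).mono s
    pde := fun t ht => hc.pde t (s ht)
    bcR := fun t ht => hc.bcR t (s ht)
    bcL := fun t ht => hc.bcL t (s ht)
    qc := fun t ht => hc.qc t (s ht)
    dc := fun t ht => hc.dc t (s ht)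
    qT := hc.qT.imp fun C h x hx => (h x hx).mono_set s
    dT := hc.dT.imp fun C h x hx => (h x hx).mono_set s
    qX := hc.qX.imp fun C h t ht => h t (s ht)
    dX := hc.dX.imp fun C h t ht => h t (s ht)
    pT := hc.pT.imp fun C h x hx => (h x hx).mono_set s }

theorem Cls.congr (hc : Cls D α τ u p q d) (hl : 0 < ℓ)
    (h : ∀ t ∈ Icc 0 τ, ∀ x ∈ Icc (-ℓ) ℓ, u' t x = u t x ∧ p' t x = p t x ∧ q' t x = q t x ∧
      d' t x = d t x) : Cls D α τ u' p' q' d' := by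
  have r : ℓ ∈ Icc (-ℓ) ℓ := ⟨by linarith, le_rfl⟩
  have l : -ℓ ∈ Icc (-ℓ) ℓ := ⟨le_rfl, by linarith⟩
  exact
  { ux := fun t ht x hx => by
      rw [(h t ht x hx).2.1]
      exact (hc.ux t ht x hx).congr (fun y hy => (h t ht y hy).1) (h t ht x hx).1
    px := fun t ht x hx => by
      rw [(h t ht x hx).2.2.1]
      exact (hc.px t ht x hx).congr (fun y hy => (h t ht y hy).2.1) (h t ht x hx).2.1
    ut := fun t ht x hx => by
      rw [(h t ht x hx).2.2.2]
      exact (hc.ut t ht x hx).congr (fun s hs => (h s hs x hx).1) (h t ht x hx).1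
    pde := fun t ht x hx => by
      obtain ⟨e1, e2, e3, e4⟩ := h t ht x hx
      rw [e1, e2, e3, e4]; exact hc.pde t ht x hx
    bcR := fun t ht => by
      obtain ⟨e1, e2, e3, e4⟩ := h t ht ℓ r
      rw [e1, e2, e4]; exact hc.bcR t ht
    bcL := fun t ht => by
      obtain ⟨e1, e2, e3, e4⟩ := h t ht _ l
      rw [e1, e2, e4]; exact hc.bcL t ht
    qc := fun t ht => (hc.qc t ht).congr fun x hx => (h t ht x hx).2.2.1
    dc := fun t ht => (hc.dc t ht).congr fun x hx => (h t ht x hx).2.2.2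
    qT := hc.qT.imp fun C hC x hx => fun s hs t ht => by
      simp only [(h s hs x hx).2.2.1, (h t ht x hx).2.2.1]; exact hC x hx s hs t ht
    dT := hc.dT.imp fun C hC x hx => fun s hs t ht => by
      simp only [(h s hs x hx).2.2.2, (h t ht x hx).2.2.2]; exact hC x hx s hs t ht
    qX := hc.qX.imp fun C hC t ht => fun x hx y hy => by
      rw [(h t ht x hx).2.2.1, (h t ht y hy).2.2.1]; exact hC t ht x hx y hy
    dX := hc.dX.imp fun C hC t ht => fun x hx y hy => by
      rw [(h t ht x hx).2.2.2, (h t ht y hy).2.2.2]; exact hC t ht x hx y hy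
    pT := hc.pT.imp fun C hC x hx => fun s hs t ht => by
      simp only [(h s hs x hx).2.1, (h t ht x hx).2.1]; exact hC x hx s hs t ht }

/-- A solution on `[0,σ]` followed by a solution issuing from its final state. -/
theorem Cls0.append {σ ρ : ℝ} (hσ : 0 ≤ σ) (hρ : 0 ≤ ρ) (hl : 0 < ℓ) (hα : 0 < α)
    (hc : Cls0 D α σ u p q d) (hc' : Cls0 (D.shift hσ) α ρ u' p' q' d')
    (hi : ∀ x ∈ Icc (-ℓ) ℓ, u' 0 x = u σ x) :
    ∃ U P Q E, Cls0 D α (σ + ρ) U P Q E ∧ ∀ x ∈ Icc (-ℓ) ℓ, U 0 x = u 0 x := by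
  have r : ℓ ∈ Icc (-ℓ) ℓ := ⟨by linarith, le_rfl⟩
  have l : -ℓ ∈ Icc (-ℓ) ℓ := ⟨le_rfl, by linarith⟩
  have ul := uniqueDiffOn_Icc (show -ℓ < ℓ by linarith)
  have mσ : σ ∈ Icc 0 σ := ⟨hσ, le_rfl⟩
  have m0 : (0:ℝ) ∈ Icc 0 ρ := ⟨le_rfl, hρ⟩
  have eu : ∀ x ∈ Icc (-ℓ) ℓ, u σ x = u' 0 x := fun x hx => (hi x hx).symm
  have ep : ∀ x ∈ Icc (-ℓ) ℓ, p σ x = p' 0 x := fun x hx =>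
    (ul x hx).eq_deriv _ (hc.ux σ mσ x hx) ((hc'.ux 0 m0 x hx).congr eu (eu x hx))
  have eq : ∀ x ∈ Icc (-ℓ) ℓ, q σ x = q' 0 x := fun x hx =>
    (ul x hx).eq_deriv _ (hc.px σ mσ x hx) ((hc'.px 0 m0 x hx).congr ep (ep x hx))
  have ed : ∀ x ∈ Icc (-ℓ) ℓ, d σ x = d' 0 x := fun x hx => by
    rw [hc.pde σ mσ x hx, hc'.pde 0 m0 x hx, eu x hx, ep x hx, eq x hx]
    simp [Dat.shift]
  have sp : ∀ t ∈ Icc 0 (σ + ρ), (t ≤ σ ∧ t ∈ Icc 0 σ) ∨ (σ < t ∧ t - σ ∈ Icc 0 ρ) := fun t ht => by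
    rcases le_or_gt t σ with h | h
    · exact Or.inl ⟨h, ht.1, h⟩
    · exact Or.inr ⟨h, by linarith, by linarith [ht.2]⟩
  -- the concatenation of two space-time functions
  let K : (ℝ → ℝ → ℝ) → (ℝ → ℝ → ℝ) → ℝ → ℝ → ℝ := fun v w t x =>
    cat σ (fun t => v t x) (fun t => w t x) t
  have K1 : ∀ v w t, t ≤ σ → K v w t = v t := fun v w t h => funext fun x => if_pos h
  have K2 : ∀ v w t, σ < t → K v w t = w (t - σ) := fun v w t h =>
    funext fun x => if_neg (not_le.2 h)
  have KH : ∀ {v w : ℝ → ℝ → ℝ} {β : ℝ}, 0 ≤ β →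
      (∃ C, ∀ x ∈ Icc (-ℓ) ℓ, HolderBnd β (Icc 0 σ) (fun t => v t x) C) →
      (∃ C, ∀ x ∈ Icc (-ℓ) ℓ, HolderBnd β (Icc 0 ρ) (fun t => w t x) C) →
      (∀ x ∈ Icc (-ℓ) ℓ, v σ x = w 0 x) →
      ∃ C, ∀ x ∈ Icc (-ℓ) ℓ, HolderBnd β (Icc 0 (σ + ρ)) (fun t => K v w t x) C := by
    rintro v w β hβ ⟨C1, h1⟩ ⟨C2, h2⟩ h
    refine ⟨|C1| + |C2|, fun x hx => cat_holder hβ (abs_nonneg _) (abs_nonneg _) hρ hσ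
      ((h1 x hx).mono (le_abs_self _)) ((h2 x hx).mono (le_abs_self _)) (h x hx)⟩
  refine ⟨K u u', K p p', K q q', K d d', ?_, fun x hx => by rw [K1 _ _ _ hσ]⟩
  exact
  { ux := fun t ht x hx => by
      rcases sp t ht with ⟨h, h'⟩ | ⟨h, h'⟩
      · rw [K1 _ _ _ h, K1 _ _ _ h]; exact hc.ux t h' x hx
      · rw [K2 _ _ _ h, K2 _ _ _ h]; exact hc'.ux _ h' x hx
    px := fun t ht x hx => by
      rcases sp t ht with ⟨h, h'⟩ | ⟨h, h'⟩
      · rw [K1 _ _ _ h, K1 _ _ _ h]; exact hc.px t h' x hx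
      · rw [K2 _ _ _ h, K2 _ _ _ h]; exact hc'.px _ h' x hx
    ut := fun t ht x hx => cat_deriv hσ hρ (fun t ht => hc.ut t ht x hx)
      (fun t ht => hc'.ut t ht x hx) (eu x hx) (ed x hx) t ht
    pde := fun t ht x hx => by
      rcases sp t ht with ⟨h, h'⟩ | ⟨h, h'⟩
      · simp only [K1 _ _ _ h]; exact hc.pde t h' x hx
      · simp only [K2 _ _ _ h]
        have := hc'.pde _ h' x hx
        simpa [Dat.shift] using this
    bcR := fun t ht => by
      rcases sp t ht with ⟨h, h'⟩ | ⟨h, h'⟩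
      · simp only [K1 _ _ _ h]; exact hc.bcR t h'
      · simp only [K2 _ _ _ h]
        have := hc'.bcR _ h'
        simpa [Dat.shift] using this
    bcL := fun t ht => by
      rcases sp t ht with ⟨h, h'⟩ | ⟨h, h'⟩
      · simp only [K1 _ _ _ h]; exact hc.bcL t h'
      · simp only [K2 _ _ _ h]
        have := hc'.bcL _ h'
        simpa [Dat.shift] using this
    qc := fun t ht => by
      rcases sp t ht with ⟨h, h'⟩ | ⟨h, h'⟩
      · rw [K1 _ _ _ h]; exact hc.qc t h'
      · rw [K2 _ _ _ h]; exact hc'.qc _ h'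
    dc := fun t ht => by
      rcases sp t ht with ⟨h, h'⟩ | ⟨h, h'⟩
      · rw [K1 _ _ _ h]; exact hc.dc t h'
      · rw [K2 _ _ _ h]; exact hc'.dc _ h'
    qT := KH (by linarith) hc.qT hc'.qT eq
    dT := KH (by linarith) hc.dT hc'.dT ed }

/-- A solution that ends before `T` extends to a longer interval: its final state satisfies the
compatibility condition, because the equation and the boundary conditions hold at the corners. -/
theorem Cls.restart {σ : ℝ} (hc : Cls D α σ u p q d) (hσ : 0 ≤ σ) (hσT : σ < T) (hl : 0 < ℓ)
    (hα : 0 < α) (hα1 : α < 1) : ∃ τ, σ < τ ∧ τ ≤ T ∧ ∃ U P Q E, Cls D α τ U P Q E ∧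
      ∀ x ∈ Icc (-ℓ) ℓ, U 0 x = u 0 x := by
  have mσ : σ ∈ Icc 0 σ := ⟨hσ, le_rfl⟩
  obtain ⟨C, hC⟩ := hc.qX
  obtain ⟨ρ, hρ, hρT, u', p', q', d', hc', hi⟩ := local_exist (T := T - σ) (by linarith) hl hα hα1
    (D.shift hσ) (hc.ux σ mσ) (hc.px σ mσ) (hC σ mσ)
    (by
      have h1 := hc.pde σ mσ ℓ ⟨by linarith, le_rfl⟩
      rw [hc.bcR σ mσ] at h1
      simpa [Dat.shift] using h1)
    (by
      have h1 := hc.pde σ mσ (-ℓ) ⟨le_rfl, by linarith⟩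
      rw [hc.bcL σ mσ] at h1
      simpa [Dat.shift] using h1)
  obtain ⟨U, P, Q, E, h, h0⟩ := hc.toCls0.append hσ hρ.le hl hα hc' hi
  exact ⟨σ + ρ, by linarith, by linarith, U, P, Q, E,
    h.toCls (by linarith) (by linarith) hl hα hα1, h0⟩

/-- Existence of a maximal solution. Either it exists up to and including the final time `T`, or
it cannot be continued to a solution on the closed interval `[0,τ∞]`. -/
theorem maximal (hT : 0 < T) (hl : 0 < ℓ) (hα : 0 < α) (hα1 : α < 1) (ob : Obl D)
    {v0 v1 v2 : ℝ → ℝ} (h0 : ∀ x ∈ Icc (-ℓ) ℓ, HasDerivWithinAt v0 (v1 x) (Icc (-ℓ) ℓ) x)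
    (h1 : ∀ x ∈ Icc (-ℓ) ℓ, HasDerivWithinAt v1 (v2 x) (Icc (-ℓ) ℓ) x)
    {C : ℝ} (h2 : HolderBnd α (Icc (-ℓ) ℓ) v2 C)
    (cR : D.r (0, ℓ, v0 ℓ, v1 ℓ) = D.a (0, ℓ, v0 ℓ, v1 ℓ) * v2 ℓ + D.f (0, ℓ, v0 ℓ, v1 ℓ))
    (cL : D.l (0, -ℓ, v0 (-ℓ), v1 (-ℓ)) =
      D.a (0, -ℓ, v0 (-ℓ), v1 (-ℓ)) * v2 (-ℓ) + D.f (0, -ℓ, v0 (-ℓ), v1 (-ℓ))) :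
    ∃ τi, 0 < τi ∧ τi ≤ T ∧ ∃ u p q d : ℝ → ℝ → ℝ, (∀ τ, 0 < τ → τ < τi → Cls D α τ u p q d) ∧
      (∀ x ∈ Icc (-ℓ) ℓ, u 0 x = v0 x) ∧
      (∀ u' p' q' d' τ, 0 < τ → τ ≤ T → Cls D α τ u' p' q' d' →
        (∀ x ∈ Icc (-ℓ) ℓ, u' 0 x = v0 x) →
        τ ≤ τi ∧ ∀ t ∈ Ico 0 τ, ∀ x ∈ Icc (-ℓ) ℓ, u' t x = u t x) ∧
      (Cls D α T u p q d ∨ ¬ ∃ u' p' q' d', Cls D α τi u' p' q' d' ∧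
        ∀ x ∈ Icc (-ℓ) ℓ, u' 0 x = v0 x) := by
  set S := {τ | 0 < τ ∧ τ ≤ T ∧ ∃ u p q d, Cls D α τ u p q d ∧ ∀ x ∈ Icc (-ℓ) ℓ, u 0 x = v0 x}
    with hS
  obtain ⟨τ0, hτ0, hτ0T, u0, p0, q0, d0, hc0, hi0⟩ := local_exist hT hl hα hα1 D h0 h1 h2 cR cL
  have S0 : τ0 ∈ S := ⟨hτ0, hτ0T, u0, p0, q0, d0, hc0.toCls hτ0 hτ0T hl hα hα1, hi0⟩
  have bd : BddAbove S := ⟨T, fun τ h => h.2.1⟩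
  set τi := sSup S with hτi
  have le : ∀ τ ∈ S, τ ≤ τi := fun τ h => le_csSup bd h
  have iT : τi ≤ T := csSup_le ⟨_, S0⟩ fun τ h => h.2.1
  have i0 : 0 < τi := hτ0.trans_le (le _ S0)
  have un : ∀ u p q d : ℝ → ℝ → ℝ, (∀ τ, 0 < τ → τ < τi → Cls D α τ u p q d) →
      (∀ x ∈ Icc (-ℓ) ℓ, u 0 x = v0 x) →
      (∀ u' p' q' d' τ, 0 < τ → τ ≤ T → Cls D α τ u' p' q' d' →
        (∀ x ∈ Icc (-ℓ) ℓ, u' 0 x = v0 x) →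
        τ ≤ τi ∧ ∀ t ∈ Ico 0 τ, ∀ x ∈ Icc (-ℓ) ℓ, u' t x = u t x) := by
    intro u p q d hu hi u' p' q' d' τ hτ hτT hc' hi'
    have hle := le τ ⟨hτ, hτT, u', p', q', d', hc', hi'⟩
    refine ⟨hle, fun t ht x hx => ?_⟩
    have ht1 := ht.1
    have ht2 := ht.2
    exact ((hc'.mono (σ := (t + τ) / 2) (by linarith)).toCls0.uniq ob
      (hu ((t + τ) / 2) (by linarith) (by linarith)).toCls0 (by linarith) (by linarith) hl hα
      (fun x hx => (hi' x hx).trans (hi x hx).symm) t ⟨ht1, by linarith⟩ x hx).1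
  by_cases hm : τi ∈ S
  · obtain ⟨-, -, u, p, q, d, hc, hi⟩ := hm
    have eT : τi = T := by
      refine le_antisymm iT (not_lt.1 fun hlt => ?_)
      obtain ⟨τ, h, hT', U, P, Q, E, hU, hU0⟩ := hc.restart i0.le hlt hl hα hα1
      exact absurd (le τ ⟨i0.trans h, hT', U, P, Q, E, hU, fun x hx => (hU0 x hx).trans (hi x hx)⟩)
        (not_le.2 h)
    have hu : ∀ τ, 0 < τ → τ < τi → Cls D α τ u p q d := fun τ _ h => hc.mono h.le
    exact ⟨τi, i0, iT, u, p, q, d, hu, hi, un u p q d hu hi, Or.inl (hc.mono eT.ge)⟩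
  · have ex : ∀ τ, ∃ u p q d : ℝ → ℝ → ℝ, 0 < τ → τ < τi → Cls D α τ u p q d ∧
        ∀ x ∈ Icc (-ℓ) ℓ, u 0 x = v0 x := fun τ => by
      by_cases h : τ < τi
      · obtain ⟨τ', ⟨-, -, u, p, q, d, hc, hi⟩, hlt⟩ := exists_lt_of_lt_csSup ⟨_, S0⟩ h
        exact ⟨u, p, q, d, fun _ _ => ⟨hc.mono hlt.le, hi⟩⟩
      · exact ⟨0, 0, 0, 0, fun _ h' => absurd h' h⟩
    clear_value τi
    choose u p q d hc using ex
    -- the state at time `t` is read off from a solution on a slightly longer interval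
    obtain ⟨m, hmdef⟩ : ∃ m : ℝ → ℝ, ∀ t, m t = (t + τi) / 2 := ⟨_, fun _ => rfl⟩
    have hu : ∀ τ, 0 < τ → τ < τi → Cls D α τ (fun t x => u (m t) t x) (fun t x => p (m t) t x)
        (fun t x => q (m t) t x) (fun t x => d (m t) t x) := fun τ h h' => by
      obtain ⟨hcτ, hiτ⟩ := hc τ h h'
      refine hcτ.congr hl fun t ht x hx => ?_
      have ht1 := ht.1
      have ht2 := ht.2
      have hm1 : t < m t := by simp only [hmdef]; linarith
      have hm2 : m t < τi := by simp only [hmdef]; linarith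
      obtain ⟨hct, hit⟩ := hc (m t) (by linarith) hm2
      have hmin : 0 < min τ (m t) := lt_min h (by linarith)
      exact (hct.mono (min_le_right τ _)).toCls0.uniq ob (hcτ.mono (min_le_left _ (m t))).toCls0
        hmin ((min_le_left _ _).trans (h'.le.trans iT)) hl hα
        (fun x hx => (hit x hx).trans (hiτ x hx).symm) t ⟨ht1, le_min ht2 hm1.le⟩ x hx
    have hi : ∀ x ∈ Icc (-ℓ) ℓ, u (m 0) 0 x = v0 x :=
      (hc (m 0) (by simp only [hmdef]; linarith) (by simp only [hmdef]; linarith)).2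
    exact ⟨τi, i0, iT, _, _, _, _, hu, hi, un _ _ _ _ hu hi,
      Or.inr fun ⟨u', p', q', d', h, h'⟩ => hm ⟨i0, iT, u', p', q', d', h, h'⟩⟩
end

/-! ### The parabolic Hölder norm -/

/-- All the quantities of the `C^{1+α/2,2+α}` norm on `(0,τ) × Q` are bounded by `C`. -/
def NBd (α τ : ℝ) (Q : Set ℝ) (u : ℝ → ℝ → ℝ) (C : ℝ) : Prop :=
  (∀ t ∈ Ioo (0 : ℝ) τ, ∀ x ∈ Q,
    |u t x| ≤ C ∧ |timeDeriv u t x| ≤ C ∧ |spaceDeriv u t x| ≤ C ∧ |spaceDeriv2 u t x| ≤ C) ∧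
  PHolderBnd α τ Q (timeDeriv u) C ∧ PHolderBnd α τ Q (spaceDeriv2 u) C ∧
  ∀ x ∈ Q, HolderBnd ((1 + α) / 2) (Ioo 0 τ) (fun t => spaceDeriv u t x) C

theorem hSemi_nonneg (β : ℝ) (I : Set ℝ) (v : ℝ → ℝ) : 0 ≤ hSemi β I v :=
  Real.sSup_nonneg (by
    rintro _ ⟨p, -, rfl⟩
    exact div_nonneg (abs_nonneg _) (Real.rpow_nonneg (abs_nonneg _) _))

theorem quot_le {β C : ℝ} {I : Set ℝ} {v : ℝ → ℝ} (h : HolderBnd β I v C) {p : ℝ × ℝ}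
    (hp : p ∈ {p : ℝ × ℝ | p.1 ∈ I ∧ p.2 ∈ I ∧ p.1 ≠ p.2}) :
    |v p.1 - v p.2| / |p.1 - p.2| ^ β ≤ C :=
  (div_le_iff₀ (Real.rpow_pos_of_pos (abs_pos.2 (sub_ne_zero.2 hp.2.2)) _)).2 (h _ hp.1 _ hp.2.1)

theorem hSemi_le {β C : ℝ} {I : Set ℝ} {v : ℝ → ℝ} (hC : 0 ≤ C) (h : HolderBnd β I v C) :
    hSemi β I v ≤ C :=
  Real.sSup_le (by rintro _ ⟨p, hp, rfl⟩; exact quot_le h hp) hC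

theorem HolderBnd.hSemi {β C : ℝ} {I : Set ℝ} {v : ℝ → ℝ} (h : HolderBnd β I v C) :
    HolderBnd β I v (hSemi β I v) := fun s hs t ht => by
  rcases eq_or_ne s t with rfl | hst
  · rw [sub_self, abs_zero]
    exact mul_nonneg (hSemi_nonneg _ _ _) (Real.rpow_nonneg (abs_nonneg _) _)
  · rw [← div_le_iff₀ (Real.rpow_pos_of_pos (abs_pos.2 (sub_ne_zero.2 hst)) _)]
    exact le_csSup ⟨C, by rintro _ ⟨p, hp, rfl⟩; exact quot_le h hp⟩ ⟨(s, t), ⟨hs, ht, hst⟩, rfl⟩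

theorem sSup_hSemi_nonneg (β : ℝ) (I J : Set ℝ) (w : ℝ → ℝ → ℝ) :
    0 ≤ sSup ((fun x => hSemi β I (w x)) '' J) :=
  Real.sSup_nonneg (by rintro _ ⟨x, -, rfl⟩; exact hSemi_nonneg _ _ _)

theorem holder_sSup {β C : ℝ} {I J : Set ℝ} {w : ℝ → ℝ → ℝ} (hC : 0 ≤ C)
    (h : ∀ x ∈ J, HolderBnd β I (w x) C) :
    ∀ x ∈ J, HolderBnd β I (w x) (sSup ((fun x => hSemi β I (w x)) '' J)) := fun x hx =>
  (h x hx).hSemi.mono (le_csSup ⟨C, by rintro _ ⟨y, hy, rfl⟩; exact hSemi_le hC (h y hy)⟩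
    ⟨x, hx, rfl⟩)

theorem supN_nonneg (τ : ℝ) (Q : Set ℝ) (w : ℝ → ℝ → ℝ) : 0 ≤ supN τ Q w :=
  Real.sSup_nonneg (by rintro _ ⟨x, -, rfl⟩; exact abs_nonneg _)

theorem le_supN {τ C : ℝ} {Q : Set ℝ} {w : ℝ → ℝ → ℝ}
    (h : ∀ t ∈ Ioo 0 τ, ∀ x ∈ Q, |w t x| ≤ C) {t x : ℝ} (ht : t ∈ Ioo 0 τ) (hx : x ∈ Q) :
    |w t x| ≤ supN τ Q w :=
  le_csSup ⟨C, by rintro _ ⟨p, hp, rfl⟩; exact h _ hp.1 _ hp.2⟩ ⟨(t, x), ⟨ht, hx⟩, rfl⟩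

theorem pSemi_nonneg (β τ : ℝ) (Q : Set ℝ) (w : ℝ → ℝ → ℝ) : 0 ≤ pSemi β τ Q w :=
  add_nonneg (sSup_hSemi_nonneg _ _ _ fun x t => w t x) (sSup_hSemi_nonneg _ _ _ w)

theorem PHolderBnd.pSemi {β τ C : ℝ} {Q : Set ℝ} {w : ℝ → ℝ → ℝ} (hC : 0 ≤ C)
    (h : PHolderBnd β τ Q w C) : PHolderBnd β τ Q w (pSemi β τ Q w) :=
  ⟨fun x hx => (holder_sSup (w := fun x t => w t x) hC h.1 x hx).mono
    (le_add_of_nonneg_right (sSup_hSemi_nonneg _ _ _ w)),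
   fun t ht => (holder_sSup (w := w) hC h.2 t ht).mono
    (le_add_of_nonneg_left (sSup_hSemi_nonneg _ _ _ fun x t => w t x))⟩

theorem PHolderBnd.mono {β τ C C' : ℝ} {Q : Set ℝ} {w : ℝ → ℝ → ℝ} (h : PHolderBnd β τ Q w C)
    (hC : C ≤ C') : PHolderBnd β τ Q w C' :=
  ⟨fun x hx => (h.1 x hx).mono hC, fun t ht => (h.2 t ht).mono hC⟩

theorem NBd.mono {α τ C C' : ℝ} {Q : Set ℝ} {u : ℝ → ℝ → ℝ} (h : NBd α τ Q u C) (hC : C ≤ C') :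
    NBd α τ Q u C' :=
  ⟨fun t ht x hx => (h.1 t ht x hx).imp (·.trans hC) fun h => h.imp (·.trans hC) fun h =>
      h.imp (·.trans hC) (·.trans hC),
    h.2.1.mono hC, h.2.2.1.mono hC, fun x hx => (h.2.2.2 x hx).mono hC⟩

theorem NBd.pNorm2 {α τ C : ℝ} {Q : Set ℝ} {u : ℝ → ℝ → ℝ} (hC : 0 ≤ C) (h : NBd α τ Q u C) :
    NBd α τ Q u (pNorm2 α τ Q u) := by
  have a1 := supN_nonneg τ Q u
  have a2 := supN_nonneg τ Q (timeDeriv u)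
  have a3 := supN_nonneg τ Q (spaceDeriv u)
  have a4 := supN_nonneg τ Q (spaceDeriv2 u)
  have a5 := pSemi_nonneg α τ Q (timeDeriv u)
  have a6 := pSemi_nonneg α τ Q (spaceDeriv2 u)
  have a7 := sSup_hSemi_nonneg ((1 + α) / 2) (Ioo 0 τ) Q fun x t => spaceDeriv u t x
  obtain ⟨h1, h2, h3, h4⟩ := h
  simp only [_root_.pNorm2, pSemi2]
  refine ⟨fun t ht x hx => ⟨?_, ?_, ?_, ?_⟩, (h2.pSemi hC).mono ?_, (h3.pSemi hC).mono ?_,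
    fun x hx => (holder_sSup (w := fun x t => spaceDeriv u t x) hC h4 x hx).mono ?_⟩
  · linarith [le_supN (fun t ht x hx => (h1 t ht x hx).1) ht hx]
  · linarith [le_supN (fun t ht x hx => (h1 t ht x hx).2.1) ht hx]
  · linarith [le_supN (fun t ht x hx => (h1 t ht x hx).2.2.1) ht hx]
  · linarith [le_supN (fun t ht x hx => (h1 t ht x hx).2.2.2) ht hx]
  all_goals linarith

/-- A bound on the norms along times approaching `τ` is a bound up to time `τ`. -/
theorem NBd.lim {α τ C : ℝ} {Q : Set ℝ} {u : ℝ → ℝ → ℝ}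
    (h : ∀ s < τ, ∃ σ, s < σ ∧ NBd α σ Q u C) : NBd α τ Q u C := by
  have two : ∀ s ∈ Ioo 0 τ, ∀ t ∈ Ioo 0 τ, ∃ σ, s ∈ Ioo 0 σ ∧ t ∈ Ioo 0 σ ∧ NBd α σ Q u C :=
    fun s hs t ht => by
      obtain ⟨σ, h1, h2⟩ := h (max s t) (max_lt hs.2 ht.2)
      exact ⟨σ, ⟨hs.1, (le_max_left _ _).trans_lt h1⟩, ⟨ht.1, (le_max_right _ _).trans_lt h1⟩, h2⟩
  refine ⟨fun t ht x hx => ?_, ⟨fun x hx s hs t ht => ?_, fun t ht => ?_⟩,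
    ⟨fun x hx s hs t ht => ?_, fun t ht => ?_⟩, fun x hx s hs t ht => ?_⟩
  · obtain ⟨σ, h1, -, h3⟩ := two t ht t ht
    exact h3.1 t h1 x hx
  · obtain ⟨σ, h1, h2, h3⟩ := two s hs t ht
    exact h3.2.1.1 x hx s h1 t h2
  · obtain ⟨σ, h1, -, h3⟩ := two t ht t ht
    exact h3.2.1.2 t h1
  · obtain ⟨σ, h1, h2, h3⟩ := two s hs t ht
    exact h3.2.2.1.1 x hx s h1 t h2
  · obtain ⟨σ, h1, -, h3⟩ := two t ht t ht
    exact h3.2.2.1.2 t h1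
  · obtain ⟨σ, h1, h2, h3⟩ := two s hs t ht
    exact h3.2.2.2 x hx s h1 t h2

/-! ### From classical solutions in the open cylinder to the closed cylinder -/

section
variable {T ℓ α τ : ℝ} {D : Dat T ℓ} {a f b g : ℝ → ℝ → ℝ → ℝ → ℝ} {u0 : ℝ → ℝ}

/-- A function that is a solution with norm at most `C` on intervals `(0,σ)` with `σ` exceeding any `s < τ`
is a solution in the open cylinder, with the Hölder bounds there. -/
theorem openSol {v : ℝ → ℝ → ℝ} {C : ℝ} (hm : Match D a f b g) (hl : 0 < ℓ)
    (h : ∀ s < τ, ∃ σ, s < σ ∧ MemP α σ (Ioo (-ℓ) ℓ) v ∧ SolQ σ ℓ a f b g u0 v ∧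
      NBd α σ (Ioo (-ℓ) ℓ) v C) :
    OpenSol D α τ v (spaceDeriv v) (spaceDeriv2 v) (timeDeriv v) C := by
  have cl : closure (Ioo (-ℓ) ℓ) = Icc (-ℓ) ℓ := closure_Ioo (by linarith)
  have hB : NBd α τ (Ioo (-ℓ) ℓ) v C := NBd.lim fun s hs => by
    obtain ⟨σ, h1, -, -, h2⟩ := h s hs
    exact ⟨σ, h1, h2⟩
  have at' : ∀ t ∈ Ioo 0 τ, ∃ σ, t ∈ Ioo 0 σ ∧ Reg12 σ (Icc (-ℓ) ℓ) v ∧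
      SolQ σ ℓ a f b g u0 v := fun t ht => by
    obtain ⟨σ, h1, h2, h3, -⟩ := h t ht.2
    exact ⟨σ, ⟨ht.1, h1⟩, cl ▸ h2.2.1, h3⟩
  have reg : ∀ t ∈ Ioo 0 τ, ∀ x ∈ Icc (-ℓ) ℓ, DifferentiableAt ℝ (fun s => v s x) t ∧
      DifferentiableAt ℝ (fun y => v t y) x ∧ DifferentiableAt ℝ (fun y => spaceDeriv v t y) x :=
    fun t ht x hx => by
      obtain ⟨σ, h1, h2, -⟩ := at' t ht
      exact h2 t h1 x hx
  exact
  { cont := fun z hz => by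
      obtain ⟨σ, h1, h2, -, -⟩ := h z.1 hz.1.2
      have := h2.1 z ⟨⟨hz.1.1, h1.le⟩, cl ▸ hz.2⟩
      rw [cl] at this
      refine this.mono_of_mem_nhdsWithin ?_
      have : Iio σ ×ˢ (univ : Set ℝ) ∈ 𝓝 z := prod_mem_nhds (Iio_mem_nhds h1) univ_mem
      filter_upwards [self_mem_nhdsWithin, mem_nhdsWithin_of_mem_nhds this] with w hw hw'
      exact ⟨⟨hw.1.1, le_of_lt hw'.1⟩, hw.2⟩
    ux := fun t ht x hx => (reg t ht x hx).2.1.hasDerivAt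
    px := fun t ht x hx => (reg t ht x (Ioo_subset_Icc_self hx)).2.2.hasDerivAt
    ut := fun t ht x hx => (reg t ht x hx).1.hasDerivAt
    pde := fun t ht x hx => by
      obtain ⟨σ, h1, -, h3⟩ := at' t ht
      rw [hm.a_eq, hm.f_eq]
      linarith [h3.2.1 t h1 x hx]
    bcR := fun t ht => by
      obtain ⟨σ, h1, -, h3⟩ := at' t ht
      rw [hm.r_eq]
      linarith [(h3.2.2.1 t h1).1]
    bcL := fun t ht => by
      obtain ⟨σ, h1, -, h3⟩ := at' t ht
      rw [hm.l_eq]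
      linarith [(h3.2.2.1 t h1).2]
    bp := fun t ht x hx => (hB.1 t ht x hx).2.2.1
    bq := fun t ht x hx => (hB.1 t ht x hx).2.2.2
    bd := fun t ht x hx => (hB.1 t ht x hx).2.1
    hq := hB.2.2.1
    hd := hB.2.1
    hp := hB.2.2.2 }

theorem MemP.bd (hl : 0 < ℓ) {v : ℝ → ℝ → ℝ} (hτ : 0 < τ) (h : MemP α τ (Ioo (-ℓ) ℓ) v) :
    ∃ C, 0 ≤ C ∧ NBd α τ (Ioo (-ℓ) ℓ) v C := by
  obtain ⟨C, hC⟩ := h.2.2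
  exact ⟨C, (abs_nonneg _).trans (hC.1 (τ / 2) ⟨by linarith, by linarith⟩ 0
    ⟨by linarith, hl⟩).1, hC⟩

/-- Such a function agrees on `[0,τ)` with a solution on the closed cylinder. -/
theorem toClosed {v : ℝ → ℝ → ℝ} {C : ℝ} (hm : Match D a f b g) (hl : 0 < ℓ) (hα : 0 < α)
    (hα1 : α < 1) (hτ : 0 < τ) (hτT : τ ≤ T)
    (h : ∀ s < τ, ∃ σ, s < σ ∧ MemP α σ (Ioo (-ℓ) ℓ) v ∧ SolQ σ ℓ a f b g u0 v ∧
      NBd α σ (Ioo (-ℓ) ℓ) v C) :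
    ∃ u p q d, Cls D α τ u p q d ∧ (∀ x ∈ Icc (-ℓ) ℓ, u 0 x = u0 x) ∧
      ∀ t ∈ Ico 0 τ, ∀ x ∈ Icc (-ℓ) ℓ, u t x = v t x := by
  obtain ⟨u, p, q, d, hc, he⟩ := (openSol hm hl h).close hτ hτT hl hα hα1
  obtain ⟨σ, -, -, h3, -⟩ := h 0 hτ
  exact ⟨u, p, q, d, hc, fun x hx => (he 0 ⟨le_rfl, hτ⟩ x hx).trans (h3.2.2.2 x hx), he⟩

/-! ### The data of the problem -/

/-- A boundary nonlinearity, viewed as a nonlinearity independent of `x`. -/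
theorem bdry_nlin (hT : 0 < T) (hl : 0 < ℓ) {h : ℝ × ℝ × ℝ → ℝ}
    (hh : ContDiffOn ℝ 2 h (Icc (0:ℝ) T ×ˢ (univ : Set (ℝ × ℝ)))) :
    NLin T ℓ fun q => h (q.1, q.2.2) :=
  nlin_of_contDiff hT hl (hh.comp (by fun_prop) fun _ hq => ⟨hq.1, mem_univ _⟩)

theorem slice_diff {h : ℝ × ℝ × ℝ → ℝ}
    (hh : ContDiffOn ℝ 2 h (Icc (0:ℝ) T ×ˢ (univ : Set (ℝ × ℝ)))) {t : ℝ} (ht : t ∈ Icc 0 T)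
    (z : ℝ) : Differentiable ℝ fun p => h (t, z, p) := by
  have : ContDiffOn ℝ 2 (fun p : ℝ => h (t, z, p)) univ :=
    hh.comp (by fun_prop) fun _ _ => ⟨ht, mem_univ _⟩
  exact (contDiffOn_univ.1 this).differentiable (by norm_num)

/-- The data of the original problem: `r = g - b p` at `ℓ` and `l = g + b p` at `-ℓ`. The obliqueness
condition fixes the signs of their derivatives in the slope `p`. -/
theorem exists_dat (hT : 0 < T) (hl : 0 < ℓ)
    (ha : ContDiffOn ℝ 2 (fun q : ℝ × ℝ × ℝ × ℝ => a q.1 q.2.1 q.2.2.1 q.2.2.2)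
      (Icc (0:ℝ) T ×ˢ Icc (-ℓ) ℓ ×ˢ (univ : Set (ℝ × ℝ))))
    (hf : ContDiffOn ℝ 2 (fun q : ℝ × ℝ × ℝ × ℝ => f q.1 q.2.1 q.2.2.1 q.2.2.2)
      (Icc (0:ℝ) T ×ˢ Icc (-ℓ) ℓ ×ˢ (univ : Set (ℝ × ℝ))))
    (hb : ContDiffOn ℝ 2 (fun q : ℝ × ℝ × ℝ => b q.1 ℓ q.2.1 q.2.2)
        (Icc (0:ℝ) T ×ˢ (univ : Set (ℝ × ℝ))) ∧
      ContDiffOn ℝ 2 (fun q : ℝ × ℝ × ℝ => b q.1 (-ℓ) q.2.1 q.2.2)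
        (Icc (0:ℝ) T ×ˢ (univ : Set (ℝ × ℝ))))
    (hg : ContDiffOn ℝ 2 (fun q : ℝ × ℝ × ℝ => g q.1 ℓ q.2.1 q.2.2)
        (Icc (0:ℝ) T ×ˢ (univ : Set (ℝ × ℝ))) ∧
      ContDiffOn ℝ 2 (fun q : ℝ × ℝ × ℝ => g q.1 (-ℓ) q.2.1 q.2.2)
        (Icc (0:ℝ) T ×ˢ (univ : Set (ℝ × ℝ))))
    (hpara : ∀ t ∈ Icc (0:ℝ) T, ∀ x ∈ Icc (-ℓ) ℓ, ∀ z p : ℝ, 0 < a t x z p)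
    (hobl : ∀ t ∈ Icc (0:ℝ) T, ∀ z p : ℝ,
      0 < deriv (fun q => b t ℓ z q) p * p + b t ℓ z p - deriv (fun q => g t ℓ z q) p ∧
      0 < deriv (fun q => b t (-ℓ) z q) p * p + b t (-ℓ) z p
          + deriv (fun q => g t (-ℓ) z q) p) :
    ∃ D : Dat T ℓ, Match D a f b g ∧ Obl D := by
  have c : ContDiffOn ℝ 2 (fun q : ℝ × ℝ × ℝ => q.2.2)
      (Icc (0:ℝ) T ×ˢ (univ : Set (ℝ × ℝ))) := by fun_prop
  let D : Dat T ℓ :=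
  { a := fun q => a q.1 q.2.1 q.2.2.1 q.2.2.2
    f := fun q => f q.1 q.2.1 q.2.2.1 q.2.2.2
    r := fun q => g q.1 ℓ q.2.2.1 q.2.2.2 - b q.1 ℓ q.2.2.1 q.2.2.2 * q.2.2.2
    l := fun q => g q.1 (-ℓ) q.2.2.1 q.2.2.2 + b q.1 (-ℓ) q.2.2.1 q.2.2.2 * q.2.2.2
    na := nlin_of_contDiff hT hl ha
    nf := nlin_of_contDiff hT hl hf
    nr := bdry_nlin hT hl (hg.1.sub (hb.1.mul c))
    nl := bdry_nlin hT hl (hg.2.add (hb.2.mul c))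
    pos := hpara }
  refine ⟨D, ⟨fun _ _ _ _ => rfl, fun _ _ _ _ => rfl, fun _ _ _ _ => rfl, fun _ _ _ _ => rfl⟩,
    fun t ht z => ?_, fun t ht z => ?_⟩
  · have h1 := slice_diff hg.1 ht z
    have h2 := slice_diff hb.1 ht z
    have hd : ∀ p, HasDerivAt (fun p => g t ℓ z p - b t ℓ z p * p)
        (deriv (fun q => g t ℓ z q) p - (deriv (fun q => b t ℓ z q) p * p + b t ℓ z p * 1)) p :=
      fun p => (h1 p).hasDerivAt.sub ((h2 p).hasDerivAt.mul (hasDerivAt_id p))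
    exact antitone_of_hasDerivAt_nonpos hd fun p => by
      show _ ≤ (0:ℝ)
      linarith [(hobl t ht z p).1]
  · have h1 := slice_diff hg.2 ht z
    have h2 := slice_diff hb.2 ht z
    have hd : ∀ p, HasDerivAt (fun p => g t (-ℓ) z p + b t (-ℓ) z p * p)
        (deriv (fun q => g t (-ℓ) z q) p +
          (deriv (fun q => b t (-ℓ) z q) p * p + b t (-ℓ) z p * 1)) p :=
      fun p => (h1 p).hasDerivAt.add ((h2 p).hasDerivAt.mul (hasDerivAt_id p))
    exact monotone_of_hasDerivAt_nonneg hd fun p => by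
      show (0:ℝ) ≤ _
      linarith [(hobl t ht z p).2]
end

/-! ### The maximal classical solution -/

/-- Theorem 2.2: local existence and uniqueness of a maximal solution for the quasilinear
problem (1), (2), and the blow-up dichotomy for the parabolic Hölder norm. -/
theorem local_existence_maximal_solution
    (α T ℓ : ℝ) (hα : α ∈ Ioo (0:ℝ) 1) (hT : 0 < T) (hl : 0 < ℓ)
    (a f b g : ℝ → ℝ → ℝ → ℝ → ℝ) (u0 : ℝ → ℝ)
    (ha : ContDiffOn ℝ 2 (fun q : ℝ × ℝ × ℝ × ℝ => a q.1 q.2.1 q.2.2.1 q.2.2.2)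
      (Icc (0:ℝ) T ×ˢ Icc (-ℓ) ℓ ×ˢ (univ : Set (ℝ × ℝ))))
    (hf : ContDiffOn ℝ 2 (fun q : ℝ × ℝ × ℝ × ℝ => f q.1 q.2.1 q.2.2.1 q.2.2.2)
      (Icc (0:ℝ) T ×ˢ Icc (-ℓ) ℓ ×ˢ (univ : Set (ℝ × ℝ))))
    (hb : ContDiffOn ℝ 2 (fun q : ℝ × ℝ × ℝ => b q.1 ℓ q.2.1 q.2.2)
        (Icc (0:ℝ) T ×ˢ (univ : Set (ℝ × ℝ))) ∧
      ContDiffOn ℝ 2 (fun q : ℝ × ℝ × ℝ => b q.1 (-ℓ) q.2.1 q.2.2)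
        (Icc (0:ℝ) T ×ˢ (univ : Set (ℝ × ℝ))))
    (hg : ContDiffOn ℝ 2 (fun q : ℝ × ℝ × ℝ => g q.1 ℓ q.2.1 q.2.2)
        (Icc (0:ℝ) T ×ˢ (univ : Set (ℝ × ℝ))) ∧
      ContDiffOn ℝ 2 (fun q : ℝ × ℝ × ℝ => g q.1 (-ℓ) q.2.1 q.2.2)
        (Icc (0:ℝ) T ×ˢ (univ : Set (ℝ × ℝ))))
    (hpara : ∀ t ∈ Icc (0:ℝ) T, ∀ x ∈ Icc (-ℓ) ℓ, ∀ z p : ℝ, 0 < a t x z p)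
    (hobl : ∀ t ∈ Icc (0:ℝ) T, ∀ z p : ℝ,
      0 < deriv (fun q => b t ℓ z q) p * p + b t ℓ z p - deriv (fun q => g t ℓ z q) p ∧
      0 < deriv (fun q => b t (-ℓ) z q) p * p + b t (-ℓ) z p
          + deriv (fun q => g t (-ℓ) z q) p)
    (hu0 : MemC2 α ℓ u0)
    (hcompat_r : -(b 0 ℓ (u0 ℓ) (deriv u0 ℓ)) * deriv u0 ℓ + g 0 ℓ (u0 ℓ) (deriv u0 ℓ)
      = a 0 ℓ (u0 ℓ) (deriv u0 ℓ) * deriv (deriv u0) ℓ + f 0 ℓ (u0 ℓ) (deriv u0 ℓ))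
    (hcompat_l : b 0 (-ℓ) (u0 (-ℓ)) (deriv u0 (-ℓ)) * deriv u0 (-ℓ)
        + g 0 (-ℓ) (u0 (-ℓ)) (deriv u0 (-ℓ))
      = a 0 (-ℓ) (u0 (-ℓ)) (deriv u0 (-ℓ)) * deriv (deriv u0) (-ℓ)
        + f 0 (-ℓ) (u0 (-ℓ)) (deriv u0 (-ℓ))) :
    ∃ τinf : ℝ, 0 < τinf ∧ τinf ≤ T ∧ ∃ u : ℝ → ℝ → ℝ,
      (∀ τ : ℝ, 0 < τ → τ < τinf → MemP α τ (Ioo (-ℓ) ℓ) u ∧ SolQ τ ℓ a f b g u0 u) ∧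
      (∀ (v : ℝ → ℝ → ℝ) (τ' : ℝ), 0 < τ' → τ' ≤ T → MemP α τ' (Ioo (-ℓ) ℓ) v →
        SolQ τ' ℓ a f b g u0 v →
        τ' ≤ τinf ∧ ∀ t ∈ Ico (0:ℝ) τ', ∀ x ∈ Icc (-ℓ) ℓ, v t x = u t x) ∧
      (Tendsto (fun τ => pNorm2 α τ (Ioo (-ℓ) ℓ) u) (𝓝[<] τinf) atTop ∨
        (MemP α T (Ioo (-ℓ) ℓ) u ∧ SolQ T ℓ a f b g u0 u)) := by
  obtain ⟨hα0, hα1⟩ := hα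
  obtain ⟨D, hm, ob⟩ := exists_dat hT hl ha hf hb hg hpara hobl
  obtain ⟨Cq, hCq⟩ := hu0.2.2.2
  obtain ⟨τi, hi0, hiT, u, p, q, d, hu, hi, huq, hor⟩ := maximal hT hl hα0 hα1 ob
    (v0 := u0) (v1 := deriv u0) (v2 := deriv (deriv u0))
    (fun x hx => (hu0.2.1 x hx).1.hasDerivAt.hasDerivWithinAt)
    (fun x hx => (hu0.2.1 x hx).2.hasDerivAt.hasDerivWithinAt) hCq
    (by rw [hm.r_eq, hm.a_eq, hm.f_eq]; linarith) (by rw [hm.l_eq, hm.a_eq, hm.f_eq]; linarith)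
  have hsol : ∀ τ, 0 < τ → τ < τi → MemP α τ (Ioo (-ℓ) ℓ) (extu ℓ u p q) ∧
      SolQ τ ℓ a f b g u0 (extu ℓ u p q) := fun τ h h' =>
    (hu τ h h').sol hm h.le hl hα0 hi
  have hex : ∀ t, ∀ x ∈ Icc (-ℓ) ℓ, extu ℓ u p q t x = u t x := fun t x hx => tay_of_mem hx
  refine ⟨τi, hi0, hiT, extu ℓ u p q, hsol, fun v τ' h h' hv hs => ?_, ?_⟩
  · obtain ⟨C, -, hC⟩ := hv.bd hl h
    obtain ⟨w, pw, qw, dw, hw, hw0, hwv⟩ := toClosed hm hl hα0 hα1 h h'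
      fun s hs' => ⟨τ', hs', hv, hs, hC⟩
    obtain ⟨e1, e2⟩ := huq w pw qw dw τ' h h' hw hw0
    exact ⟨e1, fun t ht x hx => by rw [← hwv t ht x hx, e2 t ht x hx, hex t x hx]⟩
  rcases hor with hc | hn
  · exact Or.inr (hc.sol hm hT.le hl hα0 hi)
  refine Or.inl (by_contra fun hnt => hn ?_)
  -- bounded norms along a sequence of times would allow the solution to be closed up at `τi`
  rw [tendsto_atTop] at hnt
  push Not at hnt
  obtain ⟨C, hC⟩ := hnt
  obtain ⟨w, pw, qw, dw, hw, hw0, -⟩ := toClosed (C := C) (v := extu ℓ u p q) hm hl hα0 hα1 hi0 hiT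
    fun s hs => by
      obtain ⟨σ, hσC, hσ⟩ := (hC.and_eventually
        (Ioo_mem_nhdsLT (max_lt hs hi0))).exists
      obtain ⟨hσ1, hσ2⟩ := hσ
      have hσ0 : 0 < σ := (le_max_right _ _).trans_lt hσ1
      obtain ⟨h1, h2⟩ := hsol σ hσ0 hσ2
      obtain ⟨C', hC'0, hC'⟩ := h1.bd hl hσ0
      exact ⟨σ, (le_max_left _ _).trans_lt hσ1, h1, h2, (hC'.pNorm2 hC'0).mono hσC.le⟩
  exact ⟨w, pw, qw, dw, hw, hw0⟩
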